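/- Let $L$ be the unique subfield of the cyclotomic field $\mathbb{Q}(\zeta_{29})$ with $[L : \mathbb{Q}] = 7$. Then there are no $x, y \in L$ with $x^3 + y^3 = 3$; that is, $3$ is not a sum of two cubes in $L$. -/

import Mathlib

/-!
If `a³ + b³ = 3`, then `x = 1/(a + b)`, `y = (a - b)/(2(a + b))` is a point of `y² = x³ - 1/12`. So it
suffices that this elliptic curve has no affine point over the field `L` of degree `7`. The curve has
complex multiplication by `ℤ[ω]`, `ω² + ω + 1 = 0`, and `7` is the norm of `π = 3 + ω`. The proof is a
descent along the degree-`7` isogeny `π` on the group `A` of points over `L(ω)`.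

*The Kummer map.* The kernel of the dual of `π` becomes rational over `F = ℚ(ω, θ)`, `θ⁶ = (5 + ω)/3`,
a cyclic extension of `ℚ(ω)` of degree `6` with generator `τ`. Let `W` be the compositum of `F` and
`L`, and `σ` a generator of its Galois group over `F`, of order `7`; then `A` consists of the points
over `W` fixed by `τ`. A function `f` on the sextic twist of the curve by `θ` has divisor
`7(T) - 7(O)`, and `f ∘ π` is a seventh power. It induces a homomorphism from `A` to `Wˣ / Wˣ⁷` on
whose image `τ` acts as cubing (`fP_add`, `tau_fP`); a point with trivial image is divisible by `π`
(`exists_pi_eq`, `exists_fixed`).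

*Divisibility of `A` by `π`* (`A_div`). As `σ⁷ = 1`, the operator `(σ - 1)⁷` is a multiple of `7`, hence
of `π`; by induction it is enough to divide the points whose class is fixed by `σ`. By Hilbert 90, and
as `W` has no seventh roots of unity, such a class comes from some `a ∈ Fˣ` with `τ a ~ a³`
(`exists_base`). All valuations of `a` are divisible by `7`: away from `29` because `W / F` is
unramified there, and at a prime above `29` because it is fixed by a nontrivial power `τʲ`, which
multiplies the valuation both by `1` and by `3ʲ` modulo `7` (`val_base`). So `(a) = I⁷`, and the class
of `I` lies in the `3`-eigenspace of `τ` on the `7`-part of the class group of `F`. This eigenspace is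
trivial (`principal_of_eigen`): every ideal class contains an ideal of norm at most `9105`, a prime
fixed by a nontrivial power of `τ` has no component in the eigenspace, and for the other primes of
small norm explicit elements reduce the norm. Hence `a` may be taken to be a unit (`exists_unit`).
At the prime of `F` above `7` that is totally ramified over `ℚ(ω)`, the Kummer function is, up to
seventh powers, a unit congruent to its `τ`-conjugate modulo the sixth power of the prime
(`ff_local`, `unit_step`). The logarithmic derivatives at this prime of the conjugates of one explicit
unit show that a unit of `F` with that property is a seventh power (`IsP7.exists_root`). So the class
is trivial.

*Conclusion.* Since `A = πA`, and `π` strictly contracts the kernel of reduction modulo `π`, the group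
`A` injects into the points over the residue field (`no_pole`). There `π` acts as the Frobenius, and the
residue field of `L(ω)` is contained in the field with `7⁷` elements, so `π⁷ = 1` on `A` (`pi_seven`).
A point `P` over `L` then satisfies `250 P = ω (757 P)`; if `P ≠ 0`, this forces `ω ∈ L`, which is
impossible as `[L : ℚ]` is odd (`no_point`, `no_omega`).
-/

/-! ### The curve and its group of points -/

noncomputable section
open WeierstrassCurve

namespace SumCubes

/-- The curve `y² = x³ - 1/12`, a model of `a³ + b³ = 3`. -/
def E : WeierstrassCurve.Affine ℚ := ⟨0, 0, 0, 0, -1/12⟩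

/-- The curve `y² = x³ - 1/12` over a field `k` of characteristic zero. -/
abbrev EC (k : Type*) [Field k] [CharZero k] : WeierstrassCurve.Affine k :=
  WeierstrassCurve.baseChange E k

/-- The group of points of `y² = x³ - 1/12` over a field `k` of characteristic zero. -/
abbrev Pt (k : Type*) [Field k] [CharZero k] : Type _ := (EC k).Point

section basic

variable {k : Type*} [Field k] [CharZero k]

lemma equation_iff' (x y : k) : (EC k).Equation x y ↔ y ^ 2 = x ^ 3 - 1 / 12 := by
  rw [WeierstrassCurve.Affine.equation_iff]
  simp [EC, E, WeierstrassCurve.baseChange, WeierstrassCurve.map]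
  constructor <;> intro h <;> linear_combination h

lemma nonsingular_of {x y : k} (h : y ^ 2 = x ^ 3 - 1 / 12) : (EC k).Nonsingular x y := by
  rw [WeierstrassCurve.Affine.nonsingular_iff]
  refine ⟨(equation_iff' x y).2 h, ?_⟩
  simp [EC, E, WeierstrassCurve.baseChange, WeierstrassCurve.map]
  by_contra! hc
  obtain ⟨hx, hy⟩ := hc
  have hy0 : y = 0 := by linear_combination hy / 2
  have : x = 0 := by
    have := hx
    by_contra h0; exact h0 (by simpa using this)
  rw [hy0, this] at h
  norm_num at h

/-- The affine point `(x, y)` of the curve. -/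
def mkP (x y : k) (h : y ^ 2 = x ^ 3 - 1 / 12) : Pt k :=
  WeierstrassCurve.Affine.Point.some x y (nonsingular_of h)

lemma mkP_ne_zero {x y : k} (h : y ^ 2 = x ^ 3 - 1 / 12) : mkP x y h ≠ 0 :=
  WeierstrassCurve.Affine.Point.some_ne_zero _

lemma mkP_inj {x y x' y' : k} {h : y ^ 2 = x ^ 3 - 1 / 12} {h' : y' ^ 2 = x' ^ 3 - 1 / 12} :
    mkP x y h = mkP x' y' h' ↔ x = x' ∧ y = y' := by
  simp [mkP]

lemma eq_zero_or_mkP (P : Pt k) : P = 0 ∨ ∃ x y h, P = mkP x y h := by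
  rcases P with _ | ⟨x, y, h⟩
  · left; rfl
  · exact Or.inr ⟨x, y, (equation_iff' x y).1 h.1, rfl⟩

lemma negY_eq (x y : k) : (EC k).negY x y = -y := by
  simp [WeierstrassCurve.Affine.negY, EC, E, WeierstrassCurve.baseChange, WeierstrassCurve.map]

lemma neg_mkP {x y : k} (h : y ^ 2 = x ^ 3 - 1 / 12) :
    -mkP x y h = mkP x (-y) (by rw [neg_sq]; exact h) := by
  rw [mkP, WeierstrassCurve.Affine.Point.neg_some]
  simp only [mkP, negY_eq]

variable [DecidableEq k]

/-- A sum of two points that are not opposite is computed by a non-vertical line. -/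
lemma exists_line {x₁ y₁ x₂ y₂ : k} (h₁ : y₁ ^ 2 = x₁ ^ 3 - 1 / 12)
    (h₂ : y₂ ^ 2 = x₂ ^ 3 - 1 / 12) (hne : ¬ (x₁ = x₂ ∧ y₁ = -y₂)) :
    ∃ l c x₃ y₃ : k, ∃ h₃ : y₃ ^ 2 = x₃ ^ 3 - 1 / 12,
      mkP x₁ y₁ h₁ + mkP x₂ y₂ h₂ + mkP x₃ y₃ h₃ = 0 ∧
      y₁ = l * x₁ + c ∧ y₂ = l * x₂ + c ∧ y₃ = l * x₃ + c ∧
      x₁ + x₂ + x₃ = l ^ 2 ∧ x₁ * x₂ + x₁ * x₃ + x₂ * x₃ = -2 * l * c ∧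
      x₁ * x₂ * x₃ = c ^ 2 + 1 / 12 := by
  have hne' : ¬ (x₁ = x₂ ∧ y₁ = (EC k).negY x₂ y₂) := by rwa [negY_eq]
  have e₁ := (equation_iff' x₁ y₁).2 h₁
  have e₂ := (equation_iff' x₂ y₂).2 h₂
  have hpoly := WeierstrassCurve.Affine.addPolynomial_slope e₁ e₂ hne'
  set l := (EC k).slope x₁ x₂ y₁ y₂ with hl
  have hadd : mkP x₁ y₁ h₁ + mkP x₂ y₂ h₂ = _ := 
    WeierstrassCurve.Affine.Point.add_some hne' (h₁ := nonsingular_of h₁) (h₂ := nonsingular_of h₂)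
  have hns := (WeierstrassCurve.Affine.nonsingular_add (nonsingular_of h₁) (nonsingular_of h₂) hne')
  have hX : (EC k).addX x₁ x₂ l = l ^ 2 - x₁ - x₂ := by
    simp [WeierstrassCurve.Affine.addX, EC, E, WeierstrassCurve.baseChange, WeierstrassCurve.map]
  have hY : (EC k).addY x₁ x₂ y₁ l = - (l * (l ^ 2 - x₁ - x₂ - x₁) + y₁) := by
    rw [WeierstrassCurve.Affine.addY, WeierstrassCurve.Affine.negAddY, negY_eq, hX]
  rw [WeierstrassCurve.Affine.addPolynomial_eq, hX] at hpoly
  have hp (t : k) : -(t ^ 3 - l ^ 2 * t ^ 2 + (-2 * l * (y₁ - l * x₁)) * t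
      + (-(1/12) - (y₁ - l * x₁) ^ 2)) = -((t - x₁) * (t - x₂) * (t - (l ^ 2 - x₁ - x₂))) := by
    have := congrArg (Polynomial.eval t) hpoly
    simp [Cubic.toPoly, EC, E, WeierstrassCurve.baseChange, WeierstrassCurve.map] at this
    linear_combination this
  have h0 := hp 0
  have h1 := hp 1
  have hm := hp (-1)
  have h12 : y₂ = l * x₂ + (y₁ - l * x₁) := by
    by_cases hx : x₁ = x₂
    · have : y₁ = y₂ := by
        have h3 : (y₁ - y₂) * (y₁ + y₂) = 0 := by rw [hx] at h₁; linear_combination h₁ - h₂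
        rcases mul_eq_zero.1 h3 with h | h
        · linear_combination h
        · exact absurd ⟨hx, by linear_combination h⟩ hne
      rw [hx, this]; ring
    · rw [hl, WeierstrassCurve.Affine.slope_of_X_ne hx]
      have : x₁ - x₂ ≠ 0 := sub_ne_zero.2 hx
      field_simp
      ring
  rw [hX, hY] at hns
  have h3 := (equation_iff' _ _).1 hns.1
  refine ⟨l, y₁ - l * x₁, l ^ 2 - x₁ - x₂, l * (l ^ 2 - x₁ - x₂) + (y₁ - l * x₁), ?_, ?_,
    by ring, h12, by ring, by ring, by linear_combination (h1-hm)/2, by linear_combination -h0⟩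
  · linear_combination h3
  · rw [hadd, ← eq_neg_iff_add_eq_zero, neg_mkP]
    simp only [mkP, hX, hY, ← hl, WeierstrassCurve.Affine.Point.some.injEq]
    exact ⟨trivial, by ring⟩

/-- Three points on a line, counted with multiplicity, sum to zero. -/
lemma add_eq_zero_of_line {l c x₁ y₁ x₂ y₂ x₃ y₃ : k} (h₁ : y₁ ^ 2 = x₁ ^ 3 - 1 / 12)
    (h₂ : y₂ ^ 2 = x₂ ^ 3 - 1 / 12) (h₃ : y₃ ^ 2 = x₃ ^ 3 - 1 / 12)
    (l₁ : y₁ = l * x₁ + c) (l₂ : y₂ = l * x₂ + c) (l₃ : y₃ = l * x₃ + c)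
    (v₁ : x₁ + x₂ + x₃ = l ^ 2) (v₂ : x₁ * x₂ + x₁ * x₃ + x₂ * x₃ = -2 * l * c)
    (v₃ : x₁ * x₂ * x₃ = c ^ 2 + 1 / 12) :
    mkP x₁ y₁ h₁ + mkP x₂ y₂ h₂ + mkP x₃ y₃ h₃ = 0 := by
  have hne : ¬ (x₁ = x₂ ∧ y₁ = -y₂) := by
    rintro ⟨rfl, h⟩
    have hy : y₁ = 0 := by
      have : y₁ = y₂ := by rw [l₁, l₂]
      linear_combination (h + this)/2
    rw [hy] at h₁
    have hx0 : 3 * x₁ ^ 2 = 0 := by linear_combination 2 * x₁ * v₁ - v₂ + 2 * l * (l₁.symm.trans hy)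
    have : x₁ = 0 := by simpa using hx0
    rw [this] at h₁; norm_num at h₁
  obtain ⟨l', c', x', y', h', hs, m₁, m₂, m₃, w₁, w₂, w₃⟩ := exists_line h₁ h₂ hne
  have hll : l = l' := by
    by_cases hx : x₁ = x₂
    · have hy0 : y₁ ≠ 0 := by
        intro h0; apply hne; refine ⟨hx, ?_⟩
        have : y₁ = y₂ := by rw [l₁, l₂, hx]
        rw [← this, h0, neg_zero]
      subst hx
      have t1 : 2 * y₁ * l = 3 * x₁ ^ 2 := by rw [l₁]; linear_combination v₂ - 2 * x₁ * v₁
      have t2 : 2 * y₁ * l' = 3 * x₁ ^ 2 := by rw [m₁]; linear_combination w₂ - 2 * x₁ * w₁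
      have : 2 * y₁ ≠ 0 := mul_ne_zero two_ne_zero hy0
      exact mul_left_cancel₀ this (t1.trans t2.symm)
    · have : x₁ - x₂ ≠ 0 := sub_ne_zero.2 hx
      exact mul_right_cancel₀ this (by linear_combination -l₁ + l₂ + m₁ - m₂)
  subst hll
  have hcc : c = c' := by linear_combination m₁ - l₁
  have hx' : x₃ = x' := by linear_combination v₁ - w₁
  have hy' : y₃ = y' := by rw [l₃, m₃, hx', hcc]
  subst hx' hy'
  exact hs

end basic

end SumCubes

end

/-! ### Complex multiplication by `ℤ[ω]` -/

noncomputable section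
open WeierstrassCurve

namespace SumCubes

section omega

lemma omega_cube {k : Type*} [CommRing k] {w : k} (hw : w ^ 2 + w + 1 = 0) : w ^ 3 = 1 := by
  linear_combination (w - 1) * hw

variable {k : Type*} [Field k] [CharZero k] [DecidableEq k]

/-- The underlying function of the automorphism `(x, y) ↦ (ωx, y)`. -/
def omFun (w : k) (hw : w ^ 2 + w + 1 = 0) : Pt k → Pt k
  | .zero => 0
  | .some x y h => mkP (w * x) y (by
      rw [mul_pow, omega_cube hw, one_mul]; exact (equation_iff' x y).1 h.1)

lemma omFun_mkP {w : k} (hw : w ^ 2 + w + 1 = 0) {x y : k} (h : y ^ 2 = x ^ 3 - 1 / 12) :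
    omFun w hw (mkP x y h) =
      mkP (w * x) y (by rw [mul_pow, omega_cube hw, one_mul]; exact h) := rfl

/-- The automorphism `(x, y) ↦ (ωx, y)`. -/
def om (w : k) (hw : w ^ 2 + w + 1 = 0) : Pt k →+ Pt k where
  toFun := omFun w hw
  map_zero' := rfl
  map_add' := by
    have hneg : ∀ P, omFun w hw (-P) = - omFun w hw P := by
      intro P
      rcases eq_zero_or_mkP P with rfl | ⟨x, y, h, rfl⟩
      · rfl
      · rw [neg_mkP]
        rw [omFun_mkP, omFun_mkP, neg_mkP]
    intro P Q
    rcases eq_zero_or_mkP P with rfl | ⟨x₁, y₁, h₁, rfl⟩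
    · rw [zero_add]; exact (zero_add _).symm
    rcases eq_zero_or_mkP Q with rfl | ⟨x₂, y₂, h₂, rfl⟩
    · rw [add_zero]; exact (add_zero _).symm
    by_cases hne : x₁ = x₂ ∧ y₁ = -y₂
    · obtain ⟨rfl, rfl⟩ := hne
      have : mkP x₁ (-y₂) h₁ = - mkP x₁ y₂ h₂ := by rw [neg_mkP]
      rw [this, hneg, neg_add_cancel, neg_add_cancel]; rfl
    · obtain ⟨l, c, x₃, y₃, h₃, hs, l₁, l₂, l₃, v₁, v₂, v₃⟩ := exists_line h₁ h₂ hne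
      rw [eq_neg_of_add_eq_zero_left hs, hneg, eq_comm, ← add_eq_zero_iff_eq_neg]
      have hw3 := omega_cube hw
      rw [omFun_mkP, omFun_mkP, omFun_mkP]
      refine add_eq_zero_of_line (l := w ^ 2 * l) (c := c) _ _ _ ?_ ?_ ?_ ?_ ?_ ?_
      · linear_combination l₁ - l * x₁ * hw3
      · linear_combination l₂ - l * x₂ * hw3
      · linear_combination l₃ - l * x₃ * hw3
      · linear_combination w * v₁ - l ^ 2 * w * hw3
      · linear_combination w ^ 2 * v₂
      · linear_combination v₃ + x₁ * x₂ * x₃ * hw3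

lemma om_mkP {w : k} (hw : w ^ 2 + w + 1 = 0) {x y : k} (h : y ^ 2 = x ^ 3 - 1 / 12) :
    om w hw (mkP x y h) = mkP (w * x) y (by rw [mul_pow, omega_cube hw, one_mul]; exact h) := rfl

lemma om_om {w : k} (hw : w ^ 2 + w + 1 = 0) (P : Pt k) :
    om w hw (om w hw P) = - P - om w hw P := by
  rcases eq_zero_or_mkP P with rfl | ⟨x, y, h, rfl⟩
  · simp
  rw [eq_sub_iff_add_eq, eq_neg_iff_add_eq_zero]
  rw [om_mkP, om_mkP]
  refine add_eq_zero_of_line (l := 0) (c := y) _ _ _ ?_ ?_ ?_ ?_ ?_ ?_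
  · ring
  · ring
  · ring
  · linear_combination x * hw
  · linear_combination w * x ^ 2 * hw
  · linear_combination x ^ 3 * omega_cube hw - h

/-- The endomorphism `π = 3 + ω`, of degree `7`. -/
def pi (w : k) (hw : w ^ 2 + w + 1 = 0) : Pt k →+ Pt k :=
  3 • AddMonoidHom.id (Pt k) + om w hw

/-- The dual endomorphism `3 + ω²`. -/
def pibar (w : k) (hw : w ^ 2 + w + 1 = 0) : Pt k →+ Pt k :=
  2 • AddMonoidHom.id (Pt k) - om w hw

lemma pi_apply {w : k} (hw : w ^ 2 + w + 1 = 0) (P : Pt k) : pi w hw P = 3 • P + om w hw P := rfl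

lemma pi_om {w : k} (hw : w ^ 2 + w + 1 = 0) (P : Pt k) :
    pi w hw (om w hw P) = om w hw (pi w hw P) := by
  simp [pi_apply, map_add]

lemma pi_pibar {w : k} (hw : w ^ 2 + w + 1 = 0) (P : Pt k) :
    pi w hw (pibar w hw P) = 7 • P := by
  simp only [pi, pibar, AddMonoidHom.add_apply, AddMonoidHom.sub_apply, AddMonoidHom.smul_apply,
    AddMonoidHom.id_apply, map_sub, map_nsmul, om_om]
  module

lemma pibar_pi {w : k} (hw : w ^ 2 + w + 1 = 0) (P : Pt k) :
    pibar w hw (pi w hw P) = 7 • P := by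
  simp only [pi, pibar, AddMonoidHom.add_apply, AddMonoidHom.sub_apply, AddMonoidHom.smul_apply,
    AddMonoidHom.id_apply, map_add, map_nsmul, om_om]
  module

/-- `D₁ = πx³ + 4ωB` with `B = -1/12`; its square is the denominator of `x ∘ π`. -/
def D1 (w x : k) : k := (3 + w) * x ^ 3 - w / 3
/-- The numerator of `x ∘ π`. -/
def NX (w x : k) : k := x * (x ^ 6 + (1 + 12 * w) / 3 * x ^ 3 - (2 + 3 * w) / 9)
/-- The numerator of `y ∘ π / y`. -/
def NY (w x : k) : k := x ^ 9 - (1 + 9 * w) * x ^ 6 + (10 + 9 * w) / 3 * x ^ 3 - 1 / 27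

lemma pi_eq {w : k} (hw : w ^ 2 + w + 1 = 0) (P : Pt k) :
    pi w hw P = P + (P - om w hw (om w hw P)) := by
  rw [om_om, pi_apply]; module

lemma sub_om_om {w : k} (hw : w ^ 2 + w + 1 = 0) {x y xR yR : k} (h : y ^ 2 = x ^ 3 - 1 / 12)
    (hx : x ≠ 0) (exR : xR = - w * (x ^ 3 - 1 / 3) / (3 * x ^ 2))
    (eyR : yR = - (y + 2 * (1 - w) * y / (3 * x) * (xR - x))) :
    ∃ hR : yR ^ 2 = xR ^ 3 - 1 / 12,
    mkP x y h - om w hw (om w hw (mkP x y h)) = mkP xR yR hR := by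
  have hR : yR ^ 2 = xR ^ 3 - 1 / 12 := by
    rw [eyR, exR]
    field_simp
    grind
  refine ⟨hR, ?_⟩
  rw [← sub_eq_zero, sub_eq_add_neg, sub_eq_add_neg, neg_mkP, om_mkP, om_mkP, neg_mkP]
  refine add_eq_zero_of_line (l := 2 * (1 - w) * y / (3 * x)) (c := y - 2 * (1 - w) * y / 3) _ _ _
    ?_ ?_ ?_ ?_ ?_ ?_
  · field_simp; ring
  · field_simp; grind
  · rw [eyR]; field_simp; ring
  · rw [exR]; field_simp; grind
  · rw [exR]; field_simp; grind
  · rw [exR]; field_simp; grind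

lemma eq_D1 {w x y : k} (hw : w ^ 2 + w + 1 = 0) (h : y ^ 2 = x ^ 3 - 1 / 12) (hD : D1 w x ≠ 0) :
    (y * NY w x / D1 w x ^ 3) ^ 2 = (NX w x / D1 w x ^ 2) ^ 3 - 1 / 12 := by
  have : y ^ 2 * NY w x ^ 2 = NX w x ^ 3 - 1 / 12 * D1 w x ^ 6 := by
    rw [h]; unfold NY NX D1
    have h2 : w ^ 2 = - w - 1 := by linear_combination hw
    have h3 := omega_cube hw
    have h4 : w ^ 4 = w := by linear_combination w * h3
    have h5 : w ^ 5 = -w-1 := by linear_combination w ^ 2 * h3 + h2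
    have h6 : w ^ 6 = 1 := by linear_combination (w ^ 3 + 1) * h3
    ring_nf
    simp only [h2, h3, h4, h5, h6]
    ring
  field_simp
  linear_combination 12 * this

/-- The coordinates of `π • (x, y)`. -/
lemma pi_mkP {w : k} (hw : w ^ 2 + w + 1 = 0) {x y : k} (h : y ^ 2 = x ^ 3 - 1 / 12)
    (hD : D1 w x ≠ 0) :
    pi w hw (mkP x y h) = mkP (NX w x / D1 w x ^ 2) (y * NY w x / D1 w x ^ 3) (eq_D1 hw h hD) := by
  by_cases hx : x = 0
  · subst hx
    have hw0 : w ≠ 0 := by rintro rfl; simp at hw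
    have e : om w hw (mkP 0 y h) = mkP 0 y h := by
      rw [om_mkP, mkP_inj]; simp
    rw [pi_eq, e, e, sub_self, add_zero, mkP_inj]
    refine ⟨by simp [NX], ?_⟩
    simp [NY, D1]
    field_simp
    linear_combination 27 * y * omega_cube hw
  set xR := - w * (x ^ 3 - 1 / 3) / (3 * x ^ 2) with hxR
  obtain ⟨hR, e⟩ := sub_om_om hw h hx hxR rfl
  rw [pi_eq, e, ← sub_eq_zero, sub_eq_add_neg, neg_mkP]
  have hd' : D1 w x = (3 + w) * x ^ 3 - w / 3 := rfl
  refine add_eq_zero_of_line (l := 6 * x ^ 2 * y / D1 w x - 2 * (1 - w) * y / (3 * x))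
    (c := y - 6 * x ^ 3 * y / D1 w x + 2 * (1 - w) * y / 3) _ _ _
    ?_ ?_ ?_ ?_ ?_ ?_
  all_goals
    clear e hR
    generalize D1 w x = d at hd' hD ⊢
  · field_simp; ring
  · rw [hxR]; field_simp; grind
  · unfold NX NY; field_simp; grind
  · unfold NX; rw [hxR]; field_simp; grind
  · unfold NX; rw [hxR]; field_simp; grind
  · unfold NX; rw [hxR]; field_simp; grind

lemma pi_eq_zero {w : k} (hw : w ^ 2 + w + 1 = 0) {x y : k} (h : y ^ 2 = x ^ 3 - 1 / 12)
    (hD : D1 w x = 0) : pi w hw (mkP x y h) = 0 := by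
  have hx : x ≠ 0 := by
    rintro rfl
    simp [D1] at hD
    simp [hD] at hw
  obtain ⟨hR, e⟩ := sub_om_om hw h hx rfl rfl
  rw [pi_eq, e]
  have : mkP _ _ hR = - mkP x y h := by
    have hxx : - w * (x ^ 3 - 1 / 3) / (3 * x ^ 2) = x := by
      field_simp
      unfold D1 at hD
      linear_combination - 3 * hD
    rw [neg_mkP, mkP_inj]
    refine ⟨hxx, ?_⟩
    rw [hxx]; ring
  rw [this, add_neg_cancel]

end omega

end SumCubes

end

/-! ### The Kummer function of `π` on the sextic twist -/

noncomputable section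
open WeierstrassCurve

namespace SumCubes

section twist

variable {k : Type*} [Field k] [CharZero k]

/-- The constant term of the sextic twist `Y² = X³ - (5 + ω)/36`. -/
def B0 (w : k) : k := -(5 + w) / 36
/-- The function on the sextic twist with divisor `7(T) - 7(O)`, where
`T = ((1 - ω)/3, -ω/2)` generates the kernel of the dual of `π`. -/
def ff (w X Y : k) : k :=
  X ^ 2 * Y + (1 - 4 * w) / 3 * (X * Y) + (-2 + w) / 3 * Y + (-2 + w) * X ^ 3 + (2 - w) / 2 * X ^ 2
    + (4 + 5 * w) / 6 * X - (5 + 7 * w) / 18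
/-- Denominator of multiplication by `π` on the twist. -/
def Dt (w X : k) : k := (3 + w) * X ^ 3 + (1 - 4 * w) / 9
/-- Numerator of `X ∘ π` on the twist. -/
def NXt (w X : k) : k :=
  X * (X ^ 6 + (-7 + 49 * w) / 9 * X ^ 3 + (-7 - 21 * w) / 27)
/-- Numerator of `Y ∘ π / Y` on the twist. -/
def NYt (w X : k) : k :=
  X ^ 9 + (4 - 37 * w) / 3 * X ^ 6 + (53 + 75 * w) / 9 * X ^ 3 + (-37 - 20 * w) / 243

/-- Even part of the numerator `A1 + Y * B1` of `g₁`, the function on the twist with divisor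
`π*(T) - π*(O)` and denominator `Dt`. -/
def A1 (w X : k) : k := (1 - 4 * w) / 18 + (-1 + 4 * w) / 6 * X + (-2 + w) / 2 * X ^ 2 - X ^ 3
/-- Odd part of the numerator `A1 + Y * B1` of `g₁`. -/
def B1 (w X : k) : k := (-1 - 3 * w) / 3 + (-5 - w) / 3 * X + X ^ 2
/-- Even part of the numerator `A2 + Y * B2` of `g₂`, the function on the twist with divisor
`π*(2T) - π*(O)` and denominator `Dt`. -/
def A2 (w X : k) : k :=
  (-5 - w) / 18 + (-4 - 5 * w) / 6 * X + (-2 + w) / 2 * X ^ 2 + (1 + w) * X ^ 3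
/-- Odd part of the numerator `A2 + Y * B2` of `g₂`. -/
def B2 (w X : k) : k := (-2 + w) / 3 + (1 - 4 * w) / 3 * X + X ^ 2
/-- Even part of the numerator `A4 + Y * B4` of `g₄`, the function on the twist with divisor
`π*(4T) - π*(O)` and denominator `Dt`. -/
def A4 (w X : k) : k := (4 + 5 * w) / 18 + (5 + w) / 6 * X + (-2 + w) / 2 * X ^ 2 - w * X ^ 3
/-- Odd part of the numerator `A4 + Y * B4` of `g₄`. -/
def B4 (w X : k) : k := (3 + 2 * w) / 3 + (4 + 5 * w) / 3 * X + X ^ 2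

lemma pows {w : k} (hw : w ^ 2 + w + 1 = 0) : w ^ 2 = -w - 1 ∧ w ^ 3 = 1 ∧ w ^ 4 = w ∧
    w ^ 5 = -w - 1 ∧ w ^ 6 = 1 ∧ w ^ 7 = w ∧ w ^ 8 = - w - 1 ∧ w ^ 9 = 1 ∧ w ^ 10 = w ∧
    w ^ 11 = -w - 1 ∧ w ^ 12 = 1 ∧ w ^ 13 = w ∧ w ^ 14 = -w - 1 := by
  have h2 : w ^ 2 = - w - 1 := by linear_combination hw
  have h3 := omega_cube hw
  refine ⟨h2, h3, ?_, ?_, ?_, ?_, ?_, ?_, ?_, ?_, ?_, ?_, ?_⟩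
  · linear_combination w * h3
  · linear_combination w ^ 2 * h3 + h2
  · linear_combination (w ^ 3 + 1) * h3
  · linear_combination w * (w ^ 3 + 1) * h3
  · linear_combination w ^ 2 * (w ^ 3 + 1) * h3 + h2
  · linear_combination (w ^ 6 + w ^ 3 + 1) * h3
  · linear_combination w * (w ^ 6 + w ^ 3 + 1) * h3
  · linear_combination w ^ 2 * (w ^ 6 + w ^ 3 + 1) * h3 + h2
  · linear_combination (w ^ 9 + w ^ 6 + w ^ 3 + 1) * h3
  · linear_combination w * (w ^ 9 + w ^ 6 + w ^ 3 + 1) * h3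
  · linear_combination w ^ 2 * (w ^ 9 + w ^ 6 + w ^ 3 + 1) * h3 + h2

lemma ff_mul_neg {w X Y : k} (hw : w ^ 2 + w + 1 = 0) (h : Y ^ 2 = X ^ 3 + B0 w) :
    ff w X Y * ff w X (-Y) = -(X - (1 - w) / 3) ^ 7 := by
  obtain ⟨h2, h3, h4, h5, h6, h7, h8, h9, -⟩ := pows hw
  have e : ff w X Y * ff w X (-Y) = ((-2 + w) * X ^ 3 + (2 - w) / 2 * X ^ 2
    + (4 + 5 * w) / 6 * X - (5 + 7 * w) / 18) ^ 2
    - (X ^ 3 + B0 w) * (X ^ 2 + (1 - 4 * w) / 3 * X + (-2 + w) / 3) ^ 2 := by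
    rw [← h]; unfold ff; ring
  rw [e, B0]
  ring_nf
  simp only [h2, h3, h4, h5, h6, h7]
  ring

/-- Even part of the `2`-th power of `A1 + Y * B1`. -/
def pE2 (w X : k) : k :=
  (11 - 2 * w) / 162 + (8 + 3 * w) / 27 * X + (-11 + 2 * w) / 18 * X ^ 2
      + (-8 - 17 * w) / 9 * X ^ 3 + (25 + 5 * w) / 18 * X ^ 4 + (4 - 2 * w) * X ^ 5
      + (-7 - 2 * w) / 3 * X ^ 6 + 1 * X ^ 7
/-- Odd part of the `2`-th power of `A1 + Y * B1`. -/
def pO2 (w X : k) : k :=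
  (-13 - 11 * w) / 27 + (10 + 16 * w) / 9 * X + (25 + 5 * w) / 9 * X ^ 2
      + (12 + 8 * w) / 3 * X ^ 3 + (4 + 5 * w) / 3 * X ^ 4 + (-2) * X ^ 5
/-- Even part of the `3`-th power of `A1 + Y * B1`. -/
def pE3 (w X : k) : k :=
  (20 - 17 * w) / 486 + (-37 - 20 * w) / 162 * X + (-1 + 18 * w) / 18 * X ^ 2
      + (-8 - 3 * w) / 9 * X ^ 3 + (8 + 3 * w) / 2 * X ^ 4 + (-2 - 13 * w) / 3 * X ^ 5
      + (-17 + 26 * w) / 6 * X ^ 6 + (-5 - 1 * w) * X ^ 7 + (3 + 9 * w) / 2 * X ^ 8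
      + (12 + 7 * w) / 2 * X ^ 9 + (-3) * X ^ 10
/-- Odd part of the `3`-th power of `A1 + Y * B1`. -/
def pO3 (w X : k) : k :=
  (-37 - 20 * w) / 243 + (19 + 1 * w) / 27 * X + (-13 - 11 * w) / 27 * X ^ 2
      + (-16 - 6 * w) / 9 * X ^ 3 + (-55 + 10 * w) / 9 * X ^ 4 + (-48 - 32 * w) / 3 * X ^ 5
      + (-35 - 7 * w) / 3 * X ^ 6 + (8 - 4 * w) * X ^ 7 + (-2 - 1 * w) * X ^ 8 + 1 * X ^ 9
/-- Even part of the `6`-th power of `A1 + Y * B1`. -/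
def pE6 (w X : k) : k :=
  (-461 - 2335 * w) / 354294 + (-37 + 323 * w) / 19683 * X + (1097 + 6322 * w) / 39366 * X ^ 2
      + (4268 - 2736 * w) / 19683 * X ^ 3 + (-1741 - 4334 * w) / 4374 * X ^ 4
      + (234 - 2497 * w) / 729 * X ^ 5 + (-5681 + 17537 * w) / 2187 * X ^ 6
      + (761 + 365 * w) / 243 * X ^ 7 + (-5413 + 1051 * w) / 486 * X ^ 8
      + (-14521 - 46293 * w) / 729 * X ^ 9 + (-18439 - 5267 * w) / 243 * X ^ 10
      + (6078 + 2071 * w) / 81 * X ^ 11 + (119297 + 73138 * w) / 486 * X ^ 12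
      + (3622 + 2326 * w) / 9 * X ^ 13 + (1838 + 2539 * w) / 9 * X ^ 14
      + (-2209 - 705 * w) / 9 * X ^ 15 + (-1390 + 121 * w) / 6 * X ^ 16 + (75 - 34 * w) * X ^ 17
      + (-877 - 179 * w) / 18 * X ^ 18 + (-17 - 26 * w) * X ^ 19 + (5 - 2 * w) * X ^ 20
      + 1 * X ^ 21
/-- Odd part of the `6`-th power of `A1 + Y * B1`. -/
def pO6 (w X : k) : k :=
  (-360 - 37 * w) / 19683 + (720 + 74 * w) / 6561 * X + (-435 - 745 * w) / 2187 * X ^ 2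
      + (-22 + 3826 * w) / 2187 * X ^ 3 + (-807 - 223 * w) / 729 * X ^ 4
      + (5924 + 1756 * w) / 729 * X ^ 5 + (742 - 3752 * w) / 243 * X ^ 6
      + (5294 - 1310 * w) / 243 * X ^ 7 + (-2724 - 17 * w) / 81 * X ^ 8
      + (-7484 - 430 * w) / 243 * X ^ 9 + (-9704 - 3688 * w) / 81 * X ^ 10
      + (8480 + 2494 * w) / 27 * X ^ 11 + (1105 - 1221 * w) / 9 * X ^ 12
      + (728 + 616 * w) / 9 * X ^ 13 + (-492 - 776 * w) / 3 * X ^ 14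
      + (134 + 262 * w) / 3 * X ^ 15 + (187 + 36 * w) * X ^ 16 + (-62 + 14 * w) * X ^ 17
      + (24 + 13 * w) * X ^ 18 + (-6) * X ^ 19

lemma pw2 {w X Y : k} (hw : w ^ 2 + w + 1 = 0) (h : Y ^ 2 = X ^ 3 + B0 w) :
    (A1 w X + Y * B1 w X) * (A1 w X + Y * B1 w X) = pE2 w X + Y * pO2 w X := by
  obtain ⟨h2, h3, h4, -⟩ := pows hw
  have e1 : A1 w X * A1 w X + (X ^ 3 + B0 w) * (B1 w X * B1 w X) = pE2 w X := by
    simp only [A1, B1, pE2, pO2, B0]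
    ring_nf
    simp only [h2, h3, h4]
    ring
  have e2 : A1 w X * B1 w X + B1 w X * A1 w X = pO2 w X := by
    simp only [A1, B1, pE2, pO2]
    ring_nf
    simp only [h2, h3, h4]
    ring
  linear_combination e1 + Y * e2 + B1 w X * B1 w X * h

lemma pw3 {w X Y : k} (hw : w ^ 2 + w + 1 = 0) (h : Y ^ 2 = X ^ 3 + B0 w) :
    (pE2 w X + Y * pO2 w X) * (A1 w X + Y * B1 w X) = pE3 w X + Y * pO3 w X := by
  obtain ⟨h2, h3, h4, -⟩ := pows hw
  have e1 : pE2 w X * A1 w X + (X ^ 3 + B0 w) * (pO2 w X * B1 w X) = pE3 w X := by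
    simp only [A1, B1, pE2, pE3, pO2, pO3, B0]
    ring_nf
    simp only [h2, h3, h4]
    ring
  have e2 : pE2 w X * B1 w X + pO2 w X * A1 w X = pO3 w X := by
    simp only [A1, B1, pE2, pE3, pO2, pO3]
    ring_nf
    simp only [h2, h3, h4]
    ring
  linear_combination e1 + Y * e2 + pO2 w X * B1 w X * h

lemma pw6 {w X Y : k} (hw : w ^ 2 + w + 1 = 0) (h : Y ^ 2 = X ^ 3 + B0 w) :
    (pE3 w X + Y * pO3 w X) * (pE3 w X + Y * pO3 w X) = pE6 w X + Y * pO6 w X := by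
  obtain ⟨h2, h3, h4, -⟩ := pows hw
  have e1 : pE3 w X * pE3 w X + (X ^ 3 + B0 w) * (pO3 w X * pO3 w X) = pE6 w X := by
    simp only [pE3, pE6, pO3, pO6, B0]
    ring_nf
    simp only [h2, h3, h4]
    ring
  have e2 : pE3 w X * pO3 w X + pO3 w X * pE3 w X = pO6 w X := by
    simp only [pE3, pE6, pO3, pO6]
    ring_nf
    simp only [h2, h3, h4]
    ring
  linear_combination e1 + Y * e2 + pO3 w X * pO3 w X * h

set_option maxRecDepth 20000 in
/-- `f ∘ π` is the seventh power of `(A1 + Y * B1) / Dt`. -/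
lemma ff_pi_aux {w X Y : k} (hw : w ^ 2 + w + 1 = 0) (h : Y ^ 2 = X ^ 3 + B0 w) :
    (A1 w X + Y * B1 w X) ^ 7 =
    (-2 + w) * NXt w X ^ 3 * Dt w X + (2 - w) / 2 * NXt w X ^ 2 * Dt w X ^ 3
    + (4 + 5 * w) / 6 * NXt w X * Dt w X ^ 5 - (5 + 7 * w) / 18 * Dt w X ^ 7
    + Y * (NYt w X * (NXt w X ^ 2 + (1 - 4 * w) / 3 * NXt w X * Dt w X ^ 2
      + (-2 + w) / 3 * Dt w X ^ 4)) := by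
  obtain ⟨h2, h3, h4, h5, h6, h7, h8, h9, -⟩ := pows hw
  have e1 : pE6 w X * A1 w X + (X ^ 3 + B0 w) * (pO6 w X * B1 w X) =
      (-2 + w) * NXt w X ^ 3 * Dt w X + (2 - w) / 2 * NXt w X ^ 2 * Dt w X ^ 3
      + (4 + 5 * w) / 6 * NXt w X * Dt w X ^ 5 - (5 + 7 * w) / 18 * Dt w X ^ 7 := by
    simp only [pE6, pO6, A1, B1, NXt, Dt, B0]
    ring_nf
    simp only [h2, h3, h4, h5, h6, h7, h8]
    ring
  have e2 : pE6 w X * B1 w X + pO6 w X * A1 w X =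
      NYt w X * (NXt w X ^ 2 + (1 - 4 * w) / 3 * NXt w X * Dt w X ^ 2
      + (-2 + w) / 3 * Dt w X ^ 4) := by
    simp only [pE6, pO6, A1, B1, NXt, NYt, Dt]
    ring_nf
    simp only [h2, h3, h4, h5, h6, h7, h8]
    ring
  have e3 : (A1 w X + Y * B1 w X) ^ 7 =
      (((A1 w X + Y * B1 w X) * (A1 w X + Y * B1 w X)) * (A1 w X + Y * B1 w X)) *
      (((A1 w X + Y * B1 w X) * (A1 w X + Y * B1 w X)) * (A1 w X + Y * B1 w X)) *
      (A1 w X + Y * B1 w X) := by ring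
  rw [e3, pw2 hw h, pw3 hw h, pw6 hw h]
  linear_combination e1 + Y * e2 + pO6 w X * B1 w X * h

end twist

end SumCubes

end

noncomputable section
open WeierstrassCurve

namespace SumCubes

section twist2

variable {k : Type*} [Field k] [CharZero k]

lemma prod_quadratic (r0 r1 r2 x y z : k) :
    (r0 + r1 * x + r2 * x ^ 2) * (r0 + r1 * y + r2 * y ^ 2) * (r0 + r1 * z + r2 * z ^ 2) =
    r0 ^ 3 + r0 ^ 2 * r1 * (x + y + z)
      + r0 ^ 2 * r2 * ((x + y + z) ^ 2 - 2 * (x * y + x * z + y * z))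
      + r0 * r1 ^ 2 * (x * y + x * z + y * z)
      + r0 * r1 * r2 * ((x + y + z) * (x * y + x * z + y * z) - 3 * (x * y * z))
      + r0 * r2 ^ 2 * ((x * y + x * z + y * z) ^ 2 - 2 * (x + y + z) * (x * y * z))
      + r1 ^ 3 * (x * y * z) + r1 ^ 2 * r2 * (x + y + z) * (x * y * z)
      + r1 * r2 ^ 2 * (x * y + x * z + y * z) * (x * y * z) + r2 ^ 3 * (x * y * z) ^ 2 := by
  ring

set_option maxRecDepth 20000 in
/-- The product of the values of `f` at three collinear points is a seventh power. -/
lemma ff_line {w l c X₁ Y₁ X₂ Y₂ X₃ Y₃ : k} (hw : w ^ 2 + w + 1 = 0)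
    (h₁ : Y₁ ^ 2 = X₁ ^ 3 + B0 w) (h₂ : Y₂ ^ 2 = X₂ ^ 3 + B0 w) (h₃ : Y₃ ^ 2 = X₃ ^ 3 + B0 w)
    (l₁ : Y₁ = l * X₁ + c) (l₂ : Y₂ = l * X₂ + c) (l₃ : Y₃ = l * X₃ + c)
    (v₁ : X₁ + X₂ + X₃ = l ^ 2) (v₂ : X₁ * X₂ + X₁ * X₃ + X₂ * X₃ = -2 * l * c)
    (v₃ : X₁ * X₂ * X₃ = c ^ 2 - B0 w) :
    ff w X₁ Y₁ * ff w X₂ Y₂ * ff w X₃ Y₃ = (l * (1 - w) / 3 + c + w / 2) ^ 7 := by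
  obtain ⟨p2, p3, p4, p5, p6, p7, p8, p9, -⟩ := pows hw
  have key : ∀ X Y : k, Y ^ 2 = X ^ 3 + B0 w → Y = l * X + c → ff w X Y =
      ((-2 + w) / 3 * c - (5 + 7 * w) / 18 + (l - 2 + w) * (c ^ 2 - B0 w)) +
      ((-2 + w) / 3 * l + (1 - 4 * w) / 3 * c + (4 + 5 * w) / 6 + (l - 2 + w) * (2 * l * c)) * X +
      ((1 - 4 * w) / 3 * l + c + (2 - w) / 2 + (l - 2 + w) * l ^ 2) * X ^ 2 := by
    intro X Y h hl
    rw [hl] at h ⊢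
    unfold ff
    linear_combination - (l - 2 + w) * h
  rw [key _ _ h₁ l₁, key _ _ h₂ l₂, key _ _ h₃ l₃, prod_quadratic, v₁, v₂, v₃, B0]
  clear key h₁ h₂ h₃ l₁ l₂ l₃ v₁ v₂ v₃
  ring_nf
  simp only [p2, p3, p4, p5, p6, p7, p8, p9]
  ring

section

variable {w X Y : k} (hw : w ^ 2 + w + 1 = 0) (h : Y ^ 2 = X ^ 3 + B0 w)
include hw h

lemma g16 : (Y * B1 w X + A1 w X) * (Y * B1 w X - A1 w X) =
    NXt w X - (1 - w) / 3 * Dt w X ^ 2 := by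
  obtain ⟨h2, h3, h4, -⟩ := pows hw
  have : (X ^ 3 + B0 w) * B1 w X ^ 2 - A1 w X ^ 2 = NXt w X - (1 - w) / 3 * Dt w X ^ 2 := by
    simp only [A1, B1, NXt, Dt, B0]; ring_nf; simp only [h2, h3, h4]; ring
  linear_combination this + B1 w X ^ 2 * h

lemma g25 : (Y * B2 w X + A2 w X) * (Y * B2 w X - A2 w X) =
    NXt w X - (1 + 2 * w) / 3 * Dt w X ^ 2 := by
  obtain ⟨h2, h3, h4, -⟩ := pows hw
  have : (X ^ 3 + B0 w) * B2 w X ^ 2 - A2 w X ^ 2 = NXt w X - (1 + 2 * w) / 3 * Dt w X ^ 2 := by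
    simp only [A2, B2, NXt, Dt, B0]; ring_nf; simp only [h2, h3, h4]; ring
  linear_combination this + B2 w X ^ 2 * h

lemma g43 : (Y * B4 w X + A4 w X) * (Y * B4 w X - A4 w X) =
    NXt w X - (-2 - w) / 3 * Dt w X ^ 2 := by
  obtain ⟨h2, h3, h4, -⟩ := pows hw
  have : (X ^ 3 + B0 w) * B4 w X ^ 2 - A4 w X ^ 2 = NXt w X - (-2 - w) / 3 * Dt w X ^ 2 := by
    simp only [A4, B4, NXt, Dt, B0]; ring_nf; simp only [h2, h3, h4]; ring
  linear_combination this + B4 w X ^ 2 * h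

/-- The tangent line at `T` pulls back to `g₁² g₅`. -/
lemma tan1 : (Y * B1 w X + A1 w X) ^ 2 * (Y * B2 w X - A2 w X) =
    Y * NYt w X - NXt w X * Dt w X - (-2 - w) / 6 * Dt w X ^ 3 := by
  obtain ⟨h2, h3, h4, -⟩ := pows hw
  have e1 : 2 * A1 w X * B1 w X * B2 w X * (X ^ 3 + B0 w)
      - (A1 w X ^ 2 + B1 w X ^ 2 * (X ^ 3 + B0 w)) * A2 w X =
    - NXt w X * Dt w X - (-2 - w) / 6 * Dt w X ^ 3 := by
    simp only [A1, B1, A2, B2, NXt, Dt, B0]; ring_nf; simp only [h2, h3, h4]; ring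
  have e2 : (A1 w X ^ 2 + B1 w X ^ 2 * (X ^ 3 + B0 w)) * B2 w X - 2 * A1 w X * B1 w X * A2 w X =
      NYt w X := by
    simp only [A1, B1, A2, B2, NYt, B0]; ring_nf; simp only [h2, h3, h4]; ring
  linear_combination e1 + Y * e2 + (2 * A1 w X * B1 w X * B2 w X - B1 w X ^ 2 * A2 w X
    + Y * B1 w X ^ 2 * B2 w X) * h

/-- The tangent line at `2T` pulls back to `g₂² g₃`. -/
lemma tan2 : (Y * B2 w X + A2 w X) ^ 2 * (Y * B4 w X - A4 w X) =
    Y * NYt w X + (1 + w) * NXt w X * Dt w X - (-2 - w) / 6 * Dt w X ^ 3 := by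
  obtain ⟨h2, h3, h4, -⟩ := pows hw
  have e1 : 2 * A2 w X * B2 w X * B4 w X * (X ^ 3 + B0 w)
      - (A2 w X ^ 2 + B2 w X ^ 2 * (X ^ 3 + B0 w)) * A4 w X =
    (1 + w) * NXt w X * Dt w X - (-2 - w) / 6 * Dt w X ^ 3 := by
    simp only [A2, B2, A4, B4, NXt, Dt, B0]; ring_nf; simp only [h2, h3, h4]; ring
  have e2 : (A2 w X ^ 2 + B2 w X ^ 2 * (X ^ 3 + B0 w)) * B4 w X - 2 * A2 w X * B2 w X * A4 w X =
      NYt w X := by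
    simp only [A2, B2, A4, B4, NYt, B0]; ring_nf; simp only [h2, h3, h4]; ring
  linear_combination e1 + Y * e2 + (2 * A2 w X * B2 w X * B4 w X - B2 w X ^ 2 * A4 w X
    + Y * B2 w X ^ 2 * B4 w X) * h

end

lemma comb0 {w X : k} (hw : w ^ 2 + w + 1 = 0) :
    (38 + 36 * w) / 49 * A1 w X + (-36 + 2 * w) / 49 * A2 w X + (-2 - 38 * w) / 49 * A4 w X
      + (48 + 30 * w) / 49 * Dt w X = 1 := by
  obtain ⟨h2, h3, h4, -⟩ := pows hw
  simp only [A1, A2, A4, Dt]; ring_nf; simp only [h2, h3, h4]; ring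

lemma comb1 {w X : k} (hw : w ^ 2 + w + 1 = 0) :
    (-10 - 8 * w) / 21 * A1 w X + (2 + 10 * w) / 21 * A2 w X + (8 - 2 * w) / 21 * A4 w X = X := by
  obtain ⟨h2, h3, h4, -⟩ := pows hw
  simp only [A1, A2, A4]; ring_nf; simp only [h2, h3, h4]; ring

lemma combB {w X : k} (hw : w ^ 2 + w + 1 = 0) :
    (2 + 3 * w) / 7 * B1 w X + (-3 - w) / 7 * B2 w X + (1 - 2 * w) / 7 * B4 w X = 1 := by
  obtain ⟨h2, h3, h4, -⟩ := pows hw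
  simp only [B1, B2, B4]; ring_nf; simp only [h2, h3, h4]; ring

end twist2

end SumCubes

end

/-! ### Division by `π` -/

noncomputable section
open WeierstrassCurve

namespace SumCubes

section mapP

variable {k k' : Type*} [Field k'] [CharZero k'] [DecidableEq k'] [Field k]
  [CharZero k] [DecidableEq k]

/-- The homomorphism on points induced by a field homomorphism. -/
def mapP (φ : k →+* k') : Pt k →+ Pt k' :=
  WeierstrassCurve.Affine.Point.map (W' := E) (S := ℚ) φ.toRatAlgHom

lemma map_eqn (φ : k →+* k') {x y : k} (h : y ^ 2 = x ^ 3 - 1 / 12) :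
    (φ y) ^ 2 = (φ x) ^ 3 - 1 / 12 := by
  rw [← map_pow, h]; simp [map_ofNat φ 12]

lemma mapP_mkP (φ : k →+* k') {x y : k} (h : y ^ 2 = x ^ 3 - 1 / 12) :
    mapP φ (mkP x y h) = mkP (φ x) (φ y) (map_eqn φ h) := rfl

lemma mapP_injective (φ : k →+* k') : Function.Injective (mapP φ) :=
  WeierstrassCurve.Affine.Point.map_injective (W' := E) (S := ℚ) φ.toRatAlgHom

lemma mapP_om (φ : k →+* k') {w : k} {w' : k'} (hw : w ^ 2 + w + 1 = 0) (hw' : w' ^ 2 + w' + 1 = 0)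
    (hφ : φ w = w') (P : Pt k) : mapP φ (om w hw P) = om w' hw' (mapP φ P) := by
  subst hφ
  rcases eq_zero_or_mkP P with rfl | ⟨x, y, h, rfl⟩
  · simp
  · rw [om_mkP, mapP_mkP, mapP_mkP, om_mkP, mkP_inj]
    simp

lemma mapP_pi (φ : k →+* k') {w : k} {w' : k'} (hw : w ^ 2 + w + 1 = 0) (hw' : w' ^ 2 + w' + 1 = 0)
    (hφ : φ w = w') (P : Pt k) : mapP φ (pi w hw P) = pi w' hw' (mapP φ P) := by
  rw [pi_apply, pi_apply, map_add, map_nsmul, mapP_om φ hw hw' hφ]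

end mapP

section kernel

variable {k : Type*} [Field k] [CharZero k] 

/-- The value at a point of `y² = x³ - 1/12` of the pull-back of `f` along
`(x, y) ↦ (θ²x, θ³y)`. -/
def fP (w θ : k) : Pt k → k
  | .zero => 1
  | .some x y _ => ff w (θ ^ 2 * x) (θ ^ 3 * y)

lemma fP_mkP (w θ : k) {x y : k} (h : y ^ 2 = x ^ 3 - 1 / 12) :
    fP w θ (mkP x y h) = ff w (θ ^ 2 * x) (θ ^ 3 * y) := rfl

lemma twist_eq {w θ x y : k} (hθ : θ ^ 6 = (5 + w) / 3) (h : y ^ 2 = x ^ 3 - 1 / 12) :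
    (θ ^ 3 * y) ^ 2 = (θ ^ 2 * x) ^ 3 + B0 w := by
  unfold B0
  linear_combination θ ^ 6 * h - 1 / 12 * hθ

lemma theta_ne {w θ : k} (hw : w ^ 2 + w + 1 = 0) (hθ : θ ^ 6 = (5 + w) / 3) : θ ≠ 0 := by
  rintro rfl
  have h5 : w = -5 := by linear_combination -3 * hθ
  rw [h5] at hw; norm_num at hw

lemma Dt_eq {w θ : k} (x : k) (hw : w ^ 2 + w + 1 = 0) (hθ : θ ^ 6 = (5 + w) / 3) :
    Dt w (θ ^ 2 * x) = θ ^ 6 * D1 w x := by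
  unfold Dt D1
  linear_combination w / 3 * hθ + 1 / 9 * hw

lemma NXt_eq {w θ : k} (x : k) (hw : w ^ 2 + w + 1 = 0) (hθ : θ ^ 6 = (5 + w) / 3) :
    NXt w (θ ^ 2 * x) = θ ^ 14 * NX w x := by
  have e : NXt w (θ ^ 2 * x) = θ ^ 2 * (x * ((θ ^ 6) ^ 2 * x ^ 6
    + (-7 + 49 * w) / 9 * (θ ^ 6 * x ^ 3) + (-7 - 21 * w) / 27)) := by unfold NXt; ring
  have e' : θ ^ 14 = θ ^ 2 * (θ ^ 6) ^ 2 := by ring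
  rw [e, e', hθ]
  unfold NX
  grind

lemma NYt_eq {w θ : k} (x : k) (hw : w ^ 2 + w + 1 = 0) (hθ : θ ^ 6 = (5 + w) / 3) :
    NYt w (θ ^ 2 * x) = θ ^ 18 * NY w x := by
  have e : NYt w (θ ^ 2 * x) = (θ ^ 6) ^ 3 * x ^ 9 + (4 - 37 * w) / 3 * ((θ ^ 6) ^ 2 * x ^ 6)
    + (53 + 75 * w) / 9 * (θ ^ 6 * x ^ 3) + (-37 - 20 * w) / 243 := by unfold NYt; ring
  have e' : θ ^ 18 = (θ ^ 6) ^ 3 := by ring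
  rw [e, e', hθ]
  unfold NY
  grind

/-- The seventh root of `f ∘ π`. -/
def gg (w X Y : k) : k := (Y * B1 w X + A1 w X) / Dt w X

lemma ff_pi {w X Y : k} (hw : w ^ 2 + w + 1 = 0) (h : Y ^ 2 = X ^ 3 + B0 w) (hD : Dt w X ≠ 0) :
    ff w (NXt w X / Dt w X ^ 2) (Y * NYt w X / Dt w X ^ 3) = gg w X Y ^ 7 := by
  have := ff_pi_aux hw h
  unfold gg
  rw [div_pow, add_comm (Y * B1 w X), this]
  unfold ff
  field_simp
  ring

lemma fP_pi [DecidableEq k] {w θ x y : k} (hw : w ^ 2 + w + 1 = 0) (hθ : θ ^ 6 = (5 + w) / 3)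
    (h : y ^ 2 = x ^ 3 - 1 / 12) (hD : D1 w x ≠ 0) :
    fP w θ (pi w hw (mkP x y h)) = gg w (θ ^ 2 * x) (θ ^ 3 * y) ^ 7 := by
  have h0 := theta_ne hw hθ
  have hDt : Dt w (θ ^ 2 * x) ≠ 0 := by
    rw [Dt_eq x hw hθ]; exact mul_ne_zero (pow_ne_zero _ h0) hD
  rw [pi_mkP hw h hD, fP_mkP, ← ff_pi hw (twist_eq hθ h) hDt, Dt_eq x hw hθ, NXt_eq x hw hθ,
    NYt_eq x hw hθ]
  congr 1 <;> field_simp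

/-- `g₅` in terms of `g₁` and the coordinates of `π • Q`. -/
def G5 (w b X Y : k) : k := (Y - X - (-2 - w) / 6) / b ^ 2
/-- `g₂` in terms of `g₁` and the coordinates of `π • Q`. -/
def G2 (w b X Y : k) : k := (X - (1 + 2 * w) / 3) / G5 w b X Y
/-- `g₃` in terms of `g₁` and the coordinates of `π • Q`. -/
def G3 (w b X Y : k) : k := (Y + (1 + w) * X - (-2 - w) / 6) / G2 w b X Y ^ 2
/-- `g₄` in terms of `g₁` and the coordinates of `π • Q`. -/
def G4 (w b X Y : k) : k := (X - (-2 - w) / 3) / G3 w b X Y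
/-- `g₆` in terms of `g₁` and the coordinates of `π • Q`. -/
def G6 (w b X : k) : k := (X - (1 - w) / 3) / b

/-- `1 / D` in terms of `g₁` and the coordinates of `π • Q`. -/
def RD (w b X Y : k) : k :=
  (38 + 36 * w) / 98 * (b - G6 w b X) + (-36 + 2 * w) / 98 * (G2 w b X Y - G5 w b X Y)
    + (-2 - 38 * w) / 98 * (G4 w b X Y - G3 w b X Y) + (48 + 30 * w) / 49
/-- `X / D` in terms of `g₁` and the coordinates of `π • Q`. -/
def RX (w b X Y : k) : k :=
  (-10 - 8 * w) / 42 * (b - G6 w b X) + (2 + 10 * w) / 42 * (G2 w b X Y - G5 w b X Y)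
    + (8 - 2 * w) / 42 * (G4 w b X Y - G3 w b X Y)
/-- `Y / D` in terms of `g₁` and the coordinates of `π • Q`. -/
def RY (w b X Y : k) : k :=
  (2 + 3 * w) / 14 * (b + G6 w b X) + (-3 - w) / 14 * (G2 w b X Y + G5 w b X Y)
    + (1 - 2 * w) / 14 * (G4 w b X Y + G3 w b X Y)

lemma map_R {k' : Type*} [Field k'] [CharZero k'] (φ : k →+* k') (w b X Y : k) :
    φ (RD w b X Y) = RD (φ w) (φ b) (φ X) (φ Y) ∧ φ (RX w b X Y) = RX (φ w) (φ b) (φ X) (φ Y) ∧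
    φ (RY w b X Y) = RY (φ w) (φ b) (φ X) (φ Y) := by
  have hn (n : ℕ) [n.AtLeastTwo] : φ (OfNat.ofNat n) = OfNat.ofNat n := map_ofNat φ n
  simp [RD, RX, RY, G4, G3, G2, G5, G6, hn]

/-- A point `Q` of the twist is determined by `π • Q` and the value of `g₁` at `Q`. -/
lemma invert {w X Y b X' Y' : k} (hw : w ^ 2 + w + 1 = 0) (h : Y ^ 2 = X ^ 3 + B0 w)
    (hD : Dt w X ≠ 0) (hX' : X' = NXt w X / Dt w X ^ 2) (hY' : Y' = Y * NYt w X / Dt w X ^ 3)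
    (hb : gg w X Y = b) (h1 : X' ≠ (1 - w) / 3) (h2 : X' ≠ (1 + 2 * w) / 3)
    (h4 : X' ≠ (-2 - w) / 3) :
    1 / Dt w X = RD w b X' Y' ∧ X / Dt w X = RX w b X' Y' ∧ Y / Dt w X = RY w b X' Y' := by
  have e16 := g16 hw h
  have e25 := g25 hw h
  have e43 := g43 hw h
  have t1 := tan1 hw h
  have t2 := tan2 hw h
  have c0 := comb0 (X := X) hw
  have c1 := comb1 (X := X) hw
  have cB := combB (X := X) hw
  unfold gg at hb
  set D := Dt w X with hDD
  set p1 := Y * B1 w X + A1 w X with hp1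
  set p6 := Y * B1 w X - A1 w X with hp6
  set p2 := Y * B2 w X + A2 w X with hp2
  set p5 := Y * B2 w X - A2 w X with hp5
  set p4 := Y * B4 w X + A4 w X with hp4
  set p3 := Y * B4 w X - A4 w X with hp3
  have f16 : p1 * p6 = (X' - (1 - w) / 3) * D ^ 2 := by rw [e16, hX']; field_simp
  have f25 : p2 * p5 = (X' - (1 + 2 * w) / 3) * D ^ 2 := by rw [e25, hX']; field_simp
  have f43 : p4 * p3 = (X' - (-2 - w) / 3) * D ^ 2 := by rw [e43, hX']; field_simp
  have n16 : p1 * p6 ≠ 0 := by rw [f16]; exact mul_ne_zero (sub_ne_zero.2 h1) (pow_ne_zero _ hD)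
  have n25 : p2 * p5 ≠ 0 := by rw [f25]; exact mul_ne_zero (sub_ne_zero.2 h2) (pow_ne_zero _ hD)
  have n43 : p4 * p3 ≠ 0 := by rw [f43]; exact mul_ne_zero (sub_ne_zero.2 h4) (pow_ne_zero _ hD)
  have n1 := left_ne_zero_of_mul n16
  have n2 := left_ne_zero_of_mul n25
  have n5 := right_ne_zero_of_mul n25
  have n3 := right_ne_zero_of_mul n43
  have q6 : G6 w b X' = p6 / D := by
    unfold G6; rw [← hb]; field_simp; linear_combination - 3 * f16
  have q5 : G5 w b X' Y' = p5 / D := by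
    unfold G5; rw [← hb, hX', hY']; field_simp; linear_combination - 6 * t1
  have q2 : G2 w b X' Y' = p2 / D := by
    unfold G2; rw [q5]; field_simp; linear_combination - 3 * f25
  have q3 : G3 w b X' Y' = p3 / D := by
    unfold G3; rw [q2, hX', hY']; field_simp; linear_combination - 6 * t2
  have q4 : G4 w b X' Y' = p4 / D := by
    unfold G4; rw [q3]; field_simp; linear_combination - 3 * f43
  refine ⟨?_, ?_, ?_⟩
  · unfold RD; rw [q2, q3, q4, q5, q6, ← hb, hp1, hp2, hp3, hp4, hp5, hp6]
    field_simp
    linear_combination - 4802 * c0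
  · unfold RX; rw [q2, q3, q4, q5, q6, ← hb, hp1, hp2, hp3, hp4, hp5, hp6]
    field_simp
    linear_combination - 42 * c1
  · unfold RY; rw [q2, q3, q4, q5, q6, ← hb, hp1, hp2, hp3, hp4, hp5, hp6]
    field_simp
    linear_combination - 14 * Y * cB

end kernel

end SumCubes

end

noncomputable section
open WeierstrassCurve

namespace SumCubes

section closed

lemma lin_ne {k : Type*} [Field k] [CharZero k] {w : k} (hw : w ^ 2 + w + 1 = 0) (a b : ℤ)
    (h : a * a - a * b + b * b ≠ 0) : (a : k) + b * w ≠ 0 := by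
  intro h0
  apply h
  have : ((a * a - a * b + b * b : ℤ) : k) = 0 := by
    push_cast
    linear_combination ((a : k) + b * (-1 - w)) * h0 + b ^ 2 * hw
  exact_mod_cast this

lemma three_add_ne {k : Type*} [Field k] [CharZero k] {w : k} (hw : w ^ 2 + w + 1 = 0) :
    3 + w ≠ 0 := by
  have := lin_ne hw 3 1 (by norm_num)
  push_cast at this; rwa [one_mul] at this

lemma omega_ne {k : Type*} [Field k] [CharZero k] {w : k} (hw : w ^ 2 + w + 1 = 0) : w ≠ 0 := by
  rintro rfl; simp at hw

variable {Ω : Type*} [Field Ω] [CharZero Ω] [DecidableEq Ω] [IsAlgClosed Ω]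

lemma exists_y (x : Ω) : ∃ y : Ω, y ^ 2 = x ^ 3 - 1 / 12 :=
  IsAlgClosed.exists_pow_nat_eq _ (by norm_num)

lemma exists_kernel {w : Ω} (hw : w ^ 2 + w + 1 = 0) :
    ∃ S : Pt Ω, S ≠ 0 ∧ pi w hw S = 0 := by
  obtain ⟨x, hx⟩ := IsAlgClosed.exists_pow_nat_eq (w / (3 * (3 + w))) (show 0 < 3 by norm_num)
  obtain ⟨y, hy⟩ := exists_y x
  refine ⟨mkP x y hy, mkP_ne_zero hy, pi_eq_zero hw hy ?_⟩
  have := three_add_ne hw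
  unfold D1
  rw [hx]; field_simp; ring

lemma pi_surjective {w : Ω} (hw : w ^ 2 + w + 1 = 0) {x y : Ω} (h : y ^ 2 = x ^ 3 - 1 / 12) :
    ∃ Q : Pt Ω, pi w hw Q = mkP x y h := by
  obtain ⟨u, hu⟩ : ∃ u : Ω, NX w u - x * D1 w u ^ 2 = 0 := by
    let p : Polynomial Ω := .X * (.X ^ 6 + .C ((1 + 12 * w) / 3) * .X ^ 3 - .C ((2 + 3 * w) / 9))
      - .C x * (.C (3 + w) * .X ^ 3 - .C (w / 3)) ^ 2
    have hp : p.degree = 7 := by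
      have : p = .X ^ 7 + (.C ((1 + 12 * w) / 3) * .X ^ 4 - .C ((2 + 3 * w) / 9) * .X
        - .C x * (.C (3 + w) * .X ^ 3 - .C (w / 3)) ^ 2) := by simp only [p]; ring
      rw [this]
      compute_degree!
    obtain ⟨u, hu⟩ := IsAlgClosed.exists_root p (by rw [hp]; norm_num)
    refine ⟨u, ?_⟩
    simpa [p, NX, D1, Polynomial.IsRoot] using hu
  obtain ⟨v, hv⟩ := exists_y u
  have hD : D1 w u ≠ 0 := by
    intro hD
    rw [hD] at hu
    have hN : NX w u = 0 := by linear_combination hu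
    have hu0 : u ≠ 0 := by
      rintro rfl
      simp [D1] at hD
      exact omega_ne hw hD
    unfold NX at hN
    have h1 := (mul_eq_zero.1 hN).resolve_left hu0
    unfold D1 at hD
    have h2 := lin_ne hw (-27) 0 (by norm_num)
    grind
  have e := pi_mkP hw hv hD
  have ex : NX w u / D1 w u ^ 2 = x := by
    field_simp
    linear_combination hu
  have ey := eq_D1 hw hv hD
  rw [ex, ← h] at ey
  rcases sq_eq_sq_iff_eq_or_eq_neg.1 ey with h1 | h1
  · exact ⟨_, e.trans (mkP_inj.2 ⟨ex, h1⟩)⟩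
  · refine ⟨- mkP u v hv, ?_⟩
    rw [map_neg, e, neg_mkP, mkP_inj]
    exact ⟨ex, by rw [h1, neg_neg]⟩

lemma exists_pi_eq_aux {k : Type*} [Field k] [CharZero k] [DecidableEq k] (φ : k →+* Ω) {w θ : k}
    (hw : w ^ 2 + w + 1 = 0) (hθ : θ ^ 6 = (5 + w) / 3) {x y b : k} (h : y ^ 2 = x ^ 3 - 1 / 12)
    (h1 : θ ^ 2 * x ≠ (1 - w) / 3) (h2 : θ ^ 2 * x ≠ (1 + 2 * w) / 3)
    (h4 : θ ^ 2 * x ≠ (-2 - w) / 3) (hf : fP w θ (mkP x y h) = b ^ 7) :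
    ∃ S : Pt k, pi w hw S = mkP x y h := by
  have hφ : Function.Injective φ := φ.injective
  have hn (n : ℕ) [n.AtLeastTwo] : φ (OfNat.ofNat n) = OfNat.ofNat n := map_ofNat φ n
  have hwΩ : (φ w) ^ 2 + φ w + 1 = 0 := by
    have := congrArg φ hw; simpa using this
  have hθΩ : (φ θ) ^ 6 = (5 + φ w) / 3 := by
    have := congrArg φ hθ; simpa [hn] using this
  have h1Ω : φ θ ^ 2 * φ x ≠ (1 - φ w) / 3 := by
    intro h0; apply h1; apply hφ; simpa [hn] using h0
  have h2Ω : φ θ ^ 2 * φ x ≠ (1 + 2 * φ w) / 3 := by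
    intro h0; apply h2; apply hφ; simpa [hn] using h0
  have h4Ω : φ θ ^ 2 * φ x ≠ (-2 - φ w) / 3 := by
    intro h0; apply h4; apply hφ; simpa [hn] using h0
  have hθ0 := theta_ne hwΩ hθΩ
  have hfΩ : fP (φ w) (φ θ) (mapP φ (mkP x y h)) = φ b ^ 7 := by
    rw [← map_pow, ← hf, mapP_mkP, fP_mkP, fP_mkP]
    simp [ff, hn]
  -- data at a preimage of `P`
  have data : ∀ Q : Pt Ω, pi (φ w) hwΩ Q = mapP φ (mkP x y h) → ∃ u v, ∃ huv : v ^ 2 = u ^ 3 - 1 / 12,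
      Q = mkP u v huv ∧ gg (φ w) (φ θ ^ 2 * u) (φ θ ^ 3 * v) ^ 7 = φ b ^ 7 ∧
      u = RX (φ w) (gg (φ w) (φ θ ^ 2 * u) (φ θ ^ 3 * v)) (φ θ ^ 2 * φ x) (φ θ ^ 3 * φ y) /
        RD (φ w) (gg (φ w) (φ θ ^ 2 * u) (φ θ ^ 3 * v)) (φ θ ^ 2 * φ x) (φ θ ^ 3 * φ y) / φ θ ^ 2 ∧
      v = RY (φ w) (gg (φ w) (φ θ ^ 2 * u) (φ θ ^ 3 * v)) (φ θ ^ 2 * φ x) (φ θ ^ 3 * φ y) /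
        RD (φ w) (gg (φ w) (φ θ ^ 2 * u) (φ θ ^ 3 * v)) (φ θ ^ 2 * φ x) (φ θ ^ 3 * φ y) / φ θ ^ 3 := by
    intro Q hQ
    rcases eq_zero_or_mkP Q with rfl | ⟨u, v, huv, rfl⟩
    · rw [map_zero, mapP_mkP] at hQ
      exact absurd hQ.symm (mkP_ne_zero _)
    refine ⟨u, v, huv, rfl, ?_⟩
    have hD : D1 (φ w) u ≠ 0 := by
      intro hD
      rw [pi_eq_zero hwΩ huv hD, mapP_mkP] at hQ
      exact absurd hQ.symm (mkP_ne_zero _)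
    have e := fP_pi hwΩ hθΩ huv hD
    rw [hQ, hfΩ] at e
    refine ⟨e.symm, ?_⟩
    rw [pi_mkP hwΩ huv hD, mapP_mkP, mkP_inj] at hQ
    have hDt : Dt (φ w) (φ θ ^ 2 * u) ≠ 0 := by
      rw [Dt_eq u hwΩ hθΩ]; exact mul_ne_zero (pow_ne_zero _ hθ0) hD
    obtain ⟨r0, r1, r2⟩ := invert (X' := φ θ ^ 2 * φ x) (Y' := φ θ ^ 3 * φ y) hwΩ
      (twist_eq hθΩ huv) hDt
      (by rw [Dt_eq u hwΩ hθΩ, NXt_eq u hwΩ hθΩ, ← hQ.1]; field_simp)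
      (by rw [Dt_eq u hwΩ hθΩ, NYt_eq u hwΩ hθΩ, ← hQ.2]; field_simp) rfl h1Ω h2Ω h4Ω
    rw [← r0, ← r1, ← r2]
    generalize Dt (φ w) (φ θ ^ 2 * u) = d at hDt ⊢
    constructor <;> field_simp
  obtain ⟨Q, hQ⟩ := pi_surjective hwΩ (map_eqn φ h)
  rw [← mapP_mkP] at hQ
  obtain ⟨S0, hS0, hpS0⟩ := exists_kernel hwΩ
  have hord : addOrderOf S0 = 7 := by
    have : Fact (Nat.Prime 7) := ⟨by norm_num⟩
    apply addOrderOf_eq_prime _ hS0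
    rw [← pibar_pi hwΩ, hpS0, map_zero]
  have hQj (j : ℕ) : pi (φ w) hwΩ (Q + j • S0) = mapP φ (mkP x y h) := by
    rw [map_add, map_nsmul, hpS0, smul_zero, add_zero, hQ]
  choose u v huv hQuv hpow hu hv using fun j => data _ (hQj j)
  let G : ℕ → Ω := fun j => gg (φ w) (φ θ ^ 2 * u j) (φ θ ^ 3 * v j)
  have hinj : Set.InjOn G (Finset.range 7 : Finset ℕ) := by
    intro i hi j hj hij
    have hui : u i = u j := by rw [hu i, hu j]; simp only [G] at hij; rw [hij]
    have hvi : v i = v j := by rw [hv i, hv j]; simp only [G] at hij; rw [hij]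
    have : Q + i • S0 = Q + j • S0 := by rw [hQuv i, hQuv j, mkP_inj]; exact ⟨hui, hvi⟩
    have := add_left_cancel this
    rw [nsmul_inj_mod, hord] at this
    simp at hi hj
    rwa [Nat.mod_eq_of_lt hi, Nat.mod_eq_of_lt hj] at this
  have hsub : (Finset.range 7).image G ⊆ (Polynomial.nthRoots 7 (φ b ^ 7)).toFinset := by
    intro z hz
    obtain ⟨j, -, rfl⟩ := Finset.mem_image.1 hz
    rw [Multiset.mem_toFinset, Polynomial.mem_nthRoots (by norm_num)]
    exact hpow j
  have heq := Finset.eq_of_subset_of_card_le hsub (by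
    rw [Finset.card_image_of_injOn hinj, Finset.card_range]
    exact (Multiset.toFinset_card_le _).trans (Polynomial.card_nthRoots _ _))
  have hb : φ b ∈ (Finset.range 7).image G := by
    rw [heq, Multiset.mem_toFinset, Polynomial.mem_nthRoots (by norm_num)]
  obtain ⟨j, -, hj⟩ := Finset.mem_image.1 hb
  have hj' : gg (φ w) (φ θ ^ 2 * u j) (φ θ ^ 3 * v j) = φ b := hj
  obtain ⟨m0, m1, m2⟩ := map_R φ w b (θ ^ 2 * x) (θ ^ 3 * y)
  simp only [map_mul, map_pow] at m0 m1 m2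
  have hu' := hu j
  have hv' := hv j
  rw [hj', ← m0, ← m1, ← map_pow, ← map_div₀, ← map_div₀] at hu'
  rw [hj', ← m0, ← m2, ← map_pow, ← map_div₀, ← map_div₀] at hv'
  set u' := RX w b (θ ^ 2 * x) (θ ^ 3 * y) / RD w b (θ ^ 2 * x) (θ ^ 3 * y) / θ ^ 2
  set v' := RY w b (θ ^ 2 * x) (θ ^ 3 * y) / RD w b (θ ^ 2 * x) (θ ^ 3 * y) / θ ^ 3
  have huv' : v' ^ 2 = u' ^ 3 - 1 / 12 := by
    apply hφ
    have := huv j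
    rw [hu', hv'] at this
    simpa [hn] using this
  refine ⟨mkP u' v' huv', mapP_injective φ ?_⟩
  rw [mapP_pi φ hw hwΩ rfl, ← hQj j, hQuv j, mapP_mkP]
  congr 1
  rw [mkP_inj]
  exact ⟨hu'.symm, hv'.symm⟩

/-- If `f(P)` is a seventh power then `P` is divisible by `π`. -/
lemma exists_pi_eq {k : Type*} [Field k] [CharZero k] [DecidableEq k] {w θ : k}
    (hw : w ^ 2 + w + 1 = 0) (hθ : θ ^ 6 = (5 + w) / 3) {x y b : k} (h : y ^ 2 = x ^ 3 - 1 / 12)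
    (h1 : θ ^ 2 * x ≠ (1 - w) / 3) (h2 : θ ^ 2 * x ≠ (1 + 2 * w) / 3)
    (h4 : θ ^ 2 * x ≠ (-2 - w) / 3) (hf : fP w θ (mkP x y h) = b ^ 7) :
    ∃ S : Pt k, pi w hw S = mkP x y h := by
  classical
  exact exists_pi_eq_aux (algebraMap k (AlgebraicClosure k)) hw hθ h h1 h2 h4 hf

end closed

end SumCubes

end

/-! ### The Kummer map on the points fixed by `τ` -/

noncomputable section
open WeierstrassCurve

namespace SumCubes

section kappa

/-- Equality up to non-zero seventh powers. -/
def Sim {k : Type*} [Field k] (a b : k) : Prop := ∃ u : k, u ≠ 0 ∧ a = b * u ^ 7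

namespace Sim
variable {k : Type*} [Field k] {a b c d : k}

lemma refl (a : k) : Sim a a := ⟨1, one_ne_zero, by simp⟩

lemma symm (h : Sim a b) : Sim b a := by
  obtain ⟨u, hu, rfl⟩ := h
  exact ⟨u⁻¹, inv_ne_zero hu, by field_simp⟩

lemma trans (h : Sim a b) (h' : Sim b c) : Sim a c := by
  obtain ⟨u, hu, rfl⟩ := h
  obtain ⟨v, hv, rfl⟩ := h'
  exact ⟨v * u, mul_ne_zero hv hu, by ring⟩

lemma mul (h : Sim a b) (h' : Sim c d) : Sim (a * c) (b * d) := by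
  obtain ⟨u, hu, rfl⟩ := h
  obtain ⟨v, hv, rfl⟩ := h'
  exact ⟨u * v, mul_ne_zero hu hv, by ring⟩

lemma pow (h : Sim a b) (n : ℕ) : Sim (a ^ n) (b ^ n) := by
  obtain ⟨u, hu, rfl⟩ := h
  exact ⟨u ^ n, pow_ne_zero _ hu, by ring⟩

lemma map {k' : Type*} [Field k'] (φ : k →+* k') (h : Sim a b) : Sim (φ a) (φ b) := by
  obtain ⟨u, hu, rfl⟩ := h
  exact ⟨φ u, (map_ne_zero φ).2 hu, by simp⟩

lemma of_pow (hb : b ≠ 0) : Sim (b ^ 7) 1 := ⟨b, hb, by simp⟩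

lemma ne_zero (h : Sim a b) (hb : b ≠ 0) : a ≠ 0 := by
  obtain ⟨u, hu, rfl⟩ := h
  exact mul_ne_zero hb (pow_ne_zero _ hu)

lemma cancel (hc : c ≠ 0) (h : Sim (a * c) (b * c)) : Sim a b := by
  obtain ⟨u, hu, h⟩ := h
  exact ⟨u, hu, mul_right_cancel₀ hc (by linear_combination h)⟩

end Sim

variable {W : Type*} [Field W] [CharZero W] [DecidableEq W]

/-- The points fixed by a field automorphism. -/
def fixedPts (τ : W ≃+* W) : AddSubgroup (Pt W) where
  carrier := {P | mapP (τ : W →+* W) P = P}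
  add_mem' := by
    intro P Q hP hQ
    simp only [Set.mem_setOf_eq] at *
    rw [map_add, hP, hQ]
  zero_mem' := map_zero _
  neg_mem' := by
    intro P hP
    simp only [Set.mem_setOf_eq] at *
    rw [map_neg, hP]

lemma mem_fixedPts {τ : W ≃+* W} {P : Pt W} :
    P ∈ fixedPts τ ↔ mapP (τ : W →+* W) P = P := Iff.rfl

lemma mkP_mem_fixedPts {τ : W ≃+* W} {x y : W} {h : y ^ 2 = x ^ 3 - 1 / 12} :
    mkP x y h ∈ fixedPts τ ↔ τ x = x ∧ τ y = y := by
  rw [mem_fixedPts, mapP_mkP, mkP_inj]; rfl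

variable {w θ : W} {τ : W ≃+* W} (hw : w ^ 2 + w + 1 = 0) (hθ : θ ^ 6 = (5 + w) / 3)
  (hτw : τ w = w) (hτθ : τ θ = - w ^ 2 * θ)

include hτw in
lemma om_mem {P : Pt W} (hP : P ∈ fixedPts τ) : om w hw P ∈ fixedPts τ := by
  rw [mem_fixedPts] at *
  rw [mapP_om (τ : W →+* W) hw hw hτw, hP]

include hτw in
lemma pi_mem {P : Pt W} (hP : P ∈ fixedPts τ) : pi w hw P ∈ fixedPts τ :=
  add_mem (nsmul_mem hP 3) (om_mem hw hτw hP)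

include hw hτw hτθ in
lemma ne_of_fixed {x : W} (hx : τ x = x) (a b : ℤ) (hab : a * a - a * b + b * b ≠ 0) :
    θ ^ 2 * x ≠ (a + b * w) / 3 := by
  intro h
  have h1 := congrArg τ h
  have h3 : τ 3 = 3 := map_ofNat τ 3
  simp [hx, hτw, hτθ, h3] at h1
  have h0 := lin_ne hw a b hab
  have hw3 := omega_cube hw
  have : (a + b * w) * (1 - w) = 0 := by
    linear_combination -(3 * h1 - 3 * w * h - 3 * w * θ ^ 2 * x * hw3)
  rcases mul_eq_zero.1 this with h | h
  · exact h0 h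
  · have := lin_ne hw 1 (-1) (by norm_num)
    apply this; push_cast; linear_combination h

include hw hτw hτθ in
lemma ne_T {x : W} (hx : τ x = x) : θ ^ 2 * x ≠ (1 - w) / 3 ∧ θ ^ 2 * x ≠ (1 + 2 * w) / 3 ∧
    θ ^ 2 * x ≠ (-2 - w) / 3 := by
  have h1 := ne_of_fixed (θ := θ) hw hτw hτθ hx 1 (-1) (by norm_num)
  have h2 := ne_of_fixed (θ := θ) hw hτw hτθ hx 1 2 (by norm_num)
  have h3 := ne_of_fixed (θ := θ) hw hτw hτθ hx (-2) (-1) (by norm_num)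
  push_cast at h1 h2 h3
  refine ⟨?_, h2, ?_⟩
  · convert h1 using 2; ring
  · convert h3 using 2; ring

include hw hθ hτw hτθ

lemma fP_neg_mul {P : Pt W} (hP : P ∈ fixedPts τ) : Sim (fP w θ P * fP w θ (-P)) 1 := by
  rcases eq_zero_or_mkP P with rfl | ⟨x, y, h, rfl⟩
  · rw [neg_zero]; exact ⟨1, one_ne_zero, by simp [fP]⟩
  have hx := (mkP_mem_fixedPts.1 hP).1
  rw [neg_mkP, fP_mkP, fP_mkP, mul_neg, ff_mul_neg hw (twist_eq hθ h)]
  refine ⟨-(θ ^ 2 * x - (1 - w) / 3), neg_ne_zero.2 (sub_ne_zero.2 (ne_T hw hτw hτθ hx).1), ?_⟩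
  ring

lemma fP_ne_zero {P : Pt W} (hP : P ∈ fixedPts τ) : fP w θ P ≠ 0 :=
  left_ne_zero_of_mul ((fP_neg_mul hw hθ hτw hτθ hP).ne_zero one_ne_zero)

omit hw hθ hτw hτθ in
lemma fP_zero : fP w θ (0 : Pt W) = 1 := rfl

/-- The Kummer map is a homomorphism on the points fixed by `τ`. -/
lemma fP_add {P Q : Pt W} (hP : P ∈ fixedPts τ) (hQ : Q ∈ fixedPts τ) :
    Sim (fP w θ (P + Q)) (fP w θ P * fP w θ Q) := by
  rcases eq_zero_or_mkP P with hP0 | ⟨x₁, y₁, h₁, e₁⟩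
  · rw [hP0, zero_add, fP_zero, one_mul]; exact Sim.refl _
  rcases eq_zero_or_mkP Q with hQ0 | ⟨x₂, y₂, h₂, e₂⟩
  · rw [hQ0, add_zero, fP_zero, mul_one]; exact Sim.refl _
  by_cases hne : x₁ = x₂ ∧ y₁ = -y₂
  · have : Q = - P := by
      rw [e₁, e₂, neg_mkP, mkP_inj]; exact ⟨hne.1.symm, by rw [hne.2, neg_neg]⟩
    rw [this, add_neg_cancel, fP_zero]
    exact (fP_neg_mul hw hθ hτw hτθ hP).symm
  obtain ⟨l, c, x₃, y₃, h₃, hs, l₁, l₂, l₃, v₁, v₂, v₃⟩ := exists_line h₁ h₂ hne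
  set R := mkP x₃ y₃ h₃ with hR
  rw [← e₁, ← e₂] at hs
  have hRP : P + Q = - R := eq_neg_of_add_eq_zero_left hs
  have hRm : R ∈ fixedPts τ := by
    rw [← neg_mem_iff, ← hRP]; exact add_mem hP hQ
  have e := ff_line (l := θ * l) (c := θ ^ 3 * c) hw (twist_eq hθ h₁) (twist_eq hθ h₂)
    (twist_eq hθ h₃) (by rw [l₁]; ring) (by rw [l₂]; ring) (by rw [l₃]; ring)
    (by linear_combination θ ^ 2 * v₁) (by linear_combination θ ^ 4 * v₂)
    (by unfold B0; linear_combination θ ^ 6 * v₃ + 1 / 12 * hθ)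
  rw [← fP_mkP w θ h₁, ← fP_mkP w θ h₂, ← fP_mkP w θ h₃, ← e₁, ← e₂, ← hR] at e
  have n1 := fP_ne_zero hw hθ hτw hτθ hP
  have n2 := fP_ne_zero hw hθ hτw hτθ hQ
  have n3 := fP_ne_zero hw hθ hτw hτθ hRm
  have hne : θ * l * (1 - w) / 3 + θ ^ 3 * c + w / 2 ≠ 0 := by
    intro h0
    rw [h0, zero_pow (by norm_num)] at e
    exact mul_ne_zero (mul_ne_zero n1 n2) n3 e
  rw [hRP]
  refine Sim.cancel n3 ?_
  rw [mul_comm, e]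
  exact (fP_neg_mul hw hθ hτw hτθ hRm).trans (Sim.of_pow hne).symm

lemma fP_pi_fixed {P : Pt W} (hP : P ∈ fixedPts τ) : Sim (fP w θ (pi w hw P)) 1 := by
  rcases eq_zero_or_mkP P with hP0 | ⟨x, y, h, e⟩
  · rw [hP0, map_zero]; exact Sim.refl _
  by_cases hD : D1 w x = 0
  · rw [e, pi_eq_zero hw h hD]; exact Sim.refl _
  have hn := fP_ne_zero hw hθ hτw hτθ (pi_mem hw hτw hP)
  rw [e, fP_pi hw hθ h hD] at *
  exact Sim.of_pow (fun h0 => hn (by rw [h0]; simp))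

/-- The Kummer class of a `τ`-fixed point is an eigenvector for `τ`. -/
lemma tau_fP {P : Pt W} (hP : P ∈ fixedPts τ) : Sim (τ (fP w θ P)) (fP w θ P ^ 3) := by
  have h1 : τ (fP w θ P) = fP w θ (-(om w hw P)) := by
    rcases eq_zero_or_mkP P with rfl | ⟨x, y, h, rfl⟩
    · rw [map_zero, neg_zero]; exact map_one τ
    rw [om_mkP, neg_mkP, fP_mkP, fP_mkP]
    obtain ⟨hx, hy⟩ := mkP_mem_fixedPts.1 hP
    have hn (n : ℕ) [n.AtLeastTwo] : τ (OfNat.ofNat n) = OfNat.ofNat n := map_ofNat τ n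
    have hX : τ (θ ^ 2 * x) = θ ^ 2 * (w * x) := by
      rw [map_mul, map_pow, hτθ, hx]; linear_combination w * θ ^ 2 * x * omega_cube hw
    have hY : τ (θ ^ 3 * y) = θ ^ 3 * (- y) := by
      rw [map_mul, map_pow, hτθ, hy]
      linear_combination - θ ^ 3 * y * (w ^ 3 + 1) * omega_cube hw
    rw [← hX, ← hY]
    simp [ff, hn, hτw]
  have ho := om_mem hw hτw hP
  have no := fP_ne_zero hw hθ hτw hτθ ho
  have s1 := fP_neg_mul hw hθ hτw hτθ ho
  have s2 := fP_pi_fixed hw hθ hτw hτθ hP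
  have h2P : P + P ∈ fixedPts τ := add_mem hP hP
  have h3P : P + P + P ∈ fixedPts τ := add_mem h2P hP
  have e3 : pi w hw P = P + P + P + om w hw P := by rw [pi_apply]; module
  have s3 : Sim (fP w θ (pi w hw P)) (fP w θ P ^ 3 * fP w θ (om w hw P)) := by
    rw [e3]
    refine (fP_add hw hθ hτw hτθ h3P ho).trans (Sim.mul ?_ (Sim.refl _))
    refine (fP_add hw hθ hτw hτθ h2P hP).trans ?_
    rw [show fP w θ P ^ 3 = fP w θ P * fP w θ P * fP w θ P by ring]
    exact (fP_add hw hθ hτw hτθ hP hP).mul (Sim.refl _)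
  rw [h1]
  refine Sim.cancel no ?_
  rw [mul_comm]
  exact s1.trans (s2.symm.trans s3)

end kappa

end SumCubes

end

/-! ### The field `F` -/

noncomputable section
open WeierstrassCurve

namespace SumCubes
open NumberField

/-- The field `F = ℚ(ω, θ)`, `θ⁶ = (5 + ω)/3`, over which the kernel of the
dual of `π` becomes rational, together with the generator `τ` of its Galois group over `ℚ(ω)` and the elementary facts on
`ℚ(ω)` used below. -/
structure KumF (F : Type) [Field F] [NumberField F] where
  w : F
  θ : F
  hw : w ^ 2 + w + 1 = 0
  hθ : θ ^ 6 = (5 + w) / 3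
  τ : F ≃ₐ[ℚ] F
  τw : τ w = w
  τθ : τ θ = - w ^ 2 * θ
  deg : Module.finrank ℚ F = 12
  span : ∀ x : F, ∃ a b : Fin 6 → ℚ, x = ∑ j, ((a j : F) + b j * w) * θ ^ (j : ℕ)
  normK : ∀ a b : ℚ, |Algebra.norm ℚ ((a : F) + b * w)| = (a ^ 2 - a * b + b ^ 2) ^ 6
  traceK : ∀ a b : ℚ, Algebra.trace ℚ F ((a : F) + b * w) = 6 * (2 * a - b)
  intK : ∀ a b : ℚ, IsIntegral ℤ ((a : F) + b * w) → ∃ m n : ℤ, (m : ℚ) = a ∧ (n : ℚ) = b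
  root7 : ∀ z : F, z ^ 7 = 1 → z = 1

namespace KumF
variable {F : Type} [Field F] [NumberField F] (D : KumF F)

/-- An integral multiple of `θ`. -/
def t : F := (2 * D.w + 1) * D.θ

lemma t_pow : D.t ^ 6 = -9 * (5 + D.w) := by
  have h := D.hw
  have : (2 * D.w + 1) ^ 2 = -3 := by linear_combination 4 * h
  rw [t, mul_pow, D.hθ, show (2 * D.w + 1) ^ 6 = ((2 * D.w + 1) ^ 2) ^ 3 by ring, this]
  ring

lemma τ_t : D.τ D.t = - D.w ^ 2 * D.t := by
  simp [t, D.τw, D.τθ]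
  have : D.τ 2 = 2 := map_ofNat _ 2
  rw [this]; ring

lemma int_w : IsIntegral ℤ D.w := by
  refine ⟨Polynomial.X ^ 2 + Polynomial.X + 1, ?_, ?_⟩
  · monicity!
  · simpa using D.hw

lemma int_t : IsIntegral ℤ D.t := by
  apply IsIntegral.of_pow (n := 6) (by norm_num)
  rw [t_pow]
  have h := D.int_w
  have h5 : IsIntegral ℤ (5 : F) := by
    simpa using isIntegral_algebraMap (R := ℤ) (A := F) (x := 5)
  have h9 : IsIntegral ℤ (-9 : F) := by
    simpa using isIntegral_algebraMap (R := ℤ) (A := F) (x := -9)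
  exact h9.mul (h5.add h)

/-- `ω` in the ring of integers. -/
def wI : 𝓞 F := ⟨D.w, D.int_w⟩
/-- `t` in the ring of integers. -/
def tI : 𝓞 F := ⟨D.t, D.int_t⟩
/-- `τ` on the ring of integers. -/
def τI : 𝓞 F ≃+* 𝓞 F := RingOfIntegers.mapRingEquiv D.τ

@[simp] lemma coe_wI : (D.wI : F) = D.w := rfl
@[simp] lemma coe_tI : (D.tI : F) = D.t := rfl
@[simp] lemma coe_τI (x : 𝓞 F) : (D.τI x : F) = D.τ x := rfl

lemma wI_eq : D.wI ^ 2 + D.wI + 1 = 0 := by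
  apply RingOfIntegers.ext; simpa using D.hw

lemma tI_pow : D.tI ^ 6 = -9 * (5 + D.wI) := by
  apply RingOfIntegers.ext
  have h (n : ℕ) [n.AtLeastTwo] : ((OfNat.ofNat n : 𝓞 F) : F) = OfNat.ofNat n :=
    map_ofNat (algebraMap (𝓞 F) F) n
  simpa [h] using D.t_pow

lemma τI_wI : D.τI D.wI = D.wI := by apply RingOfIntegers.ext; simpa using D.τw
lemma τI_tI : D.τI D.tI = - D.wI ^ 2 * D.tI := by apply RingOfIntegers.ext; simpa using D.τ_t

lemma w3 : D.w ^ 3 = 1 := omega_cube D.hw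

lemma τ_pow_θ (i : ℕ) : (D.τ ^ i) D.θ = (- D.w ^ 2) ^ i * D.θ := by
  induction i with
  | zero => simp
  | succ i ih =>
    rw [pow_succ', AlgEquiv.mul_apply, ih]
    simp [D.τw, D.τθ]; ring

lemma τ_pow_w (i : ℕ) : (D.τ ^ i) D.w = D.w := by
  induction i with
  | zero => simp
  | succ i ih => rw [pow_succ', AlgEquiv.mul_apply, ih, D.τw]

lemma τ_pow_span (i : ℕ) (a b : Fin 6 → ℚ) :
    (D.τ ^ i) (∑ j, ((a j : F) + b j * D.w) * D.θ ^ (j : ℕ)) =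
      ∑ j, ((a j : F) + b j * D.w) * (((- D.w ^ 2) ^ i) * D.θ) ^ (j : ℕ) := by
  simp only [map_sum, map_mul, map_add, map_pow, D.τ_pow_θ, D.τ_pow_w, map_ratCast]

lemma neg_w_sq_pow : (- D.w ^ 2) ^ 6 = 1 := by
  have := D.w3
  rw [show (- D.w ^ 2) ^ 6 = (D.w ^ 3) ^ 4 by ring, this, one_pow]

lemma τ_pow_six : D.τ ^ 6 = 1 := by
  ext x
  obtain ⟨a, b, rfl⟩ := D.span x
  rw [τ_pow_span, neg_w_sq_pow]; simp

lemma sum_τ_pow (a b : Fin 6 → ℚ) :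
    ∑ i ∈ Finset.range 6, (D.τ ^ i) (∑ j, ((a j : F) + b j * D.w) * D.θ ^ (j : ℕ)) =
      6 * ((a 0 : F) + b 0 * D.w) := by
  simp only [τ_pow_span]
  simp only [Finset.sum_range_succ, Finset.range_zero, Finset.sum_empty,
    Fin.sum_univ_succ]
  have h := D.hw
  have h2 : D.w ^ 2 = -1 - D.w := by linear_combination h
  have h3 := D.w3
  simp only [h2, neg_sub, sub_neg_eq_add]
  have e2 : (1 + D.w) ^ 2 = D.w := by linear_combination h
  have e3 : (1 + D.w) ^ 3 = -1 := by linear_combination (D.w + 2) * h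
  simp [e2, e3]
  grind

lemma fixed {x : F} (hx : D.τ x = x) : ∃ a b : ℚ, x = (a : F) + b * D.w := by
  obtain ⟨a, b, rfl⟩ := D.span x
  set y := ∑ j, ((a j : F) + b j * D.w) * D.θ ^ (j : ℕ) with hy
  have h1 : ∀ i : ℕ, (D.τ ^ i) y = y := by
    intro i
    induction i with
    | zero => simp
    | succ i ih => rw [pow_succ', AlgEquiv.mul_apply, ih, hx]
  have h2 := D.sum_τ_pow a b
  rw [← hy] at h2
  simp only [h1, Finset.sum_const, Finset.card_range] at h2
  refine ⟨a 0, b 0, ?_⟩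
  have h6 : (6 : F) ≠ 0 := by norm_num
  apply mul_left_cancel₀ h6
  rw [← h2]; simp

lemma fixedI {x : 𝓞 F} (hx : D.τI x = x) : ∃ a b : ℤ, x = (a : 𝓞 F) + b * D.wI := by
  have : D.τ (x : F) = x := by rw [← coe_τI, hx]
  obtain ⟨a, b, h⟩ := D.fixed this
  obtain ⟨m, n, rfl, rfl⟩ := D.intK a b (h ▸ x.2)
  exact ⟨m, n, by apply RingOfIntegers.ext; simpa using h⟩

lemma norm_τ (x : F) (i : ℕ) : Algebra.norm ℚ ((D.τ ^ i) x) = Algebra.norm ℚ x :=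
  (Algebra.norm_eq_of_algEquiv (D.τ ^ i) x)

/-- The absolute norm is computed from the relative norm to `ℚ(ω)`. -/
lemma abs_norm {x : F} {a b : ℚ}
    (h : ∏ i ∈ Finset.range 6, (D.τ ^ i) x = (a : F) + b * D.w) :
    |Algebra.norm ℚ x| = a ^ 2 - a * b + b ^ 2 := by
  have h1 := congrArg (Algebra.norm ℚ) h
  rw [map_prod] at h1
  simp only [D.norm_τ, Finset.prod_const, Finset.card_range] at h1
  have h2 := D.normK a b
  rw [← h1, abs_pow] at h2
  exact (pow_left_inj₀ (abs_nonneg _) (by nlinarith [sq_nonneg (a - b), sq_nonneg a, sq_nonneg b]) (by norm_num)).1 h2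

lemma absNorm_span {x : 𝓞 F} {a b : ℤ}
    (h : ∏ i ∈ Finset.range 6, (D.τ ^ i) (x : F) = (a : F) + b * D.w) :
    (Ideal.absNorm (Ideal.span {x}) : ℤ) = a ^ 2 - a * b + b ^ 2 := by
  rw [Ideal.absNorm_span_singleton]
  have := D.abs_norm (a := a) (b := b) (by simpa using h)
  rw [← Algebra.coe_norm_int] at this
  rw [Int.natCast_natAbs]
  exact_mod_cast this

end KumF
end SumCubes

end

/-! ### Conjugate ideals -/

noncomputable section
open WeierstrassCurve

namespace SumCubes
open NumberField
namespace KumF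
variable {F : Type} [Field F] [NumberField F] (D : KumF F)

/-- The powers of `τ` on the ring of integers. -/
def ρ (j : ℕ) : 𝓞 F ≃+* 𝓞 F := RingOfIntegers.mapRingEquiv ((D.τ ^ j : F ≃ₐ[ℚ] F) : F ≃+* F)

@[simp] lemma coe_ρ (j : ℕ) (x : 𝓞 F) : (D.ρ j x : F) = (D.τ ^ j) x := rfl

lemma ρ_add (i j : ℕ) (x : 𝓞 F) : D.ρ (i + j) x = D.ρ i (D.ρ j x) := by
  apply RingOfIntegers.ext; simp only [coe_ρ, pow_add, AlgEquiv.mul_apply]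

lemma ρ_zero (x : 𝓞 F) : D.ρ 0 x = x := by apply RingOfIntegers.ext; simp
lemma ρ_one (x : 𝓞 F) : D.ρ 1 x = D.τI x := by apply RingOfIntegers.ext; simp
lemma ρ_six (x : 𝓞 F) : D.ρ 6 x = x := by
  apply RingOfIntegers.ext; simp only [coe_ρ, D.τ_pow_six]; simp

lemma ρ_tI (j : ℕ) : D.ρ j D.tI = (- D.wI ^ 2) ^ j * D.tI := by
  induction j with
  | zero => simp [ρ_zero]
  | succ j ih =>
    rw [add_comm, ρ_add, ih, ρ_one, map_mul, τI_tI, map_pow, map_neg, map_pow, τI_wI]; ring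

lemma ρ_wI (j : ℕ) : D.ρ j D.wI = D.wI := by
  apply RingOfIntegers.ext; simp only [coe_ρ, coe_wI, D.τ_pow_w]

/-- The inverse image of an ideal under `τ ^ j`. -/
def T (j : ℕ) (I : Ideal (𝓞 F)) : Ideal (𝓞 F) := I.comap (D.ρ j)

@[simp] lemma mem_T {j : ℕ} {I : Ideal (𝓞 F)} {x : 𝓞 F} : x ∈ D.T j I ↔ D.ρ j x ∈ I := Iff.rfl

lemma T_eq_map (j : ℕ) (I : Ideal (𝓞 F)) : D.T j I = I.map (D.ρ j).symm :=
  (Ideal.map_symm (D.ρ j)).symm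

lemma T_mul (j : ℕ) (I J : Ideal (𝓞 F)) : D.T j (I * J) = D.T j I * D.T j J := by
  simp only [T_eq_map, Ideal.map_mul]

lemma T_pow (j : ℕ) (I : Ideal (𝓞 F)) (n : ℕ) : D.T j (I ^ n) = D.T j I ^ n := by
  simp only [T_eq_map, Ideal.map_pow]

lemma T_span (j : ℕ) (x : 𝓞 F) : D.T j (Ideal.span {D.ρ j x}) = Ideal.span {x} := by
  rw [T_eq_map, Ideal.map_span]; simp

lemma T_T (i j : ℕ) (I : Ideal (𝓞 F)) : D.T i (D.T j I) = D.T (j + i) I := by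
  ext x; simp [ρ_add]

lemma T_zero (I : Ideal (𝓞 F)) : D.T 0 I = I := by ext x; simp [ρ_zero]
lemma T_six (I : Ideal (𝓞 F)) : D.T 6 I = I := by ext x; simp [ρ_six]

lemma T_eq_bot {j : ℕ} {I : Ideal (𝓞 F)} : D.T j I = ⊥ ↔ I = ⊥ := by
  rw [T_eq_map]; exact Ideal.map_eq_bot_iff_of_injective (D.ρ j).symm.injective

lemma T_isPrime (j : ℕ) (I : Ideal (𝓞 F)) [I.IsPrime] : (D.T j I).IsPrime :=
  Ideal.comap_isPrime _ _

lemma absNorm_T (j : ℕ) (I : Ideal (𝓞 F)) : Ideal.absNorm (D.T j I) = Ideal.absNorm I := by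
  rw [Ideal.absNorm_apply, Ideal.absNorm_apply, Submodule.cardQuot_apply, Submodule.cardQuot_apply]
  refine Nat.card_congr (Ideal.quotientEquiv _ _ (D.ρ j) ?_).toEquiv
  exact (Ideal.map_comap_of_surjective _ (D.ρ j).surjective I).symm

/-- A prime all of whose nontrivial conjugates over `ℚ(ω)` are different from it. -/
def Free (P : Ideal (𝓞 F)) : Prop := ∀ j, 0 < j → j < 6 → D.T j P ≠ P

variable {D}

lemma Free.inj {P : Ideal (𝓞 F)} (h : D.Free P) {i j : ℕ} (hi : i < 6) (hj : j < 6)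
    (hij : D.T i P = D.T j P) : i = j := by
  by_contra hne
  rcases lt_or_gt_of_ne hne with hlt | hlt
  · have := congrArg (D.T (6 - j)) hij
    rw [T_T, T_T, show j + (6 - j) = 6 by omega, T_six] at this
    exact h _ (by omega) (by omega) this
  · have := congrArg (D.T (6 - i)) hij
    rw [T_T, T_T, show i + (6 - i) = 6 by omega, T_six] at this
    exact h _ (by omega) (by omega) this.symm

lemma Free.exists_idem {P : Ideal (𝓞 F)} [hP : P.IsMaximal] (hb : P ≠ ⊥) (h : D.Free P) :
    ∃ e : 𝓞 F, 1 - e ∈ P ∧ ∀ j, 0 < j → j < 6 → D.ρ j e ∈ P := by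
  have hle : ¬ (Finset.Ioo 0 6).inf (fun j => D.T j P) ≤ P := by
    intro hle
    obtain ⟨j, hj, hjP⟩ := (Ideal.IsPrime.inf_le' hP.isPrime).1 hle
    have hj' := Finset.mem_Ioo.1 hj
    have hpr := D.T_isPrime j P
    have hmax : (D.T j P).IsMaximal :=
      hpr.isMaximal (by rw [ne_eq, T_eq_bot]; exact hb)
    exact h j hj'.1 hj'.2 (hmax.eq_of_le hP.ne_top hjP)
  obtain ⟨x, hx, hxP⟩ := SetLike.not_le_iff_exists.1 hle
  obtain ⟨y, hy⟩ := hP.exists_inv hxP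
  obtain ⟨z, hz, hyz⟩ := hy
  refine ⟨y * x, by rw [← hyz]; simpa using hz, fun j h0 h6 => ?_⟩
  rw [map_mul]
  apply Ideal.mul_mem_left
  exact (Finset.inf_le (f := fun j => D.T j P) (Finset.mem_Ioo.2 ⟨h0, h6⟩)) hx

/-- The residue field at a free prime is that of the prime of `ℤ[ω]` below. -/
lemma Free.exists_sub_mem {P : Ideal (𝓞 F)} [hP : P.IsMaximal] (hb : P ≠ ⊥) (h : D.Free P)
    (x : 𝓞 F) : ∃ a b : ℤ, x - (a + b * D.wI) ∈ P := by
  obtain ⟨e, he, hej⟩ := h.exists_idem hb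
  have hfix : D.τI (∑ i ∈ Finset.range 6, D.ρ i (x * e)) = ∑ i ∈ Finset.range 6, D.ρ i (x * e) := by
    rw [← ρ_one, map_sum]
    simp only [← ρ_add, Finset.sum_range_succ, Finset.sum_range_zero, zero_add]
    norm_num only [ρ_six, ρ_zero]
    ring
  obtain ⟨a, b, hab⟩ := D.fixedI hfix
  refine ⟨a, b, ?_⟩
  rw [← hab]
  rw [Finset.sum_range_succ', ρ_zero]
  have h1 : ∑ i ∈ Finset.range 5, D.ρ (i + 1) (x * e) ∈ P := by
    refine sum_mem fun i hi => ?_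
    rw [map_mul]
    exact Ideal.mul_mem_left _ _ (hej _ (by omega) (by have := Finset.mem_range.1 hi; omega))
  have : x - (∑ i ∈ Finset.range 5, D.ρ (i + 1) (x * e) + x * e) =
    x * (1 - e) - ∑ i ∈ Finset.range 5, D.ρ (i + 1) (x * e) := by ring
  rw [this]
  exact sub_mem (Ideal.mul_mem_left _ _ he) h1

variable (D) in
lemma absNorm_tI : Ideal.absNorm (Ideal.span {D.tI}) = 1701 := by
  have := D.absNorm_span (x := D.tI) (a := 45) (b := 9) (by
    have h : ∀ i, (D.τ ^ i) (D.tI : F) = (- D.w ^ 2) ^ i * D.t := by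
      intro i
      have := congrArg (algebraMap (𝓞 F) F) (D.ρ_tI i)
      simpa using this
    simp only [h, Finset.prod_range_succ, Finset.prod_range_zero]
    have h3 := D.w3
    have h6 := D.t_pow
    push_cast
    linear_combination -(D.w ^ 3) ^ 10 * h6 + 9 * (5 + D.w) * ((D.w^3)^9 + (D.w^3)^8 +
      (D.w^3)^7 + (D.w^3)^6 + (D.w^3)^5 + (D.w^3)^4 + (D.w^3)^3 + (D.w^3)^2 + D.w^3 + 1) * h3)
  have h := this.trans (show (_ : ℤ) = 1701 by norm_num)
  exact_mod_cast h

lemma Free.tI_notMem {P : Ideal (𝓞 F)} [hP : P.IsMaximal] (hb : P ≠ ⊥) (h : D.Free P) :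
    D.tI ∉ P := by
  intro ht
  have hdvd : ∏ j ∈ Finset.range 6, D.T j P ∣ Ideal.span {D.tI} := by
    have himg : ∏ j ∈ Finset.range 6, D.T j P =
        ∏ Q ∈ (Finset.range 6).image (fun j => D.T j P), Q := by
      rw [Finset.prod_image]
      intro i hi j hj hij
      exact h.inj (Finset.mem_range.1 hi) (Finset.mem_range.1 hj) hij
    rw [himg]
    apply Finset.prod_primes_dvd
    · intro Q hQ
      obtain ⟨j, -, rfl⟩ := Finset.mem_image.1 hQ
      have := D.T_isPrime j P
      exact Ideal.prime_of_isPrime (by rw [ne_eq, T_eq_bot]; exact hb) this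
    · intro Q hQ
      obtain ⟨j, -, rfl⟩ := Finset.mem_image.1 hQ
      rw [Ideal.dvd_span_singleton, mem_T, ρ_tI]
      exact Ideal.mul_mem_left _ _ ht
  have h2 := map_dvd Ideal.absNorm hdvd
  rw [D.absNorm_tI, map_prod] at h2
  simp only [absNorm_T, Finset.prod_const, Finset.card_range] at h2
  have h3 : Ideal.absNorm P ≤ 3 := by
    by_contra hlt
    have : 4 ^ 6 ≤ Ideal.absNorm P ^ 6 := Nat.pow_le_pow_left (by omega) 6
    have := Nat.le_of_dvd (by norm_num) h2
    omega
  have h1 : Ideal.absNorm P ≠ 1 := fun h1 => hP.ne_top (Ideal.absNorm_eq_one_iff.1 h1)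
  interval_cases Ideal.absNorm P <;> revert h2 h1 <;> decide
end KumF
end SumCubes

end

/-! ### Certificates at small primes -/

noncomputable section
open WeierstrassCurve

namespace SumCubes
open NumberField

/-- Multiplication in `ℤ[ω]`, an element `a + bω` being represented by the pair `(a, b)`. -/
def zm (x y : ℤ × ℤ) : ℤ × ℤ :=
  (x.1 * y.1 - x.2 * y.2, x.1 * y.2 + x.2 * y.1 - x.2 * y.2)

/-- The `i`-th coefficient in `ℤ[ω]` of a list of integers. -/
def kc (l : List ℤ) (i : ℕ) : ℤ × ℤ := (l.getD (2 * i) 0, l.getD (2 * i + 1) 0)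

/-- The relative norm to `ℚ(ω)` of `X₀ + λ(Z₁θ + ⋯ + Z₅θ⁵)`, where `λ = 1 + 2ω`. -/
def relN (X0 Z1 Z2 Z3 Z4 Z5 : ℤ × ℤ) : ℤ × ℤ :=
  let lam : ℤ × ℤ := (1, 2)
  let mu : ℤ × ℤ := (-1, -3)
  let ml : ℤ × ℤ := zm mu lam
  let c0 := zm X0 X0 + zm ml (zm Z1 Z5 + zm Z1 Z5 + zm Z3 Z3 - zm Z2 Z4 - zm Z2 Z4)
  let d1 := zm X0 Z2 + zm X0 Z2 - zm mu (zm Z4 Z4 - zm Z3 Z5 - zm Z3 Z5) - zm lam (zm Z1 Z1)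
  let d2 := zm X0 Z4 + zm X0 Z4 + zm lam (zm Z2 Z2 - zm Z1 Z3 - zm Z1 Z3) + zm mu (zm Z5 Z5)
  zm c0 (zm c0 c0) + zm (3, 0) (zm mu (zm d1 (zm d1 d1))) + zm (zm mu ml) (zm d2 (zm d2 d2)) +
    zm (3, 0) (zm ml (zm c0 (zm d1 d2)))

/-- `2 ^ 12` times the absolute norm of the integer of `F` with coefficient list `l`. -/
def nrm (l : List ℤ) : ℤ :=
  let w : ℤ × ℤ := (0, 1)
  let n := relN (kc l 0 + kc l 0 + zm w (kc l 1)) (kc l 2 + kc l 2 + zm w (kc l 4))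
    (kc l 3 + kc l 3 + zm w (kc l 5)) (kc l 1) (kc l 4) (kc l 5)
  n.1 ^ 2 - n.1 * n.2 + n.2 ^ 2

/-- `54` times the integer of `F` with coefficient list `l`, evaluated at `t = C`. -/
def val (l : List ℤ) (C : ℤ × ℤ) : ℤ × ℤ :=
  let w : ℤ × ℤ := (0, 1)
  let lam : ℤ × ℤ := (1, 2)
  let C2 := zm C C
  let C3 := zm C C2
  let q := zm (9, 0) w + zm lam C3
  zm (54, 0) (kc l 0) + zm (9, 0) (zm (kc l 1) (zm (3, 0) w - C3)) + zm (54, 0) (zm (kc l 2) C) -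
    zm (18, 0) (zm (kc l 3) (zm lam C2)) + zm (3, 0) (zm (kc l 4) (zm C q)) -
    zm (kc l 5) (zm lam (zm C2 q))

/-- Certificate check at the prime `(p, ω - r)` of `ℤ[ω]`: either `t⁶ = -9(5 + ω)` is not a sixth
power there, or the list gives a root `c` of it and an element of small norm of the prime
`(p, ω - r, t - c)` of `F`. -/
def splitOK (p r : ℕ) : List ℤ → Bool
  | [] => ((p - 1) * (9 * (5 + r))) ^ ((p - 1) / 6) % p != 1
  | c :: l => decide ((p : ℤ) ∣ c ^ 6 + 9 * (5 + r)) &&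
      decide ((p : ℤ) ∣ (val l (c, 0)).1 + (val l (c, 0)).2 * r) &&
      decide (0 < nrm l) && decide (nrm l < 4096 * (p : ℤ) ^ 2)

/-- Check of a row of `table`: the prime `p`, a root `r` of `r² + r + 1` modulo `p`, and the
certificates for the two primes of `ℤ[ω]` above `p`. -/
def rowOK (x : ℕ × ℕ × List ℤ × List ℤ) : Bool :=
  decide (x.1 ∣ x.2.1 ^ 2 + x.2.1 + 1) && decide (x.2.1 + 1 ≤ x.1) && decide (6 ∣ x.1 - 1) &&
  splitOK x.1 x.2.1 x.2.2.1 && splitOK x.1 (x.1 - 1 - x.2.1) x.2.2.2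

/-- Powers in `ℤ[ω]` modulo `p`. -/
def zpm (p : ℤ) (d : ℤ × ℤ) : ℕ → ℤ × ℤ
  | 0 => (1, 0)
  | n + 1 => ((zm (zpm p d n) d).1 % p, (zm (zpm p d n) d).2 % p)

/-- Certificate check at a prime `p` that is inert in `ℤ[ω]`. -/
def inertOK (p e : ℕ) : List ℤ → Bool
  | [] => decide (¬ ((p : ℤ) ∣ (zpm p (-45, -9) e).1 - 1 ∧ (p : ℤ) ∣ (zpm p (-45, -9) e).2))
  | a :: b :: l =>
      let s := zm (a, b) (zm (a, b) (a, b))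
      let s2 := zm s s
      decide ((p : ℤ) ∣ s2.1 + 45) && decide ((p : ℤ) ∣ s2.2 + 9) &&
      decide ((p : ℤ) ∣ (val l (a, b)).1) && decide ((p : ℤ) ∣ (val l (a, b)).2) &&
      decide (0 < nrm l) && decide (nrm l < 4096 * (p : ℤ) ^ 4)
  | _ => false

/-- Check of a row of `itable`: the prime `p`, an exponent `e` with `p² - 1 ∣ 6e` (so that sixth
powers prime to `p` have `e`-th power `1`), and the certificate. -/
def irowOK (x : ℕ × ℕ × List ℤ) : Bool :=
  decide ((x.1 ^ 2 - 1) ∣ 6 * x.2.1) && inertOK x.1 x.2.1 x.2.2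

/-- Part 1 of `table`. -/
def table0 : List (ℕ × ℕ × List ℤ × List ℤ) := [
  (7, 2, [], []), (13, 3, [], []), (19, 7, [], []), (31, 5, [], []), (37, 10, [], []),
  (43, 6, [], []), (61, 13, [], [-20, 1, 0, 0, 1, 0, 1, 0, 0, -1, 0, 0, 0]),
  (67, 29, [], [-27, -1, 0, -1, -1, -1, 0, -1, -1, -1, -1, 0, -1]), (73, 8, [], []),
  (79, 23, [-2, 0, -1, 0, 0, 0, 1, 0, 0, -1, 0, 0, 0], []),
  (97, 35, [], [7, -1, 0, 0, 0, 0, 0, 0, 0, 1, 0, 0, 0]), (103, 46, [], []), (109, 45, [], []),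
  (127, 19, [-11, 1, 0, 0, 0, 0, 0, 0, -1, 0, 0, 1, 0], [50, 1, 1, 0, 0, 0, 0, 0, 0, -1, -1, 0, -1]),
  (139, 42, [], [-55, -2, -1, 0, 0, 0, 0, 0, 0, 0, 0, -1, -1]), (151, 32, [], []),
  (157, 12, [-21, 1, 1, 0, 1, 0, 0, 0, 0, 0, -1, 0, 1], []),
  (163, 58, [-21, 1, 0, 0, 1, 0, 0, 0, -1, 0, 0, 1, 0], []), (181, 48, [], []), (193, 84, [], []),
  (199, 92, [], []), (211, 14, [], []), (223, 39, [], []), (229, 94, [], []),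
  (241, 15, [-13, 0, 0, -1, -1, 0, 0, 0, 0, 1, 0, 0, 0], []), (271, 28, [], []),
  (277, 116, [39, 1, 0, 0, 0, 0, 0, 0, 0, 0, 0, 1, 0], []), (283, 44, [], []), (307, 17, [], []),
  (313, 98, [], []), (331, 31, [], []), (337, 128, [], []), (349, 122, [], []), (367, 83, [], []),
  (373, 88, [-57, 0, 0, 1, 0, 0, 0, 0, 0, 0, 0, 1, 0], []), (379, 51, [], []), (397, 34, [], []),
  (409, 53, [], []), (421, 20, [], []), (433, 198, [], []), (439, 171, [], []), (457, 133, [], []),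
  (463, 21, [], []), (487, 232, [], []), (499, 139, [], []),
  (523, 60, [250, 1, 1, 0, 0, 0, -1, 0, 1, 0, -1, -1, 0], []),
  (541, 129, [231, -1, 0, -1, 0, 0, 0, 0, -1, 1, 0, 1, 0], []), (547, 40, [], []),
  (571, 109, [-55, -1, 0, 0, 0, 1, 1, 0, 0, 0, 1, 1, 0], []),
  (577, 213, [], [218, 0, -1, 1, 1, 0, 0, 0, -1, 0, 0, 1, 0]),
  (601, 24, [], [42, 1, 0, 1, 2, 0, 0, 0, 0, 1, 0, 0, 0]), (607, 210, [], []),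
  (613, 65, [], [-284, 0, 0, -1, 0, 1, 0, 0, 0, 0, 0, 0, 0]), (619, 252, [], []),
  (631, 43, [], []), (643, 177, [], [])]

/-- Part 2 of `table`. -/
def table1 : List (ℕ × ℕ × List ℤ × List ℤ) := [
  (661, 296, [], []), (673, 255, [], []),
  (691, 253, [], [119, 0, 0, 1, 1, 0, 0, 0, 0, 1, 0, 0, 0]), (709, 227, [], []),
  (727, 281, [], []), (733, 307, [], []), (739, 320, [], []), (751, 72, [], []), (757, 27, [], []),
  (769, 360, [], []), (787, 379, [], [184, 0, 1, 0, 1, -1, -1, 0, 0, 1, 0, 0, 0]),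
  (811, 130, [], []), (823, 174, [], []), (829, 125, [], []),
  (853, 220, [144, -1, -1, 1, 0, 1, 0, 0, 0, 1, 0, 0, 0], []),
  (859, 260, [], [-168, -1, 0, -2, -1, 0, -1, 0, 1, 1, 0, -1, 0]),
  (877, 282, [-378, 0, -1, 1, 0, 1, 0, 0, 0, 1, 1, 1, 0], []), (883, 337, [], []),
  (907, 384, [], []), (919, 52, [], []),
  (937, 322, [], [-396, -1, -1, 0, 0, -1, 0, 0, -1, 0, 0, 1, 0]), (967, 142, [], []),
  (991, 113, [], []), (997, 304, [], [-162, 0, 0, -1, 0, 0, 0, 1, 1, -1, -1, -1, 0]),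
  (1009, 374, [], []), (1021, 368, [], [-139, 0, 0, 1, 1, 1, 1, 0, 0, 0, 1, 1, 0]),
  (1033, 195, [160, 0, 0, -1, -1, 0, 0, 0, 0, 0, 1, 1, 0], []),
  (1039, 140, [], [-186, 0, -1, 1, 0, 0, 0, 0, 1, 0, 0, -1, 0]),
  (1051, 180, [64, 0, 1, -2, -1, 0, 1, 0, 0, -1, 0, 0, 0], [210, -1, 0, -1, -1, 1, 0, 0, 1, 1, 1, -1, 0]),
  (1063, 343, [], [-362, -2, -2, 0, -1, 0, 0, 1, 1, -1, -1, 0, 1]), (1069, 86, [], []),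
  (1087, 257, [-151, 2, 0, 0, 0, 0, 0, 0, 0, 1, 0, 0, 0], []), (1093, 151, [], []),
  (1117, 120, [], []), (1123, 33, [], []),
  (1129, 387, [469, 1, 0, 0, 0, 0, 0, 0, 1, 1, 0, 0, 0], []),
  (1153, 502, [-551, 1, 1, 0, 1, 0, 0, 1, 1, -1, 0, 0, 0], []), (1171, 420, [], []),
  (1201, 570, [], []), (1213, 217, [], []), (1231, 126, [], []), (1237, 300, [], []),
  (1249, 93, [-119, 1, 0, 1, 1, 1, 0, 0, 0, 1, 1, 1, 0], []), (1279, 504, [], []),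
  (1291, 346, [295, 0, 0, -1, -1, 0, 1, 0, 0, 0, 0, 1, 0], []), (1297, 365, [], []),
  (1303, 95, [], []), (1321, 297, [], []), (1327, 347, [], []), (1381, 354, [], []),
  (1399, 390, [], []), (1423, 643, [], []), (1429, 664, [], []),
  (1447, 704, [], [67, 1, 1, 0, 0, 1, 0, 0, -1, 0, 0, 1, 0]), (1453, 693, [], []),
  (1459, 339, [], [])]

/-- Part 3 of `table`. -/
def table2 : List (ℕ × ℕ × List ℤ × List ℤ) := [
  (1471, 251, [], []), (1483, 38, [-545, 0, 0, 1, 0, 0, 0, 0, 0, -1, -1, 1, 0], []),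
  (1489, 483, [], []), (1531, 646, [], []), (1543, 681, [], []), (1549, 275, [], []),
  (1567, 535, [], []), (1579, 639, [-741, 1, 1, -1, 1, 0, -1, 0, 0, 1, 0, 1, 0], []),
  (1597, 222, [], []), (1609, 250, [], []),
  (1621, 184, [], [-89, 0, 0, 0, 1, 0, 1, 0, -1, -1, 0, 1, 0]), (1627, 264, [], []),
  (1657, 70, [772, 0, 1, -1, 0, -1, -1, 1, 0, 1, 0, 0, 0], []),
  (1663, 318, [142, 0, -1, 1, -1, 0, 0, 1, 0, 1, 0, 1, 0], []), (1669, 248, [], []),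
  (1693, 433, [-88, 1, -1, 2, 1, 0, 1, 0, 0, -1, 0, 0, 0], []), (1699, 397, [], []),
  (1723, 41, [], []), (1741, 356, [-728, 1, 2, 0, 0, 0, 0, 0, -1, 0, 0, 1, 0], []),
  (1747, 371, [], []), (1753, 182, [], []), (1759, 508, [], []), (1777, 629, [], []),
  (1783, 193, [-194, 1, 1, 0, 0, 1, 0, 0, 0, 0, 0, 0, 0], []), (1789, 152, [], []),
  (1801, 73, [], []), (1831, 672, [], []), (1861, 454, [], []),
  (1867, 834, [600, 0, -1, 2, 1, 0, 0, 1, 0, 0, 0, 0, 0], []), (1873, 114, [], []),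
  (1879, 488, [], [776, 0, 0, 1, 0, 0, 1, -1, -1, -1, 0, 1, 0]), (1933, 591, [], []),
  (1951, 76, [], []), (1987, 647, [], []), (1993, 312, [], []),
  (1999, 808, [-850, 1, 1, 0, 1, 0, 0, 0, -1, 1, 0, 0, 0], []), (2011, 205, [], []),
  (2017, 294, [], []), (2029, 975, [474, -1, -1, 0, -1, 1, 0, 0, 1, 1, 1, -1, 0], []),
  (2053, 197, [], []), (2083, 449, [], []),
  (2089, 826, [], [141, -1, 0, -1, -2, 0, -1, 0, 0, 1, -1, 1, 0]), (2113, 438, [], []),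
  (2131, 468, [], []), (2137, 201, [], []), (2143, 349, [], []), (2161, 593, [], []),
  (2179, 123, [640, 1, 2, -1, 0, 1, 0, 0, 0, 0, 0, 0, 0], []), (2203, 285, [], []),
  (2221, 543, [], []), (2239, 295, [], []),
  (2251, 708, [], [225, 0, -1, 2, 1, 1, 0, 0, 0, 0, 0, 0, 0]), (2269, 82, [], []),
  (2281, 663, [], []), (2287, 804, [], [48, -1, -1, 1, -1, -1, -1, 0, 0, 1, 0, 1, 1]),
  (2293, 989, [-1121, 1, 0, 2, 1, 0, 0, 0, 1, 0, 0, -1, 0], [])]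

/-- Part 4 of `table`. -/
def table3 : List (ℕ × ℕ × List ℤ × List ℤ) := [
  (2311, 882, [], []), (2341, 1106, [], [603, 0, 1, 0, 0, 0, 0, 0, -1, 0, 1, 1, 0]),
  (2347, 1062, [], []), (2371, 464, [], []), (2377, 721, [], []), (2383, 1103, [], []),
  (2389, 689, [], [894, -2, -2, -1, -2, 1, 1, 1, 0, 0, 0, 0, 0]),
  (2437, 85, [721, -1, 1, 0, 1, 0, 0, 0, 0, 1, 0, 0, 0], [258, 2, 3, 0, 1, 0, 1, -1, -1, -1, 0, 0, -1]),
  (2467, 216, [], []), (2473, 1015, [], []),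
  (2503, 1226, [339, 0, 1, -1, 1, 0, 0, 0, -1, 0, 0, 1, 0], []), (2521, 675, [], []),
  (2539, 306, [], []), (2551, 50, [], [32, -1, 0, 0, 0, 0, 0, 0, 1, -1, -1, -1, 0]),
  (2557, 835, [-501, 2, 1, 0, 1, 0, 1, 1, 0, -1, 0, 0, 0], []), (2593, 1137, [], []),
  (2617, 1064, [], [285, 1, 0, 0, 0, 0, 1, -1, -1, 0, 1, 0, -1]), (2647, 185, [], []),
  (2659, 903, [], [-1040, 0, 0, 0, 1, -1, -1, -1, 0, 1, 0, 0, 0]), (2671, 544, [], []),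
  (2677, 1033, [], []), (2683, 636, [914, -1, 0, 0, 0, 0, -1, 0, 1, 0, 0, -1, 0], []),
  (2689, 391, [], []), (2707, 1327, [], []), (2713, 1211, [], []),
  (2719, 1265, [-468, -1, -2, -1, -1, 1, 1, 1, 0, 0, 1, 0, 0], []),
  (2731, 446, [-1056, 0, -1, 0, 0, 0, 0, 1, 1, 1, 0, 0, 0], [-1180, 0, 0, 1, 1, 0, 0, 0, 1, 1, 0, 0, 0]),
  (2749, 595, [], []), (2767, 328, [], [-390, -1, 0, 0, 0, 0, 0, 1, 1, 1, 0, 0, 0]),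
  (2791, 91, [-142, 1, 0, 1, 2, 0, -1, -1, 0, 1, 0, 0, 0], []), (2797, 1100, [], []),
  (2803, 413, [], [-850, -1, -1, -1, 0, 0, 0, 1, 0, 0, 0, 0, 0]),
  (2833, 1300, [], [536, -1, -1, 0, 1, 0, 0, 0, -1, 1, 0, 0, 0]), (2851, 1014, [], []),
  (2857, 350, [19, 0, 1, 0, 0, 0, -1, 0, -1, 1, 1, 1, 0], [439, 2, 2, 0, 0, 0, 1, 0, 1, -1, 0, 0, 0]),
  (2887, 698, [], []), (2917, 247, [], []), (2953, 800, [], []), (2971, 54, [], []),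
  (3001, 934, [], []), (3019, 239, [], []), (3037, 745, [], []), (3049, 532, [], []),
  (3061, 561, [-1312, 0, 1, -1, 0, 1, 1, 0, 0, 0, 1, 1, 0], []),
  (3067, 973, [-1522, -1, -1, 1, -1, 1, 1, 1, 0, 0, 0, 0, 0], [1376, 1, 0, 0, -1, 1, 0, -1, 0, 2, 1, 0, 0]),
  (3079, 546, [], []),
  (3109, 1085, [-1415, 0, -1, 1, 0, 1, 0, 0, -1, 1, 0, 1, 0], [-922, 0, -1, 1, 0, 0, -1, 0, 1, 1, 0, -1, 0]),
  (3121, 1121, [], [-658, -1, -1, 0, -1, 0, 0, 0, 1, 1, 0, -1, 0]), (3163, 536, [], []),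
  (3169, 97, [], [348, 1, 1, 0, 0, 0, 0, 0, -1, -1, -1, 1, 0]),
  (3181, 440, [], [-343, -2, 0, -1, 0, 0, 0, 1, 0, 0, 0, 0, 0]), (3187, 1315, [], []),
  (3217, 204, [], []), (3229, 914, [802, 0, 0, -1, -1, 0, 0, 0, 0, -1, -1, 1, 0], []),
  (3253, 1439, [], []), (3259, 852, [], [])]

/-- Part 5 of `table`. -/
def table4 : List (ℕ × ℕ × List ℤ × List ℤ) := [
  (3271, 842, [], [-661, 1, 1, 0, 1, 0, 0, 0, 0, 0, -1, 1, 0]), (3301, 1574, [], []),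
  (3307, 57, [], []), (3313, 1123, [], []), (3319, 1527, [], []), (3331, 1463, [], []),
  (3343, 1424, [], [1644, -1, 0, 0, 0, 0, 0, 1, 0, 0, -1, 1, 0]), (3361, 892, [], []),
  (3373, 654, [], [1284, 2, 1, 1, 0, -1, -1, 0, 1, 0, -1, 0, 1]), (3391, 555, [], []),
  (3433, 268, [], [-1111, 1, 1, -1, 1, 0, 0, 1, 0, -1, -1, 1, 1]),
  (3457, 722, [25, 1, 0, 1, 0, 0, 0, -1, -1, 0, 0, 1, 0], []), (3463, 367, [], []),
  (3469, 1683, [], []), (3499, 156, [], []),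
  (3511, 756, [], [-1366, 0, 1, -1, -1, -1, -1, 1, 1, 0, -1, 1, 1]), (3517, 258, [], []),
  (3529, 448, [], []), (3541, 59, [], []), (3547, 1162, [], []), (3559, 1435, [], []),
  (3571, 103, [-166, -1, -2, -1, -1, 0, -1, 0, 0, 1, 0, 0, 1], [480, 0, 1, -1, 0, 1, 1, 0, 0, 0, 0, 1, 0]),
  (3583, 1038, [], []), (3607, 1399, [], []), (3613, 1675, [], []), (3631, 335, [], []),
  (3637, 695, [744, 0, 0, 1, 0, 0, 0, -1, -1, 0, 1, 1, 0], []), (3643, 422, [], []),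
  (3673, 1151, [], []), (3691, 474, [], []), (3697, 519, [], []), (3709, 498, [], []),
  (3727, 1188, [], []), (3733, 948, [], []), (3739, 694, [], []), (3769, 463, [], []),
  (3793, 1068, [], []), (3823, 1184, [], []), (3847, 1892, [], []),
  (3853, 1139, [373, 0, 0, 0, 1, 1, 0, 0, -1, 1, 1, 1, 0], []), (3877, 224, [], []),
  (3889, 1890, [], []),
  (3907, 62, [-1846, -1, 0, -1, -1, 1, 0, 0, 0, 1, 0, 1, 0], [-1148, 1, 1, 1, 0, 0, 0, 0, 0, 0, 1, 1, 0]),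
  (3919, 1169, [], []), (3931, 617, [], [-287, -1, -1, 0, -1, 0, 1, 1, 1, 0, 0, -1, 0]),
  (3943, 1135, [], []), (3967, 888, [], [-1327, -1, 0, 0, 0, -1, 0, 0, -1, 0, -1, 1, 0]),
  (4003, 822, [], []), (4021, 1812, [-878, 0, -1, 1, 0, 1, 0, 0, 0, 1, 0, 0, 0], []),
  (4027, 1820, [], []), (4051, 797, [], []),
  (4057, 1408, [], [-1075, -2, 1, -1, 0, 1, 1, 1, 0, -1, 0, 1, 1]),
  (4093, 902, [], [860, -1, 0, -1, -1, -1, -1, -1, -1, 1, -1, 0, 0]), (4099, 2017, [], []),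
  (4111, 1055, [], []), (4129, 1979, [], [])]

/-- Part 6 of `table`. -/
def table5 : List (ℕ × ℕ × List ℤ × List ℤ) := [
  (4153, 170, [], []),
  (4159, 1604, [1722, 0, 1, 0, 0, 0, -1, -1, 0, 1, 0, 0, 0], [-110, -1, -1, -1, 0, 0, 0, -1, -1, 1, 0, 0, 0]),
  (4177, 1102, [], []), (4201, 1124, [], []), (4219, 112, [], []),
  (4231, 620, [], [1842, 0, -1, 1, 0, 0, 0, 1, 0, 0, -1, 1, 0]),
  (4243, 298, [-1304, 0, 1, -1, -1, 0, 1, 0, -1, 0, 0, 1, 0], [-1107, 0, 1, -1, 0, -1, -1, 1, 1, 1, 0, 0, 0]),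
  (4261, 1647, [], []), (4273, 1610, [], []), (4297, 1410, [], []), (4327, 627, [], []),
  (4339, 237, [], []), (4357, 1318, [], []), (4363, 412, [], []), (4423, 66, [], []),
  (4441, 901, [], []), (4447, 115, [], []), (4483, 505, [], []), (4507, 791, [], []),
  (4513, 814, [], []), (4519, 1056, [], []),
  (4549, 1744, [], [-790, 0, 0, -1, 0, 0, 0, 0, 0, -1, -2, 1, 0]),
  (4561, 243, [], [423, -1, -2, -1, -1, -1, -1, 1, 0, 0, 0, 1, 1]),
  (4567, 1112, [2261, -1, 0, 0, -1, 1, 1, 0, 0, 0, 1, 1, 0], []), (4591, 310, [], []),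
  (4597, 377, [], []), (4603, 179, [], []), (4621, 1763, [], []), (4639, 1360, [], []),
  (4651, 786, [], []), (4657, 967, [], []), (4663, 2092, [], []), (4723, 717, [], []),
  (4729, 2036, [], [1304, 0, 0, 0, 1, 1, 1, 0, 1, -1, 1, 0, 0]), (4759, 1525, [], []),
  (4783, 1745, [], []), (4789, 1679, [], []),
  (4801, 2340, [2292, 1, 2, 0, -1, 0, -1, 1, 0, 1, 0, 0, 0], []), (4813, 1888, [], []),
  (4831, 69, [], []), (4861, 319, [], []), (4903, 2416, [], []), (4909, 573, [], []),
  (4933, 2131, [], []), (4951, 2261, [], []), (4957, 2282, [], []),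
  (4969, 186, [-1466, 0, 1, 0, 0, 1, 0, 0, -1, 0, 1, 1, 0], []), (4987, 1136, [], []),
  (4993, 2342, [], [2246, -1, -1, 0, -1, 0, -1, 0, 0, 0, -1, 1, 0]), (4999, 2337, [], []),
  (5011, 2103, [], []), (5023, 953, [680, 0, -1, 2, 1, -1, -1, 0, -1, 1, 0, 1, 0], []),
  (5059, 1912, [], []), (5077, 1629, [], [-730, 0, 1, 0, 0, 0, 0, 0, -1, 1, 0, 1, 0]),
  (5101, 1614, [], []), (5107, 311, [], [])]

/-- Part 7 of `table`. -/
def table6 : List (ℕ × ℕ × List ℤ × List ℤ) := [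
  (5113, 71, [], []), (5119, 1682, [521, 1, 0, 0, 1, 0, -1, -1, -1, 0, 0, 1, 0], []),
  (5167, 124, [], []), (5179, 1497, [], []), (5197, 1878, [], []), (5209, 1192, [], []),
  (5227, 451, [], []), (5233, 331, [], []),
  (5281, 1403, [568, -1, 0, -1, 0, 0, -1, 0, -1, 1, 0, 1, 0], []), (5323, 1282, [], []),
  (5347, 479, [], []), (5407, 1042, [], []), (5413, 1224, [], []), (5419, 127, [], []),
  (5431, 1533, [], [2549, 2, 2, 0, 0, 0, -1, 0, -1, 0, -1, 1, 0]), (5437, 2271, [], []),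
  (5443, 2588, [], []), (5449, 1474, [], [-2355, 1, 2, 1, 1, 1, 1, -1, -1, 0, 2, 0, 0]),
  (5479, 2702, [], []),
  (5503, 929, [-1895, 2, 1, 0, 0, 0, 0, 1, 0, 0, 0, 1, 0], [1550, -1, -1, 0, 0, 0, -1, 0, 0, 0, -1, 1, 1]),
  (5521, 340, [], []), (5527, 876, [], []),
  (5557, 1827, [], [2629, 0, 0, 0, 1, 0, 1, 0, 0, 0, 0, -1, 0]),
  (5563, 711, [2230, 2, 0, 0, 0, 0, 0, 0, 1, 1, 0, 0, 0], []), (5569, 2242, [], []),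
  (5581, 2458, [], [1941, -2, -1, -2, -2, 0, 0, 0, 1, 0, 0, -1, 0]), (5623, 2013, [], []),
  (5641, 2044, [], []), (5647, 853, [-1231, -1, -1, 0, 0, 0, 0, -1, -2, 1, 1, 0, -1], []),
  (5653, 740, [], []), (5659, 1464, [], []),
  (5683, 1110, [-639, 0, 0, -1, -1, -1, 0, 0, -1, -1, -1, 1, 0], []),
  (5689, 2419, [-371, 0, 1, 0, 0, 0, 1, 0, -1, 0, 0, 1, 0], []),
  (5701, 75, [2302, 0, 1, -1, 1, 1, 0, -1, -1, 1, 0, 0, 0], []), (5737, 2469, [], []),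
  (5743, 200, [], []), (5749, 330, [], []),
  (5779, 2851, [], [-1845, -2, -2, -1, -2, 0, -1, 0, 1, 1, 0, 0, 0]),
  (5791, 1572, [-2685, 0, 1, 0, 1, 0, -1, 0, 1, 0, 0, -1, 0], []), (5821, 2148, [], []),
  (5827, 1350, [], []),
  (5839, 1854, [2764, 1, 0, 0, 1, 1, 1, 0, 0, 0, 1, 1, 0], [-1695, 0, 0, 1, 1, 0, -1, 0, -1, 1, 0, 1, 0]),
  (5851, 577, [], []), (5857, 1264, [], []),
  (5869, 777, [], [-1543, 0, 1, -1, 0, 0, 0, 1, 0, 0, 0, 1, 0]), (5881, 276, [], []),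
  (5923, 428, [], []), (5953, 869, [], [75, 1, 1, -1, 0, 0, 0, 0, -1, 0, -1, 1, 0]),
  (6007, 77, [], []), (6037, 509, [1483, -2, -2, -1, -1, 1, 1, 0, -1, -1, 0, 1, 0], []),
  (6043, 1715, [], [-1896, -1, 0, -1, -1, -1, 0, 0, 1, -1, -1, -1, 0]), (6067, 665, [], []),
  (6073, 1842, [], []), (6079, 1553, [], []), (6091, 744, [], []), (6121, 1152, [], [])]

/-- Part 8 of `table`. -/
def table7 : List (ℕ × ℕ × List ℤ × List ℤ) := [
  (6133, 949, [], []), (6151, 207, [], []),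
  (6163, 78, [-1542, 0, 0, -1, -2, 0, 0, -1, -1, -1, -1, 1, -1], []),
  (6199, 2645, [715, -1, 0, -1, -2, 1, 1, 0, 0, 0, 0, -1, 0], []), (6211, 136, [], []),
  (6217, 2459, [], []), (6229, 930, [], [3084, -2, 0, -1, -1, 0, 1, 1, 0, -2, 0, 0, 0]),
  (6247, 2316, [], []), (6271, 2020, [], [2808, 2, 1, -1, 0, 0, 0, 1, 0, 0, 0, 0, 0]),
  (6277, 2308, [], [2982, 1, 0, 0, -1, 0, 0, -1, 0, 1, 0, 0, 0]), (6301, 2977, [], []),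
  (6337, 1512, [1154, 2, 2, -1, 0, 0, 1, 1, 0, 0, 1, 0, 0], []),
  (6343, 557, [-717, -1, -1, 0, -1, 0, 0, 0, 0, -1, 1, 1, 0], [2794, -1, 0, 1, 1, 0, 1, 0, 0, -1, 1, -1, 0]),
  (6361, 1858, [282, 0, 0, 1, 0, -1, -1, 0, 0, 1, 0, 0, 0], []), (6367, 769, [], []),
  (6373, 623, [-783, 1, 1, -2, -1, 0, 0, -1, -1, -1, 0, 0, 0], []), (6379, 3006, [], []),
  (6397, 2294, [], []), (6421, 3104, [-14, 2, 0, 0, 0, 1, 0, -1, 0, 1, 1, 0, 0], []),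
  (6427, 1084, [], []), (6451, 212, [], []),
  (6469, 1476, [2804, 0, 0, -1, 0, 1, 0, 0, 0, 1, 1, -1, 0], [-1215, -1, -1, 1, 0, 1, 1, 0, 1, 0, 1, -1, 0]),
  (6481, 80, [], []), (6529, 491, [-449, 0, 1, -2, -1, 0, -1, 0, 1, 1, 0, 0, 0], []),
  (6547, 2332, [], []), (6553, 1944, [], []), (6571, 2979, [], []), (6577, 353, [], []),
  (6607, 1518, [], []), (6619, 569, [], []), (6637, 1370, [], []),
  (6661, 1348, [], [2868, 1, 0, 1, 1, 0, 0, 0, 0, 0, 1, 1, 0]), (6673, 1393, [], []),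
  (6679, 942, [], []), (6691, 2918, [], []),
  (6703, 1480, [-489, 1, 0, 0, 0, 0, -1, 1, 0, 0, 0, 0, 0], []),
  (6709, 1239, [553, -2, 0, 0, -1, 1, 0, 1, 0, 0, 0, 0, 0], []), (6733, 619, [], []),
  (6763, 2155, [], []), (6781, 2926, [], []), (6793, 1168, [], []),
  (6823, 2685, [], [1029, 0, 1, -1, 0, 0, -1, 0, 0, 1, 0, 1, 0]), (6829, 734, [], []),
  (6841, 2808, [], []), (6871, 1466, [], []), (6883, 219, [], []), (6907, 1856, [], []),
  (6949, 1942, [], []), (6961, 507, [], []),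
  (6967, 382, [3111, 1, 0, 1, 1, 0, 1, 1, 2, -1, 0, -1, 0], []), (6991, 1381, [], []),
  (6997, 2908, [], []), (7027, 523, [], [-2152, 1, 1, 0, 1, -1, 0, 1, 0, 0, 0, 0, 0]),
  (7039, 302, [], []), (7057, 145, [], []), (7069, 2040, [], [])]

/-- Part 9 of `table`. -/
def table8 : List (ℕ × ℕ × List ℤ × List ℤ) := [
  (7129, 1249, [], []), (7159, 2880, [], [410, -2, 0, -1, 0, 0, 1, 0, 1, -1, 1, -1, 0]),
  (7177, 2038, [], []), (7207, 1838, [], []),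
  (7213, 2602, [2565, -1, -1, 0, 1, 0, 1, 0, 0, -2, 0, 1, 0], []),
  (7219, 2725, [1783, 0, 1, -1, 0, -1, -1, 1, 0, 0, -1, 1, 0], []),
  (7237, 1830, [], [-341, 1, -1, 2, 1, 0, 0, 1, 0, 0, -1, 1, 1]),
  (7243, 3426, [], [2160, 0, -1, 0, 0, 1, 1, 1, -1, 1, 1, 2, 1]), (7297, 3535, [], []),
  (7309, 3416, [], []), (7321, 308, [], []), (7333, 3062, [], []), (7351, 148, [], []),
  (7369, 2559, [], []), (7393, 1717, [], []), (7411, 394, [], []), (7417, 2312, [], []),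
  (7459, 228, [], []),
  (7477, 3468, [-413, 1, 1, -1, 1, 0, -1, 0, 0, 2, 0, 0, 0], [-3409, 1, 1, -2, -1, 1, 1, -1, 0, 0, 0, -1, -1]),
  (7489, 2467, [], []), (7507, 606, [], []),
  (7537, 1962, [], [-1828, 0, 0, 0, 1, 1, 2, 0, -1, 0, 1, 1, 0]), (7549, 528, [], []),
  (7561, 1298, [], []), (7573, 2057, [], []),
  (7591, 2453, [], [2657, 0, -1, 0, 0, 0, 0, 0, 1, -1, 0, -2, 0]),
  (7603, 2094, [-1916, 0, -1, 1, 2, -1, -1, 0, -1, 0, 0, 1, 0], [-548, 0, -2, 0, -1, 0, 1, 0, 0, -1, 0, 0, 0]),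
  (7621, 3124, [], [341, 2, 0, 2, 1, -1, -2, 0, 0, 1, 0, 0, 0]),
  (7639, 2975, [956, 2, 0, 0, 0, 0, 0, 0, 0, -1, 0, -1, 0], []), (7669, 2070, [], []),
  (7681, 684, [], []), (7687, 2274, [], []), (7699, 2269, [], []), (7717, 3439, [], []),
  (7723, 917, [], [-2950, -1, -1, 1, 2, 0, -1, 0, 0, 0, 0, -1, 0]), (7741, 2452, [], []),
  (7753, 403, [], []), (7759, 1759, [], [-1963, 1, 0, 0, 0, 0, -1, -1, 0, 1, 0, 0, 0]),
  (7789, 233, [], []), (7867, 1465, [876, 0, 0, -1, -2, 0, -1, -1, -1, 1, 0, 1, 0], []),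
  (7873, 1394, [], []), (7879, 1366, [], [-3459, 0, -2, 1, 1, 0, 0, 1, 1, 1, 0, 0, 0]),
  (7927, 3759, [], []), (7933, 2005, [], []),
  (7951, 321, [], [-999, 0, 0, 0, 1, -1, -1, 0, 0, 0, -1, -1, 0]),
  (7963, 1623, [], [3849, -1, -1, 0, -1, -1, 0, -1, 0, -2, -1, 0, 0]), (7993, 3244, [], []),
  (8011, 89, [], []), (8017, 2642, [], []),
  (8053, 3497, [-3288, -1, 1, -1, 0, 0, 1, 0, 1, 1, 1, -1, 0], []), (8059, 2765, [], []),
  (8089, 1413, [], []), (8101, 2217, [], []), (8161, 2903, [], []), (8167, 3092, [], []),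
  (8179, 1096, [], [])]

/-- Part 10 of `table`. -/
def table9 : List (ℕ × ℕ × List ℤ × List ℤ) := [
  (8191, 90, [], []), (8209, 3265, [], []), (8221, 415, [], []),
  (8233, 2612, [-3456, 2, 2, 1, 2, 0, 0, 0, 0, 1, 0, 1, 0], [-1916, 0, 0, 1, 1, 1, 0, 1, 0, 2, 1, 0, 0]),
  (8263, 240, [], []), (8269, 157, [], []), (8287, 568, [], []), (8293, 2050, [], []),
  (8311, 1266, [-2904, 0, 0, -1, 0, 0, 1, 0, 0, 0, 0, 1, 0], []), (8317, 1286, [], []),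
  (8329, 1052, [], []), (8353, 1736, [], []), (8377, 813, [], []),
  (8389, 691, [925, -1, -2, 2, 1, 1, 0, 0, 0, 1, 1, 1, 0], []),
  (8419, 1961, [2605, 2, 1, -1, 0, 0, -1, 0, 1, 1, 0, 0, 0], []),
  (8431, 2147, [], [-224, 0, -1, 2, 1, 0, 1, 0, 0, -1, 0, 0, 0]), (8443, 1035, [], []),
  (8461, 1776, [], []), (8467, 4187, [], []),
  (8521, 2024, [3209, 1, 0, 0, -1, 0, 1, 0, 0, -2, -1, 1, 0], []),
  (8527, 2976, [-3418, -1, 0, 0, 0, 0, 1, 0, 1, -1, 1, 0, 0], [-686, -2, -2, -1, -1, 1, 1, 0, -1, 0, 1, 1, 0]),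
  (8539, 2552, [], []), (8563, 2823, [2169, 2, 0, 0, 0, 1, 1, 0, 1, 0, 1, -1, 0], []),
  (8581, 424, [], []), (8599, 1205, [], []),
  (8623, 1545, [-2202, -1, 0, -1, -2, 1, 0, 1, 1, 1, 0, 0, 1], []), (8629, 3306, [], []),
  (8641, 3572, [3235, 1, 0, 0, 0, 1, 0, -1, 0, 1, 0, 0, 0], []), (8647, 794, [], []),
  (8677, 1378, [], []), (8689, 1903, [], []), (8707, 2413, [], []),
  (8713, 2537, [-3240, 0, -1, 0, 0, 1, 1, 0, 0, -1, 1, 1, 0], []), (8719, 2281, [], []),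
  (8731, 3658, [], []), (8737, 2268, [], []), (8761, 1733, [], []), (8779, 1267, [], []),
  (8803, 988, [], []), (8821, 2436, [], []),
  (8839, 4372, [3787, -1, -2, 1, 1, 0, 0, 1, 1, 1, 0, 0, 0], []),
  (8863, 1461, [-3648, 1, 0, 0, 0, 1, 0, 0, 0, 2, 1, 1, 0], [-1608, 0, 0, 1, 0, -1, -1, 0, 0, 0, -2, 0, -1]),
  (8887, 4227, [], []), (8893, 249, [-2371, 1, 1, 2, 2, 1, 2, 0, 0, -1, 1, 0, 0], []),
  (8923, 3847, [], []), (8929, 4339, [-1602, -1, 0, -2, -1, -1, -1, 0, 0, 0, -1, 1, 0], []),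
  (8941, 1640, [], []), (8971, 341, [], [-407, 0, 0, 0, -1, 1, 0, 0, 0, 1, 1, 1, 0]),
  (9001, 3798, [], []), (9007, 1094, [], [-3878, 0, 0, -1, -1, 1, 1, 1, -1, 0, 1, 1, 0]),
  (9013, 3325, [], []), (9043, 3152, [], []), (9049, 845, [], []),
  (9067, 1081, [], [1197, 1, 1, 1, 1, -1, -1, 0, -1, 1, 0, 1, 0]), (9091, 3388, [], []),
  (9103, 4379, [], [])]

/-- Certificates for the primes `p ≡ 1 (mod 3)` below the Minkowski bound: `p`, a root `r` of
`r² + r + 1` modulo `p`, and the certificates for the two roots `r` and `-1 - r`. -/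
def table : List (ℕ × ℕ × List ℤ × List ℤ) :=
  table0 ++ table1 ++ table2 ++ table3 ++ table4 ++ table5 ++ table6 ++ table7 ++ table8 ++ table9

/-- Certificates for the primes `p ≡ 2 (mod 3)` with `p²` below the Minkowski bound. -/
def itable : List (ℕ × ℕ × List ℤ) := [
  (2, 1, []),
  (5, 4, []),
  (11, 20, []),
  (17, 48, []),
  (23, 88, []),
  (29, 140, []),
  (41, 280, [1, 39, -1, 0, -1, -1, 0, 0, 0, 1, 0, 0, 0, 0]),
  (47, 368, []),
  (53, 468, []),
  (59, 580, []),
  (71, 840, []),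
  (83, 1148, [1, 17, -1, 0, 0, 0, -1, 0, 0, 1, 0, 0, -2, -1]),
  (89, 1320, [])]

lemma table_ok : table.all rowOK = true := by decide +kernel

lemma itable_ok : itable.all irowOK = true := by decide +kernel

/-- The product of the primes below `97`. -/
def primo : ℕ := 23768741896345550770650537601358310

lemma cover_ok : ((List.range 9106).filter fun p => p != 1 && p % 3 == 1 && (Nat.gcd p primo == 1 ||
    [7, 13, 19, 31, 37, 43, 61, 67, 73, 79].contains p)) = table.map Prod.fst := by
  decide +kernel

end SumCubes

end

noncomputable section
open WeierstrassCurve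

namespace SumCubes
open NumberField
namespace KumF
variable {F : Type} [Field F] [NumberField F] (D : KumF F)

/-- The element of `ℚ(ω)` represented by a pair of integers. -/
def cast (x : ℤ × ℤ) : F := x.1 + x.2 * D.w

lemma cast_zm (x y : ℤ × ℤ) : D.cast (zm x y) = D.cast x * D.cast y := by
  have h := D.hw
  simp only [cast, zm]; push_cast
  linear_combination - (x.2 * y.2 : F) * h

lemma cast_add (x y : ℤ × ℤ) : D.cast (x + y) = D.cast x + D.cast y := by
  simp only [cast, Prod.fst_add, Prod.snd_add]; push_cast; ring

lemma cast_sub (x y : ℤ × ℤ) : D.cast (x - y) = D.cast x - D.cast y := by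
  simp only [cast, Prod.fst_sub, Prod.snd_sub]; push_cast; ring

lemma cast_mk (a b : ℤ) : D.cast (a, b) = a + b * D.w := rfl

lemma τ_cast (i : ℕ) (x : ℤ × ℤ) : (D.τ ^ i) (D.cast x) = D.cast x := by
  simp only [cast, map_add, map_mul, map_intCast, D.τ_pow_w]

lemma norm_conj {c0 d1 d2 u w : F} (hw : w ^ 2 + w + 1 = 0) :
    (c0 + d1 * u + d2 * u ^ 2) * (c0 + d1 * (w * u) + d2 * (w * u) ^ 2) *
      (c0 + d1 * (w ^ 2 * u) + d2 * (w ^ 2 * u) ^ 2) =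
    c0 ^ 3 + d1 ^ 3 * u ^ 3 + d2 ^ 3 * u ^ 6 - 3 * c0 * d1 * d2 * u ^ 3 := by
  grind

/-- The relative norm to `ℚ(ω)` of an element with given coefficients. -/
lemma prod_τ (X0 Z1 Z2 Z3 Z4 Z5 : ℤ × ℤ) {x : F}
    (hx : x = D.cast X0 + (1 + 2 * D.w) * (D.cast Z1 * D.θ + D.cast Z2 * D.θ ^ 2 +
      D.cast Z3 * D.θ ^ 3 + D.cast Z4 * D.θ ^ 4 + D.cast Z5 * D.θ ^ 5)) :
    ∏ i ∈ Finset.range 6, (D.τ ^ i) x = D.cast (relN X0 Z1 Z2 Z3 Z4 Z5) := by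
  have hl : ∀ i, (D.τ ^ i) (1 + 2 * D.w) = 1 + 2 * D.w := by
    intro i; simp only [map_add, map_mul, map_one, map_ofNat, D.τ_pow_w]
  have hτ : ∀ i, (D.τ ^ i) x = D.cast X0 + (1 + 2 * D.w) * (D.cast Z1 * ((- D.w ^ 2) ^ i * D.θ) +
      D.cast Z2 * ((- D.w ^ 2) ^ i * D.θ) ^ 2 + D.cast Z3 * ((- D.w ^ 2) ^ i * D.θ) ^ 3 +
      D.cast Z4 * ((- D.w ^ 2) ^ i * D.θ) ^ 4 + D.cast Z5 * ((- D.w ^ 2) ^ i * D.θ) ^ 5) := by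
    intro i
    rw [hx, map_add, map_mul, hl]
    simp only [map_add, map_mul, map_pow, D.τ_cast, D.τ_pow_θ]
  have hw := D.hw
  have hθ := D.hθ
  simp only [relN, cast_add, cast_sub, cast_zm, hτ]
  generalize D.cast X0 = x0
  generalize D.cast Z1 = z1
  generalize D.cast Z2 = z2
  generalize D.cast Z3 = z3
  generalize D.cast Z4 = z4
  generalize D.cast Z5 = z5
  simp only [cast_mk]
  push_cast
  generalize D.w = w at *
  generalize D.θ = θ at *
  clear hx hτ hl
  have h3 := omega_cube hw
  have e1 : (-w ^ 2) ^ 1 = - w ^ 2 := by ring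
  have e2 : (-w ^ 2) ^ 2 = w := by linear_combination w * h3
  have e3 : (-w ^ 2) ^ 3 = -1 := by linear_combination (-w ^ 3 - 1) * h3
  have e4 : (-w ^ 2) ^ 4 = w ^ 2 := by linear_combination (w ^ 5 + w ^ 2) * h3
  have e5 : (-w ^ 2) ^ 5 = -w := by linear_combination -(w ^ 7 + w ^ 4 + w) * h3
  simp only [Finset.prod_range_succ, Finset.prod_range_zero, pow_zero, e1, e2, e3, e4, e5, one_mul]
  set l := 1 + 2 * w with hl
  have hl2 : l ^ 2 = -3 := by rw [hl]; linear_combination 4 * hw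
  set m := -1 - 3 * w with hm
  have hlm : l * m = 5 + w := by rw [hl, hm]; linear_combination -6 * hw
  have hθ' : θ ^ 6 * 3 = l * m := by rw [hθ, hlm]; ring
  have hθ2 : θ ^ 6 * l = - m := by
    have h3 : (3 : F) ≠ 0 := by norm_num
    apply mul_left_cancel₀ h3
    linear_combination l * hθ' + m * hl2
  -- the product over `±θ` is a polynomial in `θ²`
  have key (s v : F) (hv : s ^ 2 = v) (hs : s ^ 6 = θ ^ 6) : (x0 + l * (z1 * s + z2 * s ^ 2 + z3 * s ^ 3 + z4 * s ^ 4 + z5 * s ^ 5)) *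
      (x0 + l * (z1 * (-s) + z2 * (-s) ^ 2 + z3 * (-s) ^ 3 + z4 * (-s) ^ 4 + z5 * (-s) ^ 5)) =
      (x0 * x0 + m * l * (z1 * z5 + z1 * z5 + z3 * z3 - z2 * z4 - z2 * z4)) +
      (l * (x0 * z2 + x0 * z2 - m * (z4 * z4 - z3 * z5 - z3 * z5) - l * (z1 * z1))) * v +
      (l * (x0 * z4 + x0 * z4 + l * (z2 * z2 - z1 * z3 - z1 * z3) + m * (z5 * z5))) * v ^ 2 := by
    subst hv
    have hs2 : s ^ 6 * l = - m := by rw [hs, hθ2]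
    linear_combination (l * (2 * z2 * z4 - z3 ^ 2 - 2 * z1 * z5) + l * (z4 ^ 2 - 2 * z3 * z5) * s ^ 2
      - l * z5 ^ 2 * s ^ 4) * hs2
  have hw12 : (w ^ 2) ^ 6 = 1 := by linear_combination (w ^ 9 + w ^ 6 + w ^ 3 + 1) * h3
  have hw6 : w ^ 6 = 1 := by linear_combination (w ^ 3 + 1) * h3
  have k1 := key θ _ rfl rfl
  have k2 := key (w * θ) (w ^ 2 * θ ^ 2) (by ring) (by rw [mul_pow, hw6, one_mul])
  have k3 := key (w ^ 2 * θ) (w * θ ^ 2) (by linear_combination w * θ ^ 2 * h3) (by rw [mul_pow, hw12, one_mul])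
  rw [show -(w * θ) = -w * θ by ring] at k2
  rw [show -(w ^ 2 * θ) = -w ^ 2 * θ by ring] at k3
  rw [neg_one_mul]
  have kk := congrArg₂ (· * ·) (congrArg₂ (· * ·) k1 k3) k2
  beta_reduce at kk
  rw [norm_conj hw] at kk
  have em : ((-1 : F) + -3 * w) = m := by rw [hm]; ring
  simp only [em, zero_mul, add_zero]
  generalize x0 * x0 + m * l * (z1 * z5 + z1 * z5 + z3 * z3 - z2 * z4 - z2 * z4) = c0 at *
  generalize x0 * z2 + x0 * z2 - m * (z4 * z4 - z3 * z5 - z3 * z5) - l * (z1 * z1) = d1 at *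
  generalize x0 * z4 + x0 * z4 + l * (z2 * z2 - z1 * z3 - z1 * z3) + m * (z5 * z5) = d2 at *
  have perm : ∀ a b c d e f : F, a * b * c * d * e * f = (a * d) * (e * b) * (c * f) := by
    intros; ring
  refine Eq.trans (perm _ _ _ _ _ _) (kk.trans ?_)
  · linear_combination (l ^ 2 * d1 ^ 3 - l * 3 * c0 * d1 * d2 + l ^ 2 * d2 ^ 3 * θ ^ 6 - l * m * d2 ^ 3) * hθ2 - m * d1 ^ 3 * hl2

end KumF
end SumCubes

end

/-! ### Small residue fields -/

noncomputable section
open WeierstrassCurve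

namespace SumCubes

section residue
variable {k : Type} [Field k]

/-- The element `a + b ω` of a field containing a root `ω = W` of `x² + x + 1`. -/
def ck (W : k) (x : ℤ × ℤ) : k := x.1 + x.2 * W

lemma ck_zm {W : k} (hW : W ^ 2 + W + 1 = 0) (x y : ℤ × ℤ) : ck W (zm x y) = ck W x * ck W y := by
  simp only [ck, zm]; push_cast
  linear_combination - (x.2 * y.2 : k) * hW

lemma sixth_root {W t c : k} (hW : W ^ 2 + W + 1 = 0) (h : t ^ 6 = c ^ 6) :
    ∃ j < 6, t = (-W ^ 2) ^ j * c := by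
  have h3 := omega_cube hW
  have hp : (t - c) * (t + c) * (t - W * c) * (t + W * c) * (t - W ^ 2 * c) * (t + W ^ 2 * c) = 0 := by
    have h2 : W ^ 2 = -1 - W := by linear_combination hW
    have : (t - c) * (t - W * c) * (t - W ^ 2 * c) = t ^ 3 - c ^ 3 := by grind
    have : (t + c) * (t + W * c) * (t + W ^ 2 * c) = t ^ 3 + c ^ 3 := by grind
    grind
  simp only [mul_eq_zero] at hp
  rcases hp with ((((hp | hp) | hp) | hp) | hp) | hp
  · exact ⟨0, by norm_num, by linear_combination hp⟩
  · exact ⟨3, by norm_num, by linear_combination hp + (W ^ 3 + 1) * c * h3⟩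
  · exact ⟨2, by norm_num, by linear_combination hp - W * c * h3⟩
  · exact ⟨5, by norm_num, by linear_combination hp + (W ^ 7 + W ^ 4 + W) * c * h3⟩
  · exact ⟨4, by norm_num, by linear_combination hp + (W ^ 5 + W ^ 2) * c * (-1) * h3⟩
  · exact ⟨1, by norm_num, by linear_combination hp⟩

lemma intCast_pow_char (p : ℕ) [CharP k p] [Fact p.Prime] (n : ℤ) : (n : k) ^ p = n := by
  have := map_intCast (frobenius k p) n
  rwa [frobenius_def] at this

lemma zpm_cast {W : k} (hW : W ^ 2 + W + 1 = 0) (p : ℕ) [CharP k p] (d : ℤ × ℤ) (n : ℕ) :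
    ck W (zpm p d n) = ck W d ^ n := by
  induction n with
  | zero => simp [zpm, ck]
  | succ n ih =>
    rw [pow_succ, ← ih, ← ck_zm hW]
    have h (m : ℤ) : ((m % (p : ℤ) : ℤ) : k) = m :=
      (CharP.intCast_eq_intCast k p).2 (Int.mod_modEq m p)
    simp only [zpm, ck, h]

lemma prime_cover {p : ℕ} (hp : p.Prime) (h3 : p % 3 = 1) (hlt : p < 9106) :
    p ∈ table.map Prod.fst := by
  rw [← cover_ok, List.mem_filter]
  refine ⟨List.mem_range.2 hlt, ?_⟩
  have h1 : p ≠ 1 := hp.one_lt.ne'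
  simp only [Bool.and_eq_true, bne_iff_ne, Bool.or_eq_true, beq_iff_eq]
  refine ⟨⟨h1, h3⟩, ?_⟩
  by_cases hc : Nat.gcd p primo = 1
  · exact Or.inl hc
  · right
    have hd : p ∣ primo := by
      by_contra hd
      exact hc ((Nat.Prime.coprime_iff_not_dvd hp).2 hd)
    have hl : primo = [2,3,5,7,11,13,17,19,23,29,31,37,41,43,47,53,59,61,67,71,73,79,83,89].prod := by
      decide +kernel
    rw [hl] at hd
    obtain ⟨a, ha, hpa⟩ := (Prime.dvd_prod_iff hp.prime).1 hd
    have hap : ∀ a ∈ [2,3,5,7,11,13,17,19,23,29,31,37,41,43,47,53,59,61,67,71,73,79,83,89],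
        Nat.Prime a ∧ (a % 3 = 1 → [7, 13, 19, 31, 37, 43, 61, 67, 73, 79].contains a = true) := by
      decide +kernel
    obtain ⟨h4, h5⟩ := hap a ha
    have := (Nat.prime_dvd_prime_iff_eq hp h4).1 hpa
    subst this
    exact h5 h3

/-- At a prime that can only split completely over `ℤ[ω]`, the tables provide an element of small
norm. -/
lemma residue_table [Finite k] {W t : k} (hW : W ^ 2 + W + 1 = 0)
    (ht0 : t ≠ 0) (ht : t ^ 6 = -9 * (5 + W)) (hspan : ∀ x : k, ∃ a b : ℤ, x = a + b * W)
    (hcard : Nat.card k ≤ 9105) :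
    ∃ (l : List ℤ) (C : ℤ × ℤ) (j : ℕ), j < 6 ∧ t = (-W ^ 2) ^ j * ck W C ∧ ck W (val l C) = 0 ∧
      (54 : k) ≠ 0 ∧ 0 < nrm l ∧ nrm l < 4096 * (Nat.card k : ℤ) ^ 2 := by
  classical
  haveI := Fintype.ofFinite k
  obtain ⟨p, hpc⟩ := CharP.exists k
  haveI : Fact p.Prime := ⟨(CharP.char_is_prime_or_zero k p).resolve_right
    (CharP.char_ne_zero_of_finite k p)⟩
  have hp : p.Prime := Fact.out
  obtain ⟨n, -, hn⟩ := FiniteField.card k p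
  rw [Nat.card_eq_fintype_card] at *
  have hn1 : 1 ≤ (n : ℕ) := n.2
  have hpk : p ≤ Fintype.card k := hn ▸ Nat.le_self_pow (by omega) p
  have hz (m : ℕ) : (m : k) = 0 ↔ p ∣ m := CharP.cast_eq_zero_iff k p m
  have hzz (m : ℤ) : (m : k) = 0 ↔ (p : ℤ) ∣ m := CharP.intCast_eq_zero_iff k p m
  have h3 : p ≠ 3 := by
    rintro rfl
    have : (3 : k) = 0 := by exact_mod_cast (hz 3).2 dvd_rfl
    apply ht0
    apply pow_eq_zero_iff (n := 6) (by norm_num) |>.1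
    rw [ht]; linear_combination -3 * (5 + W) * this
  have h3k : (3 : k) ≠ 0 := fun h => h3 (by
    have := (hz 3).1 (by exact_mod_cast h)
    exact (Nat.prime_dvd_prime_iff_eq hp Nat.prime_three).1 this)
  have h54 : p ≠ 2 → (54 : k) ≠ 0 := by
    intro h2 h
    have h2k : (2 : k) ≠ 0 := fun h => h2 (by
      have := (hz 2).1 (by exact_mod_cast h)
      exact (Nat.prime_dvd_prime_iff_eq hp Nat.prime_two).1 this)
    have : (54 : k) = 2 * 3 ^ 3 := by norm_num
    rw [this] at h
    exact mul_ne_zero h2k (pow_ne_zero 3 h3k) h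
  have hmod : p % 3 = 1 ∨ p % 3 = 2 := by
    have : p % 3 ≠ 0 := fun h => h3 ((Nat.prime_dvd_prime_iff_eq Nat.prime_three hp).1
      (Nat.dvd_of_mod_eq_zero h)).symm
    omega
  have hw3 := omega_cube hW
  rcases hmod with hmod | hmod
  · have hmem := prime_cover hp hmod (by omega)
    obtain ⟨⟨p', r, A, B⟩, hrow, rfl⟩ := List.mem_map.1 hmem
    have hok := List.all_eq_true.1 table_ok _ hrow
    simp only [rowOK, Bool.and_eq_true, decide_eq_true_eq] at hok
    simp only at *
    obtain ⟨⟨⟨⟨hr, hr1⟩, h6⟩, hA⟩, hB⟩ := hok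
    have hp2 : p' ≠ 2 := by rintro rfl; omega
    have main : ∀ (r : ℕ) (A : List ℤ), W = r → splitOK p' r A = true →
      ∃ (l : List ℤ) (C : ℤ × ℤ) (j : ℕ), j < 6 ∧ t = (-W ^ 2) ^ j * ck W C ∧ ck W (val l C) = 0 ∧
      (54 : k) ≠ 0 ∧ 0 < nrm l ∧ nrm l < 4096 * (Fintype.card k : ℤ) ^ 2 := by
      intro r A hWr hA
      rcases A with - | ⟨c, l⟩
      · exfalso
        simp only [splitOK, bne_iff_ne] at hA
        obtain ⟨a, b, hab⟩ := hspan t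
        have htp : t ^ p' = t := by
          have : t = ((a + b * r : ℤ) : k) := by rw [hab, hWr]; push_cast; ring
          rw [this]; exact intCast_pow_char p' _
        have ht1 : t ^ (p' - 1) = 1 := by
          apply mul_right_cancel₀ ht0
          rw [← pow_succ, Nat.sub_add_cancel hp.one_lt.le, htp, one_mul]
        obtain ⟨e, he⟩ := h6
        rw [he, pow_mul, ht] at ht1
        apply hA
        have h1 : (((p' - 1) * (9 * (5 + r))) ^ ((p' - 1) / 6) : ℕ) ≡ 1 [MOD p'] := by
          rw [← CharP.natCast_eq_natCast k p'] 
          have : (p' - 1) / 6 = e := by omega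
          rw [this]
          push_cast [Nat.cast_sub hp.one_lt.le]
          rw [CharP.cast_eq_zero k p', ← hWr]
          refine Eq.trans ?_ ht1
          congr 1; ring
        rw [h1, Nat.mod_eq_of_lt hp.one_lt]
      · simp only [splitOK, Bool.and_eq_true, decide_eq_true_eq] at hA
        obtain ⟨⟨⟨hc, hv⟩, hn0⟩, hn1⟩ := hA
        have hc' := (hzz _).2 hc
        obtain ⟨j, hj, hjt⟩ := sixth_root (t := t) (c := (c : k)) hW (by
          rw [ht, hWr]; push_cast at hc'; linear_combination -hc')
        refine ⟨l, (c, 0), j, hj, by rw [hjt]; simp [ck], ?_, h54 hp2, hn0, hn1.trans_le ?_⟩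
        · have := (hzz _).2 hv
          rw [ck, hWr]; push_cast at this; exact this
        · have : (p' : ℤ) ≤ Fintype.card k := by exact_mod_cast hpk
          gcongr
    have hrk : ((r : k) ^ 2 + r + 1) = 0 := by exact_mod_cast (hz _).2 hr
    have hf : (W - r) * (W + 1 + r) = 0 := by linear_combination hW - hrk
    rcases mul_eq_zero.1 hf with hf | hf
    · exact main r A (by linear_combination hf) hA
    · refine main _ B ?_ hB
      rw [Nat.sub_sub, Nat.cast_sub (by omega), CharP.cast_eq_zero]
      push_cast; linear_combination hf
  · have hWp : W ^ p = W ^ 2 := by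
      obtain ⟨q, hq⟩ : ∃ q, p = 3 * q + 2 := ⟨p / 3, by omega⟩
      rw [hq, pow_add, pow_mul, hw3, one_pow, one_mul]
    have hWW : W ^ 2 - W ≠ 0 := by
      intro h
      apply h3k
      have h1 : W = 1 := by
        have : W ≠ 0 := by rintro rfl; simp at hW
        apply mul_left_cancel₀ this; linear_combination h
      rw [h1] at hW; linear_combination hW
    have hfr (x y : k) : (x + y) ^ p = x ^ p + y ^ p := add_pow_char x y p
    have hab (a b : ℤ) : ((a : k) + b * W) ^ p = a + b * W ^ 2 := by
      rw [hfr, mul_pow, intCast_pow_char p, intCast_pow_char p, hWp]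
    have hindep (a b : ℤ) (h : (a : k) + b * W = 0) : (p : ℤ) ∣ a ∧ (p : ℤ) ∣ b := by
      have h' := hab a b
      rw [h, zero_pow hp.ne_zero] at h'
      have hb : (b : k) = 0 := by
        have : (b : k) * (W ^ 2 - W) = 0 := by linear_combination -h' - h
        exact (mul_eq_zero.1 this).resolve_right hWW
      refine ⟨(hzz a).1 ?_, (hzz b).1 hb⟩
      rw [hb] at h; simpa using h
    have hn2 : 2 ≤ (n : ℕ) := by
      by_contra hlt
      have : (n : ℕ) = 1 := by omega
      rw [this, pow_one] at hn
      have := FiniteField.pow_card W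
      rw [hn, hWp] at this
      exact hWW (by linear_combination this)
    have hp2k : p ^ 2 ≤ Fintype.card k := hn ▸ Nat.pow_le_pow_right hp.pos hn2
    have hp96 : p < 96 := by nlinarith
    have hmem : p ∈ itable.map Prod.fst := by
      have : ∀ p < 96, p.Prime → p % 3 = 2 → p ∈ itable.map Prod.fst := by decide +kernel
      exact this p hp96 hp hmod
    obtain ⟨⟨p', e, A⟩, hrow, rfl⟩ := List.mem_map.1 hmem
    have hok := List.all_eq_true.1 itable_ok _ hrow
    have h2row : itable.all (fun x => x.1 != 2 || x.2.2 == []) = true := by decide +kernel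
    have h2row := List.all_eq_true.1 h2row _ hrow
    simp only [irowOK, Bool.and_eq_true, decide_eq_true_eq] at hok
    simp only at *
    obtain ⟨he, hA⟩ := hok
    match A, hA with
    | [], hA =>
      exfalso
      simp only [inertOK, decide_eq_true_eq] at hA
      apply hA
      have htp : t ^ (p' ^ 2) = t := by
        obtain ⟨a, b, h⟩ := hspan t
        rw [h, pow_two, pow_mul, hab, hfr, mul_pow, intCast_pow_char p', intCast_pow_char p',
          ← pow_mul, mul_comm 2, pow_mul, hWp]
        linear_combination (b : k) * W * hw3
      have ht1 : t ^ (p' ^ 2 - 1) = 1 := by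
        apply mul_right_cancel₀ ht0
        rw [← pow_succ, Nat.sub_add_cancel (Nat.one_le_pow _ _ hp.pos), htp, one_mul]
      have ht2 : t ^ (6 * e) = 1 := by
        obtain ⟨m, hm⟩ := he
        rw [hm, pow_mul, ht1, one_pow]
      rw [pow_mul, ht] at ht2
      have hz1 := zpm_cast hW p' (-45, -9) e
      have : ck W (-45, -9) = -9 * (5 + W) := by simp [ck]; ring
      rw [this, ht2, ck] at hz1
      refine hindep _ _ ?_
      push_cast; linear_combination hz1
    | [a], hA => simp [inertOK] at hA
    | a :: b :: l, hA =>
      simp only [inertOK, Bool.and_eq_true, decide_eq_true_eq] at hA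
      obtain ⟨⟨⟨⟨⟨h1, h2⟩, h3⟩, h4⟩, h5⟩, h6⟩ := hA
      have h1' := (hzz _).2 h1
      have h2' := (hzz _).2 h2
      have h3' := (hzz _).2 h3
      have h4' := (hzz _).2 h4
      obtain ⟨j, hj, hjt⟩ := sixth_root (t := t) (c := ck W (a, b)) hW (by
        set s := zm (a, b) (zm (a, b) (a, b))
        have hs : ck W s = ck W (a, b) ^ 3 := by rw [ck_zm hW, ck_zm hW]; ring
        have hs2 : ck W (zm s s) = ck W (a, b) ^ 6 := by rw [ck_zm hW, hs]; ring
        rw [ht, ← hs2, ck]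
        push_cast at h1' h2'
        linear_combination -h1' - W * h2')
      refine ⟨l, (a, b), j, hj, hjt, ?_, h54 ?_, h5, h6.trans_le ?_⟩
      · rw [ck, h3', h4']; ring
      · rintro rfl; simp at h2row
      · have : (p' : ℤ) ^ 2 ≤ Fintype.card k := by exact_mod_cast hp2k
        have h0 : (0 : ℤ) ≤ (p' : ℤ) ^ 2 := by positivity
        nlinarith

end residue
end SumCubes

end

/-! ### Integers of `F` in coordinates over `ℤ[ω]` -/

noncomputable section

namespace SumCubes
open NumberField
namespace KumF
variable {F : Type} [Field F] [NumberField F] (D : KumF F)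

/-- Six integers of `F`, linearly independent over `ℤ[ω]`. -/
def kb : Fin 6 → F := ![1, (D.w + (1 + 2 * D.w) * D.θ ^ 3) / 2, D.t, (1 + 2 * D.w) * D.θ ^ 2,
  (1 + 2 * D.w) * D.θ * (D.w + D.θ ^ 3) / 2, (1 + 2 * D.w) * D.θ ^ 2 * (D.w + D.θ ^ 3) / 2]

lemma int_num (n : ℤ) : IsIntegral ℤ (n : F) := by
  simpa using isIntegral_algebraMap (R := ℤ) (A := F) (x := n)

lemma int_cast (x : ℤ × ℤ) : IsIntegral ℤ (D.cast x) :=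
  (int_num _).add ((int_num _).mul D.int_w)

lemma int_kb (i : Fin 6) : IsIntegral ℤ (D.kb i) := by
  have hw := D.hw
  have hθ := D.hθ
  have hθ' : 3 * D.θ ^ 6 = 5 + D.w := by rw [hθ]; ring
  have hc (a b : ℤ) : IsIntegral ℤ ((a : F) + b * D.w) := D.int_cast (a, b)
  have hs : IsIntegral ℤ ((D.w + (1 + 2 * D.w) * D.θ ^ 3) / 2) := by
    set s := (D.w + (1 + 2 * D.w) * D.θ ^ 3) / 2 with hs
    have h2s : 2 * s = D.w + (1 + 2 * D.w) * D.θ ^ 3 := by rw [hs]; ring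
    have e : s ^ 2 = D.w * s - 1 := by
      have : (4 : F) ≠ 0 := by norm_num
      apply mul_left_cancel₀ this
      generalize D.w = w at *
      generalize D.θ = θ at *
      clear hs
      grind
    have e2 : IsIntegral ℤ (D.w ^ 2 * s) := by
      refine ⟨(Polynomial.X ^ 2 - Polynomial.X) ^ 2 - (Polynomial.X ^ 2 - Polynomial.X) + 1, ?_, ?_⟩
      · monicity!
      · have h3 := D.w3
        have h : (D.w ^ 2 * s) ^ 2 - D.w ^ 2 * s = - D.w := by
          linear_combination D.w ^ 4 * e + (D.w ^ 2 * s - D.w) * h3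
        simp only [Polynomial.eval₂_add, Polynomial.eval₂_sub, Polynomial.eval₂_pow,
          Polynomial.eval₂_X, Polynomial.eval₂_one, h]
        linear_combination hw
    have : s = D.w * (D.w ^ 2 * s) := by
      have := D.w3; linear_combination - s * this
    rw [this]; exact D.int_w.mul e2
  have h2s : 2 * ((D.w + (1 + 2 * D.w) * D.θ ^ 3) / 2) = D.w + (1 + 2 * D.w) * D.θ ^ 3 := by ring
  fin_cases i <;> simp only [kb, Fin.zero_eta, Fin.mk_one, Fin.reduceFinMk, Matrix.cons_val]
  · exact isIntegral_one
  · exact hs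
  · exact D.int_t
  · apply IsIntegral.of_pow (n := 3) (by norm_num)
    have : ((1 + 2 * D.w) * D.θ ^ 2) ^ 3 = D.cast (-3, -9) := by
      simp only [cast]; push_cast
      generalize D.w = w at *
      generalize D.θ = θ at *
      clear hs hc h2s
      grind
    rw [this]; exact D.int_cast _
  · apply IsIntegral.of_pow (n := 3) (by norm_num)
    have : ((1 + 2 * D.w) * D.θ * (D.w + D.θ ^ 3) / 2) ^ 3 =
      D.cast (-4, -2) + D.cast (0, -3) * ((D.w + (1 + 2 * D.w) * D.θ ^ 3) / 2) := by
      simp only [cast]; push_cast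
      generalize D.w = w at *
      generalize D.θ = θ at *
      clear hs hc h2s
      have : (8 : F) ≠ 0 := by norm_num
      apply mul_left_cancel₀ this
      field_simp
      grind
    rw [this]
    exact (D.int_cast _).add ((D.int_cast _).mul hs)
  · apply IsIntegral.of_pow (n := 3) (by norm_num)
    have : ((1 + 2 * D.w) * D.θ ^ 2 * (D.w + D.θ ^ 3) / 2) ^ 3 =
      D.cast (6, 4) + D.cast (1, 3) * ((D.w + (1 + 2 * D.w) * D.θ ^ 3) / 2) := by
      simp only [cast]; push_cast
      generalize D.w = w at *
      generalize D.θ = θ at *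
      clear hs hc h2s
      have : (8 : F) ≠ 0 := by norm_num
      apply mul_left_cancel₀ this
      field_simp
      grind
    rw [this]
    exact (D.int_cast _).add ((D.int_cast _).mul hs)

end KumF
end SumCubes

end

noncomputable section

namespace SumCubes
open NumberField
namespace KumF
variable {F : Type} [Field F] [NumberField F] (D : KumF F)

/-- The family `kb` in the ring of integers. -/
def kbI (i : Fin 6) : 𝓞 F := ⟨D.kb i, D.int_kb i⟩

/-- The element of `ℤ[ω]` represented by a pair of integers, in the ring of integers. -/
def castI (x : ℤ × ℤ) : 𝓞 F := x.1 + x.2 * D.wI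

lemma coe_castI (x : ℤ × ℤ) : (D.castI x : F) = D.cast x := by simp [castI, cast]

/-- The integer of `F` with coefficient list `l`. -/
def bet (l : List ℤ) : 𝓞 F := ∑ i : Fin 6, D.castI (kc l i) * D.kbI i

lemma coe_bet (l : List ℤ) : (D.bet l : F) = ∑ i : Fin 6, D.cast (kc l i) * D.kb i := by
  simp only [bet, map_sum, map_mul, coe_castI]; rfl

lemma bet_eq (l : List ℤ) : 54 * D.bet l = 54 * D.castI (kc l 0) +
    9 * (D.castI (kc l 1) * (3 * D.wI - D.tI ^ 3)) + 54 * (D.castI (kc l 2) * D.tI) -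
    18 * (D.castI (kc l 3) * ((1 + 2 * D.wI) * D.tI ^ 2)) +
    3 * (D.castI (kc l 4) * (D.tI * (9 * D.wI + (1 + 2 * D.wI) * D.tI ^ 3))) -
    D.castI (kc l 5) * ((1 + 2 * D.wI) * (D.tI ^ 2 * (9 * D.wI + (1 + 2 * D.wI) * D.tI ^ 3))) := by
  apply RingOfIntegers.ext
  have h (n : ℕ) [n.AtLeastTwo] : ((OfNat.ofNat n : 𝓞 F) : F) = OfNat.ofNat n :=
    map_ofNat (algebraMap (𝓞 F) F) n
  simp only [map_add, map_sub, map_mul, h, coe_bet, coe_castI, map_pow, coe_tI, coe_wI, map_one]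
  simp only [Fin.sum_univ_succ, kb, t, Fin.succ_zero_eq_one]
  simp
  generalize D.cast (kc l 0) = k0
  generalize D.cast (kc l 1) = k1
  generalize D.cast (kc l 2) = k2
  generalize D.cast (kc l 3) = k3
  generalize D.cast (kc l 4) = k4
  generalize D.cast (kc l 5) = k5
  have hw := D.hw
  generalize D.w = w at *
  generalize D.θ = θ at *
  have h2 : w ^ 2 = -1 - w := by linear_combination hw
  have h3 : w ^ 3 = 1 := by grind
  have h4 : w ^ 4 = w := by grind
  have h5 : w ^ 5 = -1 - w := by grind
  have h6 : w ^ 6 = 1 := by grind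
  have h7 : w ^ 7 = w := by grind
  ring_nf
  simp only [h2, h3, h4, h5, h6, h7]
  ring

lemma bet_congr (l : List ℤ) (C : ℤ × ℤ) {k : Type} [Field k] (φ : 𝓞 F →+* k)
    (h : φ D.tI = ck (φ D.wI) C) : 54 * φ (D.bet l) = ck (φ D.wI) (val l C) := by
  have hW : φ D.wI ^ 2 + φ D.wI + 1 = 0 := by
    have := congrArg φ D.wI_eq; simpa using this
  have hn (n : ℕ) [n.AtLeastTwo] : φ (OfNat.ofNat n) = OfNat.ofNat n := map_ofNat φ n
  have h1 := congrArg φ (D.bet_eq l)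
  have hc (x : ℤ × ℤ) : φ (D.castI x) = ck (φ D.wI) x := by simp [castI, ck]
  simp only [map_add, map_sub, map_mul, map_pow, map_one, hn, hc, h] at h1
  rw [h1]
  have hadd (x y : ℤ × ℤ) : ck (φ D.wI) (x + y) = ck (φ D.wI) x + ck (φ D.wI) y := by
    simp [ck]; ring
  have hsub (x y : ℤ × ℤ) : ck (φ D.wI) (x - y) = ck (φ D.wI) x - ck (φ D.wI) y := by
    simp [ck]; ring
  have hconst (n : ℤ) : ck (φ D.wI) (n, 0) = n := by simp [ck]
  have hw : ck (φ D.wI) (0, 1) = φ D.wI := by simp [ck]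
  have hl : ck (φ D.wI) (1, 2) = 1 + 2 * φ D.wI := by simp [ck]
  simp only [val, hadd, hsub, ck_zm hW, hconst, hw, hl]
  push_cast
  ring

lemma absNorm_bet (l : List ℤ) : 4096 * (Ideal.absNorm (Ideal.span {D.bet l}) : ℤ) = nrm l := by
  have h2 : (Ideal.absNorm (Ideal.span {(2 : 𝓞 F)}) : ℤ) = 4096 := by
    have hn (n : ℕ) [n.AtLeastTwo] : ((OfNat.ofNat n : 𝓞 F) : F) = OfNat.ofNat n :=
      map_ofNat (algebraMap (𝓞 F) F) n
    have := D.absNorm_span (x := 2) (a := 64) (b := 0) (by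
      simp only [hn, map_ofNat]; norm_num)
    rw [this]; norm_num
  have h3 : (Ideal.absNorm (Ideal.span {2 * D.bet l}) : ℤ) = nrm l := by
    refine D.absNorm_span (x := 2 * D.bet l) ?_
    rw [← cast_mk]
    refine D.prod_τ _ _ _ _ _ _ ?_
    have hn (n : ℕ) [n.AtLeastTwo] : ((OfNat.ofNat n : 𝓞 F) : F) = OfNat.ofNat n :=
      map_ofNat (algebraMap (𝓞 F) F) n
    simp only [map_mul, hn, coe_bet, cast_add, cast_zm]
    have hw1 : D.cast (0, 1) = D.w := by simp [cast]
    rw [hw1]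
    simp only [Fin.sum_univ_succ, kb, t, Fin.succ_zero_eq_one]
    simp
    ring
  rw [← h3, ← Ideal.span_singleton_mul_span_singleton, map_mul, ← h2]
  push_cast; ring

/-- A free prime of norm below the Minkowski bound has a conjugate containing an element of norm
smaller than the square of the norm of the prime. -/
lemma Free.exists_small {P : Ideal (𝓞 F)} [hP : P.IsMaximal] (hb : P ≠ ⊥) (h : D.Free P)
    (hN : Ideal.absNorm P ≤ 9105) : ∃ (i : ℕ) (β : 𝓞 F), β ≠ 0 ∧ β ∈ D.T i P ∧
      Ideal.absNorm (Ideal.span {β}) < Ideal.absNorm P ^ 2 := by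
  letI : Field (𝓞 F ⧸ P) := Ideal.Quotient.field P
  haveI : Finite (𝓞 F ⧸ P) := Ideal.finiteQuotientOfFreeOfNeBot P hb
  set φ := Ideal.Quotient.mk P with hφ
  have hW : φ D.wI ^ 2 + φ D.wI + 1 = 0 := by
    have := congrArg φ D.wI_eq; simpa using this
  have hn (n : ℕ) [n.AtLeastTwo] : φ (OfNat.ofNat n) = OfNat.ofNat n := map_ofNat φ n
  have hc : Nat.card (𝓞 F ⧸ P) = Ideal.absNorm P := by
    rw [Ideal.absNorm_apply, Submodule.cardQuot_apply]
  obtain ⟨l, C, j, hj, htC, hv, h54, hn0, hn1⟩ := residue_table (W := φ D.wI) (t := φ D.tI) hW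
    (fun h0 => h.tI_notMem hb (Ideal.Quotient.eq_zero_iff_mem.1 h0))
    (by
      have := congrArg φ D.tI_pow
      simpa [hn] using this)
    (by
      intro x
      obtain ⟨y, rfl⟩ := Ideal.Quotient.mk_surjective x
      obtain ⟨a, b, hab⟩ := h.exists_sub_mem hb y
      refine ⟨a, b, ?_⟩
      have := Ideal.Quotient.eq.2 hab
      rw [this]; simp [hφ])
    (by rw [hc]; exact hN)
  have hnorm := D.absNorm_bet l
  refine ⟨6 - j, D.bet l, ?_, ?_, ?_⟩
  · rintro h0
    rw [h0] at hnorm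
    simp at hnorm
    omega
  · rw [mem_T, ← Ideal.Quotient.eq_zero_iff_mem]
    have h1 := D.bet_congr l C (φ.comp (D.ρ (6 - j)).toRingHom) (by
      simp only [RingHom.comp_apply, RingEquiv.toRingHom_eq_coe, RingHom.coe_coe, ρ_tI, ρ_wI,
        map_mul, map_pow, map_neg]
      rw [htC, ← mul_assoc, ← pow_add, Nat.sub_add_cancel hj.le]
      have h3 := omega_cube hW
      linear_combination ck (φ D.wI) C * (φ D.wI ^ 9 + φ D.wI ^ 6 + φ D.wI ^ 3 + 1) * h3)
    simp only [RingHom.comp_apply, RingEquiv.toRingHom_eq_coe, RingHom.coe_coe, ρ_wI, hv] at h1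
    exact (mul_eq_zero.1 h1).resolve_left h54
  · rw [hc] at hn1
    have : (Ideal.absNorm (Ideal.span {D.bet l}) : ℤ) < (Ideal.absNorm P : ℤ) ^ 2 := by omega
    exact_mod_cast this

end KumF
end SumCubes

end

noncomputable section

namespace SumCubes
open NumberField
namespace KumF
variable {F : Type} [Field F] [NumberField F] (D : KumF F)

/-! ### The relevant eigenspace of the class group is trivial -/

open Classical in
/-- The class of an ideal, and `1` for the zero ideal. -/
def cl (I : Ideal (𝓞 F)) : ClassGroup (𝓞 F) :=
  if h : I ≠ ⊥ then ClassGroup.mk0 ⟨I, mem_nonZeroDivisors_of_ne_zero h⟩ else 1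

lemma cl_mul {I J : Ideal (𝓞 F)} (hI : I ≠ ⊥) (hJ : J ≠ ⊥) : cl (I * J) = cl I * cl J := by
  have : I * J ≠ ⊥ := mul_ne_zero hI hJ
  rw [cl, cl, cl, dif_pos hI, dif_pos hJ, dif_pos this, ← map_mul]
  rfl

lemma cl_pow {I : Ideal (𝓞 F)} (hI : I ≠ ⊥) (n : ℕ) : cl (I ^ n) = cl I ^ n := by
  have : I ^ n ≠ ⊥ := pow_ne_zero n hI
  rw [cl, cl, dif_pos hI, dif_pos this, ← map_pow]
  rfl

lemma cl_eq_one {I : Ideal (𝓞 F)} (hI : I ≠ ⊥) : cl I = 1 ↔ I.IsPrincipal := by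
  rw [cl, dif_pos hI, ClassGroup.mk0_eq_one_iff]

lemma cl_span (x : 𝓞 F) : cl (Ideal.span {x}) = 1 := by
  by_cases h : x = 0
  · rw [cl, dif_neg]; simp [h]
  · exact (cl_eq_one (by simpa using h)).2 ⟨x, rfl⟩

lemma T_span_isPrincipal (j : ℕ) (x : 𝓞 F) :
    D.T j (Ideal.span {x}) = Ideal.span {(D.ρ j).symm x} := by
  have := D.T_span j ((D.ρ j).symm x)
  rwa [RingEquiv.apply_symm_apply] at this

/-- The component of the class of `I` in the `3`-eigenspace of `τ` on the `7`-part of the class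
group, where `7 ^ k * q` is the class number and `7 ∤ q`: a weighted product over the conjugates,
with `M = 3 ^ 7 ^ k` in place of a Teichmüller lift of `3`. -/
def G (q M : ℕ) (I : Ideal (𝓞 F)) : ClassGroup (𝓞 F) :=
  ∏ j ∈ Finset.range 6, cl (D.T j I) ^ (q * M ^ j)

section
variable {k q M : ℕ}

lemma G_mul {I J : Ideal (𝓞 F)} (hI : I ≠ ⊥) (hJ : J ≠ ⊥) :
    D.G q M (I * J) = D.G q M I * D.G q M J := by
  have h (j) : D.T j I ≠ ⊥ := fun h => hI (D.T_eq_bot.1 h)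
  have h' (j) : D.T j J ≠ ⊥ := fun h => hJ (D.T_eq_bot.1 h)
  simp only [G, T_mul, cl_mul (h _) (h' _), mul_pow, Finset.prod_mul_distrib]

lemma G_span (x : 𝓞 F) : D.G q M (Ideal.span {x}) = 1 := by
  simp only [G, T_span_isPrincipal, cl_span, one_pow, Finset.prod_const_one]

lemma M_pow (k : ℕ) : 7 ^ k ∣ (3 ^ 7 ^ k) ^ 6 - 1 := by
  have h : (3 ^ 6 : ℕ) ≡ 1 [MOD 7] := by decide
  have h2 : ∀ k : ℕ, (3 ^ 6 : ℕ) ^ 7 ^ k ≡ 1 [MOD 7 ^ (k + 1)] := by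
    intro k
    induction k with
    | zero => simpa using h
    | succ k ih =>
      have : (7 : ℤ) ^ (k + 1 + 1) ∣ ((3 ^ 6 : ℤ) ^ 7 ^ k) ^ 7 - 1 ^ 7 := by
        have hd : (7 : ℤ) ^ (k + 1) ∣ (3 ^ 6 : ℤ) ^ 7 ^ k - 1 := by
          have := (Nat.modEq_iff_dvd.1 ih.symm)
          push_cast at this; exact_mod_cast this
        have := dvd_sub_pow_of_dvd_sub (R := ℤ) (p := 7) (a := (3 ^ 6 : ℤ) ^ 7 ^ k) (b := 1)
          (by exact (dvd_pow_self (7 : ℤ) (by omega)).trans hd) 1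
        obtain ⟨c, hc⟩ := hd
        have hx : (3 ^ 6 : ℤ) ^ 7 ^ k = 1 + 7 ^ (k + 1) * c := by linear_combination hc
        rw [hx]
        refine ⟨c + 7 ^ k * (21 * c ^ 2 + 35 * 7 ^ (k + 1) * c ^ 3 + 35 * (7 ^ (k + 1)) ^ 2 * c ^ 4 +
          21 * (7 ^ (k + 1)) ^ 3 * c ^ 5 + 7 * (7 ^ (k + 1)) ^ 4 * c ^ 6 + (7 ^ (k + 1)) ^ 5 * c ^ 7), ?_⟩
        have e : (7 : ℤ) ^ (k + 1 + 1) = 49 * 7 ^ k := by ring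
        have e1 : (7 : ℤ) ^ (k + 1) = 7 * 7 ^ k := by ring
        rw [e, e1]; ring
      refine (Nat.modEq_iff_dvd.2 ?_).symm
      push_cast
      rw [pow_succ 7 k, pow_mul]
      simpa using this
  have h3 := (Nat.modEq_iff_dvd' (Nat.one_le_pow _ _ (by norm_num))).1 (h2 k).symm
  rw [← pow_mul, mul_comm, pow_mul]
  exact (pow_dvd_pow 7 (Nat.le_succ k)).trans h3

lemma M_mod (k : ℕ) : 3 ^ 7 ^ k ≡ 3 [MOD 7] := by
  induction k with
  | zero => rfl
  | succ k ih =>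
    rw [pow_succ 7, pow_mul]
    exact (ih.pow 7).trans (by decide)

lemma M_pos {M : ℕ} (hM3 : M ≡ 3 [MOD 7]) : 0 < M := by
  rcases M with - | M
  · exact absurd hM3 (by decide)
  · omega

variable (hkq : ∀ c : ClassGroup (𝓞 F), c ^ (7 ^ k * q) = 1)
variable (hM6 : 7 ^ k ∣ M ^ 6 - 1) (hM3 : M ≡ 3 [MOD 7])
include hkq hM6 hM3

lemma G_T_one (I : Ideal (𝓞 F)) : D.G q M (D.T 1 I) ^ M = D.G q M I := by
  have hMM : ∀ c : ClassGroup (𝓞 F), c ^ (q * M ^ 6) = c ^ q := by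
    intro c
    obtain ⟨m, hm⟩ := hM6
    have h1 : 1 ≤ M ^ 6 := Nat.one_le_pow _ _ (M_pos hM3)
    have : M ^ 6 = 7 ^ k * m + 1 := by rw [← hm]; omega
    rw [this, show q * (7 ^ k * m + 1) = 7 ^ k * q * m + q by ring, pow_add, pow_mul, hkq, one_pow,
      one_mul]
  rw [G, G, ← Finset.prod_pow]
  simp only [T_T, ← pow_mul (cl _)]
  rw [Finset.prod_range_succ, Finset.prod_range_succ' _ 5]
  rw [show 1 + 5 = 6 from rfl, T_six, T_zero]
  congr 1
  · refine Finset.prod_congr rfl fun j _ => ?_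
    rw [add_comm 1 j]; congr 1; ring
  · rw [show q * M ^ 5 * M = q * M ^ 6 by ring, hMM]; simp

lemma G_T (i : ℕ) (I : Ideal (𝓞 F)) : D.G q M (D.T i I) ^ (M ^ i) = D.G q M I := by
  induction i generalizing I with
  | zero => simp [T_zero]
  | succ i ih =>
    rw [add_comm i 1, ← D.T_T i 1, add_comm 1 i, pow_succ, pow_mul, ih, D.G_T_one hkq hM6 hM3]

omit hM6 hM3 in
lemma G_pow (I : Ideal (𝓞 F)) : D.G q M I ^ 7 ^ k = 1 := by
  rw [G, ← Finset.prod_pow]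
  refine Finset.prod_eq_one fun j _ => ?_
  rw [← pow_mul, show q * M ^ j * 7 ^ k = 7 ^ k * q * M ^ j by ring, pow_mul,
    hkq, one_pow]

lemma G_eq_one_of_T (i : ℕ) (I : Ideal (𝓞 F)) (h : D.G q M (D.T i I) = 1) : D.G q M I = 1 := by
  rw [← D.G_T hkq hM6 hM3 i, h, one_pow]

lemma G_of_not_free {P : Ideal (𝓞 F)} (h : ¬ D.Free P) : D.G q M P = 1 := by
  simp only [Free, not_forall, not_not] at h
  obtain ⟨j, h0, h6, hj⟩ := h
  have h1 := D.G_T hkq hM6 hM3 j P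
  rw [hj] at h1
  have h2 : D.G q M P ^ (M ^ j - 1) = 1 := by
    apply mul_right_cancel (b := D.G q M P)
    rw [← pow_succ, Nat.sub_add_cancel (Nat.one_le_pow _ _ (M_pos hM3)), h1, one_mul]
  have hc : Nat.Coprime (M ^ j - 1) (7 ^ k) := by
    apply Nat.Coprime.pow_right
    rw [Nat.coprime_comm, Nat.Prime.coprime_iff_not_dvd (by norm_num)]
    intro hd
    have := ((hM3).pow j).symm.trans ((Nat.modEq_iff_dvd' (Nat.one_le_pow _ _ (M_pos hM3))).2 hd).symm
    interval_cases j <;> revert this <;> decide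
  have := Nat.dvd_gcd (orderOf_dvd_of_pow_eq_one h2) (orderOf_dvd_of_pow_eq_one (D.G_pow hkq P))
  rw [hc.gcd_eq_one, Nat.dvd_one, orderOf_eq_one_iff] at this
  exact this

lemma G_of_small (n : ℕ) (hn : n ≤ 9105) (I : Ideal (𝓞 F)) (hI : I ≠ ⊥)
    (hIn : Ideal.absNorm I = n) : D.G q M I = 1 := by
  induction n using Nat.strong_induction_on generalizing I with
  | _ n ih =>
  by_cases htop : I = ⊤
  · rw [htop, ← Ideal.span_singleton_one, D.G_span]
  obtain ⟨P, hP, hIP⟩ := Ideal.exists_le_maximal I htop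
  obtain ⟨J, hJ⟩ := Ideal.dvd_iff_le.2 hIP
  have hPb : P ≠ ⊥ := by rintro rfl; exact hI (by simpa using hIP)
  have hJb : J ≠ ⊥ := by rintro rfl; apply hI; rw [hJ]; simp
  have hpos (I : Ideal (𝓞 F)) (hI : I ≠ ⊥) : 0 < Ideal.absNorm I :=
    Nat.pos_of_ne_zero (fun h => hI (Ideal.absNorm_eq_zero_iff.1 h))
  have hone (I : Ideal (𝓞 F)) (hI : I ≠ ⊥) (h : I ≠ ⊤) : 1 < Ideal.absNorm I := by
    have := hpos I hI
    have : Ideal.absNorm I ≠ 1 := fun h1 => h (Ideal.absNorm_eq_one_iff.1 h1)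
    omega
  have hN : Ideal.absNorm P * Ideal.absNorm J = n := by rw [← map_mul, ← hJ, hIn]
  have hP1 := hone P hPb hP.ne_top
  have hJ0 := hpos J hJb
  by_cases hJt : J = ⊤
  · have hIP : I = P := by rw [hJ, hJt]; simp
    rw [hIP] at hIn ⊢
    by_cases hfree : D.Free P
    · obtain ⟨i, β, hβ, hβP, hlt⟩ := Free.exists_small D hPb hfree (by omega)
      obtain ⟨J', hJ'⟩ := Ideal.dvd_span_singleton.2 hβP
      have hTb : D.T i P ≠ ⊥ := fun h => hPb (D.T_eq_bot.1 h)
      have hJ'b : J' ≠ ⊥ := by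
        rintro rfl
        rw [Ideal.mul_bot, Ideal.span_singleton_eq_bot] at hJ'
        exact hβ hJ'
      rw [hJ', map_mul, absNorm_T, pow_two, hIn] at hlt
      have hlt' := lt_of_mul_lt_mul_left hlt (Nat.zero_le _)
      have h1 := ih _ hlt' (by omega) J' hJ'b rfl
      have h2 := D.G_mul (q := q) (M := M) hTb hJ'b
      rw [← hJ', D.G_span, h1, mul_one] at h2
      exact D.G_eq_one_of_T hkq hM6 hM3 i P h2.symm
    · exact D.G_of_not_free hkq hM6 hM3 hfree
  · have hJ1 := hone J hJb hJt
    rw [hJ, D.G_mul hPb hJb, ih _ (by nlinarith) (by nlinarith) P hPb rfl,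
      ih _ (by nlinarith) (by nlinarith) J hJb rfl, one_mul]

lemma G_eq_one (hmin : ∀ C : ClassGroup (𝓞 F), ∃ I : nonZeroDivisors (Ideal (𝓞 F)),
      ClassGroup.mk0 I = C ∧ Ideal.absNorm (I : Ideal (𝓞 F)) ≤ 9105)
    (I : Ideal (𝓞 F)) (hI : I ≠ ⊥) : D.G q M I = 1 := by
  obtain ⟨J, hJ, hJn⟩ := hmin (ClassGroup.mk0 ⟨I, mem_nonZeroDivisors_of_ne_zero hI⟩)
  obtain ⟨x, y, hx, hy, hxy⟩ := ClassGroup.mk0_eq_mk0_iff.1 hJ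
  have hJb : (J : Ideal (𝓞 F)) ≠ ⊥ := nonZeroDivisors.ne_zero J.2
  have h1 := D.G_of_small hkq hM6 hM3 _ hJn J hJb rfl
  have hx' : Ideal.span {x} ≠ ⊥ := by simpa using hx
  have hy' : Ideal.span {y} ≠ ⊥ := by simpa using hy
  have h2 := D.G_mul (q := q) (M := M) hx' hJb
  rw [hxy, D.G_mul hy' hI, D.G_span, D.G_span, h1, one_mul, one_mul] at h2
  exact h2

end

/-- An ideal `I` with `I⁷` principal whose class is multiplied by `3` under `τ` is principal. -/
theorem principal_of_eigen (hmin : ∀ C : ClassGroup (𝓞 F), ∃ I : nonZeroDivisors (Ideal (𝓞 F)),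
      ClassGroup.mk0 I = C ∧ Ideal.absNorm (I : Ideal (𝓞 F)) ≤ 9105)
    (I : Ideal (𝓞 F)) (hI : I ≠ ⊥) (h7 : (I ^ 7).IsPrincipal) {x y : 𝓞 F} (hx : x ≠ 0)
    (hy : y ≠ 0) (hxy : Ideal.span {x} * I = Ideal.span {y} * D.T 1 I ^ 3) : I.IsPrincipal := by
  obtain ⟨k, q, hq, hkq⟩ := Nat.exists_eq_pow_mul_and_not_dvd
    (Nat.card_pos (α := ClassGroup (𝓞 F))).ne' 7 (by norm_num)
  have hpow (c : ClassGroup (𝓞 F)) : c ^ (7 ^ k * q) = 1 := by rw [← hkq, pow_card_eq_one']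
  have hG := D.G_eq_one hpow (M_pow k) (M_mod k) hmin I hI
  rw [← cl_eq_one hI]
  have hTb (j) : D.T j I ≠ ⊥ := fun h => hI (D.T_eq_bot.1 h)
  have hc7 (j) : cl (D.T j I) ^ 7 = 1 := by
    rw [← cl_pow (hTb j), ← T_pow]
    obtain ⟨z, hz⟩ := h7
    rw [hz, Ideal.submodule_span_eq, T_span_isPrincipal, cl_span]
  have hstep (j) : cl (D.T j I) = cl (D.T (j + 1) I) ^ 3 := by
    have h := congrArg (D.T j) hxy
    rw [T_mul, T_mul, T_span_isPrincipal, T_span_isPrincipal, T_pow, T_T] at h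
    have h := congrArg cl h
    rw [cl_mul (by simpa using hx) (hTb j), cl_mul (by simpa using hy) (pow_ne_zero 3 (hTb _)),
      cl_span, cl_span, one_mul, one_mul, cl_pow (hTb _)] at h
    rw [h, add_comm]
  have hstep' (j) : cl (D.T j I) = cl I ^ 5 ^ j := by
    induction j with
    | zero => simp [T_zero]
    | succ j ih =>
      rw [pow_succ 5, pow_mul, ← ih, hstep j, ← pow_mul, show 3 * 5 = 7 * 2 + 1 from rfl, pow_succ,
        pow_mul, hc7, one_pow, one_mul]
  have hI7 := hc7 0
  rw [T_zero] at hI7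
  have hM3 := M_mod k
  generalize 3 ^ 7 ^ k = M at hG hM3
  simp only [G, hstep', ← pow_mul (cl _)] at hG
  rw [Finset.prod_pow_eq_pow_sum] at hG
  set N := ∑ j ∈ Finset.range 6, 5 ^ j * (q * M ^ j) with hN
  have hc : Nat.Coprime 7 N := by
    rw [Nat.Prime.coprime_iff_not_dvd (by norm_num)]
    intro hd
    apply hq
    have hm : N ≡ ∑ j ∈ Finset.range 6, 5 ^ j * (q * 3 ^ j) [MOD 7] := by
      rw [hN]
      simp only [Finset.sum_range_succ, Finset.sum_range_zero]
      have h (j : ℕ) := (hM3.pow j).mul_left q |>.mul_left (5 ^ j)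
      exact (((((h 0).add_left 0 |>.add (h 1)).add (h 2)).add (h 3)).add (h 4)).add (h 5)
    have h0 := (hm.symm.trans (Nat.modEq_zero_iff_dvd.2 hd))
    simp only [Finset.sum_range_succ, Finset.sum_range_zero, Nat.ModEq] at h0
    omega
  have := Nat.dvd_gcd (orderOf_dvd_of_pow_eq_one hI7) (orderOf_dvd_of_pow_eq_one hG)
  rw [hc.gcd_eq_one, Nat.dvd_one, orderOf_eq_one_iff] at this
  exact this

end KumF
end SumCubes

end

noncomputable section

namespace SumCubes
open NumberField
namespace KumF
variable {F : Type} [Field F] [NumberField F] (D : KumF F)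

/-! ### The discriminant of `F` and the Minkowski bound -/

lemma trace_span (a b : Fin 6 → ℚ) :
    Algebra.trace ℚ F (∑ j, ((a j : F) + b j * D.w) * D.θ ^ (j : ℕ)) = 6 * (2 * a 0 - b 0) := by
  set x := ∑ j, ((a j : F) + b j * D.w) * D.θ ^ (j : ℕ) with hx
  have h1 := congrArg (Algebra.trace ℚ F) (D.sum_τ_pow a b)
  rw [map_sum] at h1
  have h2 (i : ℕ) : Algebra.trace ℚ F ((D.τ ^ i) x) = Algebra.trace ℚ F x :=
    Algebra.trace_eq_of_algEquiv (D.τ ^ i) x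
  simp only [← hx, h2, Finset.sum_const, Finset.card_range] at h1
  have h3 : (6 : F) * ((a 0 : F) + b 0 * D.w) = (6 : ℚ) • ((a 0 : F) + b 0 * D.w) := by
    rw [Algebra.smul_def, map_ofNat]
  rw [h3, map_smul, D.traceK, smul_eq_mul] at h1
  have : (6 : ℚ) * Algebra.trace ℚ F x = 6 * (6 * (2 * a 0 - b 0)) := by
    rw [← h1]; simp
  linarith

lemma trace_single (a b : ℚ) (j : Fin 6) :
    Algebra.trace ℚ F (((a : F) + b * D.w) * D.θ ^ (j : ℕ)) =
      if j = 0 then 6 * (2 * a - b) else 0 := by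
  have := D.trace_span (Pi.single j a) (Pi.single j b)
  rw [Finset.sum_eq_single j] at this
  · simp only [Pi.single_eq_same] at this
    rw [this]
    by_cases h : j = 0
    · subst h; simp
    · rw [if_neg h, Pi.single_eq_of_ne (Ne.symm h), Pi.single_eq_of_ne (Ne.symm h)]; simp
  · intro i _ hi
    simp [hi]
  · simp

/-- The traces of the products `ωᵐ θⁿ` with `m ≤ 2` and `n ≤ 10`. -/
def trQ (m n : ℕ) : ℚ :=
  if n = 0 then (if m = 0 then 12 else -6)
  else if n = 6 then (if m = 0 then 18 else if m = 1 then -12 else -6) else 0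

lemma trace_wθ {m n : ℕ} (hm : m ≤ 2) (hn : n ≤ 10) :
    Algebra.trace ℚ F (D.w ^ m * D.θ ^ n) = trQ m n := by
  have hw := D.hw
  have hθ := D.hθ
  have h2 : D.w ^ 2 = -1 - D.w := by linear_combination hw
  rcases Nat.lt_or_ge n 6 with h | h
  · obtain ⟨a, b, hab, h0⟩ : ∃ a b : ℚ, D.w ^ m = (a : F) + b * D.w ∧
        6 * (2 * a - b) = if m = 0 then 12 else -6 := by
      interval_cases m
      · exact ⟨1, 0, by simp, by norm_num⟩
      · exact ⟨0, 1, by simp, by norm_num⟩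
      · exact ⟨-1, -1, by rw [h2]; push_cast; ring, by norm_num⟩
    have := D.trace_single a b ⟨n, h⟩
    rw [hab, this, trQ, h0]
    by_cases hn0 : n = 0
    · subst hn0; simp
    · rw [if_neg (by simpa [Fin.ext_iff] using hn0), if_neg hn0, if_neg (by omega)]
  · obtain ⟨a, b, hab, h0⟩ : ∃ a b : ℚ, D.w ^ m * D.θ ^ 6 = (a : F) + b * D.w ∧
        6 * (2 * a - b) = if m = 0 then 18 else if m = 1 then -12 else -6 := by
      interval_cases m
      · exact ⟨5/3, 1/3, by rw [hθ]; push_cast; ring, by norm_num⟩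
      · exact ⟨-1/3, 4/3, by rw [hθ]; push_cast; linear_combination hw / 3, by norm_num⟩
      · exact ⟨-4/3, -5/3, by rw [hθ, h2]; push_cast; linear_combination -hw / 3, by norm_num⟩
    obtain ⟨d, rfl⟩ := Nat.exists_eq_add_of_le h
    have := D.trace_single a b ⟨d, by omega⟩
    rw [pow_add, ← mul_assoc, hab, this, trQ, h0, if_neg (by omega : ¬ 6 + d = 0)]
    by_cases hn0 : d = 0
    · subst hn0; simp
    · rw [if_neg (by simpa [Fin.ext_iff] using hn0), if_neg (by omega)]

/-- The basis `ωⁱ θʲ` of `F`. -/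
def cb (n : Fin 12) : F := D.w ^ ((n : ℕ) % 2) * D.θ ^ ((n : ℕ) / 2)

/-- The diagonal blocks of the trace form on `cb`, up to the permutation `j ↦ -j`. -/
def blkf (j : Fin 6) (a b : Fin 2) : ℚ :=
  if j = 0 then ![![12, -6], ![-6, -6]] a b else ![![18, -12], ![-12, -6]] a b

/-- The index `n` of `cb` as the pair of the exponents of `ω` and of `θ`. -/
def e12 : Fin 12 ≃ Fin 2 × Fin 6 :=
  (finProdFinEquiv (m := 6) (n := 2)).symm.trans (Equiv.prodComm _ _)

/-- As `e12`, with the exponent of `θ` negated modulo `6`: the trace form pairs `θʲ` with `θ⁻ʲ`. -/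
def e12' : Fin 12 ≃ Fin 2 × Fin 6 := e12.trans ((Equiv.refl _).prodCongr (Equiv.neg (Fin 6)))

lemma traceMatrix_cb : Algebra.traceMatrix ℚ D.cb =
    (Matrix.blockDiagonal fun j => Matrix.of (blkf j)).submatrix e12 e12' := by
  have key : ∀ a b : Fin 12, trQ ((a : ℕ) % 2 + (b : ℕ) % 2) ((a : ℕ) / 2 + (b : ℕ) / 2) =
      if (e12 a).2 = (e12' b).2 then blkf (e12 a).2 (e12 a).1 (e12' b).1 else 0 := by
    decide +kernel
  ext a b
  rw [Matrix.submatrix_apply, Matrix.blockDiagonal_apply, Matrix.of_apply, ← key,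
    Algebra.traceMatrix_apply, Algebra.traceForm_apply, cb, cb, ← D.trace_wθ (by omega) (by omega)]
  congr 1; ring

lemma discr_cb : |Algebra.discr ℚ D.cb| = 2 ^ 12 * 3 ^ 13 * 7 ^ 5 := by
  rw [Algebra.discr_def, traceMatrix_cb, Matrix.abs_det_submatrix_equiv_equiv,
    Matrix.det_blockDiagonal]
  simp only [Fin.prod_univ_succ, blkf, Matrix.det_fin_two, Matrix.of_apply]
  simp [Fin.ext_iff]
  norm_num

/-- The coefficients of an integral family of `F` in terms of `cb`. -/
def pfun (a b : Fin 12) : ℚ :=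
  if a = b then (if a.1 < 2 then 1 else if a.1 < 6 then (if a.1 % 2 = 0 then 3 else 1) else
    (if a.1 % 2 = 0 then 3/2 else 1/2))
  else if a.1 % 2 = 1 ∧ 2 ≤ a.1 ∧ b.1 + 1 = a.1 then (if a.1 < 6 then -1 else -1/2)
  else if a.1 = 6 then (if b.1 = 0 then 1 else if b.1 = 1 then 1/2 else 0)
  else if a.1 = 7 then (if b.1 = 0 then -1/2 else 0)
  else if a.1 = 8 ∨ a.1 = 10 then (if b.1 + 5 = a.1 then 3/2 else 0)
  else if a.1 = 9 ∨ a.1 = 11 then (if b.1 + 7 = a.1 then -1/2 else if b.1 + 6 = a.1 then -1 else 0)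
  else 0

lemma det_pfun : (Matrix.of pfun).det = 3 ^ 5 / 2 ^ 6 := by
  rw [Matrix.det_of_lowerTriangular]
  · simp only [Matrix.of_apply]
    have : ∏ a, pfun a a = 3 ^ 5 / 2 ^ 6 := by decide +kernel
    exact this
  · have : ∀ a b : Fin 12, a < b → pfun a b = 0 := by decide +kernel
    intro a b h
    exact this a b h

/-- An integral family whose discriminant is small enough for the Minkowski bound. -/
def ib : Fin 12 → F := ![1, D.w, D.cast (-1, -2) * D.kb 2, D.cast (1, 1) * D.kb 2,
  D.cast (-1, -2) * D.kb 3, D.cast (1, 1) * D.kb 3, D.cast (-1, -2) * D.kb 1, D.cast (1, 1) * D.kb 1,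
  D.cast (-1, -2) * D.kb 4, D.cast (1, 1) * D.kb 4, D.cast (-1, -2) * D.kb 5, D.cast (1, 1) * D.kb 5]

lemma int_ib (n : Fin 12) : IsIntegral ℤ (D.ib n) := by
  have h (x : ℤ × ℤ) (i : Fin 6) := (D.int_cast x).mul (D.int_kb i)
  fin_cases n <;> first | exact h _ _ | exact isIntegral_one | exact D.int_w

lemma ib_eq : D.ib = ((Matrix.of pfun).map (algebraMap ℚ F)).mulVec D.cb := by
  have hw := D.hw
  have h2 : D.w ^ 2 = -1 - D.w := by linear_combination hw
  ext n
  rw [Matrix.mulVec, dotProduct]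
  simp only [Matrix.map_apply, Matrix.of_apply, Fin.sum_univ_succ, cb]
  fin_cases n <;> simp [pfun, ib, kb, cast, t, Fin.ext_iff] <;> grind

lemma discr_ib : |Algebra.discr ℚ D.ib| = 3 ^ 23 * 7 ^ 5 := by
  rw [ib_eq, Algebra.discr_of_matrix_mulVec, abs_mul, discr_cb, det_pfun]
  norm_num

end KumF
end SumCubes

end

noncomputable section

namespace SumCubes
open NumberField
namespace KumF
variable {F : Type} [Field F] [NumberField F] (D : KumF F)

include D in
lemma discr_le : |(discr F : ℚ)| ≤ 3 ^ 23 * 7 ^ 5 := by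
  have hc : Fintype.card (Module.Free.ChooseBasisIndex ℤ (𝓞 F)) = 12 := by
    rw [← Module.finrank_eq_card_chooseBasisIndex, RingOfIntegers.rank, D.deg]
  let e := Fintype.equivFinOfCardEq hc
  let B := (integralBasis F).reindex e
  have hB : Algebra.discr ℚ B = discr F := by
    rw [coe_discr, Module.Basis.coe_reindex, Algebra.discr_reindex]
  let x (i : Fin 12) : 𝓞 F := ⟨D.ib i, D.int_ib i⟩
  let M : Matrix (Fin 12) (Fin 12) ℤ := Matrix.of fun i j =>
    (RingOfIntegers.basis F).repr (x i) (e.symm j)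
  have hM : D.ib = ((M.map (algebraMap ℤ ℚ)).map (algebraMap ℚ F)).mulVec B := by
    ext i
    have h1 := B.sum_repr (D.ib i)
    rw [← h1, Matrix.mulVec, dotProduct]
    refine Finset.sum_congr rfl fun j _ => ?_
    rw [Algebra.smul_def]
    congr 2
    have := integralBasis_repr_apply F (x i) (e.symm j)
    simp only [Matrix.map_apply, M, Matrix.of_apply]
    rw [← this]
    simp [B, x]
    rfl
  have h := D.discr_ib
  rw [hM, Algebra.discr_of_matrix_mulVec, hB, abs_mul] at h
  rw [← h]
  have hd : (M.map (algebraMap ℤ ℚ)).det = (M.det : ℚ) := by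
    rw [← RingHom.mapMatrix_apply, ← RingHom.map_det]; rfl
  rw [hd] at h ⊢
  have h0 : M.det ≠ 0 := by
    intro h0; rw [h0] at h; norm_num at h
  have h1 : (1 : ℚ) ≤ |(M.det : ℚ) ^ 2| := by
    rw [abs_of_nonneg (by positivity)]
    have : (1 : ℤ) ≤ M.det ^ 2 := Int.add_one_le_iff.2 (sq_pos_of_ne_zero h0)
    exact_mod_cast this
  exact le_mul_of_one_le_left (abs_nonneg _) h1

include D in
/-- The Minkowski bound of `F`. -/
lemma exists_small_ideal (C : ClassGroup (𝓞 F)) : ∃ I : nonZeroDivisors (Ideal (𝓞 F)),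
    ClassGroup.mk0 I = C ∧ Ideal.absNorm (I : Ideal (𝓞 F)) ≤ 9105 := by
  obtain ⟨I, hI, h⟩ := NumberField.exists_ideal_in_class_of_norm_le C
  refine ⟨I, hI, ?_⟩
  have hr : InfinitePlace.nrComplexPlaces F ≤ 6 := by
    have := InfinitePlace.card_add_two_mul_card_eq_rank F
    rw [D.deg] at this; omega
  have hd : √|(discr F : ℝ)| ≤ 39777990 := by
    rw [Real.sqrt_le_left (by norm_num)]
    have : ((|(discr F : ℚ)| : ℚ) : ℝ) ≤ ((3 ^ 23 * 7 ^ 5 : ℚ) : ℝ) := by exact_mod_cast D.discr_le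
    push_cast at this
    refine this.trans (by norm_num)
  have hp : (4 / Real.pi) ^ InfinitePlace.nrComplexPlaces F ≤ (4 / 3.14159) ^ 6 := by
    have h4 : 1 ≤ 4 / Real.pi := by
      rw [le_div_iff₀ Real.pi_pos]; linarith [Real.pi_lt_four]
    refine (pow_le_pow_right₀ h4 hr).trans ?_
    gcongr
    have := Real.pi_gt_d4
    have := Real.pi_gt_d6
    linarith
  rw [D.deg] at h
  have h2 : (4 / Real.pi) ^ InfinitePlace.nrComplexPlaces F *
      ((Nat.factorial 12 : ℝ) / (12 : ℕ) ^ 12 * √|(discr F : ℝ)|) ≤ (4 / 3.14159) ^ 6 *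
      ((Nat.factorial 12 : ℝ) / (12 : ℕ) ^ 12 * 39777990) := by gcongr
  have h3 : ((Ideal.absNorm (I : Ideal (𝓞 F)) : ℕ) : ℝ) < ((9106 : ℕ) : ℝ) := by
    refine (h.trans h2).trans_lt ?_
    norm_num [Nat.factorial]
  have := Nat.cast_lt.1 h3
  omega

end KumF
end SumCubes

end

noncomputable section

namespace SumCubes
open NumberField
namespace KumF
variable {F : Type} [Field F] [NumberField F] (D : KumF F)

/-! ### The totally ramified prime above `7` -/

/-- The prime of `F` of norm `7` that contains `t`; it is totally ramified over `ℚ(ω)`. -/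
structure IsP7 (P : Ideal (𝓞 F)) : Prop where
  max : P.IsMaximal
  norm : Ideal.absNorm P = 7
  t_mem : D.tI ∈ P

lemma exists_P7 : ∃ P, D.IsP7 P := by
  obtain ⟨P, hP, h1, h2⟩ := Ideal.exists_isMaximal_dvd_of_dvd_absNorm' (p := 7) (by norm_num)
    (Ideal.span {D.tI}) (by rw [D.absNorm_tI]; norm_num)
  refine ⟨P, hP, ?_, ?_⟩
  · have h7 : (7 : 𝓞 F) ∈ P := by
      have : (7 : ℤ) ∈ P.under ℤ := by rw [h1]; exact Ideal.mem_span_singleton_self _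
      simpa [Ideal.under, Ideal.mem_comap] using this
    have h3 := Ideal.absNorm_dvd_absNorm_of_le (Ideal.dvd_iff_le.mp h2)
    rw [D.absNorm_tI] at h3
    have h4 : Ideal.absNorm P ∣ 7 ^ 12 := by
      have := Ideal.absNorm_dvd_absNorm_of_le ((Ideal.span_singleton_le_iff_mem P).2 h7)
      rw [Ideal.absNorm_span_singleton] at this
      have e : Algebra.norm ℤ (7 : 𝓞 F) = 7 ^ 12 := by
        have := Algebra.norm_algebraMap (S := 𝓞 F) (7 : ℤ)
        rw [RingOfIntegers.rank, D.deg] at this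
        simpa using this
      rw [e] at this
      simpa using this
    obtain ⟨k, hk, hk'⟩ := (Nat.dvd_prime_pow (by norm_num)).1 h4
    rw [hk'] at h3 ⊢
    interval_cases k
    · exact absurd (Ideal.absNorm_eq_one_iff.1 hk') hP.ne_top
    · rfl
    all_goals (revert h3; norm_num)
  · exact Ideal.dvd_span_singleton.1 h2

namespace IsP7
variable {D} {P : Ideal (𝓞 F)} (h : D.IsP7 P)
include h

lemma ne_bot : P ≠ ⊥ := by
  rintro rfl; have := h.norm; simp at this

lemma prime : Prime P := by
  have := h.max
  exact Ideal.prime_of_isPrime h.ne_bot inferInstance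

lemma seven_mem : (7 : 𝓞 F) ∈ P := by
  have := Ideal.absNorm_mem P
  rw [h.norm] at this
  exact_mod_cast this

lemma t_notMem : D.tI ∉ P ^ 2 := by
  intro h1
  have h2 := Ideal.absNorm_dvd_absNorm_of_le ((Ideal.span_singleton_le_iff_mem _).2 h1)
  rw [D.absNorm_tI, map_pow, h.norm] at h2
  revert h2; norm_num

lemma T_eq (j : ℕ) : D.T j P = P := by
  by_contra hne
  have := h.max
  have hT : (D.T j P).IsPrime := D.T_isPrime j P
  have hb : D.T j P ≠ ⊥ := fun hb => h.ne_bot (D.T_eq_bot.1 hb)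
  have hm : D.tI ∈ D.T j P := by
    rw [mem_T, ρ_tI]; exact Ideal.mul_mem_left _ _ h.t_mem
  have h1 : IsCoprime P (D.T j P) := by
    rw [Ideal.isCoprime_iff_sup_eq]
    have : (D.T j P).IsMaximal := hT.isMaximal hb
    exact Ideal.IsMaximal.coprime_of_ne h.max this (Ne.symm hne)
  have h2 : P * D.T j P ∣ Ideal.span {D.tI} :=
    h1.mul_dvd (Ideal.dvd_span_singleton.2 h.t_mem) (Ideal.dvd_span_singleton.2 hm)
  have h3 := Ideal.absNorm_dvd_absNorm_of_le (Ideal.dvd_iff_le.mp h2)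
  rw [D.absNorm_tI, map_mul, absNorm_T, h.norm] at h3
  revert h3; norm_num

/-- The residue field is `ℤ/7`. -/
lemma exists_int (y : 𝓞 F) : ∃ n : ℤ, y - n ∈ P := by
  have hc : Nat.card (𝓞 F ⧸ P) = 7 := h.norm
  have : Finite (𝓞 F ⧸ P) := Nat.finite_of_card_ne_zero (by rw [hc]; norm_num)
  have := Fintype.ofFinite (𝓞 F ⧸ P)
  have hc' : Fintype.card (𝓞 F ⧸ P) = 7 := by rw [← Nat.card_eq_fintype_card]; exact hc
  have hs := (ZMod.ringEquivOfPrime (𝓞 F ⧸ P) (by norm_num) hc').surjective (Ideal.Quotient.mk P y)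
  obtain ⟨c, hc2⟩ := hs
  refine ⟨c.val, ?_⟩
  rw [← Ideal.Quotient.eq]
  rw [← hc2]
  conv_lhs => rw [← ZMod.natCast_zmod_val c]
  rw [map_natCast]
  push_cast
  rw [map_natCast]

lemma τ_sub_mem (y : 𝓞 F) : D.ρ 1 y - y ∈ P := by
  obtain ⟨n, hn⟩ := h.exists_int y
  have h1 : D.ρ 1 (y - n) ∈ P := by
    rw [← mem_T, h.T_eq]; exact hn
  rw [map_sub, map_intCast] at h1
  have := P.sub_mem h1 hn
  convert this using 1; ring

lemma mem_of_mul {a : ℤ} (ha : IsCoprime a 7) {k : ℕ} {y : 𝓞 F} (hy : a * y ∈ P ^ k) :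
    y ∈ P ^ k := by
  obtain ⟨m, n, hmn⟩ := ha.pow_right (n := k)
  have h7 : (7 : 𝓞 F) ^ k ∈ P ^ k := Ideal.pow_mem_pow h.seven_mem k
  have : y = m * (a * y) + n * y * 7 ^ k := by
    have := congrArg (Int.cast : ℤ → 𝓞 F) hmn
    push_cast at this
    linear_combination (-y) * this
  rw [this]
  exact Ideal.add_mem _ (Ideal.mul_mem_left _ _ hy) (Ideal.mul_mem_left _ _ h7)

lemma five_add_mem : 5 + D.wI ∈ P ^ 6 := by
  have h1 : D.tI ^ 6 ∈ P ^ 6 := Ideal.pow_mem_pow h.t_mem 6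
  rw [tI_pow] at h1
  exact h.mem_of_mul (a := -9) (by norm_num) (by exact_mod_cast h1)

lemma seven_mem_pow : (7 : 𝓞 F) ∈ P ^ 6 := by
  have h1 : (4 - D.wI) * (5 + D.wI) ∈ P ^ 6 := Ideal.mul_mem_left _ _ h.five_add_mem
  have : (4 - D.wI) * (5 + D.wI) = (3 : ℤ) * 7 := by
    push_cast; linear_combination - D.wI_eq
  rw [this] at h1
  exact h.mem_of_mul (by norm_num) h1

lemma w_sub_mem : D.wI - 2 ∈ P ^ 6 := by
  have := Ideal.sub_mem _ h.five_add_mem h.seven_mem_pow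
  convert this using 1; ring

lemma mem_pow_of_mul {x y : 𝓞 F} (hx : x ∉ P) {k : ℕ} (hxy : x * y ∈ P ^ k) : y ∈ P ^ k := by
  rw [← Ideal.dvd_span_singleton] at *
  rw [← Ideal.span_singleton_mul_span_singleton] at hxy
  exact h.prime.pow_dvd_of_dvd_mul_left k hx hxy

lemma t_pow_notMem (k : ℕ) : D.tI ^ k ∉ P ^ (k + 1) := by
  intro h1
  obtain ⟨J, hJ⟩ := Ideal.dvd_span_singleton.2 h.t_mem
  rw [← Ideal.dvd_span_singleton, ← Ideal.span_singleton_pow, hJ, mul_pow, pow_succ] at h1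
  have h2 := (mul_dvd_mul_iff_left (pow_ne_zero k h.ne_bot)).1 h1
  obtain ⟨JJ, rfl⟩ := h.prime.dvd_of_dvd_pow h2
  apply h.t_notMem
  rw [← Ideal.dvd_span_singleton, hJ]
  exact ⟨JJ, by ring⟩

/-- Every integer of `F` is, to any given accuracy, a polynomial in the uniformizer `t`. -/
lemma exists_poly (y : 𝓞 F) (n : ℕ) : ∃ f : Polynomial ℤ, y - Polynomial.aeval D.tI f ∈ P ^ n := by
  induction n with
  | zero => exact ⟨0, by simp⟩
  | succ n ih =>
    obtain ⟨f, hf⟩ := ih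
    have := h.max
    obtain ⟨d, e, he, hde⟩ := Ideal.exists_mul_add_mem_pow_succ h.ne_bot (D.tI ^ n) _
      (Ideal.pow_mem_pow h.t_mem n) (h.t_pow_notMem n) hf
    obtain ⟨m, hm⟩ := h.exists_int d
    refine ⟨f + Polynomial.C m * Polynomial.X ^ n, ?_⟩
    have h2 : D.tI ^ n * (d - m) ∈ P ^ (n + 1) := by
      rw [pow_succ]; exact Ideal.mul_mem_mul (Ideal.pow_mem_pow h.t_mem n) hm
    have := Ideal.add_mem _ h2 he
    convert this using 1
    simp
    linear_combination -hde

end IsP7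
end KumF
end SumCubes

end

noncomputable section

namespace SumCubes
open NumberField Polynomial
namespace KumF
variable {F : Type} [Field F] [NumberField F] (D : KumF F)

/-! ### The logarithmic derivative of units modulo the sixth power of that prime -/

/-- Reduction of integral polynomials modulo `7`. -/
abbrev red (f : ℤ[X]) : (ZMod 7)[X] := f.map (Int.castRingHom (ZMod 7))

lemma red_surjective (q : (ZMod 7)[X]) : ∃ f : ℤ[X], red f = q :=
  Polynomial.map_surjective _ (ZMod.ringHom_surjective _) q

lemma red_eq_zero {f : ℤ[X]} (h : red f = 0) : ∃ r : ℤ[X], f = C 7 * r := by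
  have : C (7 : ℤ) ∣ f := by
    rw [Polynomial.C_dvd_iff_dvd_coeff]
    intro i
    have h1 := congrArg (fun p => coeff p i) h
    simp only [coeff_map, coeff_zero] at h1
    exact (ZMod.intCast_zmod_eq_zero_iff_dvd _ 7).1 (by simpa using h1)
  exact this

namespace IsP7
variable {D} {P : Ideal (𝓞 F)} (h : D.IsP7 P)

include h in
lemma int_notMem {a : ℤ} (ha : (a : 𝓞 F) ∈ P) : (7 : ℤ) ∣ a := by
  by_contra hn
  have hc : IsCoprime a 7 := ((Int.prime_iff_natAbs_prime.2 (by norm_num)).coprime_iff_not_dvd.2 hn).symm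
  have h1 : (1 : 𝓞 F) ∈ P ^ 1 := h.mem_of_mul hc (by simpa using ha)
  rw [pow_one] at h1
  exact h.max.ne_top ((Ideal.eq_top_iff_one P).2 h1)

include h in
lemma aeval_sub_mem (g : ℤ[X]) : aeval D.tI g - ((g.coeff 0 : ℤ) : 𝓞 F) ∈ P := by
  have h1 : X ∣ g - C (g.coeff 0) := by rw [Polynomial.X_dvd_iff]; simp
  obtain ⟨q, hq⟩ := h1
  have h2 := congrArg (aeval D.tI) hq
  simp only [map_sub, map_mul, aeval_X, aeval_C] at h2
  have h3 : (algebraMap ℤ (𝓞 F)) (g.coeff 0) = ((g.coeff 0 : ℤ) : 𝓞 F) := by simp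
  rw [h3] at h2
  rw [h2]
  exact Ideal.mul_mem_right _ _ h.t_mem

include h in
lemma X_pow_dvd {f : ℤ[X]} (hf : aeval D.tI f ∈ P ^ 6) : X ^ 6 ∣ red f := by
  have key : ∀ k ≤ 6, X ^ k ∣ red f := by
    intro k
    induction k with
    | zero => simp
    | succ k ih =>
      intro hk
      obtain ⟨q, hq⟩ := ih (by omega)
      obtain ⟨g, rfl⟩ := red_surjective q
      obtain ⟨r, hr⟩ := red_eq_zero (f := f - X ^ k * g) (by
        simp only [red] at hq ⊢
        rw [Polynomial.map_sub, hq, Polynomial.map_mul, Polynomial.map_pow, Polynomial.map_X, sub_self])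
      have h1 := congrArg (aeval D.tI) hr
      simp only [map_sub, map_mul, map_pow, aeval_X, aeval_C] at h1
      have h2 : D.tI ^ k * aeval D.tI g ∈ P ^ 6 := by
        have h7 : (algebraMap ℤ (𝓞 F)) 7 = 7 := by simp
        have := Ideal.sub_mem _ hf (Ideal.mul_mem_right (aeval D.tI r) _ h.seven_mem_pow)
        rw [h7] at h1
        rw [← h1] at this
        convert this using 1; ring
      have h3 : aeval D.tI g ∈ P := by
        by_contra h3
        rw [mul_comm] at h2
        exact h.t_pow_notMem k (Ideal.pow_le_pow_right (by omega) (h.mem_pow_of_mul h3 h2))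
      have h4 := Ideal.sub_mem _ h3 (h.aeval_sub_mem g)
      rw [sub_sub_cancel] at h4
      have h5 := h.int_notMem h4
      have h6 : X ∣ red g := by
        rw [Polynomial.X_dvd_iff, coeff_map]
        simpa using (ZMod.intCast_zmod_eq_zero_iff_dvd _ 7).2 h5
      rw [hq, pow_succ]
      exact mul_dvd_mul_left _ h6
  exact key 6 le_rfl

/-- An integral polynomial whose value at `t` is `y` modulo `P ^ 6`. -/
def rep (y : 𝓞 F) : ℤ[X] := (h.exists_poly y 6).choose

lemma rep_spec (y : 𝓞 F) : y - aeval D.tI (h.rep y) ∈ P ^ 6 := (h.exists_poly y 6).choose_spec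

/-- The reduction of an integer of `F` to `𝔽₇[X]`, well defined modulo `X ^ 6`. -/
def bar (y : 𝓞 F) : (ZMod 7)[X] := red (h.rep y)

lemma bar_congr {y : 𝓞 F} {f : ℤ[X]} (hf : y - aeval D.tI f ∈ P ^ 6) : X ^ 6 ∣ h.bar y - red f := by
  have := Ideal.sub_mem _ hf (h.rep_spec y)
  have h2 := h.X_pow_dvd (f := h.rep y - f) (by
    rw [map_sub]; convert this using 1; ring)
  simpa [bar, red] using h2

lemma bar_mul (x y : 𝓞 F) : X ^ 6 ∣ h.bar (x * y) - h.bar x * h.bar y := by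
  have := h.bar_congr (y := x * y) (f := h.rep x * h.rep y) (by
    have h1 := Ideal.mul_mem_right y _ (h.rep_spec x)
    have h2 := Ideal.mul_mem_left _ (aeval D.tI (h.rep x)) (h.rep_spec y)
    convert Ideal.add_mem _ h1 h2 using 1
    rw [map_mul]; ring)
  simpa [bar, red] using this

lemma bar_one : X ^ 6 ∣ h.bar 1 - 1 := by
  have := h.bar_congr (y := 1) (f := 1) (by simp)
  simpa [red] using this

lemma bar_eq {x y : 𝓞 F} (hxy : x - y ∈ P ^ 6) : X ^ 6 ∣ h.bar x - h.bar y := by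
  refine h.bar_congr ?_
  convert Ideal.add_mem _ hxy (h.rep_spec y) using 1; ring

lemma bar_τ (y : 𝓞 F) : X ^ 6 ∣ h.bar (D.ρ 1 y) - (h.bar y).comp (C 3 * X) := by
  have := h.bar_congr (y := D.ρ 1 y) (f := (h.rep y).comp (C 3 * X)) (by
    have h1 : D.ρ 1 (y - aeval D.tI (h.rep y)) ∈ P ^ 6 := by
      rw [← mem_T, T_pow, h.T_eq]; exact h.rep_spec y
    rw [map_sub] at h1
    have h2 : D.ρ 1 (aeval D.tI (h.rep y)) - aeval D.tI ((h.rep y).comp (C 3 * X)) ∈ P ^ 6 := by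
      have e1 : D.ρ 1 (aeval D.tI (h.rep y)) = aeval (D.ρ 1 D.tI) (h.rep y) := by
        have := Polynomial.hom_eval₂ (h.rep y) (algebraMap ℤ (𝓞 F)) (D.ρ 1 : 𝓞 F →+* 𝓞 F) D.tI
        rw [aeval_def, aeval_def]
        refine this.trans ?_
        congr 1
        exact RingHom.ext_int _ _
      rw [e1, aeval_comp, aeval_def, aeval_def, eval₂_eq_eval_map, eval₂_eq_eval_map]
      refine Ideal.mem_of_dvd _ (sub_dvd_eval_sub _ _ _) ?_
      have e2 : D.ρ 1 D.tI - aeval D.tI (C 3 * X : ℤ[X]) =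
          (-(2 + D.wI) * D.tI) * (D.wI - 2) + (-D.tI) * 7 := by
        have h3 : aeval D.tI (C 3 * X : ℤ[X]) = 3 * D.tI := by
          rw [map_mul, aeval_C, aeval_X]; simp
        rw [ρ_tI, h3]; ring
      rw [e2]
      exact Ideal.add_mem _ (Ideal.mul_mem_left _ _ h.w_sub_mem)
        (Ideal.mul_mem_left _ _ h.seven_mem_pow)
    convert Ideal.add_mem _ h1 h2 using 1; ring)
  have e : red ((h.rep y).comp (C 3 * X)) = (h.bar y).comp (C 3 * X) := by
    simp only [red, bar, Polynomial.map_comp, Polynomial.map_mul, Polynomial.map_C, Polynomial.map_X]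
    rfl
  rwa [e] at this

/-- The logarithmic derivative `X f' / f` of the reduction `f` of a unit. -/
def lg (u : (𝓞 F)ˣ) : (ZMod 7)[X] := X * derivative (h.bar u) * h.bar (u⁻¹ : (𝓞 F)ˣ)

lemma dvd_X_derivative {f : (ZMod 7)[X]} (hf : X ^ 6 ∣ f) : X ^ 6 ∣ X * derivative f := by
  obtain ⟨q, rfl⟩ := hf
  rw [derivative_mul, derivative_X_pow]
  exact ⟨C 6 * q + X * derivative q, by simp; ring⟩

lemma lg_aux {a b f g : (ZMod 7)[X]} (h1 : X ^ 6 ∣ a - b) (h2 : X ^ 6 ∣ f - g) :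
    X ^ 6 ∣ X * derivative a * f - X * derivative b * g := by
  have h3 := dvd_X_derivative h1
  rw [derivative_sub] at h3
  have : X * derivative a * f - X * derivative b * g =
    (X * (derivative a - derivative b)) * f + X * derivative b * (f - g) := by ring
  rw [this]
  exact dvd_add (h3.mul_right _) (h2.mul_left _)

lemma bar_inv (u : (𝓞 F)ˣ) : X ^ 6 ∣ h.bar u * h.bar (u⁻¹ : (𝓞 F)ˣ) - 1 := by
  have h1 := h.bar_mul u (u⁻¹ : (𝓞 F)ˣ)
  rw [Units.mul_inv] at h1
  have := dvd_sub h.bar_one h1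
  convert this using 1; ring

lemma lg_mul (u v : (𝓞 F)ˣ) : X ^ 6 ∣ h.lg (u * v) - (h.lg u + h.lg v) := by
  have h1 := lg_aux (h.bar_mul u v) (h.bar_mul (u⁻¹ : (𝓞 F)ˣ) (v⁻¹ : (𝓞 F)ˣ))
  have h2 := (h.bar_inv v).mul_left (h.lg u)
  have h3 := (h.bar_inv u).mul_left (h.lg v)
  have h4 := dvd_add h1 (dvd_add h2 h3)
  convert h4 using 1
  rw [lg, mul_inv, Units.val_mul, Units.val_mul, derivative_mul]
  simp only [lg]; ring

lemma lg_congr {u v : (𝓞 F)ˣ} (huv : (u : 𝓞 F) - v ∈ P ^ 6) : X ^ 6 ∣ h.lg u - h.lg v := by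
  refine lg_aux (h.bar_eq huv) (h.bar_eq ?_)
  have := Ideal.mul_mem_left _ (-(u⁻¹ : (𝓞 F)ˣ) * (v⁻¹ : (𝓞 F)ˣ) : 𝓞 F) huv
  convert this using 1
  have e1 := u.mul_inv
  have e2 := v.mul_inv
  linear_combination ((v⁻¹ : (𝓞 F)ˣ) : 𝓞 F) * e1 - ((u⁻¹ : (𝓞 F)ˣ) : 𝓞 F) * e2

/-- `τ` on the units of `F`. -/
def _root_.SumCubes.KumF.τU (D : KumF F) (u : (𝓞 F)ˣ) : (𝓞 F)ˣ :=
  Units.map (D.ρ 1 : 𝓞 F →* 𝓞 F) u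

lemma lg_τ (u : (𝓞 F)ˣ) : X ^ 6 ∣ h.lg (D.τU u) - (h.lg u).comp (C 3 * X) := by
  have h1 := lg_aux (h.bar_τ u) (h.bar_τ (u⁻¹ : (𝓞 F)ˣ))
  convert h1 using 2
  · rfl
  simp only [lg, derivative_comp, mul_comp, X_comp, derivative_mul, derivative_C, derivative_X]
  ring

/-- The coefficients of the logarithmic derivative. -/
def lam (i : ℕ) (u : (𝓞 F)ˣ) : ZMod 7 := (h.lg u).coeff i

lemma coeff_eq {f g : (ZMod 7)[X]} (hfg : X ^ 6 ∣ f - g) {i : ℕ} (hi : i < 6) :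
    f.coeff i = g.coeff i := by
  have := (X_pow_dvd_iff.1 hfg) i hi
  rwa [coeff_sub, sub_eq_zero] at this

lemma lam_mul {i : ℕ} (hi : i < 6) (u v : (𝓞 F)ˣ) : h.lam i (u * v) = h.lam i u + h.lam i v := by
  simpa [lam] using coeff_eq (h.lg_mul u v) hi

lemma lam_one {i : ℕ} (hi : i < 6) : h.lam i 1 = 0 := by
  have := h.lam_mul hi 1 1
  simpa using this

lemma lam_τ {i : ℕ} (hi : i < 6) (u : (𝓞 F)ˣ) : h.lam i (D.τU u) = 3 ^ i * h.lam i u := by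
  have := coeff_eq (h.lg_τ u) hi
  rw [Polynomial.comp_C_mul_X_coeff] at this
  rw [lam, this, lam, mul_comm]

lemma lam_eq_zero {i : ℕ} (hi : i < 6) (hi0 : 0 < i) {u : (𝓞 F)ˣ}
    (hu : (D.ρ 1 u : 𝓞 F) - u ∈ P ^ 6) : h.lam i u = 0 := by
  have h1 := coeff_eq (h.lg_congr (u := D.τU u) (v := u) hu) hi
  have h2 := h.lam_τ hi u
  rw [lam, h1] at h2
  have : (h.lg u).coeff i = h.lam i u := rfl
  rw [this] at h2
  generalize h.lam i u = c at *
  clear this h1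
  revert c
  interval_cases i <;> decide

/-- The logarithmic derivative as a homomorphism. -/
def lamHom (i : Fin 5) : Additive (𝓞 F)ˣ →+ ZMod 7 where
  toFun u := h.lam (i + 1) u.toMul
  map_zero' := h.lam_one (by omega)
  map_add' u v := h.lam_mul (by omega) _ _

end IsP7
end KumF
end SumCubes

end

noncomputable section

namespace SumCubes
open NumberField Polynomial
namespace KumF
variable {F : Type} [Field F] [NumberField F] (D : KumF F)

/-! ### Units congruent to a constant are seventh powers -/

include D in
lemma rank_eq : Units.rank F = 5 := by
  have h0 : InfinitePlace.nrRealPlaces F = 0 := by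
    classical
    refine (Fintype.card_eq_zero_iff (α := {v : InfinitePlace F // v.IsReal})).2 ⟨fun v => ?_⟩
    have hr := InfinitePlace.isReal_iff.1 v.2
    have hw := congrArg hr.embedding D.hw
    simp only [map_add, map_pow, map_one, map_zero] at hw
    nlinarith [sq_nonneg (hr.embedding D.w + 1 / 2)]
  have h1 := InfinitePlace.card_add_two_mul_card_eq_rank F
  have h2 : Fintype.card (InfinitePlace F) =
    InfinitePlace.nrRealPlaces F + InfinitePlace.nrComplexPlaces F :=
      InfinitePlace.card_eq_nrRealPlaces_add_nrComplexPlaces F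
  rw [D.deg] at h1
  rw [Units.rank, h2]
  omega

lemma isUnit_bet {l : List ℤ} (hl : nrm l = 4096) : IsUnit (D.bet l) := by
  have := D.absNorm_bet l
  rw [hl] at this
  have h1 : Ideal.absNorm (Ideal.span {D.bet l}) = 1 := by omega
  rwa [Ideal.absNorm_eq_one_iff, Ideal.span_singleton_eq_top] at h1

/-- A unit of `F` whose conjugates generate the units modulo seventh powers. -/
def u0 : (𝓞 F)ˣ :=
  (D.isUnit_bet (l := [0, -1, -1, -1, 0, 0, 0, 0, 1, 0, 1, 0]) (by decide +kernel)).unit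

/-- The reduction of `u0` modulo the sixth power of the prime above `7`. -/
def f0 : ℤ[X] := C 2 + C 1 * X + C 3 * X ^ 2 + C 4 * X ^ 3 + C 3 * X ^ 4 + C 2 * X ^ 5

/-- The logarithmic derivative of `u0`. -/
def L0 : Fin 5 → ZMod 7 := ![4, 1, 3, 2, 2]

namespace IsP7
variable {D} {P : Ideal (𝓞 F)} (h : D.IsP7 P)

include h in
lemma u0_sub : (D.u0 : 𝓞 F) - aeval D.tI f0 ∈ P ^ 6 := by
  apply h.mem_of_mul (a := 54) (by norm_num)
  have hb := D.bet_eq [0, -1, -1, -1, 0, 0, 0, 0, 1, 0, 1, 0]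
  have hu : (D.u0 : 𝓞 F) = D.bet [0, -1, -1, -1, 0, 0, 0, 0, 1, 0, 1, 0] := rfl
  have hf : aeval D.tI f0 = 2 + D.tI + 3 * D.tI ^ 2 + 4 * D.tI ^ 3 + 3 * D.tI ^ 4 + 2 * D.tI ^ 5 := by
    have hn (n : ℕ) [n.AtLeastTwo] : (aeval D.tI) (OfNat.ofNat n : ℤ[X]) = OfNat.ofNat n :=
      map_ofNat _ n
    simp [f0, hn]
  rw [hf, hu]
  push_cast
  rw [mul_sub, hb]
  simp only [castI, kc]
  simp
  have hw := (Ideal.Quotient.eq_zero_iff_mem).2 h.w_sub_mem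
  have h7 := (Ideal.Quotient.eq_zero_iff_mem).2 h.seven_mem_pow
  rw [← Ideal.Quotient.eq_zero_iff_mem]
  have hn (n : ℕ) [n.AtLeastTwo] : (Ideal.Quotient.mk (P ^ 6)) (OfNat.ofNat n) = OfNat.ofNat n :=
    map_ofNat _ n
  simp only [map_sub, map_add, map_mul, map_pow, map_neg, map_one, hn] at *
  generalize (Ideal.Quotient.mk (P ^ 6)) D.wI = w at *
  generalize (Ideal.Quotient.mk (P ^ 6)) D.tI = t at *
  have hw' : w = 2 := by linear_combination hw
  subst hw'
  grind

lemma lam_u0 (i : Fin 5) : h.lam (i + 1) D.u0 = L0 i := by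
  have h1 := h.bar_congr h.u0_sub
  set f : (ZMod 7)[X] := red f0 with hf
  set L : (ZMod 7)[X] := C 4 * X + C 1 * X ^ 2 + C 3 * X ^ 3 + C 2 * X ^ 4 + C 2 * X ^ 5 with hL
  have h2 := h.bar_inv D.u0
  have h7 : (7 : (ZMod 7)[X]) = 0 := by
    have : (7 : (ZMod 7)[X]) = C 7 := rfl
    rw [this, show (7 : ZMod 7) = 0 by decide, C_0]
  have hd : X ^ 6 ∣ X * derivative f - L * f := by
    refine ⟨-31 - 25 * X - 20 * X ^ 2 - 10 * X ^ 3 - 4 * X ^ 4, ?_⟩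
    have hC (n : ℕ) [n.AtLeastTwo] : (C (OfNat.ofNat n : ZMod 7)) = OfNat.ofNat n := map_ofNat C n
    have hM (n : ℕ) [n.AtLeastTwo] : map (Int.castRingHom (ZMod 7)) (OfNat.ofNat n : ℤ[X]) =
        OfNat.ofNat n := map_ofNat (mapRingHom _) n
    have e : f = 2 + X + 3 * X ^ 2 + 4 * X ^ 3 + 3 * X ^ 4 + 2 * X ^ 5 := by
      rw [hf, f0]
      simp only [red, Polynomial.map_add, Polynomial.map_mul, Polynomial.map_C, Polynomial.map_pow,
        Polynomial.map_X, hM, eq_intCast, Int.cast_ofNat, Int.cast_one, hC, C_1, one_mul]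
    have e' : derivative f = 1 + 6 * X + 12 * X ^ 2 + 12 * X ^ 3 + 10 * X ^ 4 := by
      rw [e]; simp [hC]; ring
    have e2 : L = 4 * X + X ^ 2 + 3 * X ^ 3 + 2 * X ^ 4 + 2 * X ^ 5 := by
      rw [hL]; simp; rfl
    rw [e', e, e2]
    linear_combination (-X - X ^ 3 - 2 * X ^ 4 - 3 * X ^ 5) * h7
  -- `lg ≡ X f' g` and `f g ≡ 1`
  set g := h.bar (D.u0⁻¹ : (𝓞 F)ˣ) with hg
  have h3 := lg_aux h1 (show X ^ 6 ∣ g - g by simp)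
  have h4 : X ^ 6 ∣ h.lg D.u0 - L := by
    have e : h.lg D.u0 - L = (X * derivative (h.bar D.u0) * g - X * derivative f * g) +
        (X * derivative f - L * f) * g + L * (h.bar D.u0 * g - 1) - L * g * (h.bar D.u0 - f) := by
      rw [lg, ← hg]; ring
    rw [e]
    exact dvd_sub (dvd_add (dvd_add h3 (hd.mul_right _)) (h2.mul_left _)) (h1.mul_left _)
  have h5 := coeff_eq h4 (i := (i : ℕ) + 1) (by omega)
  rw [lam, h5, hL]
  fin_cases i <;> simp [coeff_X, coeff_X_pow, L0]

lemma lam_τ_pow {i : ℕ} (hi : i < 6) (u : (𝓞 F)ˣ) (j : ℕ) :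
    h.lam i (D.τU^[j] u) = 3 ^ (i * j) * h.lam i u := by
  induction j with
  | zero => simp
  | succ j ih =>
    rw [Function.iterate_succ_apply', h.lam_τ hi, ih]; ring

/-- All logarithmic derivatives at once. -/
def lamV : Additive (𝓞 F)ˣ →+ (Fin 5 → ZMod 7) where
  toFun u i := h.lamHom i u
  map_zero' := by ext; simp
  map_add' u v := by ext; simp

lemma lamV_surjective : Function.Surjective h.lamV := by
  let c (i : Fin 5) (j : Fin 6) : ZMod 7 := 5 ^ ((i + 1) * j : ℕ) * (6 * L0 i)⁻¹
  have hc : ∀ i k : Fin 5, ∑ j : Fin 6, c i j * (3 ^ ((k + 1) * j : ℕ) * L0 k) = if i = k then 1 else 0 := by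
    decide +kernel
  intro y
  refine ⟨∑ i, (y i).val • ∑ j, (c i j).val • Additive.ofMul (D.τU^[(j : ℕ)] D.u0), ?_⟩
  have h1 (k : Fin 5) (j : ℕ) : h.lamV (Additive.ofMul (D.τU^[j] D.u0)) k =
      3 ^ ((k + 1) * j : ℕ) * L0 k := by
    change h.lam (k + 1) (D.τU^[j] D.u0) = _
    rw [h.lam_τ_pow (by omega), h.lam_u0]
  ext k
  simp only [map_sum, map_nsmul, Finset.sum_apply, Pi.smul_apply, h1]
  simp only [nsmul_eq_mul, ZMod.natCast_val, ZMod.cast_id', id]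
  simp only [hc]
  simp

include h in
lemma exists_root {u : (𝓞 F)ˣ} (hu : (D.ρ 1 u : 𝓞 F) - u ∈ P ^ 6) : ∃ v : (𝓞 F)ˣ, u = v ^ 7 := by
  have htor : ∀ z : (𝓞 F)ˣ, z ∈ Units.torsion F → ∃ y : (𝓞 F)ˣ, z = y ^ 7 := by
    intro z hz
    have hinj : Function.Injective (fun y : Units.torsion F => y ^ 7) := by
      intro x y hxy
      have h1 : ((x * y⁻¹ : Units.torsion F) : (𝓞 F)ˣ) ^ 7 = 1 := by
        have : (x * y⁻¹) ^ 7 = 1 := by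
          rw [mul_pow, inv_pow]; exact mul_inv_eq_one.2 hxy
        exact_mod_cast congrArg Subtype.val this
      have h2 := D.root7 (((x * y⁻¹ : Units.torsion F) : (𝓞 F)ˣ) : 𝓞 F) (by
        have := congrArg (fun a : (𝓞 F)ˣ => ((a : 𝓞 F) : F)) h1
        simpa using this)
      have h3 : (x * y⁻¹ : Units.torsion F) = 1 := by
        apply Subtype.ext; apply Units.ext; apply RingOfIntegers.ext
        simpa using h2
      exact mul_inv_eq_one.1 h3
    obtain ⟨y, hy⟩ := (Finite.injective_iff_surjective.1 hinj) ⟨z, hz⟩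
    exact ⟨y, (congrArg Subtype.val hy).symm⟩
  have hpow : ∀ v : (𝓞 F)ˣ, h.lamV (Additive.ofMul (v ^ 7)) = 0 := by
    intro v
    rw [ofMul_pow, map_nsmul]
    ext i; simp [show (7 : ZMod 7) = 0 by decide]
  let f : (Fin (Units.rank F) → ZMod 7) →ₗ[ZMod 7] (Fin 5 → ZMod 7) :=
    Fintype.linearCombination (ZMod 7) fun k => h.lamV (Additive.ofMul (Units.fundSystem F k))
  have hfac : ∀ x : (𝓞 F)ˣ, ∀ z : Units.torsion F, ∀ e : Fin (Units.rank F) → ℤ,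
      x = z * ∏ k, Units.fundSystem F k ^ e k → h.lamV (Additive.ofMul x) = f fun k => (e k : ZMod 7) := by
    intro x z e hx
    obtain ⟨y, hy⟩ := htor z z.2
    rw [hx, ofMul_mul, map_add, hy, hpow, zero_add, ofMul_prod, map_sum, Fintype.linearCombination_apply]
    refine Finset.sum_congr rfl fun k _ => ?_
    rw [ofMul_zpow, map_zsmul]
    ext i; simp
  have hsurj : Function.Surjective f := by
    intro y
    obtain ⟨x, rfl⟩ := h.lamV_surjective y
    obtain ⟨⟨z, e⟩, hx, -⟩ := Units.exist_unique_eq_mul_prod F x.toMul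
    exact ⟨_, (hfac _ z e hx).symm⟩
  have hinj : Function.Injective f := by
    haveI : Fact (Nat.Prime 7) := ⟨by norm_num⟩
    have hc : Fintype.card (Fin (Units.rank F) → ZMod 7) = Fintype.card (Fin 5 → ZMod 7) := by
      simp [D.rank_eq]
    exact ((Fintype.bijective_iff_surjective_and_card f).2 ⟨hsurj, hc⟩).1
  obtain ⟨⟨z, e⟩, hx, -⟩ := Units.exist_unique_eq_mul_prod F u
  have h0 := hfac _ z e hx
  have h1 : h.lamV (Additive.ofMul u) = 0 := by
    ext i; exact h.lam_eq_zero (by omega) (by omega) hu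
  rw [h1] at h0
  have h2 := hinj (h0.symm.trans (map_zero f).symm)
  obtain ⟨y, hy⟩ := htor z z.2
  have h3 : ∀ k, ∃ m : ℤ, e k = m * 7 := by
    intro k
    have := (ZMod.intCast_zmod_eq_zero_iff_dvd _ 7).1 (congrFun h2 k)
    obtain ⟨m, hm⟩ := this
    exact ⟨m, by rw [hm]; push_cast; ring⟩
  choose m hm using h3
  refine ⟨y * ∏ k, Units.fundSystem F k ^ m k, ?_⟩
  rw [hx, mul_pow, ← hy, ← Finset.prod_pow]
  congr 1
  refine Finset.prod_congr rfl fun k _ => ?_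
  change _ ^ e k = _
  rw [hm, zpow_mul]; norm_cast

end IsP7
end KumF
end SumCubes

end

noncomputable section

namespace SumCubes

/-! ### Valuations of the Kummer function -/

section val
variable {k : Type*} [Field k] [CharZero k] {Γ : Type*} [LinearOrderedCommGroupWithZero Γ]
  (v : Valuation k Γ)

lemma val_w {w : k} (hw : w ^ 2 + w + 1 = 0) : v w = 1 := by
  have h3 : v w ^ 3 = 1 := by rw [← map_pow, omega_cube hw, map_one]
  exact (pow_eq_one_iff_of_nonneg zero_le' (by norm_num)).1 h3

lemma int_le (n : ℤ) : v (n : k) ≤ 1 := by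
  have : (n : k) ∈ v.integer := intCast_mem _ n
  exact this

lemma kc_le {w : k} (hw : w ^ 2 + w + 1 = 0) (m n : ℤ) : v ((m : k) + n * w) ≤ 1 :=
  (v.map_add _ _).trans (max_le (int_le v m) (by
    rw [map_mul, val_w v hw, mul_one]; exact int_le v n))

/-- The Kummer function in Tate coordinates. -/
def ft (w x y : k) : k :=
  x ^ 2 * y + (w - 1) * x ^ 3 + (1 + w) * x ^ 2 + (1 - 2 * w) * (x * y) - (1 + w) * y

lemma ff_eq_ft {w : k} (hw : w ^ 2 + w + 1 = 0) (X Y : k) :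
    ff w X Y = ft w (X - (1 - w) / 3) (Y - (X - (1 - w) / 3) + w / 2) := by
  obtain ⟨h2, h3, h4, h5, h6, h7, h8, h9, -⟩ := pows hw
  unfold ff ft
  ring_nf
  simp only [h2, h3, h4]
  ring

lemma tate_eq {w X Y : k} (hw : w ^ 2 + w + 1 = 0) (h : Y ^ 2 = X ^ 3 + B0 w) :
    (Y - (X - (1 - w) / 3) + w / 2) ^ 2 + 2 * (X - (1 - w) / 3) * (Y - (X - (1 - w) / 3) + w / 2)
      - w * (Y - (X - (1 - w) / 3) + w / 2) =
      (X - (1 - w) / 3) ^ 3 - w * (X - (1 - w) / 3) ^ 2 := by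
  obtain ⟨h2, h3, h4, h5, h6, h7, h8, h9, -⟩ := pows hw
  unfold B0 at h
  ring_nf
  ring_nf at h
  simp only [h2, h3, h4, h]
  ring

/-- Near the origin `f` has the valuation of the seventh power of `y / x`. -/
lemma val_pole {w x y : k} (hw : w ^ 2 + w + 1 = 0)
    (h : y ^ 2 + 2 * x * y - w * y = x ^ 3 - w * x ^ 2) (hx : 1 < v x) :
    v (ft w x y) = v (y / x) ^ 7 := by
  have hvw := val_w v hw
  have hx0 : x ≠ 0 := by rintro rfl; simp at hx
  set s := y / x with hs
  have hy : y = s * x := by rw [hs]; field_simp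
  have hxi : v x⁻¹ < 1 := by rw [map_inv₀]; exact inv_lt_one_of_one_lt₀ hx
  have e : s * (s + (2 - w * x⁻¹)) = x - w := by
    rw [hy] at h
    have : x ^ 2 * (s * (s + (2 - w * x⁻¹))) = x ^ 2 * (x - w) := by
      have hxx : x * x⁻¹ = 1 := mul_inv_cancel₀ hx0
      linear_combination h - s * w * x * hxx
    exact mul_left_cancel₀ (pow_ne_zero 2 hx0) this
  have h2 : v (2 : k) ≤ 1 := by simpa using int_le v 2
  have hc : v (2 - w * x⁻¹) ≤ 1 := (v.map_sub _ _).trans (max_le h2 (by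
    rw [map_mul, hvw, one_mul]; exact hxi.le))
  have hr : v (x - w) = v x := v.map_sub_eq_of_lt_left (by rwa [hvw])
  have hs1 : 1 < v s := by
    by_contra hle
    rw [not_lt] at hle
    have : v (x - w) ≤ 1 := by
      rw [← e, map_mul]
      exact mul_le_one' hle ((v.map_add _ _).trans (max_le hle hc))
    rw [hr] at this
    exact absurd hx (not_lt.2 this)
  have hxs : v x = v s ^ 2 := by
    rw [← hr, ← e, map_mul, v.map_add_eq_of_lt_left (hc.trans_lt hs1), sq]
  have hs0 : s ≠ 0 := by rintro h0; rw [h0] at hs1; simp at hs1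
  have hsi : v s⁻¹ < 1 := by rw [map_inv₀]; exact inv_lt_one_of_one_lt₀ hs1
  have e2 : ft w x y = x ^ 3 * s * (1 + ((w - 1) * s⁻¹ + (1 + w) * (x⁻¹ * s⁻¹) + (1 - 2 * w) * x⁻¹
      - (1 + w) * x⁻¹ ^ 2)) := by
    rw [ft, hy]; field_simp
    ring
  have k1 : v (w - 1) ≤ 1 := by have := kc_le v hw (-1) 1; push_cast at this; convert this using 2; ring
  have k2 : v (1 + w) ≤ 1 := by have := kc_le v hw 1 1; push_cast at this; convert this using 2; ring
  have k3 : v (1 - 2 * w) ≤ 1 := by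
    have := kc_le v hw 1 (-2); push_cast at this; convert this using 2; ring
  have m (a b : k) (ha : v a ≤ 1) (hb : v b < 1) : v (a * b) < 1 := by
    rw [map_mul]; exact mul_lt_one_of_nonneg_of_lt_one_right ha zero_le' hb
  have hsm : v ((w - 1) * s⁻¹ + (1 + w) * (x⁻¹ * s⁻¹) + (1 - 2 * w) * x⁻¹ - (1 + w) * x⁻¹ ^ 2) < 1 := by
    refine (v.map_sub _ _).trans_lt (max_lt ((v.map_add _ _).trans_lt (max_lt
      ((v.map_add _ _).trans_lt (max_lt (m _ _ k1 hsi) (m _ _ k2 (m _ _ hxi.le hsi)))) (m _ _ k3 hxi)))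
      (m _ _ k2 (by rw [sq]; exact m _ _ hxi.le hxi)))
  rw [e2, map_mul, v.map_one_add_of_lt hsm, mul_one, map_mul, map_pow, hxs, ← pow_mul, ← pow_succ]

lemma val_y_le {w x y : k} (hw : w ^ 2 + w + 1 = 0)
    (h : y ^ 2 + 2 * x * y - w * y = x ^ 3 - w * x ^ 2) (hx : v x ≤ 1) : v y ≤ 1 := by
  by_contra hlt
  rw [not_le] at hlt
  have hy0 : y ≠ 0 := by rintro rfl; simp at hlt
  have hwO : w ∈ v.integer := (val_w v hw).le
  have hxO : x ∈ v.integer := hx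
  have hr : v (x ^ 3 - w * x ^ 2) ≤ 1 :=
    sub_mem (pow_mem hxO 3) (mul_mem hwO (pow_mem hxO 2))
  have hc : v (2 * x - w) ≤ 1 := sub_mem (mul_mem (ofNat_mem v.integer 2) hxO) hwO
  rw [← h, show y ^ 2 + 2 * x * y - w * y = y * (y + (2 * x - w)) by ring, map_mul,
    v.map_add_eq_of_lt_left (hc.trans_lt hlt)] at hr
  exact absurd (one_lt_mul'' hlt hlt) (not_lt.2 hr)

/-- The valuation of the Kummer function is a seventh power. -/
lemma val_ff {w X Y : k} (hw : w ^ 2 + w + 1 = 0) (h : Y ^ 2 = X ^ 3 + B0 w)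
    (hX : X ≠ (1 - w) / 3) : ∃ c : k, c ≠ 0 ∧ v (ff w X Y) = v c ^ 7 := by
  have hm := ff_mul_neg hw h
  have hnf : ff w X Y ≠ 0 := by
    intro h0; rw [h0, zero_mul] at hm
    exact sub_ne_zero.2 hX (pow_eq_zero_iff (n := 7) (by norm_num) |>.1 (neg_eq_zero.1 hm.symm))
  have ht := tate_eq hw h
  have ht' := tate_eq (Y := -Y) hw (by rw [neg_sq]; exact h)
  rw [ff_eq_ft hw, ff_eq_ft hw] at hm
  rw [ff_eq_ft hw] at hnf ⊢
  have hsum : ft w (X - (1 - w) / 3) (Y - (X - (1 - w) / 3) + w / 2) +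
      ft w (X - (1 - w) / 3) (-Y - (X - (1 - w) / 3) + w / 2) =
      1 + (X - (1 - w) / 3) * ((2 * w - 4) * (X - (1 - w) / 3) ^ 2 + 7 * w * (X - (1 - w) / 3) + (4 + 5 * w)) := by
    unfold ft
    clear hm ht ht' h hnf
    generalize X - (1 - w) / 3 = x
    linear_combination (-1 - 2 * x) * hw
  generalize X - (1 - w) / 3 = x at *
  generalize Y - x + w / 2 = y at *
  generalize -Y - x + w / 2 = y' at *
  by_cases hx : 1 < v x
  · rw [val_pole v hw ht hx]
    refine ⟨y / x, ?_, rfl⟩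
    intro h0
    have := val_pole v hw ht hx
    rw [h0] at this
    simp at this
    exact hnf this
  rw [not_lt] at hx
  have hwO : w ∈ v.integer := (val_w v hw).le
  have hxO : x ∈ v.integer := hx
  have hft : ∀ y, v y ≤ 1 → v (ft w x y) ≤ 1 := by
    intro y hy
    have hyO : y ∈ v.integer := hy
    have h2 : (2 : k) ∈ v.integer := ofNat_mem _ 2
    have : ft w x y ∈ v.integer := by
      unfold ft
      have h1 := one_mem v.integer
      exact sub_mem (add_mem (add_mem (add_mem (mul_mem (pow_mem hxO 2) hyO)
        (mul_mem (sub_mem hwO h1) (pow_mem hxO 3))) (mul_mem (add_mem h1 hwO) (pow_mem hxO 2)))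
        (mul_mem (sub_mem h1 (mul_mem h2 hwO)) (mul_mem hxO hyO))) (mul_mem (add_mem h1 hwO) hyO)
    exact this
  have hy := hft y (val_y_le v hw ht hx)
  have hy' := hft y' (val_y_le v hw ht' hx)
  have hp : v (ft w x y) * v (ft w x y') = v x ^ 7 := by
    rw [← map_mul, hm, Valuation.map_neg, map_pow]
  rcases hx.lt_or_eq with hlt | heq
  · have h1 : v (ft w x y + ft w x y') = 1 := by
      rw [hsum]
      apply v.map_one_add_of_lt
      rw [map_mul]
      refine mul_lt_one_of_nonneg_of_lt_one_left zero_le' hlt ?_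
      have : (2 * w - 4) * x ^ 2 + 7 * w * x + (4 + 5 * w) ∈ v.integer :=
        add_mem (add_mem (mul_mem (sub_mem (mul_mem (ofNat_mem _ 2) hwO) (ofNat_mem _ 4)) (pow_mem hxO 2))
          (mul_mem (mul_mem (ofNat_mem _ 7) hwO) hxO))
          (add_mem (ofNat_mem _ 4) (mul_mem (ofNat_mem _ 5) hwO))
      exact this
    rcases hy.lt_or_eq with hl | he
    · rcases hy'.lt_or_eq with hl' | he'
      · exact absurd ((v.map_add _ _).trans_lt (max_lt hl hl')) (by rw [h1]; exact lt_irrefl _)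
      · refine ⟨x, ?_, by rw [← hp, he', mul_one]⟩
        rintro rfl
        rw [he', mul_one] at hp
        simp at hp
        exact hnf hp
    · exact ⟨1, one_ne_zero, by rw [he, map_one, one_pow]⟩
  · refine ⟨1, one_ne_zero, ?_⟩
    rw [heq, one_pow] at hp
    rw [map_one, one_pow]
    refine le_antisymm hy ?_
    rw [← hp]
    exact mul_le_of_le_one_right' hy'

end val
end SumCubes

end

noncomputable section

namespace SumCubes
open NumberField IsDedekindDomain

/-! ### The compositum with the field of degree seven -/

/-- The compositum `W` of `F` and the field of degree `7`: a cyclic extension of `F` of degree `7`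
with generator `σ`, to which `τ` extends, and the Gaussian period `η` with its conjugates. -/
structure KumW {F : Type} [Field F] [NumberField F] (D : KumF F) (W : Type) [Field W]
    [NumberField W] [Algebra F W] where
  σ : W ≃ₐ[F] W
  τ : W ≃ₐ[ℚ] W
  τalg : ∀ x : F, τ (algebraMap F W x) = algebraMap F W (D.τ x)
  comm : ∀ x, τ (σ x) = σ (τ x)
  σ7 : ∀ x, (σ ^ 7) x = x
  fixed : ∀ x, σ x = x → ∃ a : F, algebraMap F W a = x
  η : W
  int : IsIntegral ℤ η
  τη : τ η = η
  sum : ∑ i ∈ Finset.range 7, (σ ^ i) η = -1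
  gram : ∀ j < 7, ∑ i ∈ Finset.range 7, (σ ^ i) η * (σ ^ (j + i)) η = if j = 0 then 25 else -4

namespace KumW
variable {F : Type} [Field F] [NumberField F] {D : KumF F} {W : Type} [Field W]
    [NumberField W] [Algebra F W] (E : KumW D W)

/-- The trace to `F`. -/
def tr (x : W) : W := ∑ j ∈ Finset.range 7, (E.σ ^ j) x

/-- The conjugates of the Gaussian period. -/
def per (i : ℕ) : W := (E.σ ^ i) E.η

lemma σ_succ (j : ℕ) (x : W) : (E.σ ^ (j + 1)) x = E.σ ((E.σ ^ j) x) := by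
  rw [pow_succ', AlgEquiv.mul_apply]

lemma σ_alg (j : ℕ) (a : F) : (E.σ ^ j) (algebraMap F W a) = algebraMap F W a :=
  AlgEquiv.commutes _ a

lemma σ_add (i j : ℕ) (x : W) : (E.σ ^ (i + j)) x = (E.σ ^ i) ((E.σ ^ j) x) := by
  rw [pow_add, AlgEquiv.mul_apply]

lemma exists_tr (x : W) : ∃ a : F, algebraMap F W a = E.tr x := by
  apply E.fixed
  rw [tr, map_sum]
  simp only [← E.σ_succ]
  have := Finset.sum_range_succ' (fun j => (E.σ ^ j) x) 7
  rw [Finset.sum_range_succ, E.σ7] at this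
  simp only [pow_zero, AlgEquiv.one_apply] at this
  exact (add_right_cancel this).symm

lemma comm_pow (j : ℕ) (x : W) : E.τ ((E.σ ^ j) x) = (E.σ ^ j) (E.τ x) := by
  induction j with
  | zero => simp
  | succ j ih => rw [E.σ_succ, E.comm, ih, E.σ_succ]

lemma τ_per (i : ℕ) : E.τ (E.per i) = E.per i := by rw [per, E.comm_pow, E.τη]

lemma τ_tr (x : W) : E.τ (E.tr x) = E.tr (E.τ x) := by
  simp only [tr, map_sum, E.comm_pow]

lemma decomp (x : W) :
    29 * x = ∑ i ∈ Finset.range 7, (E.tr (x * E.per i) - 4 * E.tr x) * E.per i := by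
  have h1 : ∑ i ∈ Finset.range 7, E.tr (x * E.per i) * E.per i = 29 * x - 4 * E.tr x := by
    simp only [tr, per, map_mul, Finset.sum_mul, ← E.σ_add]
    rw [Finset.sum_comm]
    have : ∀ j ∈ Finset.range 7, ∑ i ∈ Finset.range 7,
        (E.σ ^ j) x * (E.σ ^ (j + i)) E.η * (E.σ ^ i) E.η =
        (if j = 0 then 29 * x else 0) - 4 * (E.σ ^ j) x := by
      intro j hj
      have hg := E.gram j (Finset.mem_range.1 hj)
      have : ∑ i ∈ Finset.range 7, (E.σ ^ j) x * (E.σ ^ (j + i)) E.η * (E.σ ^ i) E.η =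
          (E.σ ^ j) x * ∑ i ∈ Finset.range 7, (E.σ ^ i) E.η * (E.σ ^ (j + i)) E.η := by
        rw [Finset.mul_sum]
        exact Finset.sum_congr rfl fun i _ => by ring
      rw [this, hg]
      split_ifs with h0
      · subst h0; simp; ring
      · ring
    rw [Finset.sum_congr rfl this, Finset.sum_sub_distrib, ← Finset.mul_sum]
    simp
  simp only [sub_mul, Finset.sum_sub_distrib]
  rw [h1, ← Finset.mul_sum]
  simp only [per]
  rw [E.sum]; ring

/-- Coefficients of `29 x` with respect to the periods. -/
lemma exists_coeff (x : W) : ∃ c : ℕ → F,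
    (∀ i, algebraMap F W (c i) = E.tr (x * E.per i) - 4 * E.tr x) ∧
    29 * x = ∑ i ∈ Finset.range 7, algebraMap F W (c i) * E.per i := by
  have : ∀ i, ∃ a : F, algebraMap F W a = E.tr (x * E.per i) - 4 * E.tr x := by
    intro i
    obtain ⟨a, ha⟩ := E.exists_tr (x * E.per i)
    obtain ⟨b, hb⟩ := E.exists_tr x
    exact ⟨a - 4 * b, by rw [map_sub, map_mul, ha, hb, map_ofNat]⟩
  choose c hc using this
  refine ⟨c, hc, ?_⟩
  simp only [hc]
  exact E.decomp x

/-- Hilbert's theorem 90, made explicit with the periods. -/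
lemma hilbert90 {b : W} (hb : b ≠ 0) (hN : ∏ j ∈ Finset.range 7, (E.σ ^ j) b = 1) :
    ∃ c : W, c ≠ 0 ∧ b * E.σ c = c := by
  -- partial products of the conjugates of `b`
  let q (j : ℕ) : W := ∏ i ∈ Finset.range j, (E.σ ^ i) b
  let S (x : W) : W := ∑ j ∈ Finset.range 7, q j * (E.σ ^ j) x
  have hS : ∃ i, S (E.per i) ≠ 0 := by
    by_contra hall
    push Not at hall
    have h1 : ∑ i ∈ Finset.range 7, S (E.per i) = -∑ j ∈ Finset.range 7, q j := by
      simp only [S, per, ← E.σ_add]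
      rw [Finset.sum_comm, ← Finset.sum_neg_distrib]
      refine Finset.sum_congr rfl fun j _ => ?_
      rw [← Finset.mul_sum]
      simp only [E.σ_add]
      rw [← map_sum, E.sum]; simp
    have h2 : ∑ i ∈ Finset.range 7, E.per i * S (E.per i) = 29 - 4 * ∑ j ∈ Finset.range 7, q j := by
      simp only [S, per, ← E.σ_add, Finset.mul_sum]
      rw [Finset.sum_comm]
      have : ∀ j ∈ Finset.range 7, ∑ i ∈ Finset.range 7,
          (E.σ ^ i) E.η * (q j * (E.σ ^ (j + i)) E.η) = (if j = 0 then 29 else 0) - 4 * q j := by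
        intro j hj
        have hg := E.gram j (Finset.mem_range.1 hj)
        have : ∑ i ∈ Finset.range 7, (E.σ ^ i) E.η * (q j * (E.σ ^ (j + i)) E.η) =
            q j * ∑ i ∈ Finset.range 7, (E.σ ^ i) E.η * (E.σ ^ (j + i)) E.η := by
          rw [Finset.mul_sum]
          exact Finset.sum_congr rfl fun i _ => by ring
        rw [this, hg]
        split_ifs with h0
        · subst h0; simp [q]; norm_num
        · ring
      rw [Finset.sum_congr rfl this, Finset.sum_sub_distrib]
      simp [Finset.mul_sum]
    simp only [hall, mul_zero, Finset.sum_const_zero] at h1 h2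
    rw [neg_eq_zero.1 h1.symm] at h2
    norm_num at h2
  obtain ⟨i, hi⟩ := hS
  refine ⟨S (E.per i), hi, ?_⟩
  have hq : ∀ j, b * E.σ (q j) = q (j + 1) := by
    intro j
    simp only [q, map_prod, ← E.σ_succ]
    rw [Finset.prod_range_succ']; simp [mul_comm]
  generalize E.per i = x
  simp only [S, map_sum, map_mul, ← E.σ_succ, Finset.mul_sum, ← mul_assoc, hq]
  have := Finset.sum_range_succ' (fun j => q j * (E.σ ^ j) x) 7
  rw [Finset.sum_range_succ, E.σ7, show q 7 = 1 from hN] at this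
  simp only [pow_zero, AlgEquiv.one_apply, show q 0 = 1 from Finset.prod_range_zero _] at this
  exact (add_right_cancel this).symm

/-! ### Ramification -/

/-- The powers of `σ` on the ring of integers. -/
def σI (j : ℕ) : 𝓞 W ≃+* 𝓞 W := RingOfIntegers.mapRingEquiv ((E.σ ^ j : W ≃ₐ[F] W) : W ≃+* W)

@[simp] lemma coe_σI (j : ℕ) (x : 𝓞 W) : (E.σI j x : W) = (E.σ ^ j) x := rfl

lemma int_per (i : ℕ) : IsIntegral ℤ (E.per i) := E.int.map ((E.σ ^ i : W ≃ₐ[F] W) : W →+* W).toIntAlgHom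

/-- The periods as integers. -/
def perI (i : ℕ) : 𝓞 W := ⟨E.per i, E.int_per i⟩

@[simp] lemma coe_perI (i : ℕ) : (E.perI i : W) = E.per i := rfl

lemma coe_algebraMap (a : 𝓞 F) : ((algebraMap (𝓞 F) (𝓞 W) a : 𝓞 W) : W) = algebraMap F W a := rfl

lemma σI_alg (j : ℕ) (a : 𝓞 F) : E.σI j (algebraMap (𝓞 F) (𝓞 W) a) = algebraMap (𝓞 F) (𝓞 W) a := by
  apply RingOfIntegers.ext; rw [coe_σI, coe_algebraMap, E.σ_alg]

lemma exists_coeffI (x : 𝓞 W) : ∃ c : ℕ → 𝓞 F,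
    (∀ i, algebraMap (𝓞 F) (𝓞 W) (c i) = ∑ j ∈ Finset.range 7, E.σI j (x * E.perI i) -
      4 * ∑ j ∈ Finset.range 7, E.σI j x) ∧
    29 * x = ∑ i ∈ Finset.range 7, algebraMap (𝓞 F) (𝓞 W) (c i) * E.perI i := by
  obtain ⟨c, h1, h2⟩ := E.exists_coeff x
  have h4 : ((4 : 𝓞 W) : W) = 4 := map_ofNat (algebraMap (𝓞 W) W) 4
  have h29 : ((29 : 𝓞 W) : W) = 29 := map_ofNat (algebraMap (𝓞 W) W) 29
  have h3 : ∀ i, algebraMap F W (c i) = ((∑ j ∈ Finset.range 7, E.σI j (x * E.perI i) -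
      4 * ∑ j ∈ Finset.range 7, E.σI j x : 𝓞 W) : W) := by
    intro i
    rw [h1 i]; simp [tr, h4]
  have hc : ∀ i, IsIntegral ℤ (c i) := by
    intro i
    have h5 : IsIntegral ℤ (algebraMap F W (c i)) := by rw [h3]; exact RingOfIntegers.isIntegral_coe _
    exact (isIntegral_algHom_iff ((algebraMap F W).toIntAlgHom) (algebraMap F W).injective).1 h5
  have hc' : ∀ i, ∃ a : 𝓞 F, (a : F) = c i := fun i => ⟨⟨c i, hc i⟩, rfl⟩
  choose d hd using hc'
  refine ⟨d, fun i => ?_, ?_⟩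
  · apply RingOfIntegers.ext
    rw [coe_algebraMap, ← h3, hd]
  · apply RingOfIntegers.ext
    simp only [map_mul, map_sum, h29, coe_perI, coe_algebraMap, hd]
    exact h2

include E in
/-- The primes of `F` not above `29` are unramified in `W`: `29 x` is a combination of the periods
with traces of multiples of `x` as coefficients, so a nilpotent class has coefficients in `p`. -/
lemma isRadical_map {p : Ideal (𝓞 F)} [hp : p.IsMaximal] (h29 : (29 : 𝓞 F) ∉ p) :
    (p.map (algebraMap (𝓞 F) (𝓞 W))).IsRadical := by
  set M := p.map (algebraMap (𝓞 F) (𝓞 W)) with hM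
  have hσ : ∀ j, ∀ x ∈ M.radical, E.σI j x ∈ M.radical := by
    rintro j x ⟨n, hn⟩
    refine ⟨n, ?_⟩
    rw [← map_pow]
    have : M ≤ M.comap (E.σI j) := by
      rw [hM, Ideal.map_le_iff_le_comap]
      intro a ha
      rw [Ideal.mem_comap, Ideal.mem_comap, E.σI_alg]
      exact Ideal.mem_map_of_mem _ ha
    exact this hn
  have hdown : ∀ c : 𝓞 F, algebraMap (𝓞 F) (𝓞 W) c ∈ M.radical → c ∈ p := by
    rintro c ⟨n, hn⟩
    obtain ⟨Q, hQ, hQp⟩ := Ideal.exists_maximal_ideal_liesOver_of_isIntegral (S := 𝓞 W) p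
    have h1 : M ≤ Q := by
      rw [hM, Ideal.map_le_iff_le_comap, ← Ideal.under_def, ← hQp.over]
    have h2 := hQ.isPrime.mem_of_pow_mem _ (h1 hn)
    rw [hQp.over]; exact h2
  intro x hx
  obtain ⟨c, h1, h2⟩ := E.exists_coeffI x
  have h3 : 29 * x ∈ M := by
    rw [h2]
    refine Ideal.sum_mem _ fun i _ => Ideal.mul_mem_right _ _ (Ideal.mem_map_of_mem _ (hdown _ ?_))
    rw [h1]
    exact sub_mem (sum_mem fun j _ => hσ j _ (Ideal.mul_mem_right _ _ hx))
      (Ideal.mul_mem_left _ _ (sum_mem fun j _ => hσ j _ hx))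
  obtain ⟨d, hd⟩ := hp.exists_inv h29
  obtain ⟨i, hi, hdi⟩ := hd
  have h4 := congrArg (algebraMap (𝓞 F) (𝓞 W)) hdi
  rw [map_add, map_mul, map_ofNat, map_one] at h4
  have : x = algebraMap (𝓞 F) (𝓞 W) d * (29 * x) + x * algebraMap (𝓞 F) (𝓞 W) i := by
    linear_combination -x * h4
  rw [this]
  exact add_mem (Ideal.mul_mem_left _ _ h3) (Ideal.mul_mem_left _ _ (Ideal.mem_map_of_mem _ hi))

lemma not_le_sq {R : Type*} [CommRing R] [IsDedekindDomain R] {M Q : Ideal R} (hr : M.IsRadical)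
    (h0 : M ≠ ⊥) (hQ : Q ≠ ⊤) : ¬ M ≤ Q ^ 2 := by
  intro hne
  obtain ⟨J, hJ⟩ := Ideal.dvd_iff_le.2 hne
  have hsq : (Q * J) ^ 2 = M * J := by rw [hJ]; ring
  have h2 : Q * J ≤ M := by
    intro x hx
    refine hr ⟨2, ?_⟩
    have h1 : x ^ 2 ∈ (Q * J) ^ 2 := Ideal.pow_mem_pow hx 2
    rw [hsq] at h1
    exact (Ideal.mul_le_left (I := M) (J := J)) h1
  have hM : M = Q * (Q * J) := by rw [hJ]; ring
  have h4 : Q * J ≠ 0 := by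
    intro h
    rw [hM, h, mul_zero] at h0
    exact h0 rfl
  have h5 : Q * (Q * J) ∣ 1 * (Q * J) := by rw [one_mul, ← hM]; exact Ideal.dvd_iff_le.2 h2
  have h6 : Q ∣ 1 := (mul_dvd_mul_iff_right h4).1 h5
  exact hQ (Ideal.isUnit_iff.1 (isUnit_of_dvd_one h6))

include E in
lemma val_eq (p : HeightOneSpectrum (𝓞 F)) (Q : HeightOneSpectrum (𝓞 W))
    [hQ : Q.asIdeal.LiesOver p.asIdeal] (h29 : (29 : 𝓞 F) ∉ p.asIdeal) (x : F) :
    Q.valuation W (algebraMap F W x) = p.valuation F x := by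
  have hpm := p.isMaximal
  have hle : p.asIdeal.map (algebraMap (𝓞 F) (𝓞 W)) ≤ Q.asIdeal := by
    rw [Ideal.map_le_iff_le_comap, ← Ideal.under_def, ← hQ.over]
  have h1 : p.asIdeal.ramificationIdx' Q.asIdeal = 1 := by
    by_contra hne
    rw [← ne_eq, Ideal.ramificationIdx'_ne_one_iff hle] at hne
    refine not_le_sq (E.isRadical_map h29) ?_ Q.isPrime.ne_top hne
    rw [ne_eq, Ideal.map_eq_bot_iff_of_injective (FaithfulSMul.algebraMap_injective _ _)]
    exact p.ne_bot
  have := HeightOneSpectrum.valuation_liesOver (K := F) W p Q x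
  rw [h1, pow_one] at this
  exact this.symm

end KumW
end SumCubes

end

/-! ### Descent of Kummer classes from `W` to `F` -/

noncomputable section

namespace SumCubes
open NumberField IsDedekindDomain

namespace KumW
variable {F : Type} [Field F] [NumberField F] {D : KumF F} {W : Type} [Field W]
    [NumberField W] [Algebra F W] (E : KumW D W)

include E in
/-- There is no non-trivial seventh root of unity in `W`: `σ` would act on it through an exponent
`k` with `k ^ 7 ≡ 1`, hence trivially. -/
lemma root7 {z : W} (hz : z ^ 7 = 1) : z = 1 := by
  by_contra hne
  have : Fact (Nat.Prime 7) := ⟨by norm_num⟩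
  have hp : IsPrimitiveRoot z 7 := by
    have := orderOf_eq_prime hz hne (p := 7)
    exact this ▸ IsPrimitiveRoot.orderOf z
  have h1 : (E.σ z) ^ 7 = 1 := by rw [← map_pow, hz, map_one]
  obtain ⟨k, -, hk⟩ := hp.eq_pow_of_pow_eq_one h1
  have h2 : ∀ j : ℕ, (E.σ ^ j) z = z ^ (k ^ j) := by
    intro j
    induction j with
    | zero => simp
    | succ j ih => rw [E.σ_succ, ih, map_pow, ← hk, ← pow_mul, pow_succ']
  have h3 : z ^ (k ^ 7) = z ^ k := by
    apply pow_eq_pow_of_modEq _ hz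
    rw [← ZMod.natCast_eq_natCast_iff]
    push_cast
    exact ZMod.pow_card (k : ZMod 7)
  have h4 : E.σ z = z := by rw [← hk, ← h3, ← h2, E.σ7]
  obtain ⟨a, ha⟩ := E.fixed z h4
  have : a ^ 7 = 1 := by
    apply (algebraMap F W).injective
    rw [map_pow, ha, hz, map_one]
  apply hne
  rw [← ha, D.root7 a this, map_one]

/-- A class of `Wˣ / Wˣ⁷` fixed by `σ` comes from `F`. -/
lemma exists_base {α : W} (hα : α ≠ 0) (h1 : Sim (E.σ α) α) : ∃ a : F, a ≠ 0 ∧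
    Sim α (algebraMap F W a) := by
  obtain ⟨b, hb, h⟩ := h1
  have key : ∀ n : ℕ, (E.σ ^ n) α = α * (∏ j ∈ Finset.range n, (E.σ ^ j) b) ^ 7 := by
    intro n
    induction n with
    | zero => simp
    | succ n ih =>
      rw [add_comm, E.σ_add, pow_one, ih, map_mul, h, map_pow, map_prod,
        add_comm 1 n, Finset.prod_range_succ']
      simp only [E.σ_succ]
      simp only [pow_zero, AlgEquiv.one_apply]
      ring
  have h7 := key 7
  rw [E.σ7] at h7
  have hN := E.root7 (mul_left_cancel₀ hα ((mul_one α).trans h7)).symm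
  obtain ⟨c, hc, hbc⟩ := E.hilbert90 hb hN
  obtain ⟨a, ha⟩ := E.fixed (α * c ^ 7) (by
    rw [map_mul, h, map_pow]
    linear_combination α * congrArg (· ^ 7) hbc)
  refine ⟨a, ?_, c⁻¹, inv_ne_zero hc, by rw [ha]; field_simp⟩
  rintro rfl
  rw [map_zero] at ha
  exact mul_ne_zero hα (pow_ne_zero _ hc) ha.symm

include E in
/-- Seventh powers of `W` which lie in `F` are seventh powers in `F`. -/
lemma sim_of_sim {a b : F} (hb : b ≠ 0) (h : Sim (algebraMap F W a) (algebraMap F W b)) : Sim a b := by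
  obtain ⟨u, hu, h⟩ := h
  have hb' : algebraMap F W b ≠ 0 := by simpa using hb
  have h1 : E.σ u / u = 1 := by
    apply E.root7
    have h2 := congrArg E.σ h
    simp only [map_mul, map_pow, AlgEquiv.commutes] at h2
    have h3 : E.σ u ^ 7 = u ^ 7 := mul_left_cancel₀ hb' (h2.symm.trans h)
    rw [div_pow, h3, div_self (pow_ne_zero _ hu)]
  obtain ⟨d, rfl⟩ := E.fixed u ((div_eq_one_iff_eq hu).1 h1)
  refine ⟨d, by simpa using hu, ?_⟩
  apply (algebraMap F W).injective
  simpa using h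

lemma base_tau {α : W} {a : F} (ha : a ≠ 0) (h : Sim α (algebraMap F W a))
    (h2 : Sim (E.τ α) (α ^ 3)) : Sim (D.τ a) (a ^ 3) := by
  apply E.sim_of_sim (pow_ne_zero _ ha)
  rw [← E.τalg, map_pow]
  exact ((h.map (E.τ : W ≃+* W).toRingHom).symm.trans h2).trans (h.pow 3)

end KumW
end SumCubes

end

noncomputable section

namespace SumCubes
open NumberField IsDedekindDomain

section general
variable {R K : Type*} [CommRing R] [IsDedekindDomain R] [Field K] [Algebra R K]
  [IsFractionRing R K]

lemma intVal_equiv_le (Q : HeightOneSpectrum R) (e : R ≃+* R) (hQ : Q.asIdeal.comap e = Q.asIdeal)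
    (r : R) : Q.intValuation (e r) ≤ Q.intValuation r := by
  by_cases hr : r = 0
  · simp [hr]
  obtain ⟨n, hn⟩ : ∃ n : ℕ, Q.intValuation r = WithZero.exp (-(n : ℤ)) :=
    ⟨_, Q.intValuation_if_neg hr⟩
  rw [hn, Q.intValuation_le_pow_iff_mem]
  have h1 : r ∈ Q.asIdeal ^ n := (Q.intValuation_le_pow_iff_mem r n).1 hn.le
  have h2 := Ideal.mem_map_of_mem (e : R →+* R) h1
  rw [Ideal.map_pow] at h2
  have h3 : Q.asIdeal.map (e : R →+* R) = Q.asIdeal := by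
    conv_lhs => rw [← hQ]
    exact Ideal.map_comap_of_surjective _ e.surjective _
  rw [h3] at h2
  exact h2

lemma intVal_equiv (Q : HeightOneSpectrum R) (e : R ≃+* R) (hQ : Q.asIdeal.comap e = Q.asIdeal)
    (r : R) : Q.intValuation (e r) = Q.intValuation r := by
  apply le_antisymm (intVal_equiv_le Q e hQ r)
  have h := intVal_equiv_le Q e.symm (by
    ext x
    have := Ideal.ext_iff.1 hQ (e.symm x)
    rw [Ideal.mem_comap] at this ⊢
    rw [← this]
    simp) (e r)
  simpa using h

/-- An automorphism which fixes a prime preserves the valuation attached to it. -/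
lemma val_equiv (Q : HeightOneSpectrum R) (e : R ≃+* R) (hQ : Q.asIdeal.comap e = Q.asIdeal)
    (φ : K ≃+* K) (hφ : ∀ r, φ (algebraMap R K r) = algebraMap R K (e r)) (x : K) :
    Q.valuation K (φ x) = Q.valuation K x := by
  obtain ⟨a, b, hb, rfl⟩ := IsFractionRing.div_surjective (A := R) x
  simp only [map_div₀, hφ, HeightOneSpectrum.valuation_of_algebraMap, intVal_equiv Q e hQ]

lemma exists_ideal_pow {A : R} (hA : A ≠ 0)
    (h : ∀ p : HeightOneSpectrum R, ∃ g : WithZero (Multiplicative ℤ), p.intValuation A = g ^ 7) :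
    ∃ I : Ideal R, Ideal.span {A} = I ^ 7 := by
  have hs : Ideal.span {A} ≠ 0 := by simpa using hA
  obtain ⟨b, hb⟩ := Associates.is_pow_of_dvd_count (k := 7) (a := Associates.mk (Ideal.span {A}))
    (by simpa using hA) (by
      intro p hp
      obtain ⟨P, rfl⟩ := Associates.mk_surjective p
      rw [Associates.irreducible_mk] at hp
      have hP := hp.prime
      obtain ⟨g, hg⟩ := h ⟨P, Ideal.isPrime_of_prime hP, hP.ne_zero⟩
      rw [HeightOneSpectrum.intValuation_if_neg _ hA] at hg
      have hg0 : g ≠ 0 := by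
        rintro rfl
        simp at hg
      rw [← WithZero.exp_log hg0, ← WithZero.exp_nsmul, WithZero.exp_inj] at hg
      dsimp only at hg
      zify
      refine ⟨-g.log, ?_⟩
      rw [nsmul_eq_mul] at hg
      push_cast at hg
      linarith)
  obtain ⟨I, rfl⟩ := Associates.mk_surjective b
  refine ⟨I, ?_⟩
  rw [← Associates.mk_pow, Associates.mk_eq_mk_iff_associated, associated_iff_eq] at hb
  exact hb

end general

/-- In a field of characteristic `29` containing a primitive cube root of unity `W`, the element
`-9 (5 + W)` is not the sixth power of an element of `𝔽₂₉(W)`. -/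
lemma not_sixth_29 {k : Type*} [CommRing k] [IsDomain k] [CharP k 29] {t W : k} {a b : ℤ}
    (h1 : t = a + b * W) (hW : W ^ 2 + W + 1 = 0) (hT : t ^ 6 = -9 * (5 + W)) : False := by
  haveI : Fact (Nat.Prime 29) := ⟨by norm_num⟩
  have h29' : (29 : k) = 0 := by exact_mod_cast CharP.cast_eq_zero k 29
  have hF : ∀ z : k, frobenius k 29 z = z ^ 29 := fun z => rfl
  have hW3 : W ^ 3 = 1 := by linear_combination (W - 1) * hW
  have hW29 : W ^ 29 = W ^ 2 := by
    calc W ^ 29 = (W ^ 3) ^ 9 * W ^ 2 := by ring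
      _ = _ := by rw [hW3]; ring
  have h2 : t ^ 29 = a + b * W ^ 2 := by
    rw [← hF, h1, map_add, map_mul, map_intCast, map_intCast, hF, hW29]
  have h3 : t ^ 841 = t := by
    calc t ^ 841 = (t ^ 29) ^ 29 := by ring
      _ = a + b * (W ^ 29) ^ 2 := by
        rw [h2, ← hF, map_add, map_mul, map_intCast, map_intCast, hF]; ring
      _ = a + b * W ^ 4 := by rw [hW29]; ring
      _ = t := by rw [h1]; linear_combination b * W * hW3
  have hc : t ^ 6 = 13 + 20 * W := by linear_combination hT - (2 + W) * h29'
  have hc2 : t ^ 12 = 1 + 4 * W := by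
    have : t ^ 12 = (t ^ 6) ^ 2 := by ring
    rw [this, hc]
    linear_combination 400 * hW + (-8 + 4 * W) * h29'
  have hc4 : t ^ 24 = 14 + 21 * W := by
    have : t ^ 24 = (t ^ 12) ^ 2 := by ring
    rw [this, hc2]
    linear_combination 16 * hW + (-1 + -1 * W) * h29'
  have hc8 : t ^ 48 = 16 + 2 * W := by
    have : t ^ 48 = (t ^ 24) ^ 2 := by ring
    rw [this, hc4]
    linear_combination 441 * hW + (-9 + 5 * W) * h29'
  have hc16 : t ^ 96 = 20 + 2 * W := by
    have : t ^ 96 = (t ^ 48) ^ 2 := by ring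
    rw [this, hc8]
    linear_combination 4 * hW + (8 + 2 * W) * h29'
  have hc32 : t ^ 192 = 19 + 18 * W := by
    have : t ^ 192 = (t ^ 96) ^ 2 := by ring
    rw [this, hc16]
    linear_combination 4 * hW + (13 + 2 * W) * h29'
  have hc64 : t ^ 384 = 8 + 12 * W := by
    have : t ^ 384 = (t ^ 192) ^ 2 := by ring
    rw [this, hc32]
    linear_combination 324 * hW + (1 + 12 * W) * h29'
  have hc128 : t ^ 768 = 7 + 19 * W := by
    have : t ^ 768 = (t ^ 384) ^ 2 := by ring
    rw [this, hc64]
    linear_combination 144 * hW + (-3 + 1 * W) * h29'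
  have hc140 : t ^ 840 = 28 + 0 * W := by
    have : t ^ 840 = t ^ 768 * t ^ 48 * t ^ 24 := by ring
    rw [this, hc128, hc8, hc4]
    linear_combination (38 * (14 + 21 * W) + 5880) * hW + (-168 + -14 * W) * h29'
  have ht : t ≠ 0 := by
    rintro rfl
    have : (13 + 20 * W) * (13 + 20 * W ^ 2) = 0 := by rw [← hc]; ring
    have h1 : (1 : k) = 0 := by linear_combination 26 * this - 277 * h29' - 26 * (400 * W - 140) * hW
    exact one_ne_zero h1
  have h840 : t ^ 840 = 1 := by
    apply mul_right_cancel₀ ht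
    rw [one_mul, ← pow_succ]
    exact h3
  have h5 : (1 : k) = 0 := by linear_combination 14 * (h840 - hc140) - 13 * h29'
  exact one_ne_zero h5

namespace KumF
variable {F : Type} [Field F] [NumberField F] {D : KumF F}

/-- The primes above `29` are fixed by some non-trivial power of `τ`: otherwise the residue field
would have `841` elements, in which `t⁶ = -9 (5 + w)` is not a sixth power. -/
lemma not_free_29 {P : Ideal (𝓞 F)} [hP : P.IsMaximal] (hb : P ≠ ⊥) (h29 : (29 : 𝓞 F) ∈ P) :
    ¬ D.Free P := by
  intro h
  have h0 : ((29 : ℕ) : 𝓞 F ⧸ P) = 0 := by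
    have : (Ideal.Quotient.mk P (29 : 𝓞 F)) = 0 := Ideal.Quotient.eq_zero_iff_mem.2 h29
    rw [← this, map_ofNat]
    rfl
  have hch : CharP (𝓞 F ⧸ P) 29 := by
    have := CharP.ringChar_of_prime_eq_zero (R := 𝓞 F ⧸ P) (p := 29) (by norm_num) h0
    exact this ▸ ringChar.charP _
  obtain ⟨a, b, hab⟩ := h.exists_sub_mem hb D.tI
  have h1 : Ideal.Quotient.mk P D.tI = (a : 𝓞 F ⧸ P) + b * Ideal.Quotient.mk P D.wI := by
    have := Ideal.Quotient.eq_zero_iff_mem.2 hab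
    rw [map_sub, sub_eq_zero] at this
    simpa using this
  have hW := congrArg (Ideal.Quotient.mk P) D.wI_eq
  have hT := congrArg (Ideal.Quotient.mk P) D.tI_pow
  simp only [map_add, map_mul, map_pow, map_neg, map_one, map_zero, map_ofNat] at hW hT
  exact not_sixth_29 h1 hW hT

lemma sim_τ_pow {a : F} (h : Sim (D.τ a) (a ^ 3)) (j : ℕ) : Sim ((D.τ ^ j) a) (a ^ 3 ^ j) := by
  induction j with
  | zero => simpa using Sim.refl a
  | succ j ih =>
    have := (ih.map (D.τ : F ≃+* F).toRingHom).trans ((congrArg _ (map_pow _ _ _)).mp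
      (Sim.refl _) |>.trans (h.pow (3 ^ j)))
    rw [pow_succ', AlgEquiv.mul_apply, pow_succ', pow_mul]
    exact this

end KumF

namespace KumW
variable {F : Type} [Field F] [NumberField F] {D : KumF F} {W : Type} [Field W]
    [NumberField W] [Algebra F W] (E : KumW D W)

include E in
lemma val_base {α : W} {a : F} (ha : a ≠ 0) (h : Sim α (algebraMap F W a))
    (h2 : Sim (D.τ a) (a ^ 3))
    (h3 : ∀ Q : HeightOneSpectrum (𝓞 W), ∃ g, Q.valuation W α = g ^ 7)
    (p : HeightOneSpectrum (𝓞 F)) : ∃ g, p.valuation F a = g ^ 7 := by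
  have hpm := p.isMaximal
  by_cases h29 : (29 : 𝓞 F) ∈ p.asIdeal
  · have hf := KumF.not_free_29 (D := D) p.ne_bot h29
    simp only [KumF.Free, not_forall, not_not] at hf
    obtain ⟨j, hj0, hj6, hj⟩ := hf
    have hv : p.valuation F ((D.τ ^ j) a) = p.valuation F a :=
      val_equiv p (D.ρ j) hj ((D.τ ^ j : F ≃ₐ[ℚ] F) : F ≃+* F) (fun r => rfl) a
    obtain ⟨c, hc, hac⟩ := KumF.sim_τ_pow h2 j
    rw [hac, map_mul, map_pow, map_pow] at hv
    have hva : p.valuation F a ≠ 0 := by simpa using ha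
    have hvc : p.valuation F c ≠ 0 := by simpa using hc
    generalize p.valuation F a = x at *
    generalize p.valuation F c = y at *
    have hl := congrArg WithZero.log hv
    rw [WithZero.log_mul (pow_ne_zero _ hva) (pow_ne_zero _ hvc), WithZero.log_pow,
      WithZero.log_pow, nsmul_eq_mul, nsmul_eq_mul] at hl
    have hd : ∃ n : ℤ, x.log = 7 * n := by
      interval_cases j <;> norm_num at hl <;> exact ⟨x.log / 7, by omega⟩
    obtain ⟨n, hn⟩ := hd
    refine ⟨WithZero.exp n, ?_⟩
    rw [← WithZero.exp_nsmul, ← WithZero.exp_log hva, hn]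
    simp
  · obtain ⟨Q, hQ, hQ'⟩ := Ideal.exists_maximal_ideal_liesOver_of_isIntegral p.asIdeal (S := 𝓞 W)
    have hQb : Q ≠ ⊥ := by
      rintro rfl
      apply p.ne_bot
      rw [hQ'.over, Ideal.under_bot]
    let Q' : HeightOneSpectrum (𝓞 W) := ⟨Q, hQ.isPrime, hQb⟩
    haveI : Q'.asIdeal.LiesOver p.asIdeal := hQ'
    obtain ⟨g, hg⟩ := h3 Q'
    obtain ⟨c, hc, hac⟩ := h.symm
    rw [← E.val_eq p Q' h29, hac, map_mul, map_pow, hg, ← mul_pow]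
    exact ⟨_, rfl⟩

end KumW
end SumCubes

end

noncomputable section

namespace SumCubes
open NumberField IsDedekindDomain

lemma ideal_pow_inj {R : Type*} [CommRing R] [IsDedekindDomain R] {I J : Ideal R}
    (h : I ^ 7 = J ^ 7) : I = J :=
  dvd_antisymm ((UniqueFactorizationMonoid.pow_dvd_pow_iff_dvd (by norm_num)).1 h.dvd)
    ((UniqueFactorizationMonoid.pow_dvd_pow_iff_dvd (by norm_num)).1 h.symm.dvd)

namespace KumF
variable {F : Type} [Field F] [NumberField F] {D : KumF F}

/-- A class in `Fˣ / Fˣ⁷` on which `τ` acts as `3` and which is everywhere locally a seventh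
power up to units is represented by a unit. -/
lemma exists_unit {a : F} (ha : a ≠ 0) (h2 : Sim (D.τ a) (a ^ 3))
    (h3 : ∀ p : HeightOneSpectrum (𝓞 F), ∃ g, p.valuation F a = g ^ 7) :
    ∃ u : (𝓞 F)ˣ, Sim a ((u : 𝓞 F) : F) := by
  obtain ⟨n, d, hd, hnd⟩ := IsFractionRing.div_surjective (A := 𝓞 F) a
  have hd0 : algebraMap (𝓞 F) F d ≠ 0 := by simpa using nonZeroDivisors.ne_zero hd
  have hAa : Sim a (algebraMap (𝓞 F) F (n * d ^ 6)) := by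
    refine ⟨(algebraMap (𝓞 F) F d)⁻¹, inv_ne_zero hd0, ?_⟩
    rw [← hnd, map_mul, map_pow]
    field_simp
  generalize n * d ^ 6 = A at hAa
  have hA : A ≠ 0 := by
    rintro rfl
    simpa using hAa.symm.ne_zero ha
  have hAF : algebraMap (𝓞 F) F A ≠ 0 := by simpa using hA
  obtain ⟨I, hI⟩ := exists_ideal_pow hA (by
    intro p
    obtain ⟨g, hg⟩ := h3 p
    obtain ⟨c, -, hc⟩ := hAa.symm
    refine ⟨g * p.valuation F c, ?_⟩
    rw [← HeightOneSpectrum.valuation_of_algebraMap (K := F)]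
    change p.valuation F (algebraMap (𝓞 F) F A) = _
    rw [hc, map_mul, hg, map_pow, mul_pow])
  obtain ⟨c, hc, hτA⟩ : Sim (D.τ (algebraMap (𝓞 F) F A)) ((algebraMap (𝓞 F) F A) ^ 3) :=
    ((hAa.map (D.τ : F ≃+* F).toRingHom).symm.trans h2).trans (hAa.pow 3)
  obtain ⟨r, s, hs, hrs⟩ := IsFractionRing.div_surjective (A := 𝓞 F) c
  have hs0 : s ≠ 0 := nonZeroDivisors.ne_zero hs
  have hs0' : algebraMap (𝓞 F) F s ≠ 0 := by simpa using hs0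
  have hr0 : r ≠ 0 := by
    rintro rfl
    apply hc
    rw [← hrs, map_zero, zero_div]
  have hrel : s ^ 7 * D.ρ 1 A = r ^ 7 * A ^ 3 := by
    apply FaithfulSMul.algebraMap_injective (𝓞 F) F
    have : algebraMap (𝓞 F) F (D.ρ 1 A) = D.τ (algebraMap (𝓞 F) F A) := by
      simp [← RingOfIntegers.coe_eq_algebraMap]
    rw [map_mul, map_mul, this, hτA, ← hrs, map_pow, map_pow, map_pow]
    field_simp
  have hid : Ideal.span {(D.ρ 1).symm s} * I = Ideal.span {(D.ρ 1).symm r} * D.T 1 I ^ 3 := by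
    apply ideal_pow_inj
    have h := congrArg (fun z => D.T 1 (Ideal.span {z})) hrel
    simp only [← Ideal.span_singleton_mul_span_singleton, ← Ideal.span_singleton_pow, T_mul, T_pow,
      T_span_isPrincipal, RingEquiv.symm_apply_apply, hI] at h
    rw [mul_pow, mul_pow, h, ← pow_mul, ← pow_mul]
  have hI0 : I ≠ ⊥ := by
    rintro rfl
    rw [← Ideal.zero_eq_bot, zero_pow (by norm_num), Ideal.zero_eq_bot,
      Ideal.span_singleton_eq_bot] at hI
    exact hA hI
  obtain ⟨β, hβ⟩ := D.principal_of_eigen D.exists_small_ideal I hI0 (hI ▸ ⟨A, rfl⟩)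
    (by simpa using hs0) (by simpa using hr0) hid
  rw [hβ, Ideal.submodule_span_eq, Ideal.span_singleton_pow,
    Ideal.span_singleton_eq_span_singleton] at hI
  obtain ⟨u, hu⟩ := hI.symm
  refine ⟨u, hAa.trans ⟨algebraMap (𝓞 F) F β, ?_, ?_⟩⟩
  · intro h0
    apply hAF
    rw [← hu, map_mul, map_pow, h0]
    simp
  · rw [← hu, map_mul, map_pow, mul_comm]

end KumF

namespace KumW
variable {F : Type} [Field F] [NumberField F] {D : KumF F} {W : Type} [Field W]
    [NumberField W] [Algebra F W] (E : KumW D W)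

/-- Descent of a Kummer class to a unit of `F`. -/
theorem exists_unit {α : W} (hα : α ≠ 0) (h1 : Sim (E.σ α) α) (h2 : Sim (E.τ α) (α ^ 3))
    (h3 : ∀ Q : HeightOneSpectrum (𝓞 W), ∃ g, Q.valuation W α = g ^ 7) :
    ∃ u : (𝓞 F)ˣ, Sim α (algebraMap F W ((u : 𝓞 F) : F)) := by
  obtain ⟨a, ha, h⟩ := E.exists_base hα h1
  have h4 := E.base_tau ha h h2
  obtain ⟨u, hu⟩ := KumF.exists_unit ha h4 (E.val_base ha h h4 h3)
  exact ⟨u, h.trans (hu.map (algebraMap F W))⟩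

end KumW
end SumCubes

end

/-! ### The Kummer class at the prime above `7` -/

noncomputable section

namespace SumCubes
open WithZero

/-- The local situation at a prime above the prime `(7, t)` of `F`: the automorphism `τ` fixes the
prime and acts trivially on the residue field, `t` is a uniformiser, and `7` and `w - 2` vanish to
order `6`. -/
structure Loc {k : Type*} [Field k] (v : Valuation k (WithZero (Multiplicative ℤ))) (τ : k ≃+* k)
    (w t : k) : Prop where
  hw : w ^ 2 + w + 1 = 0
  τw : τ w = w
  τt : τ t = -w ^ 2 * t
  vt : v t = exp (-1)
  vτ : ∀ x, v (τ x) = v x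
  res : ∀ x, v x ≤ 1 → v (τ x - x) < 1
  v7 : v 7 ≤ exp (-6)
  vw2 : v (w - 2) ≤ exp (-6)

lemma le_exp_neg_one {x : WithZero (Multiplicative ℤ)} (h : x < 1) : x ≤ exp (-1) := by
  by_cases hx : x = 0
  · simp [hx]
  rw [← exp_log hx, exp_le_exp]
  rw [← exp_log hx, ← exp_zero, exp_lt_exp] at h
  omega

lemma exp_neg_lt_one : exp (-6) < (1 : WithZero (Multiplicative ℤ)) := by
  rw [← exp_zero, exp_lt_exp]; norm_num

namespace Loc
variable {k : Type*} [Field k] [CharZero k] {v : Valuation k (WithZero (Multiplicative ℤ))} {τ : k ≃+* k}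
    {w t : k} (L : Loc v τ w t)
include L

lemma vw : v w = 1 := val_w v L.hw

lemma v7' : v 7 < 1 := L.v7.trans_lt exp_neg_lt_one

/-- An integer prime to `7` is a unit. -/
lemma vint {n : ℤ} (hn : IsCoprime n 7) : v (n : k) = 1 := by
  apply le_antisymm (int_le v n)
  by_contra hlt
  rw [not_le] at hlt
  obtain ⟨a, b, hab⟩ := hn
  have h1 : (a : k) * n + b * 7 = 1 := by exact_mod_cast congrArg (Int.cast : ℤ → k) hab
  have h2 : v ((a : k) * n + b * 7) < 1 := by
    apply v.map_add_lt
    · rw [map_mul]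
      exact mul_lt_one_of_nonneg_of_lt_one_right (int_le v a) zero_le hlt
    · rw [map_mul]
      exact mul_lt_one_of_nonneg_of_lt_one_right (int_le v b) zero_le L.v7'
  rw [h1, map_one] at h2
  exact lt_irrefl _ h2

lemma v2 : v 2 = 1 := by simpa using L.vint (n := 2) (by norm_num)
lemma v3 : v 3 = 1 := by simpa using L.vint (n := 3) (by norm_num)

/-- Elements `m + n w` are determined modulo `π⁶` by `m + 2 n`. -/
lemma kc_small {m n : ℤ} (h : (7 : ℤ) ∣ m + 2 * n) : v ((m : k) + n * w) ≤ exp (-6) := by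
  obtain ⟨c, hc⟩ := h
  have h1 : (m : k) + n * w = c * 7 + n * (w - 2) := by
    have : (m : k) + 2 * n = 7 * c := by exact_mod_cast congrArg (Int.cast : ℤ → k) hc
    linear_combination this
  rw [h1]
  apply v.map_add_le <;> rw [map_mul]
  · exact (mul_le_mul' (int_le v c) L.v7).trans (one_mul _).le
  · exact (mul_le_mul' (int_le v n) L.vw2).trans (one_mul _).le

lemma kc_unit {m n : ℤ} (h : IsCoprime (m + 2 * n) 7) : v ((m : k) + n * w) = 1 := by
  have h1 : (m : k) + n * w = n * (w - 2) + ((m + 2 * n : ℤ) : k) := by push_cast; ring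
  rw [h1, v.map_add_eq_of_lt_right, L.vint h]
  rw [L.vint h, map_mul]
  exact mul_lt_one_of_nonneg_of_lt_one_right (int_le v n) zero_le (L.vw2.trans_lt exp_neg_lt_one)

lemma w_ne : w ≠ 0 := by
  intro h
  have := L.vw
  simp [h] at this

lemma t_ne : t ≠ 0 := by
  intro h
  have h1 := L.vt
  rw [h, map_zero] at h1
  exact exp_ne_zero h1.symm

lemma vc : v (-w ^ 2) = 1 := by rw [Valuation.map_neg, map_pow, L.vw, one_pow]

lemma c_ne : -w ^ 2 ≠ 0 := neg_ne_zero.2 (pow_ne_zero _ L.w_ne)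

lemma c6 : (-w ^ 2) ^ 6 = 1 := by
  have := omega_cube L.hw
  calc (-w ^ 2) ^ 6 = (w ^ 3) ^ 4 := by ring
    _ = 1 := by rw [this, one_pow]

/-- The root of unity `-w ^ 2` has order `6` in the residue field. -/
lemma six_dvd {s : ℤ} (h : v ((-w ^ 2) ^ s - 1) < 1) : (6 : ℤ) ∣ s := by
  have h1 : (-w ^ 2) ^ s = (-w ^ 2) ^ (s % 6) := by
    conv_lhs => rw [← Int.emod_add_mul_ediv s 6, zpow_add₀ L.c_ne, zpow_mul]
    rw [show (6 : ℤ) = ((6 : ℕ) : ℤ) from rfl, zpow_natCast, L.c6, one_zpow, mul_one]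
  rw [h1] at h
  have hw := L.hw
  have h0 : 0 ≤ s % 6 := Int.emod_nonneg _ (by norm_num)
  have h6 : s % 6 < 6 := Int.emod_lt_of_pos _ (by norm_num)
  rw [Int.dvd_iff_emod_eq_zero]
  obtain ⟨r, hr⟩ := Int.eq_ofNat_of_zero_le h0
  rw [hr] at h h6 ⊢
  rw [zpow_natCast] at h
  have key : ∀ m n : ℤ, (-w ^ 2) ^ r - 1 = (m : k) + n * w → IsCoprime (m + 2 * n) 7 → False := by
    intro m n hmn hc
    rw [hmn, L.kc_unit hc] at h
    exact lt_irrefl _ h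
  have hr6 : r < 6 := by omega
  clear hr h h6
  interval_cases r
  · rfl
  · exact (key 0 1 (by push_cast; linear_combination -hw) (by norm_num)).elim
  · exact (key (-1) 1 (by push_cast; linear_combination (w ^ 2 - w) * hw) (by norm_num)).elim
  · exact (key (-2) 0 (by push_cast; linear_combination -(w ^ 4 - w ^ 3 + w - 1) * hw)
      (by norm_num)).elim
  · exact (key (-2) (-1) (by
      push_cast; linear_combination (w ^ 6 - w ^ 5 + w ^ 3 - w ^ 2 + 1) * hw) (by norm_num)).elim
  · exact (key (-1) (-1) (by
      push_cast
      linear_combination -(w ^ 8 - w ^ 7 + w ^ 5 - w ^ 4 + w ^ 2 - w) * hw) (by norm_num)).elim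

lemma τ_zpow (s : ℤ) : τ (t ^ s) = (-w ^ 2) ^ s * t ^ s := by
  rw [map_zpow₀, L.τt, mul_zpow]

lemma v_zpow (s : ℤ) : v (t ^ s) = exp (-s) := by
  rw [map_zpow₀, L.vt, ← exp_zsmul]
  simp

/-- Every non-zero element is a power of `t` times a unit. -/
lemma exists_unif {z : k} (hz : z ≠ 0) :
    ∃ z0, v z0 = 1 ∧ z = t ^ (-(v z).log) * z0 := by
  refine ⟨t ^ ((v z).log) * z, ?_, ?_⟩
  · rw [map_mul, L.v_zpow]
    conv_lhs => rw [← exp_log ((v.ne_zero_iff).2 hz)]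
    rw [log_exp, ← exp_add]
    simp
  · rw [← mul_assoc, ← zpow_add₀ L.t_ne]
    simp

/-- Elements fixed by `τ` have valuation divisible by `6`. -/
lemma log_fixed {z : k} (hz : z ≠ 0) (hτ : τ z = z) : (6 : ℤ) ∣ (v z).log := by
  obtain ⟨z0, h0, h1⟩ := L.exists_unif hz
  rw [← dvd_neg]
  generalize -(v z).log = s at *
  apply L.six_dvd
  have h2 : (-w ^ 2) ^ s * τ z0 = z0 := by
    rw [h1, map_mul, L.τ_zpow] at hτ
    apply mul_left_cancel₀ (zpow_ne_zero s L.t_ne)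
    linear_combination hτ
  have h3 := L.res z0 h0.le
  have h4 : v (((-w ^ 2) ^ s - 1) * τ z0) < 1 := by
    rw [show ((-w ^ 2) ^ s - 1) * τ z0 = - (τ z0 - z0) by linear_combination h2, Valuation.map_neg]
    exact h3
  rwa [map_mul, L.vτ, h0, mul_one] at h4

lemma pow7_sub {q : k} (hq : v q < 1) : v ((1 + q) ^ 7 - 1) ≤ exp (-6) := by
  have h1 : (1 + q) ^ 7 - 1 =
      7 * (q * (1 + 3 * q + 5 * q ^ 2 + 5 * q ^ 3 + 3 * q ^ 4 + q ^ 5)) + q ^ 7 := by ring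
  rw [h1]
  apply v.map_add_le
  · rw [map_mul]
    have hqi : q ∈ v.integer := hq.le
    have : q * (1 + 3 * q + 5 * q ^ 2 + 5 * q ^ 3 + 3 * q ^ 4 + q ^ 5) ∈ v.integer := by
      refine mul_mem hqi ?_
      refine add_mem (add_mem (add_mem (add_mem (add_mem (one_mem _) ?_) ?_) ?_) ?_) ?_
      · exact mul_mem (ofNat_mem _ 3) hqi
      · exact mul_mem (ofNat_mem _ 5) (pow_mem hqi _)
      · exact mul_mem (ofNat_mem _ 5) (pow_mem hqi _)
      · exact mul_mem (ofNat_mem _ 3) (pow_mem hqi _)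
      · exact pow_mem hqi _
    exact (mul_le_mul' L.v7 this).trans (mul_one _).le
  · rw [map_pow]
    refine (pow_le_pow_left₀ zero_le (le_exp_neg_one hq) 7).trans ?_
    rw [← exp_nsmul, exp_le_exp]
    norm_num

/-- If `τ` acts on `u * β ^ 7` modulo `π⁶` as on a power of `t` of the same valuation, then `u` is
fixed by `τ` modulo `π⁶`. -/
lemma unit_step {α u β : k} (hβ : β ≠ 0) (hu : v u = 1) (hα : α = u * β ^ 7) {s : ℤ}
    (hs : (v α).log = -7 * s) (h : v (τ α - (-w ^ 2) ^ s * α) ≤ exp (-6) * v α) :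
    v (τ u - u) ≤ exp (-6) := by
  obtain ⟨z, hz, hβz⟩ := L.exists_unif hβ
  have hvβ : v β ≠ 0 := (v.ne_zero_iff).2 hβ
  have hs' : -(v β).log = s := by
    rw [hα, map_mul, hu, one_mul, map_pow, log_pow] at hs
    simp only [nsmul_eq_mul] at hs
    push_cast at hs
    omega
  rw [hs'] at hβz
  have hz0 : z ≠ 0 := by rintro rfl; simp at hz
  have hq : v (τ z / z - 1) < 1 := by
    rw [div_sub_one hz0, map_div₀, hz, div_one]
    exact L.res z hz.le
  have hq7 := L.pow7_sub hq
  rw [add_sub_cancel] at hq7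
  have hc7 : ((-w ^ 2) ^ s) ^ 7 = (-w ^ 2) ^ s := by
    rw [pow_succ, ← zpow_natCast, ← zpow_mul, mul_comm s, zpow_mul, zpow_natCast, L.c6, one_zpow,
      one_mul]
  have hvc : v ((-w ^ 2) ^ s) = 1 := by rw [map_zpow₀, L.vc, one_zpow]
  have hτα : τ α = τ u * (-w ^ 2) ^ s * (τ z / z) ^ 7 * β ^ 7 := by
    rw [hα, hβz, map_mul, map_pow, map_mul, L.τ_zpow]
    field_simp
    linear_combination τ u * (t ^ s) ^ 7 * (τ z) ^ 7 * hc7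
  have hvα : v α = v (β ^ 7) := by rw [hα, map_mul, hu, one_mul]
  have hvβ7 : v (β ^ 7) ≠ 0 := (v.ne_zero_iff).2 (pow_ne_zero _ hβ)
  have h1 : v (τ u * (τ z / z) ^ 7 - u) ≤ exp (-6) := by
    have : τ α - (-w ^ 2) ^ s * α = (τ u * (τ z / z) ^ 7 - u) * ((-w ^ 2) ^ s * β ^ 7) := by
      rw [hτα, hα]; ring
    rw [this, map_mul, map_mul, hvc, one_mul, hvα] at h
    exact le_of_mul_le_mul_right h (zero_lt_iff.2 hvβ7)
  have h2 : τ u - u = (τ u * (τ z / z) ^ 7 - u) - τ u * ((τ z / z) ^ 7 - 1) := by ring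
  rw [h2]
  apply v.map_sub_le h1
  rw [map_mul, L.vτ, hu, one_mul]
  exact hq7

/-- Modulo `π⁶` the Kummer function is `X ^ 2 * Y - (5 + 7 w) / 18`. -/
lemma ff_approx {X Y : k} (m : WithZero (Multiplicative ℤ)) (h1 : v (X * Y) ≤ m) (h2 : v Y ≤ m)
    (h3 : v (X ^ 3) ≤ m) (h4 : v (X ^ 2) ≤ m) (h5 : v X ≤ m) :
    v (ff w X Y - (X ^ 2 * Y - (5 + 7 * w) / 18)) ≤ exp (-6) * m := by
  have key : ∀ (m' n' : ℤ) (d Z : k), (7 : ℤ) ∣ m' + 2 * n' → v d = 1 → v Z ≤ m →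
      v (((m' : k) + n' * w) / d * Z) ≤ exp (-6) * m := by
    intro m' n' d Z hd hvd hZ
    rw [map_mul, map_div₀, hvd, div_one]
    exact mul_le_mul' (L.kc_small hd) hZ
  have h6 : v (6 : k) = 1 := by simpa using L.vint (n := 6) (by norm_num)
  have e : ff w X Y - (X ^ 2 * Y - (5 + 7 * w) / 18) =
      (((1 : ℤ) : k) + (-4 : ℤ) * w) / 3 * (X * Y) + (((-2 : ℤ) : k) + (1 : ℤ) * w) / 3 * Y +
      (((-2 : ℤ) : k) + (1 : ℤ) * w) / 1 * X ^ 3 + (((2 : ℤ) : k) + (-1 : ℤ) * w) / 2 * X ^ 2 +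
      (((4 : ℤ) : k) + (5 : ℤ) * w) / 6 * X := by
    unfold ff; push_cast; ring
  rw [e]
  refine v.map_add_le (v.map_add_le (v.map_add_le (v.map_add_le ?_ ?_) ?_) ?_) ?_
  · exact key _ _ _ _ (by norm_num) L.v3 h1
  · exact key _ _ _ _ (by norm_num) L.v3 h2
  · exact key _ _ _ _ (by norm_num) (map_one v) h3
  · exact key _ _ _ _ (by norm_num) L.v2 h4
  · exact key _ _ _ _ (by norm_num) h6 h5

lemma v_const : v ((5 + 7 * w) / 18) = 1 := by
  have h18 : v (18 : k) = 1 := by simpa using L.vint (n := 18) (by norm_num)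
  rw [map_div₀, h18, div_one]
  simpa using L.kc_unit (m := 5) (n := 7) (by norm_num)

lemma v_B0 : v (B0 w) ≤ 1 := by
  have h36 : v (36 : k) = 1 := by simpa using L.vint (n := 36) (by norm_num)
  rw [B0, map_div₀, h36, div_one, Valuation.map_neg]
  simpa using kc_le v L.hw 5 1

/-- The Kummer function at a `τ`-fixed point behaves under `τ` modulo `π⁶` like a power of `t`. -/
lemma ff_local {X Y : k} (h : Y ^ 2 = X ^ 3 + B0 w) (hX : τ X = w * X) (hY : τ Y = - Y)
    (lX : X ≠ 0 → (6 : ℤ) ∣ (v X).log + 2) (lY : Y ≠ 0 → (6 : ℤ) ∣ (v Y).log + 3) :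
    ∃ s : ℤ, (v (ff w X Y)).log = -7 * s ∧
      v (τ (ff w X Y) - (-w ^ 2) ^ s * ff w X Y) ≤ exp (-6) * v (ff w X Y) := by
  have hκ := L.v_const
  have hτκ : τ ((5 + 7 * w) / 18) = (5 + 7 * w) / 18 := by
    rw [map_div₀, map_add, map_mul, L.τw, map_ofNat, map_ofNat, map_ofNat]
  have hτM : τ (X ^ 2 * Y) = -w ^ 2 * (X ^ 2 * Y) := by
    rw [map_mul, map_pow, hX, hY]; ring
  by_cases hv : v X ≤ 1
  · have hY1 : v Y ≤ 1 := by
      have : v Y ^ 2 ≤ 1 := by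
        rw [← map_pow, h]
        exact v.map_add_le (by rw [map_pow]; exact pow_le_one₀ zero_le hv) L.v_B0
      exact (pow_le_one_iff_of_nonneg zero_le (by norm_num)).1 this
    have hX2 : v X ≤ exp (-2) := by
      by_cases h0 : X = 0
      · simp [h0]
      have := lX h0
      have hx0 : v X ≠ 0 := (v.ne_zero_iff).2 h0
      rw [← exp_log hx0, ← exp_zero, exp_le_exp] at hv
      rw [← exp_log hx0, exp_le_exp]
      omega
    have hY2 : v Y ≤ exp (-3) := by
      by_cases h0 : Y = 0
      · simp [h0]
      have := lY h0
      have hx0 : v Y ≠ 0 := (v.ne_zero_iff).2 h0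
      rw [← exp_log hx0, ← exp_zero, exp_le_exp] at hY1
      rw [← exp_log hx0, exp_le_exp]
      omega
    have hM : v (X ^ 2 * Y) ≤ exp (-6) := by
      rw [map_mul, map_pow]
      refine (mul_le_mul' (pow_le_pow_left₀ zero_le hX2 2) hY2).trans ?_
      rw [← exp_nsmul, ← exp_add, exp_le_exp]
      norm_num
    have ha := L.ff_approx 1 (X := X) (Y := Y) (by rw [map_mul]; exact mul_le_one' hv hY1) hY1
      (by rw [map_pow]; exact pow_le_one₀ zero_le hv)
      (by rw [map_pow]; exact pow_le_one₀ zero_le hv) hv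
    rw [mul_one] at ha
    set α := ff w X Y
    have hd : v (α + (5 + 7 * w) / 18) ≤ exp (-6) := by
      rw [show α + (5 + 7 * w) / 18 = (α - (X ^ 2 * Y - (5 + 7 * w) / 18)) + X ^ 2 * Y by ring]
      exact v.map_add_le ha hM
    have hα : v α = 1 := by
      rw [show α = (α + (5 + 7 * w) / 18) - (5 + 7 * w) / 18 by ring,
        v.map_sub_eq_of_lt_right, hκ]
      rw [hκ]
      exact hd.trans_lt exp_neg_lt_one
    refine ⟨0, by simp [hα], ?_⟩
    rw [hα, mul_one, zpow_zero, one_mul]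
    have : τ α - α = τ (α + (5 + 7 * w) / 18) - (α + (5 + 7 * w) / 18) := by
      rw [map_add, hτκ]; ring
    rw [this]
    exact v.map_sub_le (by rw [L.vτ]; exact hd) hd
  · rw [not_le] at hv
    have hX0 : X ≠ 0 := by rintro rfl; simp at hv
    have hx0 : v X ≠ 0 := (v.ne_zero_iff).2 hX0
    have hYX : v Y ^ 2 = v X ^ 3 := by
      rw [← map_pow, ← map_pow, h, v.map_add_eq_of_lt_left]
      rw [map_pow]
      exact L.v_B0.trans_lt (one_lt_pow₀ hv (by norm_num))
    have hy0 : v Y ≠ 0 := by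
      intro h0
      rw [h0, zero_pow (by norm_num)] at hYX
      exact pow_ne_zero 3 hx0 hYX.symm
    have hY0 : Y ≠ 0 := (v.ne_zero_iff).1 hy0
    have l1 := lX hX0
    have l2 := lY hY0
    have l3 : 2 * (v Y).log = 3 * (v X).log := by
      have := congrArg log hYX
      rw [log_pow, log_pow] at this
      simpa using this
    have l4 : 0 < (v X).log := by
      rw [← exp_log hx0, ← exp_zero, exp_lt_exp] at hv
      exact hv
    obtain ⟨x, hx⟩ : ∃ n, n = (v X).log := ⟨_, rfl⟩
    obtain ⟨y, hy⟩ : ∃ n, n = (v Y).log := ⟨_, rfl⟩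
    have ex : v X = exp x := by rw [hx, exp_log hx0]
    have ey : v Y = exp y := by rw [hy, exp_log hy0]
    rw [← hx] at l1 l3 l4
    rw [← hy] at l2 l3
    have hM : v (X ^ 2 * Y) = exp (2 * x + y) := by
      rw [map_mul, map_pow, ex, ey, ← exp_nsmul, ← exp_add]
      simp
    have ha := L.ff_approx (exp (2 * x + y)) (X := X) (Y := Y)
      (by rw [map_mul, ex, ey, ← exp_add, exp_le_exp]; omega)
      (by rw [ey, exp_le_exp]; omega)
      (by rw [map_pow, ex, ← exp_nsmul, exp_le_exp]; simp; omega)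
      (by rw [map_pow, ex, ← exp_nsmul, exp_le_exp]; simp; omega)
      (by rw [ex, exp_le_exp]; omega)
    rw [← exp_add] at ha
    set α := ff w X Y
    have hd : v (α - X ^ 2 * Y) ≤ exp (-6 + (2 * x + y)) := by
      rw [show α - X ^ 2 * Y = (α - (X ^ 2 * Y - (5 + 7 * w) / 18)) - (5 + 7 * w) / 18 by ring]
      apply v.map_sub_le ha
      rw [hκ, ← exp_zero, exp_le_exp]
      omega
    have hα : v α = exp (2 * x + y) := by
      rw [show α = (α - X ^ 2 * Y) + X ^ 2 * Y by ring, v.map_add_eq_of_lt_right, hM]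
      rw [hM]
      exact hd.trans_lt (exp_lt_exp.2 (by omega))
    obtain ⟨s, hs⟩ : ∃ s : ℤ, 2 * x + y = -7 * s ∧ ∃ j, s = 6 * j + 1 := by
      refine ⟨-(x / 2), by omega, -((x / 2 + 1) / 6), by omega⟩
    obtain ⟨hs, j, hj⟩ := hs
    have hcs : (-w ^ 2) ^ s = -w ^ 2 := by
      rw [hj, zpow_add₀ L.c_ne, zpow_mul, show (6 : ℤ) = ((6 : ℕ) : ℤ) from rfl, zpow_natCast,
        L.c6, one_zpow, zpow_one, one_mul]
    refine ⟨s, by rw [hα, log_exp, hs], ?_⟩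
    rw [hcs, hα, ← exp_add]
    have : τ α - -w ^ 2 * α = τ (α - X ^ 2 * Y) - -w ^ 2 * (α - X ^ 2 * Y) := by
      rw [map_sub, hτM]; ring
    rw [this]
    apply v.map_sub_le
    · rw [L.vτ]; exact hd
    · rw [map_mul, L.vc, one_mul]; exact hd

end Loc
end SumCubes

end

noncomputable section

namespace SumCubes
open NumberField IsDedekindDomain

namespace KumW
variable {F : Type} [Field F] [NumberField F] {D : KumF F} {W : Type} [Field W]
    [NumberField W] [Algebra F W] (E : KumW D W)

/-- The action of `τ` on the integers of `W`. -/
def τI : 𝓞 W ≃+* 𝓞 W := RingOfIntegers.mapRingEquiv (E.τ : W ≃+* W)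

@[simp] lemma coe_τI (x : 𝓞 W) : (E.τI x : W) = E.τ x := rfl

lemma τI_alg (a : 𝓞 F) : E.τI (algebraMap (𝓞 F) (𝓞 W) a) = algebraMap (𝓞 F) (𝓞 W) (D.ρ 1 a) := by
  apply RingOfIntegers.ext
  rw [coe_τI, coe_algebraMap, E.τalg, coe_algebraMap, KumF.coe_ρ, pow_one]

lemma τI_perI (i : ℕ) : E.τI (E.perI i) = E.perI i := by
  apply RingOfIntegers.ext
  rw [coe_τI, coe_perI, E.τ_per]

variable {P : Ideal (𝓞 F)} (h : D.IsP7 P)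
include h

lemma notMem_29 : (29 : 𝓞 F) ∉ P := by
  intro h1
  apply h.max.ne_top
  rw [Ideal.eq_top_iff_one]
  have : (1 : 𝓞 F) = 29 - 4 * 7 := by norm_num
  rw [this]
  exact P.sub_mem h1 (P.mul_mem_left _ h.seven_mem)

/-- `τ` acts trivially on the residue field. -/
lemma τI_sub_mem {Q : Ideal (𝓞 W)} [hQ : Q.IsPrime] [hQP : Q.LiesOver P] (x : 𝓞 W) :
    E.τI x - x ∈ Q := by
  have hm : ∀ a ∈ P, algebraMap (𝓞 F) (𝓞 W) a ∈ Q := fun a ha => by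
    rw [hQP.over] at ha; exact ha
  obtain ⟨c, -, hc⟩ := E.exists_coeffI x
  have h29 : (29 : 𝓞 W) ∉ Q := by
    intro h1
    apply notMem_29 h
    rw [hQP.over, Ideal.under_def, Ideal.mem_comap, map_ofNat]
    exact h1
  have h2 : 29 * (E.τI x - x) ∈ Q := by
    have h3 := congrArg E.τI hc
    rw [map_mul, map_ofNat] at h3
    rw [mul_sub, h3, hc, map_sum, ← Finset.sum_sub_distrib]
    refine Q.sum_mem fun i _ => ?_
    rw [map_mul, τI_alg, τI_perI, ← sub_mul, ← map_sub]
    exact Q.mul_mem_right _ (hm _ (h.τ_sub_mem _))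
  exact (hQ.mem_or_mem h2).resolve_left h29

lemma loc (Q : HeightOneSpectrum (𝓞 W)) [hQP : Q.asIdeal.LiesOver P] :
    Loc (Q.valuation W) (E.τ : W ≃+* W) (algebraMap F W D.w) (algebraMap F W D.t) := by
  have hP := h.max
  set p : HeightOneSpectrum (𝓞 F) := ⟨P, h.max.isPrime, h.ne_bot⟩ with hp
  haveI : Q.asIdeal.LiesOver p.asIdeal := hQP
  have hv : ∀ x, Q.valuation W (algebraMap F W x) = p.valuation F x :=
    E.val_eq p Q (notMem_29 h)
  have hvI : ∀ (x : 𝓞 F) (n : ℕ), x ∈ P ^ n → p.valuation F (x : F) ≤ WithZero.exp (-(n : ℤ)) := by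
    intro x n hx
    rw [HeightOneSpectrum.valuation_of_algebraMap]
    exact (p.intValuation_le_pow_iff_mem x n).2 hx
  have hvτ : ∀ x, Q.valuation W (E.τ x) = Q.valuation W x := by
    refine val_equiv Q E.τI ?_ (E.τ : W ≃+* W) (fun r => rfl)
    ext x
    rw [Ideal.mem_comap]
    have h1 := E.τI_sub_mem h (Q := Q.asIdeal) x
    constructor
    · intro h2
      have := Q.asIdeal.sub_mem h2 h1
      simpa using this
    · intro h2
      have := Q.asIdeal.add_mem h1 h2
      simpa using this
  refine ⟨?_, ?_, ?_, ?_, hvτ, ?_, ?_, ?_⟩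
  · rw [← map_pow, ← map_add, ← map_one (algebraMap F W), ← map_add, D.hw, map_zero]
  · change E.τ _ = _
    rw [E.τalg, D.τw]
  · change E.τ _ = _
    rw [E.τalg, D.τ_t]
    simp
  · rw [hv]
    change p.valuation F (D.tI : F) = _
    rw [HeightOneSpectrum.valuation_of_algebraMap]
    apply le_antisymm
    · exact (p.intValuation_le_pow_iff_mem D.tI 1).2 (by rw [pow_one]; exact h.t_mem)
    · by_contra hlt
      rw [not_le] at hlt
      apply h.t_notMem
      rw [← p.intValuation_le_pow_iff_mem D.tI 2]
      have ht : p.intValuation D.tI ≠ 0 := by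
        apply p.intValuation_ne_zero
        intro h0
        apply h.t_notMem
        rw [h0]; exact Ideal.zero_mem _
      rw [← WithZero.exp_log ht] at hlt ⊢
      rw [WithZero.exp_lt_exp] at hlt
      rw [WithZero.exp_le_exp]
      push_cast
      omega
  · intro x hx
    obtain ⟨a, ha⟩ := Q.exists_valuation_sub_lt_of_integer hx 1
    rw [Units.val_one] at ha
    have e : E.τ x - x = E.τ (x - algebraMap (𝓞 W) W a) +
        algebraMap (𝓞 W) W (E.τI a - a) + (algebraMap (𝓞 W) W a - x) := by
      have : algebraMap (𝓞 W) W (E.τI a) = E.τ (algebraMap (𝓞 W) W a) := rfl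
      rw [map_sub, map_sub, this]; ring
    change Q.valuation W (E.τ x - x) < 1
    rw [e]
    refine Valuation.map_add_lt _ (Valuation.map_add_lt _ ?_ ?_) ha
    · rw [hvτ, Valuation.map_sub_swap]; exact ha
    · rw [HeightOneSpectrum.valuation_of_algebraMap]
      exact (Q.intValuation_lt_one_iff_mem _).2 (E.τI_sub_mem h a)
  · have h1 := hvI 7 6 h.seven_mem_pow
    rw [← hv] at h1
    have : algebraMap F W ((7 : 𝓞 F) : F) = 7 := by
      have h7 : ((7 : 𝓞 F) : F) = 7 := map_ofNat (algebraMap (𝓞 F) F) 7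
      rw [h7, map_ofNat]
    rw [this] at h1
    exact h1
  · have h1 := hvI _ 6 h.w_sub_mem
    rw [← hv] at h1
    have : algebraMap F W ((D.wI - 2 : 𝓞 F) : F) = algebraMap F W D.w - 2 := by
      have h7 : ((D.wI - 2 : 𝓞 F) : F) = D.w - 2 := by
        change algebraMap (𝓞 F) F (D.wI - 2) = _
        rw [map_sub, map_ofNat]; rfl
      rw [h7, map_sub, map_ofNat]
    rw [this] at h1
    exact h1

omit h

include E in
/-- A unit of `F` which, up to seventh powers of `W`, is the Kummer function at a `τ`-fixed point
is a seventh power. -/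
lemma kummer_unit [DecidableEq W] {x y : W} (hxy : y ^ 2 = x ^ 3 - 1 / 12) (hx : E.τ x = x)
    (hy : E.τ y = y) {u : (𝓞 F)ˣ}
    (hs : Sim (ff (algebraMap F W D.w) (algebraMap F W D.θ ^ 2 * x) (algebraMap F W D.θ ^ 3 * y))
      (algebraMap F W ((u : 𝓞 F) : F))) : ∃ v : (𝓞 F)ˣ, u = v ^ 7 := by
  obtain ⟨P, h⟩ := D.exists_P7
  have hPm := h.max
  obtain ⟨Q, hQ, hQP⟩ := Ideal.exists_maximal_ideal_liesOver_of_isIntegral P (S := 𝓞 W)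
  have hQb : Q ≠ ⊥ := by
    rintro rfl
    apply h.ne_bot
    rw [hQP.over, Ideal.under_bot]
  let Q' : HeightOneSpectrum (𝓞 W) := ⟨Q, hQ.isPrime, hQb⟩
  haveI : Q'.asIdeal.LiesOver P := hQP
  have L := E.loc h Q'
  let p : HeightOneSpectrum (𝓞 F) := ⟨P, h.max.isPrime, h.ne_bot⟩
  haveI : Q'.asIdeal.LiesOver p.asIdeal := hQP
  have hv : ∀ x, Q'.valuation W (algebraMap F W x) = p.valuation F x :=
    E.val_eq p Q' (notMem_29 h)
  have ht : algebraMap F W D.t = (2 * algebraMap F W D.w + 1) * algebraMap F W D.θ := by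
    rw [KumF.t, map_mul, map_add, map_mul, map_one, map_ofNat]
  have hτθ : E.τ (algebraMap F W D.θ) = - algebraMap F W D.w ^ 2 * algebraMap F W D.θ := by
    rw [E.τalg, D.τθ]; simp
  have hθ6 : algebraMap F W D.θ ^ 6 = (5 + algebraMap F W D.w) / 3 := by
    rw [← map_pow, D.hθ, map_div₀, map_add, map_ofNat, map_ofNat]
  generalize algebraMap F W D.w = w at *
  generalize algebraMap F W D.θ = θ at *
  generalize algebraMap F W D.t = t at *
  generalize hV : Q'.valuation W = V at *
  have hvs : V (2 * w + 1) = 1 := by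
    have := L.kc_unit (m := 1) (n := 2) (by norm_num)
    push_cast at this
    rwa [add_comm] at this
  have hvθ : V θ = WithZero.exp (-1) := by rw [← L.vt, ht, map_mul, hvs, one_mul]
  have hw3 : w ^ 3 = 1 := omega_cube L.hw
  have hvθ0 : V θ ≠ 0 := by rw [hvθ]; exact WithZero.exp_ne_zero
  obtain ⟨s, hs1, hs2⟩ := L.ff_local (X := θ ^ 2 * x) (Y := θ ^ 3 * y) (twist_eq hθ6 hxy)
    (by
      change E.τ _ = _
      rw [map_mul, map_pow, hτθ, hx]
      linear_combination w * θ ^ 2 * x * hw3)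
    (by
      change E.τ _ = _
      rw [map_mul, map_pow, hτθ, hy]
      linear_combination -(w ^ 3 + 1) * θ ^ 3 * y * hw3)
    (by
      intro h0
      have hx0 : x ≠ 0 := right_ne_zero_of_mul h0
      have := L.log_fixed hx0 hx
      rw [map_mul, map_pow, WithZero.log_mul (pow_ne_zero _ hvθ0) (by simpa using hx0),
        WithZero.log_pow, hvθ, WithZero.log_exp]
      simpa using this)
    (by
      intro h0
      have hx0 : y ≠ 0 := right_ne_zero_of_mul h0
      have := L.log_fixed hx0 hy
      rw [map_mul, map_pow, WithZero.log_mul (pow_ne_zero _ hvθ0) (by simpa using hx0),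
        WithZero.log_pow, hvθ, WithZero.log_exp]
      simpa using this)
  obtain ⟨β, hβ, hα⟩ := hs
  have hu : V (algebraMap F W ((u : 𝓞 F) : F)) = 1 := by
    rw [hv, HeightOneSpectrum.valuation_of_algebraMap,
      HeightOneSpectrum.intValuation_eq_one_iff_mem_primeCompl]
    intro h1
    exact h.max.ne_top (Ideal.eq_top_of_isUnit_mem _ h1 u.isUnit)
  have h6 := L.unit_step hβ hu hα hs1 hs2
  apply h.exists_root
  change V (E.τ _ - _) ≤ _ at h6
  have e : E.τ (algebraMap F W ((u : 𝓞 F) : F)) - algebraMap F W ((u : 𝓞 F) : F) =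
      algebraMap F W (algebraMap (𝓞 F) F (D.ρ 1 u - u)) := by
    rw [E.τalg, map_sub, map_sub]
    congr 2
  rw [e, hv, HeightOneSpectrum.valuation_of_algebraMap] at h6
  exact (p.intValuation_le_pow_iff_mem _ 6).1 h6

end KumW
end SumCubes

end

/-! ### Divisibility by `π` of the points fixed by `τ` -/

noncomputable section

namespace SumCubes
open NumberField IsDedekindDomain

namespace KumW
variable {F : Type} [Field F] [NumberField F] {D : KumF F} {W : Type} [Field W]
    [NumberField W] [Algebra F W] (E : KumW D W)

lemma τ6 (x : W) : (E.τ ^ 6) x = x := by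
  obtain ⟨c, -, hc⟩ := E.exists_coeff x
  have h1 : ∀ (n : ℕ) (a : F), (E.τ ^ n) (algebraMap F W a) = algebraMap F W ((D.τ ^ n) a) := by
    intro n a
    induction n with
    | zero => simp
    | succ n ih => rw [pow_succ', AlgEquiv.mul_apply, ih, E.τalg, pow_succ', AlgEquiv.mul_apply]
  have h2 : ∀ n i : ℕ, (E.τ ^ n) (E.per i) = E.per i := by
    intro n i
    induction n with
    | zero => simp
    | succ n ih => rw [pow_succ', AlgEquiv.mul_apply, ih, E.τ_per]
  have h3 := congrArg (fun z => (E.τ ^ 6 : W ≃ₐ[ℚ] W) z) hc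
  simp only [map_sum, map_mul, h1, h2, D.τ_pow_six, map_ofNat, AlgEquiv.one_apply] at h3
  rw [← hc] at h3
  exact mul_left_cancel₀ (by norm_num) h3

include E in
lemma hw : (algebraMap F W D.w) ^ 2 + algebraMap F W D.w + 1 = 0 := by
  rw [← map_pow, ← map_add, ← map_one (algebraMap F W), ← map_add, D.hw, map_zero]

include E in
lemma hθ : algebraMap F W D.θ ^ 6 = (5 + algebraMap F W D.w) / 3 := by
  rw [← map_pow, D.hθ, map_div₀, map_add, map_ofNat, map_ofNat]

variable [DecidableEq W]

/-- The Mordell–Weil group of the fixed field of `τ`. -/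
abbrev A : AddSubgroup (Pt W) := fixedPts (E.τ : W ≃+* W)

lemma τw : (E.τ : W ≃+* W) (algebraMap F W D.w) = algebraMap F W D.w := by
  change E.τ _ = _
  rw [E.τalg, D.τw]

lemma τθ : (E.τ : W ≃+* W) (algebraMap F W D.θ) = - algebraMap F W D.w ^ 2 * algebraMap F W D.θ := by
  change E.τ _ = _
  rw [E.τalg, D.τθ]; simp

/-- Multiplication by `π = 3 + ω` on the curve over `W`. -/
def piW : Pt W →+ Pt W := pi (algebraMap F W D.w) E.hw

/-- Multiplication by the conjugate of `π`. -/
def pibarW : Pt W →+ Pt W := pibar (algebraMap F W D.w) E.hw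

/-- The action of `σ` on points. -/
def sP : Pt W →+ Pt W := mapP (E.σ : W ≃+* W).toRingHom

lemma piW_mem {P : Pt W} (hP : P ∈ E.A) : E.piW P ∈ E.A := pi_mem E.hw E.τw hP

lemma pibarW_mem {P : Pt W} (hP : P ∈ E.A) : E.pibarW P ∈ E.A := by
  exact sub_mem (nsmul_mem hP 2) (om_mem E.hw E.τw hP)

lemma piW_pibarW (P : Pt W) : E.piW (E.pibarW P) = 7 • P := pi_pibar _ _

lemma sP_mem {P : Pt W} (hP : P ∈ E.A) : E.sP P ∈ E.A := by
  rcases eq_zero_or_mkP P with rfl | ⟨x, y, h, rfl⟩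
  · rw [map_zero]; exact zero_mem _
  rw [A, mkP_mem_fixedPts] at hP
  rw [sP, mapP_mkP, A, mkP_mem_fixedPts]
  refine ⟨?_, ?_⟩
  · change E.τ (E.σ x) = E.σ x
    rw [E.comm]; exact congrArg _ hP.1
  · change E.τ (E.σ y) = E.σ y
    rw [E.comm]; exact congrArg _ hP.2

lemma fP_sP (P : Pt W) : fP (algebraMap F W D.w) (algebraMap F W D.θ) (E.sP P) =
    E.σ (fP (algebraMap F W D.w) (algebraMap F W D.θ) P) := by
  have hn (n : ℕ) [n.AtLeastTwo] : E.σ (OfNat.ofNat n) = OfNat.ofNat n := map_ofNat E.σ n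
  rcases eq_zero_or_mkP P with rfl | ⟨x, y, h, rfl⟩
  · rw [map_zero, fP_zero, map_one]
  rw [sP, mapP_mkP, fP_mkP, fP_mkP]
  change ff _ (_ * E.σ x) (_ * E.σ y) = _
  simp [ff, hn]

/-- A `τ`-fixed point divisible by `π` over `W` is divisible by `π` in `A`: the trace over the powers
of `τ` divides `6 • P`, and `7 • P` is `π` applied to its conjugate applied to `P`. -/
lemma exists_fixed {P S : Pt W} (hP : P ∈ E.A) (hS : E.piW S = P) : ∃ R ∈ E.A, E.piW R = P := by
  set T : Pt W →+ Pt W := mapP (E.τ : W ≃+* W).toRingHom with hT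
  have hTP : T P = P := hP
  have hpi : ∀ R, E.piW (T R) = T (E.piW R) := fun R =>
    (mapP_pi (E.τ : W ≃+* W).toRingHom E.hw E.hw E.τw R).symm
  have hT6 : T (T (T (T (T (T S))))) = S := by
    rcases eq_zero_or_mkP S with rfl | ⟨x, y, h, rfl⟩
    · simp
    have h6 : ∀ z, E.τ (E.τ (E.τ (E.τ (E.τ (E.τ z))))) = z := fun z => by
      have := E.τ6 z
      simpa [pow_succ] using this
    simp only [hT, mapP_mkP, mkP_inj]
    exact ⟨h6 x, h6 y⟩
  set S' := S + T S + T (T S) + T (T (T S)) + T (T (T (T S))) + T (T (T (T (T S)))) with hS'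
  have hS'A : S' ∈ E.A := by
    change T S' = S'
    rw [hS']
    simp only [map_add, hT6]
    abel
  have hpS' : E.piW S' = 6 • P := by
    rw [hS']
    simp only [map_add, hpi, hS, hTP]
    abel
  refine ⟨E.pibarW P - S', sub_mem (E.pibarW_mem hP) hS'A, ?_⟩
  rw [map_sub, piW_pibarW, hpS']
  abel

/-- A point of `A` whose class modulo `π` is fixed by `σ` is divisible by `π`. -/
lemma div_of_sigma {P : Pt W} (hP : P ∈ E.A) {R : Pt W} (hR : R ∈ E.A)
    (h : E.sP P = P + E.piW R) : ∃ R ∈ E.A, E.piW R = P := by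
  have h1 : Sim (E.σ (fP (algebraMap F W D.w) (algebraMap F W D.θ) P))
      (fP (algebraMap F W D.w) (algebraMap F W D.θ) P) := by
    rw [← fP_sP, h]
    have a1 := fP_add E.hw E.hθ E.τw E.τθ hP (E.piW_mem hR)
    have a2 := fP_pi_fixed E.hw E.hθ E.τw E.τθ hR
    have a3 := (Sim.refl (fP (algebraMap F W D.w) (algebraMap F W D.θ) P)).mul a2
    rw [mul_one] at a3
    exact a1.trans a3
  have h2 := tau_fP E.hw E.hθ E.τw E.τθ hP
  have h0 := fP_ne_zero E.hw E.hθ E.τw E.τθ hP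
  rcases eq_zero_or_mkP P with rfl | ⟨x, y, hxy, rfl⟩
  · exact ⟨0, zero_mem _, map_zero _⟩
  have hP' := mkP_mem_fixedPts.1 hP
  obtain ⟨n1, n2, n3⟩ := ne_T E.hw E.τw E.τθ hP'.1
  have h3 : ∀ Q : HeightOneSpectrum (𝓞 W), ∃ g, Q.valuation W
      (fP (algebraMap F W D.w) (algebraMap F W D.θ) (mkP x y hxy)) = g ^ 7 := by
    intro Q
    obtain ⟨c, -, hc⟩ := val_ff (Q.valuation W) E.hw (twist_eq E.hθ hxy) n1
    exact ⟨_, hc⟩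
  obtain ⟨u, hu⟩ := E.exists_unit h0 h1 h2 h3
  obtain ⟨v, rfl⟩ := E.kummer_unit hxy hP'.1 hP'.2 hu
  obtain ⟨β, -, hβ⟩ := hu
  have hb : fP (algebraMap F W D.w) (algebraMap F W D.θ) (mkP x y hxy) =
      (algebraMap F W ((v : 𝓞 F) : F) * β) ^ 7 := by
    rw [hβ, mul_pow]; simp
  obtain ⟨S, hS⟩ := exists_pi_eq E.hw E.hθ hxy n1 n2 n3 hb
  exact E.exists_fixed hP hS

lemma sP7 (P : Pt W) : E.sP (E.sP (E.sP (E.sP (E.sP (E.sP (E.sP P)))))) = P := by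
  rcases eq_zero_or_mkP P with rfl | ⟨x, y, h, rfl⟩
  · simp
  have h7 : ∀ z, E.σ (E.σ (E.σ (E.σ (E.σ (E.σ (E.σ z)))))) = z := fun z => by
    have := E.σ7 z
    simpa [pow_succ] using this
  simp only [sP, mapP_mkP, mkP_inj]
  exact ⟨h7 x, h7 y⟩

lemma div_of_delta {P : Pt W} (hP : P ∈ E.A) (h : ∃ R ∈ E.A, E.piW R = E.sP P - P) :
    ∃ R ∈ E.A, E.piW R = P := by
  obtain ⟨R, hR, h⟩ := h
  exact E.div_of_sigma hP hR (by rw [h]; abel)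

/-- The group `A` is divisible by `π`: with `δ = σ - 1`, divisibility of `δ P` implies that of `P`,
and `δ ^ 7` is a multiple of `7` because `σ ^ 7 = 1`. -/
theorem A_div {P : Pt W} (hP : P ∈ E.A) : ∃ R ∈ E.A, E.piW R = P := by
  have hs : ∀ {Q}, Q ∈ E.A → E.sP Q - Q ∈ E.A := fun h => sub_mem (E.sP_mem h) h
  have m1 := E.sP_mem hP
  have m2 := E.sP_mem m1
  have m3 := E.sP_mem m2
  have m4 := E.sP_mem m3
  have m5 := E.sP_mem m4
  have m6 := E.sP_mem m5
  apply E.div_of_delta hP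
  apply E.div_of_delta (hs hP)
  apply E.div_of_delta (hs (hs hP))
  apply E.div_of_delta (hs (hs (hs hP)))
  apply E.div_of_delta (hs (hs (hs (hs hP))))
  apply E.div_of_delta (hs (hs (hs (hs (hs hP)))))
  apply E.div_of_delta (hs (hs (hs (hs (hs (hs hP))))))
  generalize h1 : E.sP P = P1 at *
  generalize h2 : E.sP P1 = P2 at *
  generalize h3 : E.sP P2 = P3 at *
  generalize h4 : E.sP P3 = P4 at *
  generalize h5 : E.sP P4 = P5 at *
  generalize h6 : E.sP P5 = P6 at *
  have h7 : E.sP P6 = P := by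
    rw [← h6, ← h5, ← h4, ← h3, ← h2, ← h1]; exact E.sP7 P
  refine ⟨E.pibarW (P1 - 3 • P2 + 5 • P3 - 5 • P4 + 3 • P5 - P6), E.pibarW_mem ?_, ?_⟩
  · exact sub_mem (add_mem (sub_mem (add_mem (sub_mem m1 (nsmul_mem m2 3)) (nsmul_mem m3 5))
      (nsmul_mem m4 5)) (nsmul_mem m5 3)) m6
  rw [piW_pibarW]
  simp only [map_sub, h1, h2, h3, h4, h5, h6, h7]
  abel

end KumW
end SumCubes

end

noncomputable section

namespace SumCubes

/-! ### Reduction modulo `π` -/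

section red
variable {k : Type*} [Field k] [CharZero k] {Γ : Type*} [LinearOrderedCommGroupWithZero Γ]
  (v : Valuation k Γ)

lemma red_v7 {w : k} (hw : w ^ 2 + w + 1 = 0) (h3 : v (3 + w) < 1) : v 7 < 1 := by
  have e : (7 : k) = (3 + w) * ((2 : ℤ) + (-1 : ℤ) * w) := by push_cast; grind
  rw [e, map_mul]
  exact mul_lt_one_of_nonneg_of_lt_one_left zero_le h3 (kc_le v hw 2 (-1))

lemma red_unit (h7 : v 7 < 1) {n : ℤ} (hn : ¬ (7 : ℤ) ∣ n) : v (n : k) = 1 := by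
  apply le_antisymm (int_le v n)
  by_contra h
  have hc : IsCoprime (7 : ℤ) n := (Int.prime_iff_natAbs_prime.2 (by norm_num)).coprime_iff_not_dvd.2 hn
  obtain ⟨a, b, hab⟩ := hc
  have h1 : v ((a : k) * 7 + b * n) < 1 := by
    apply v.map_add_lt
    · rw [map_mul]; exact mul_lt_one_of_nonneg_of_lt_one_right (int_le v a) zero_le h7
    · rw [map_mul]
      exact mul_lt_one_of_nonneg_of_lt_one_right (int_le v b) zero_le (not_le.1 h)
  have : (a : k) * 7 + b * n = 1 := by exact_mod_cast hab
  rw [this, map_one] at h1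
  exact lt_irrefl _ h1

lemma red_D1 {w : k} (hw : w ^ 2 + w + 1 = 0) (h3 : v (3 + w) < 1) {x : k} (hx : v x ≤ 1) :
    v (D1 w x) = 1 := by
  have hv3 : v (3 : k) = 1 := by
    have := red_unit v (red_v7 v hw h3) (n := 3) (by norm_num)
    simpa using this
  have h1 : v (w / 3) = 1 := by rw [map_div₀, val_w v hw, hv3, div_one]
  have h2 : v ((3 + w) * x ^ 3) < 1 := by
    rw [map_mul, map_pow]
    exact mul_lt_one_of_nonneg_of_lt_one_left zero_le h3 (pow_le_one₀ zero_le hx)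
  rw [D1, v.map_sub_eq_of_lt_right (by rw [h1]; exact h2), h1]

lemma red_c {w : k} (hw : w ^ 2 + w + 1 = 0) (h3 : v (3 + w) < 1) :
    v ((1 + 12 * w) / 3) ≤ 1 ∧ v ((2 + 3 * w) / 9) ≤ 1 := by
  have h7 := red_v7 v hw h3
  have hv3 : v (3 : k) = 1 := by
    have := red_unit v h7 (n := 3) (by norm_num)
    simpa using this
  have hv9 : v (9 : k) = 1 := by
    have := red_unit v h7 (n := 9) (by norm_num)
    simpa using this
  have a := kc_le v hw 1 12
  have b := kc_le v hw 2 3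
  push_cast at a b
  rw [map_div₀, map_div₀, hv3, hv9, div_one, div_one]
  exact ⟨a, b⟩

lemma red_int {w : k} (hw : w ^ 2 + w + 1 = 0) (h3 : v (3 + w) < 1) {x : k} (hx : v x ≤ 1) :
    v (NX w x / D1 w x ^ 2) ≤ 1 := by
  obtain ⟨a, b⟩ := red_c v hw h3
  rw [map_div₀, map_pow, red_D1 v hw h3 hx, one_pow, div_one, NX, map_mul]
  refine mul_le_one₀ hx zero_le ?_
  refine v.map_sub_le (v.map_add_le ?_ ?_) b
  · rw [map_pow]; exact pow_le_one₀ zero_le hx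
  · rw [map_mul, map_pow]; exact mul_le_one₀ a zero_le (pow_le_one₀ zero_le hx)

/-- Near the origin, multiplication by `π` moves points strictly closer to the origin. -/
lemma red_pole {w : k} (hw : w ^ 2 + w + 1 = 0) (h3 : v (3 + w) < 1) {x : k} (hx : 1 < v x)
    (hD : D1 w x ≠ 0) : v x < v (NX w x / D1 w x ^ 2) := by
  obtain ⟨a, b⟩ := red_c v hw h3
  have hv3 : v (3 : k) = 1 := by
    have := red_unit v (red_v7 v hw h3) (n := 3) (by norm_num)
    simpa using this
  have hp : ∀ {m n : ℕ}, m < n → v x ^ m < v x ^ n := fun h => pow_lt_pow_right₀ hx h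
  have hN : v (NX w x) = v x ^ 7 := by
    rw [NX, map_mul]
    have e : v (x ^ 6 + (1 + 12 * w) / 3 * x ^ 3 - (2 + 3 * w) / 9) = v x ^ 6 := by
      have e1 : v ((1 + 12 * w) / 3 * x ^ 3) < v (x ^ 6) := by
        rw [map_mul, map_pow, map_pow]
        exact (mul_le_of_le_one_left' a).trans_lt (hp (by norm_num))
      rw [v.map_sub_eq_of_lt_left, v.map_add_eq_of_lt_left e1, map_pow]
      rw [v.map_add_eq_of_lt_left e1, map_pow]
      refine b.trans_lt ?_
      simpa using hp (m := 0) (n := 6) (by norm_num)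
    rw [e, pow_succ' _ 6]
  have hDv : v (D1 w x) < v x ^ 3 := by
    rw [D1]
    refine (v.map_sub _ _).trans_lt (max_lt ?_ ?_)
    · rw [map_mul, map_pow]
      exact mul_lt_of_lt_one_left (pow_pos (zero_lt_one.trans hx) 3) h3
    · rw [map_div₀, val_w v hw, hv3, div_one]
      simpa using hp (m := 0) (n := 3) (by norm_num)
  have hD0 : 0 < v (D1 w x) := zero_lt_iff.2 ((map_ne_zero v).2 hD)
  rw [map_div₀, map_pow, hN, lt_div_iff₀ (pow_pos hD0 2)]
  calc v x * v (D1 w x) ^ 2 < v x * (v x ^ 3) ^ 2 := by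
        apply mul_lt_mul_of_pos_left _ (zero_lt_one.trans hx)
        exact pow_lt_pow_left₀ hDv zero_le (by norm_num)
    _ = v x ^ 7 := by rw [← pow_mul, pow_succ' _ 6]

end red

namespace KumW
variable {F : Type} [Field F] [NumberField F] {D : KumF F} {W : Type} [Field W]
    [NumberField W] [Algebra F W] (E : KumW D W) [DecidableEq W]

/-- Since `A` is divisible by `π`, no nonzero point of `A` reduces to the origin modulo `π`. -/
lemma no_pole (v : Valuation W (WithZero (Multiplicative ℤ))) (h3 : v (3 + algebraMap F W D.w) < 1)
    {x y : W} (h : y ^ 2 = x ^ 3 - 1 / 12) (hP : mkP x y h ∈ E.A) : v x ≤ 1 := by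
  suffices H : ∀ n : ℕ, ∀ (x y : W) (h : y ^ 2 = x ^ 3 - 1 / 12), mkP x y h ∈ E.A →
      v x < WithZero.exp (n : ℤ) → v x ≤ 1 by
    by_contra hx
    have hx0 : v x ≠ 0 := fun h => hx (by rw [h]; exact zero_le)
    refine hx (H ((WithZero.log (v x)).toNat + 1) x y h hP ?_)
    rw [← WithZero.log_lt_iff_lt_exp hx0]
    push_cast
    exact Int.lt_add_one_of_le (Int.self_le_toNat _)
  intro n
  induction n with
  | zero => intro x y h hP hx; exact le_of_lt (by simpa using hx)
  | succ n ih =>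
    intro x y h hP hx
    obtain ⟨R, hR, e⟩ := E.A_div hP
    rcases eq_zero_or_mkP R with rfl | ⟨x', y', h', rfl⟩
    · rw [map_zero] at e
      exact absurd e.symm (mkP_ne_zero _)
    by_cases hD : D1 (algebraMap F W D.w) x' = 0
    · rw [piW, pi_eq_zero _ _ hD] at e
      exact absurd e.symm (mkP_ne_zero _)
    rw [piW, pi_mkP _ _ hD, mkP_inj] at e
    rw [← e.1] at hx ⊢
    apply red_int v E.hw h3
    by_contra hx1
    have hp := red_pole v E.hw h3 (not_le.1 hx1) hD
    refine hx1 (ih x' y' h' hR ?_)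
    have hx0 : v x' ≠ 0 := fun h => hx1 (by rw [h]; exact zero_le)
    rw [← WithZero.log_lt_iff_lt_exp hx0] 
    have h4 := hp.trans hx
    have hx2 : v (NX (algebraMap F W D.w) x' / D1 (algebraMap F W D.w) x' ^ 2) ≠ 0 := (zero_le.trans_lt hp).ne'
    rw [← WithZero.log_lt_iff_lt_exp hx2] at hx
    have := (WithZero.log_lt_log hx0 hx2).2 hp
    push_cast at hx
    omega
end KumW
end SumCubes

end

noncomputable section

namespace SumCubes

section frob
variable {k : Type*} [Field k] [CharZero k] {Γ : Type*} [LinearOrderedCommGroupWithZero Γ]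
  (v : Valuation k Γ)

/-- The residue map of a valuation. -/
abbrev rs : v.valuationSubring →+* IsLocalRing.ResidueField v.valuationSubring :=
  IsLocalRing.residue _

lemma rs_eq_zero (r : v.valuationSubring) : rs v r = 0 ↔ v (r : k) < 1 := by
  rw [rs, IsLocalRing.residue_eq_zero_iff, IsLocalRing.mem_maximalIdeal, mem_nonunits_iff]
  have hr : v (r : k) ≤ 1 := r.2
  constructor
  · intro h
    by_contra h1
    have h2 : v (r : k) = 1 := le_antisymm hr (not_lt.1 h1)
    have h3 : (r : k) ≠ 0 := by intro h0; rw [h0, map_zero] at h2; exact zero_ne_one h2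
    have h4 : (r : k)⁻¹ ∈ v.valuationSubring := by
      rw [Valuation.mem_valuationSubring_iff, map_inv₀, h2, inv_one]
    exact h (IsUnit.of_mul_eq_one ⟨_, h4⟩ (Subtype.ext (mul_inv_cancel₀ h3)))
  · rintro h ⟨u, rfl⟩
    have h1 : v ((u : v.valuationSubring) : k) * v ((u⁻¹ : (v.valuationSubring)ˣ) : v.valuationSubring) = 1 := by
      rw [← map_mul, ← MulMemClass.coe_mul, Units.mul_inv]; simp
    have h2 := mul_lt_one_of_nonneg_of_lt_one_left zero_le h
      (((u⁻¹ : (v.valuationSubring)ˣ) : v.valuationSubring).2 : v _ ≤ 1)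
    rw [h1] at h2
    exact lt_irrefl _ h2

/-- Being integral with residue in the field with `7 ^ 7` elements. -/
def Fx (z : k) : Prop := ∃ h : v z ≤ 1, (rs v ⟨z, h⟩) ^ 7 ^ 7 = rs v ⟨z, h⟩

variable {v} [hc : CharP (IsLocalRing.ResidueField v.valuationSubring) 7]

omit hc in
lemma charP_of (h7 : v 7 < 1) : CharP (IsLocalRing.ResidueField v.valuationSubring) 7 := by
  haveI : Fact (Nat.Prime 7) := ⟨by norm_num⟩
  refine (CharP.charP_iff_prime_eq_zero (by norm_num)).2 ?_
  have : ((7 : ℕ) : IsLocalRing.ResidueField v.valuationSubring) = rs v 7 := by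
    rw [map_ofNat]; norm_num
  rw [this, rs_eq_zero]
  exact h7

include hc in
lemma Fx.add {a b : k} (ha : Fx v a) (hb : Fx v b) : Fx v (a + b) := by
  haveI : Fact (Nat.Prime 7) := ⟨by norm_num⟩
  obtain ⟨ha, ea⟩ := ha
  obtain ⟨hb, eb⟩ := hb
  refine ⟨v.map_add_le ha hb, ?_⟩
  have : rs v ⟨a + b, v.map_add_le ha hb⟩ = rs v ⟨a, ha⟩ + rs v ⟨b, hb⟩ := by
    rw [← map_add]; rfl
  rw [this, add_pow_char_pow, ea, eb]

omit hc in
lemma Fx.mul {a b : k} (ha : Fx v a) (hb : Fx v b) : Fx v (a * b) := by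
  obtain ⟨ha, ea⟩ := ha
  obtain ⟨hb, eb⟩ := hb
  have h : v (a * b) ≤ 1 := by rw [map_mul]; exact mul_le_one₀ ha zero_le hb
  refine ⟨h, ?_⟩
  have : rs v ⟨a * b, h⟩ = rs v ⟨a, ha⟩ * rs v ⟨b, hb⟩ := by
    rw [← map_mul]; rfl
  rw [this, mul_pow, ea, eb]

include hc in
lemma Fx.int (n : ℤ) : Fx v (n : k) := by
  haveI : Fact (Nat.Prime 7) := ⟨by norm_num⟩
  refine ⟨int_le v n, ?_⟩
  have : rs v ⟨(n : k), int_le v n⟩ = n := by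
    rw [← map_intCast (rs v)]; rfl
  rw [this, ← iterateFrobenius_def, map_intCast]

omit hc in
lemma Fx.inv {a : k} (ha : Fx v a) (h1 : v a = 1) : Fx v a⁻¹ := by
  obtain ⟨ha, ea⟩ := ha
  have h : v a⁻¹ ≤ 1 := by rw [map_inv₀, h1, inv_one]
  have h0 : a ≠ 0 := by rintro rfl; rw [map_zero] at h1; exact zero_ne_one h1
  refine ⟨h, ?_⟩
  have e : rs v ⟨a, ha⟩ * rs v ⟨a⁻¹, h⟩ = 1 := by
    rw [← map_mul, ← map_one (rs v)]; congr 1; exact Subtype.ext (mul_inv_cancel₀ h0)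
  have e2 := congrArg (· ^ 7 ^ 7) e
  simp only [mul_pow, ea, one_pow] at e2
  have h3 : rs v ⟨a, ha⟩ ≠ 0 := left_ne_zero_of_mul_eq_one e
  exact mul_left_cancel₀ h3 (e2.trans e.symm)

omit hc in
lemma Fx.of_congr {a b : k} (ha : Fx v a) (h : v (b - a) < 1) : Fx v b := by
  obtain ⟨ha, ea⟩ := ha
  have hb : v b ≤ 1 := by
    have : b = (b - a) + a := by ring
    rw [this]; exact v.map_add_le h.le ha
  refine ⟨hb, ?_⟩
  have : rs v ⟨b, hb⟩ = rs v ⟨a, ha⟩ := by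
    rw [← sub_eq_zero, ← map_sub, rs_eq_zero]; exact h
  rw [this, ea]

include hc in
lemma Fx.sum {ι : Type*} (s : Finset ι) {f : ι → k} (h : ∀ i ∈ s, Fx v (f i)) : Fx v (∑ i ∈ s, f i) := by
  classical
  induction s using Finset.induction_on with
  | empty => simpa using Fx.int (v := v) 0
  | insert a s ha ih =>
    rw [Finset.sum_insert ha]
    exact (h a (by simp)).add (ih fun i hi => h i (by simp [hi]))

include hc in
lemma Fx.w {w : k} (h3 : v (3 + w) < 1) : Fx v w := by
  refine (Fx.int (-3)).of_congr ?_
  push_cast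
  rwa [sub_neg_eq_add, add_comm]

omit hc in
/-- An Eisenstein integer is a power of `π` times one that is prime to `π`. -/
lemma exists_pi_pow {w : k} (hw : w ^ 2 + w + 1 = 0) (h3 : v (3 + w) < 1) (m n : ℤ)
    (h0 : (m : k) + n * w ≠ 0) : ∃ (j : ℕ) (m' n' : ℤ), (m : k) + n * w = (3 + w) ^ j * (m' + n' * w) ∧
      v ((m' : k) + n' * w) = 1 := by
  induction hN : (m ^ 2 - m * n + n ^ 2).toNat using Nat.strong_induction_on generalizing m n with
  | _ N ih =>
  by_cases h1 : v ((m : k) + n * w) = 1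
  · exact ⟨0, m, n, by simp, h1⟩
  have h1 : v ((m : k) + n * w) < 1 := lt_of_le_of_ne (kc_le v hw m n) h1
  have h2 : v (((m - 3 * n : ℤ) : k)) < 1 := by
    have : (((m - 3 * n : ℤ) : k)) = (m + n * w) - n * (3 + w) := by push_cast; ring
    rw [this]
    refine (v.map_sub _ _).trans_lt (max_lt h1 ?_)
    rw [map_mul]
    exact mul_lt_one_of_nonneg_of_lt_one_right (int_le v n) zero_le h3
  have h4 : (7 : ℤ) ∣ m - 3 * n := by
    by_contra h
    rw [red_unit v (red_v7 v hw h3) h] at h2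
    exact lt_irrefl _ h2
  obtain ⟨l, hl⟩ := h4
  obtain rfl : m = 3 * n + 7 * l := by linarith
  have e : (((3 * n + 7 * l : ℤ)) : k) + n * w = (3 + w) * (((n + 2 * l : ℤ) : k) + ((-l : ℤ) : k) * w) := by
    push_cast; linear_combination (l : k) * hw
  have h5 : (((n + 2 * l : ℤ) : k) + ((-l : ℤ) : k) * w) ≠ 0 := by
    intro h; rw [e, h, mul_zero] at h0; exact h0 rfl
  have hpos : 0 < (n + 2 * l) ^ 2 - (n + 2 * l) * (-l) + (-l) ^ 2 := by
    have hne : ¬ (n + 2 * l = 0 ∧ l = 0) := by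
      rintro ⟨h6, rfl⟩; simp [h6] at h5; simp_all
    by_contra hle
    apply hne
    have a1 := sq_nonneg (2 * (n + 2 * l) + l)
    have a2 := sq_nonneg l
    have a3 : l ^ 2 = 0 := by nlinarith
    have a4 : l = 0 := by simpa using a3
    subst a4
    refine ⟨?_, rfl⟩
    have : (n + 2 * 0) ^ 2 = 0 := by nlinarith
    simpa using this
  obtain ⟨j, m', n', e', hv⟩ := ih _ (by
    rw [← hN]
    have : (3 * n + 7 * l) ^ 2 - (3 * n + 7 * l) * n + n ^ 2 = 7 * ((n + 2 * l) ^ 2 - (n + 2 * l) * (-l) + (-l) ^ 2) := by ring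
    rw [this]
    omega) _ _ h5 rfl
  exact ⟨j + 1, m', n', by rw [e, e', pow_succ']; ring, hv⟩

include hc in
lemma Fx.K {w : k} (hw : w ^ 2 + w + 1 = 0) (h3 : v (3 + w) < 1) (a b : ℚ)
    (h : v ((a : k) + b * w) ≤ 1) : Fx v ((a : k) + b * w) := by
  by_cases h0 : (a : k) + b * w = 0
  · rw [h0]; simpa using Fx.int (v := v) 0
  have hw3 : (3 + w) ≠ 0 := by intro h; have := lin_ne hw 3 1 (by norm_num); simp_all
  set d : ℤ := a.den * b.den
  have hd : (d : k) ≠ 0 := by simp [d]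
  have e1 : (a : k) + b * w = (((a.num * b.den : ℤ) : k) + ((b.num * a.den : ℤ) : k) * w) / d := by
    have ha := Rat.cast_def (K := k) a
    have hb := Rat.cast_def (K := k) b
    have h1 : (a.den : k) ≠ 0 := by simp
    have h2 : (b.den : k) ≠ 0 := by simp
    rw [ha, hb]; simp only [d]; push_cast; field_simp
  obtain ⟨i, m, n, e2, h2⟩ := exists_pi_pow hw h3 (a.num * b.den) (b.num * a.den)
    (by intro h; rw [e1, h, zero_div] at h0; exact h0 rfl)
  obtain ⟨j, m', n', e3, h3'⟩ := exists_pi_pow hw h3 d 0 (by simpa using hd)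
  have e3 : (d : k) = (3 + w) ^ j * (m' + n' * w) := by simpa using e3
  have hF : ∀ m n : ℤ, Fx v ((m : k) + n * w) := fun m n =>
    (Fx.int m).add ((Fx.int n).mul (Fx.w h3))
  have hu : ((m' : k) + n' * w) ≠ 0 := by
    intro h; rw [h, map_zero] at h3'; exact zero_ne_one h3'
  have hij : j ≤ i := by
    by_contra hlt
    rw [e1, e2, e3, map_div₀, map_mul, map_mul, h2, h3', mul_one, mul_one, map_pow, map_pow,
      div_le_one₀ (pow_pos (zero_lt_iff.2 ((map_ne_zero v).2 hw3)) _)] at h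
    exact absurd h (not_le.2 (pow_lt_pow_right_of_lt_one₀ (zero_lt_iff.2 ((map_ne_zero v).2 hw3)) h3 (not_le.1 hlt)))
  obtain ⟨l, rfl⟩ := Nat.exists_eq_add_of_le hij
  have e4 : (a : k) + b * w = (3 + w) ^ l * (m + n * w) * (m' + n' * w)⁻¹ := by
    rw [e1, e2, e3, pow_add]; field_simp
  rw [e4]
  refine (Fx.mul ?_ (hF m n)).mul ((hF m' n').inv h3')
  have h31 : Fx v (3 + w) := by simpa using hF 3 1
  clear e4 e2 h hij e1
  induction l with
  | zero => simpa using Fx.int (v := v) 1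
  | succ l ih => rw [pow_succ]; exact ih.mul h31

end frob
end SumCubes

end

noncomputable section

namespace SumCubes

section frob
variable {k : Type*} [Field k] [CharZero k] {Γ : Type*} [LinearOrderedCommGroupWithZero Γ]
  {v : Valuation k Γ}

lemma int_val {z : k} (hz : IsIntegral ℤ z) : v z ≤ 1 := by
  have h1 : IsIntegral v.valuationSubring z := hz.tower_top
  obtain ⟨y, rfl⟩ := IsIntegrallyClosed.isIntegral_iff.1 h1
  exact y.2

/-- Modulo `π`, multiplication by `π` is the Frobenius map. -/
lemma red_frob {w : k} (hw : w ^ 2 + w + 1 = 0) (h3 : v (3 + w) < 1) {x y : k}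
    (h : y ^ 2 = x ^ 3 - 1 / 12) (hx : v x ≤ 1) (hy : v y ≤ 1) :
    ∃ (hx' : v (NX w x / D1 w x ^ 2) ≤ 1) (hy' : v (y * NY w x / D1 w x ^ 3) ≤ 1),
      rs v ⟨_, hx'⟩ = rs v ⟨x, hx⟩ ^ 7 ∧ rs v ⟨_, hy'⟩ = rs v ⟨y, hy⟩ ^ 7 := by
  have h7 := red_v7 v hw h3
  have hv3 : v (3 : k) = 1 := by
    have := red_unit v h7 (n := 3) (by norm_num)
    simpa using this
  have hv12 : v (12 : k) = 1 := by
    have := red_unit v h7 (n := 12) (by norm_num)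
    simpa using this
  have hD := red_D1 v hw h3 hx
  have hD0 : D1 w x ≠ 0 := by intro h; rw [h, map_zero] at hD; exact zero_ne_one hD
  have hx' := red_int v hw h3 hx
  have hi : v (3 : k)⁻¹ ≤ 1 := by rw [map_inv₀, hv3, inv_one]
  have hj : v (12 : k)⁻¹ ≤ 1 := by rw [map_inv₀, hv12, inv_one]
  have hwv : v w ≤ 1 := (val_w v hw).le
  obtain ⟨xO, ex⟩ : ∃ r : v.valuationSubring, r = ⟨x, hx⟩ := ⟨_, rfl⟩
  obtain ⟨yO, ey⟩ : ∃ r : v.valuationSubring, r = ⟨y, hy⟩ := ⟨_, rfl⟩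
  obtain ⟨wO, ew⟩ : ∃ r : v.valuationSubring, r = ⟨w, hwv⟩ := ⟨_, rfl⟩
  obtain ⟨i, ei⟩ : ∃ r : v.valuationSubring, r = ⟨3⁻¹, hi⟩ := ⟨_, rfl⟩
  obtain ⟨j, ej⟩ : ∃ r : v.valuationSubring, r = ⟨12⁻¹, hj⟩ := ⟨_, rfl⟩
  obtain ⟨d, ed⟩ : ∃ r : v.valuationSubring, r = ⟨D1 w x, hD.le⟩ := ⟨_, rfl⟩
  have e3 : 3 * i = 1 := by rw [ei]; apply Subtype.ext; exact mul_inv_cancel₀ (by norm_num)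
  have e12 : 12 * j = 1 := by rw [ej]; apply Subtype.ext; exact mul_inv_cancel₀ (by norm_num)
  have eq : yO ^ 2 = xO ^ 3 - j := by
    rw [ex, ey, ej]; apply Subtype.ext
    change y ^ 2 = x ^ 3 - 12⁻¹
    rw [h]; ring
  have edd : d = (3 + wO) * xO ^ 3 - wO * i := by
    rw [ed, ex, ew, ei]; apply Subtype.ext
    change D1 w x = (3 + w) * x ^ 3 - w * 3⁻¹
    rw [D1, div_eq_mul_inv]
  obtain ⟨nY, eY⟩ : ∃ r : v.valuationSubring, (r : k) = NY w x := by
    refine ⟨xO ^ 9 - (1 + 9 * wO) * xO ^ 6 + (10 + 9 * wO) * i * xO ^ 3 - i ^ 3, ?_⟩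
    rw [ex, ew, ei]
    change x ^ 9 - (1 + 9 * w) * x ^ 6 + (10 + 9 * w) * 3⁻¹ * x ^ 3 - 3⁻¹ ^ 3 = _
    rw [NY]; ring
  have enY : nY = xO ^ 9 - (1 + 9 * wO) * xO ^ 6 + (10 + 9 * wO) * i * xO ^ 3 - i ^ 3 := by
    rw [ex, ew, ei]; apply Subtype.ext
    change (nY : k) = x ^ 9 - (1 + 9 * w) * x ^ 6 + (10 + 9 * w) * 3⁻¹ * x ^ 3 - 3⁻¹ ^ 3
    rw [eY, NY]; ring
  have hy' : v (y * NY w x / D1 w x ^ 3) ≤ 1 := by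
    rw [map_div₀, map_pow, hD, one_pow, div_one, map_mul]
    refine mul_le_one₀ hy zero_le ?_
    rw [← eY]; exact nY.2
  refine ⟨hx', hy', ?_⟩
  obtain ⟨x', ex'⟩ : ∃ r : v.valuationSubring, r = ⟨_, hx'⟩ := ⟨_, rfl⟩
  obtain ⟨y', ey'⟩ : ∃ r : v.valuationSubring, r = ⟨_, hy'⟩ := ⟨_, rfl⟩
  have f1 : x' * d ^ 2 = xO * (xO ^ 6 + (1 + 12 * wO) * i * xO ^ 3 - (2 + 3 * wO) * i ^ 2) := by
    rw [ex', ed, ex, ew, ei]; apply Subtype.ext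
    change NX w x / D1 w x ^ 2 * D1 w x ^ 2 =
      x * (x ^ 6 + (1 + 12 * w) * 3⁻¹ * x ^ 3 - (2 + 3 * w) * 3⁻¹ ^ 2)
    rw [div_mul_cancel₀ _ (pow_ne_zero 2 hD0), NX]; ring
  have f2 : y' * d ^ 3 = yO * nY := by
    rw [ey', ed, ey]; apply Subtype.ext
    change y * NY w x / D1 w x ^ 3 * D1 w x ^ 3 = y * (nY : k)
    rw [div_mul_cancel₀ _ (pow_ne_zero 3 hD0), eY]
  have rw0 : rs v wO = -3 := by
    have : rs v (3 + wO) = 0 := by rw [rs_eq_zero, ew]; exact h3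
    rw [map_add, map_ofNat] at this
    linear_combination this
  have r7 : (7 : IsLocalRing.ResidueField v.valuationSubring) = 0 := by
    have : rs v 7 = 0 := by rw [rs_eq_zero]; exact h7
    rwa [map_ofNat] at this
  rw [← ex, ← ey, ← ex', ← ey']
  have g1 := congrArg (rs v) f1
  have g2 := congrArg (rs v) f2
  have g3 := congrArg (rs v) e3
  have g4 := congrArg (rs v) e12
  have g5 := congrArg (rs v) edd
  have g6 := congrArg (rs v) eq
  have g7 := congrArg (rs v) enY
  simp only [map_mul, map_pow, map_add, map_sub, map_one, map_ofNat, rw0] at g1 g2 g3 g4 g5 g6 g7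
  have gi : rs v i = 5 := by linear_combination 5 * g3 - 2 * rs v i * r7
  have gj : rs v j = 3 := by linear_combination 3 * g4 - 5 * rs v j * r7
  rw [gi] at g1 g5 g7
  have gd : rs v d = 1 := by rw [g5]; linear_combination 2 * r7
  rw [gd] at g1 g2
  rw [gj] at g6
  constructor
  · linear_combination g1 - 25 * rs v xO ^ 4 * r7 + 25 * rs v xO * r7
  · have : rs v yO ^ 7 = rs v yO * (rs v yO ^ 2) ^ 3 := by ring
    rw [this, g6, ← mul_one (rs v y'), ← one_pow 3, g2, g7]
    linear_combination rs v yO * (5 * rs v xO ^ 6 - 16 * rs v xO ^ 3 - 14) * r7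

end frob

namespace KumW
variable {F : Type} [Field F] [NumberField F] {D : KumF F} {W : Type} [Field W]
    [NumberField W] [Algebra F W] (E : KumW D W) 
    (v : Valuation W (WithZero (Multiplicative ℤ))) 

lemma comap_lt (h3 : v (3 + algebraMap F W D.w) < 1) (j : ℕ) :
    v.comap ((E.σ ^ j : W ≃ₐ[F] W) : W →+* W) (3 + algebraMap F W D.w) < 1 := by
  change v ((E.σ ^ j) (3 + algebraMap F W D.w)) < 1
  rw [map_add, E.σ_alg, map_ofNat]; exact h3

include E in
lemma charP_res (h3 : v (3 + algebraMap F W D.w) < 1) :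
    CharP (IsLocalRing.ResidueField v.valuationSubring) 7 := charP_of (red_v7 v E.hw h3)

/-- `τ`-fixed elements that are integral at `π` have residues in the field with `7 ^ 7` elements. -/
lemma fx_of_fixed (hη : ∃ z, IsIntegral ℤ z ∧ E.η ^ 7 ^ 7 = E.η + 7 * z)
    (h3 : v (3 + algebraMap F W D.w) < 1) {z : W} (hz : E.τ z = z)
    (hv : ∀ j : ℕ, v ((E.σ ^ j) z) ≤ 1) : Fx v z := by
  have h7 := red_v7 v E.hw h3
  haveI := E.charP_res v h3
  obtain ⟨c, hc, hd⟩ := E.exists_coeff z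
  have hp : ∀ i, Fx v (E.per i) := by
    intro i
    obtain ⟨s, hs, e⟩ := hη
    have hi := E.int_per i
    refine ⟨int_val hi, ?_⟩
    rw [← sub_eq_zero, ← map_pow, ← map_sub, rs_eq_zero]
    change v (E.per i ^ 7 ^ 7 - E.per i) < 1
    have : E.per i ^ 7 ^ 7 - E.per i = 7 * (E.σ ^ i) s := by
      rw [per, ← map_pow, e, map_add, map_mul, map_ofNat]; ring
    rw [this, map_mul]
    exact mul_lt_one_of_nonneg_of_lt_one_left zero_le h7
      (int_val (hs.map ((E.σ ^ i : W ≃ₐ[F] W) : W →+* W).toIntAlgHom))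
  have htr : ∀ u, (∀ j : ℕ, v ((E.σ ^ j) u) ≤ 1) → v (E.tr u) ≤ 1 := fun u hu =>
    v.map_sum_le fun j _ => hu j
  have hcF : ∀ i, Fx v (algebraMap F W (c i)) := by
    intro i
    have hle : v (algebraMap F W (c i)) ≤ 1 := by
      rw [hc]
      refine v.map_sub_le (htr _ fun j => ?_) ?_
      · rw [map_mul, map_mul]
        refine mul_le_one₀ (hv j) zero_le (int_val ?_)
        exact (E.int_per i).map ((E.σ ^ j : W ≃ₐ[F] W) : W →+* W).toIntAlgHom
      · rw [map_mul]
        refine mul_le_one₀ ?_ zero_le (htr _ hv)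
        simpa using int_le v 4
    have hτ : D.τ (c i) = c i := by
      apply (algebraMap F W).injective
      rw [← E.τalg, hc, map_sub, map_mul, map_ofNat, E.τ_tr, E.τ_tr, map_mul, E.τ_per, hz]
    obtain ⟨a, b, e⟩ := D.fixed hτ
    have e2 : algebraMap F W (c i) = (a : W) + b * algebraMap F W D.w := by
      rw [e]; simp
    rw [e2] at hle ⊢
    exact Fx.K E.hw h3 a b hle
  have h29 : v (29 : W) = 1 := by
    have := red_unit v h7 (n := 29) (by norm_num)
    simpa using this
  have hF29 : Fx v (29 : W) := by simpa using Fx.int (v := v) 29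
  have : z = 29⁻¹ * ∑ i ∈ Finset.range 7, algebraMap F W (c i) * E.per i := by
    rw [← hd]; field_simp
  rw [this]
  exact (hF29.inv h29).mul (Fx.sum _ fun i _ => (hcF i).mul (hp i))

variable [DecidableEq W]

lemma int_pt (h3 : v (3 + algebraMap F W D.w) < 1) {x y : W} (h : y ^ 2 = x ^ 3 - 1 / 12)
    (hP : mkP x y h ∈ E.A) : v x ≤ 1 ∧ v y ≤ 1 := by
  have hx := E.no_pole v h3 h hP
  refine ⟨hx, ?_⟩
  have hv12 : v (12 : W) = 1 := by
    have := red_unit v (red_v7 v E.hw h3) (n := 12) (by norm_num)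
    simpa using this
  have : v y ^ 2 ≤ 1 := by
    rw [← map_pow, h]
    refine v.map_sub_le ?_ ?_
    · rw [map_pow]; exact pow_le_one₀ zero_le hx
    · rw [map_div₀, map_one, hv12, div_one]
  exact (pow_le_one_iff (by norm_num)).1 this

/-- Iterates of `π` reduce to iterates of Frobenius. -/
lemma iter_frob (h3 : v (3 + algebraMap F W D.w) < 1) {x y : W} (h : y ^ 2 = x ^ 3 - 1 / 12)
    (hP : mkP x y h ∈ E.A) (hx : v x ≤ 1) (hy : v y ≤ 1) (n : ℕ) :
    ∃ (x' y' : W) (h' : y' ^ 2 = x' ^ 3 - 1 / 12) (hx' : v x' ≤ 1) (hy' : v y' ≤ 1),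
      E.piW^[n] (mkP x y h) = mkP x' y' h' ∧ mkP x' y' h' ∈ E.A ∧
      rs v ⟨x', hx'⟩ = rs v ⟨x, hx⟩ ^ 7 ^ n ∧ rs v ⟨y', hy'⟩ = rs v ⟨y, hy⟩ ^ 7 ^ n := by
  induction n with
  | zero => exact ⟨x, y, h, hx, hy, rfl, hP, by simp, by simp⟩
  | succ n ih =>
    obtain ⟨x', y', h', hx', hy', e, hA, e1, e2⟩ := ih
    obtain ⟨a, b, e3, e4⟩ := red_frob E.hw h3 h' hx' hy'
    have hD0 : D1 (algebraMap F W D.w) x' ≠ 0 := by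
      intro h
      have := red_D1 v E.hw h3 hx'
      rw [h, map_zero] at this; exact zero_ne_one this
    refine ⟨_, _, eq_D1 E.hw h' hD0, a, b, ?_, ?_, ?_, ?_⟩
    · rw [Function.iterate_succ_apply', e, piW, pi_mkP _ _ hD0]
    · rw [← pi_mkP E.hw h' hD0]; exact E.piW_mem hA
    · rw [e3, e1, ← pow_mul, ← pow_succ]
    · rw [e4, e2, ← pow_mul, ← pow_succ]

/-- `π ^ 7` is the identity on `A`. -/
theorem pi_seven (hη : ∃ z, IsIntegral ℤ z ∧ E.η ^ 7 ^ 7 = E.η + 7 * z)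
    (h3 : v (3 + algebraMap F W D.w) < 1) {P : Pt W} (hP : P ∈ E.A) : E.piW^[7] P = P := by
  rcases eq_zero_or_mkP P with rfl | ⟨x, y, h, rfl⟩
  · simp
  have h7 := red_v7 v E.hw h3
  haveI := E.charP_res v h3
  obtain ⟨hx, hy⟩ := E.int_pt v h3 h hP
  have hj : ∀ j : ℕ, v ((E.σ ^ j) x) ≤ 1 ∧ v ((E.σ ^ j) y) ≤ 1 := fun j =>
    E.int_pt (v.comap ((E.σ ^ j : W ≃ₐ[F] W) : W →+* W)) (E.comap_lt v h3 j) h hP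
  have hfix := mkP_mem_fixedPts.1 hP
  obtain ⟨_, fx⟩ := E.fx_of_fixed v hη h3 hfix.1 fun j => (hj j).1
  obtain ⟨_, fy⟩ := E.fx_of_fixed v hη h3 hfix.2 fun j => (hj j).2
  obtain ⟨x', y', h', hx', hy', e, hA, e1, e2⟩ := E.iter_frob v h3 h hP hx hy 7
  rw [fx] at e1
  rw [fy] at e2
  rw [e]
  have r7 : (7 : IsLocalRing.ResidueField v.valuationSubring) = 0 := by
    have : rs v 7 = 0 := by rw [rs_eq_zero]; exact h7
    rwa [map_ofNat] at this
  have hv12 : v (12 : W) = 1 := by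
    have := red_unit v h7 (n := 12) (by norm_num)
    simpa using this
  have hY : rs v ⟨y, hy⟩ ≠ 0 := by
    intro h0
    have hjv : v (12 : W)⁻¹ ≤ 1 := by rw [map_inv₀, hv12, inv_one]
    have g4 : 12 * rs v ⟨12⁻¹, hjv⟩ = 1 := by
      rw [← map_ofNat (rs v) 12, ← map_mul, ← map_one (rs v)]; congr 1
      apply Subtype.ext; exact mul_inv_cancel₀ (by norm_num)
    have g6 : rs v ⟨y, hy⟩ ^ 2 = rs v ⟨x, hx⟩ ^ 3 - rs v ⟨12⁻¹, hjv⟩ := by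
      rw [← map_pow, ← map_pow, ← map_sub]; congr 1; apply Subtype.ext
      change y ^ 2 = x ^ 3 - 12⁻¹
      rw [h]; ring
    have hX : rs v ⟨x, hx⟩ ^ 3 = 3 := by
      rw [h0] at g6
      linear_combination 3 * g4 - 5 * rs v ⟨12⁻¹, hjv⟩ * r7 - g6
    have h18 : rs v ⟨x, hx⟩ ^ 18 = 1 := by
      have : rs v ⟨x, hx⟩ ^ 18 = (rs v ⟨x, hx⟩ ^ 3) ^ 6 := by ring
      rw [this, hX]; linear_combination 104 * r7
    have h77 : rs v ⟨x, hx⟩ ^ 7 ^ 7 = rs v ⟨x, hx⟩ ^ 7 := by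
      have : 7 ^ 7 = 18 * 45752 + 7 := by norm_num
      rw [this, pow_add, pow_mul, h18, one_pow, one_mul]
    rw [fx] at h77
    have hX0 : rs v ⟨x, hx⟩ = 0 := by
      have : rs v ⟨x, hx⟩ ^ 7 = (rs v ⟨x, hx⟩ ^ 3) ^ 2 * rs v ⟨x, hx⟩ := by ring
      rw [this, hX] at h77
      linear_combination -h77 - rs v ⟨x, hx⟩ * r7 
    rw [hX0] at hX
    have : (1 : IsLocalRing.ResidueField v.valuationSubring) = 0 := by
      linear_combination 2 * hX + r7
    exact one_ne_zero this
  by_contra hne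
  have hn : -(mkP x y h) ∈ E.A := neg_mem hP
  rw [neg_mkP] at hn
  obtain ⟨l, c, x₃, y₃, h₃, hs, l1, l2, l3, s1, -, -⟩ := exists_line h' (show (-y) ^ 2 = x ^ 3 - 1 / 12 by rw [neg_sq, h])
    (by rintro ⟨rfl, e'⟩; rw [neg_neg] at e'; subst e'; exact hne rfl)
  have hA3 : mkP x₃ y₃ h₃ ∈ E.A := by
    have := eq_neg_of_add_eq_zero_right hs
    rw [this]
    exact neg_mem (add_mem hA hn)
  have hx3 := E.no_pole v h3 h₃ hA3
  have hl : v l ≤ 1 := by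
    refine (pow_le_one_iff (n := 2) (by norm_num)).1 ?_
    rw [← map_pow, ← s1]
    exact v.map_add_le (v.map_add_le hx' hx) hx3
  have hxx : v (x' - x) < 1 := by
    have := (rs_eq_zero v (⟨x', hx'⟩ - ⟨x, hx⟩)).1 (by rw [map_sub, e1, sub_self])
    exact this
  have hyy : v (y' + y) < 1 := by
    have : y' + y = l * (x' - x) := by linear_combination l1 - l2
    rw [this, map_mul]
    exact mul_lt_one_of_nonneg_of_lt_one_right hl zero_le hxx
  have h2 := (rs_eq_zero v (⟨y', hy'⟩ + ⟨y, hy⟩)).2 hyy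
  rw [map_add, e2] at h2
  apply hY
  linear_combination 4 * h2 - rs v ⟨y, hy⟩ * r7

end KumW
end SumCubes

end

noncomputable section

namespace SumCubes
open NumberField IsDedekindDomain

namespace KumW
variable {F : Type} [Field F] [NumberField F] {D : KumF F} {W : Type} [Field W]
    [NumberField W] [Algebra F W] (E : KumW D W) 

include E in
lemma exists_val : ∃ v : Valuation W (WithZero (Multiplicative ℤ)),
    v (3 + algebraMap F W D.w) < 1 := by
  have hw := E.hw
  have hInt : IsIntegral ℤ (3 + algebraMap F W D.w) := by
    have h3 : IsIntegral ℤ (3 : W) := by simpa using isIntegral_algebraMap (R := ℤ) (A := W) (x := 3)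
    exact h3.add (D.int_w.map (algebraMap F W).toIntAlgHom)
  set p : 𝓞 W := ⟨3 + algebraMap F W D.w, hInt⟩ with hp
  have hp0 : p ≠ 0 := by
    intro h
    have h1 : (p : W) = 0 := by rw [h]; rfl
    have h2 : (3 + algebraMap F W D.w) * (2 - algebraMap F W D.w) = 7 := by grind
    rw [show (3 + algebraMap F W D.w) = 0 from h1, zero_mul] at h2
    norm_num at h2
  have hnu : ¬ IsUnit p := by
    rintro ⟨u, hu⟩
    have h1 : (p : W) * ((u⁻¹ : (𝓞 W)ˣ) : 𝓞 W) = 1 := by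
      rw [← hu, ← map_mul, Units.mul_inv, map_one]
    have h2 : (3 + algebraMap F W D.w) * (2 - algebraMap F W D.w) = 7 := by grind
    have h3 : (((u⁻¹ : (𝓞 W)ˣ) : 𝓞 W) : W) = algebraMap F W (((2 / 7 : ℚ) : F) + ((-1 / 7 : ℚ) : F) * D.w) := by
      have h4 : (3 + algebraMap F W D.w) ≠ 0 := by intro h; rw [h, zero_mul] at h2; norm_num at h2
      apply mul_left_cancel₀ h4
      refine h1.trans ?_
      simp only [map_add, map_mul, map_ratCast]
      push_cast
      linear_combination -(1 / 7 : W) * h2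
    have h5 : IsIntegral ℤ (algebraMap F W (((2 / 7 : ℚ) : F) + ((-1 / 7 : ℚ) : F) * D.w)) := by
      rw [← h3]; exact RingOfIntegers.isIntegral_coe _
    have h6 := (isIntegral_algebraMap_iff (algebraMap F W).injective).1 h5
    obtain ⟨m, n, hm, -⟩ := D.intK _ _ h6
    have : (m : ℚ) * 7 = 2 := by rw [hm]; norm_num
    have : m * 7 = 2 := by exact_mod_cast this
    omega
  obtain ⟨M, hM, hpM⟩ := exists_max_ideal_of_mem_nonunits (mem_nonunits_iff.2 hnu)
  have hMb : M ≠ ⊥ := by rintro rfl; exact hp0 (by simpa using hpM)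
  set Q : HeightOneSpectrum (𝓞 W) := ⟨M, hM.isPrime, hMb⟩
  refine ⟨Q.valuation W, ?_⟩
  have := (Q.valuation_lt_one_iff_mem (K := W) p).2 hpM
  exact this

/-- There is no affine point over a subfield fixed by `τ` without primitive cube roots of unity:
`π ^ 7 - 1 = -250 + 757 ω` annihilates it, so that `ω` maps `757 • P` to `250 • P`. Both have
coordinates in the subfield, hence so does `ω`, unless `757 • P` is `0` or has abscissa `0`. -/
theorem no_point (hη : ∃ z, IsIntegral ℤ z ∧ E.η ^ 7 ^ 7 = E.η + 7 * z) {L : Type} [Field L]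
    [CharZero L] (ι : L →+* W) (hι : ∀ z, E.τ (ι z) = ι z) (hL : ∀ z : L, z ^ 2 + z + 1 ≠ 0)
    {x y : L} (h : y ^ 2 = x ^ 3 - 1 / 12) : False := by
  classical
  obtain ⟨v, h3⟩ := E.exists_val
  have hA : mapP ι (mkP x y h) ∈ E.A := by
    rw [mapP_mkP, mkP_mem_fixedPts]; exact ⟨hι x, hι y⟩
  have h7 := E.pi_seven v hη h3 hA
  set P := mkP x y h
  set Q := mapP ι P
  have hpi : ∀ R, E.piW R = 3 • R + om _ E.hw R := fun R => rfl
  have hoo : ∀ R, om _ E.hw (om _ E.hw R) = - R - om _ E.hw R := by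
    intro R; rw [om_om]
  simp only [Function.iterate_succ, Function.iterate_zero, Function.comp, id, hpi, map_add, map_nsmul, hoo,
    map_sub, map_neg] at h7
  have key : mapP ι (250 • P) = om _ E.hw (mapP ι (757 • P)) := by
    rw [map_nsmul, map_nsmul, map_nsmul]
    change 250 • Q = 757 • om _ E.hw Q
    generalize om _ E.hw Q = S at h7 ⊢
    have : (-249 : ℤ) • Q + (757 : ℤ) • S = Q := by
      refine Eq.trans ?_ h7; abel
    have h8 : (757 : ℤ) • S - (250 : ℤ) • Q = 0 := by
      have := sub_eq_zero.2 this
      rw [← this]; module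
    have := sub_eq_zero.1 h8
    exact_mod_cast this.symm
  have hP : P = 324 • (250 • P) - 107 • (757 • P) := by module
  rcases eq_zero_or_mkP (757 • P) with e | ⟨a, b, hab, e⟩
  · rw [e, map_zero, map_zero] at key
    have e2 : 250 • P = 0 := mapP_injective ι (by rw [key, map_zero])
    rw [e, e2] at hP
    exact mkP_ne_zero h (by simpa using hP)
  rcases eq_zero_or_mkP (250 • P) with e2 | ⟨c, d, hcd, e2⟩
  · rw [e2, e, map_zero, mapP_mkP, om_mkP] at key
    exact mkP_ne_zero _ key.symm
  rw [e, e2, mapP_mkP, mapP_mkP, om_mkP, mkP_inj] at key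
  by_cases ha : a = 0
  · subst ha
    apply hL ((-1 + 6 * b) / 2)
    linear_combination 9 * hab
  · apply hL (c / a)
    apply ι.injective
    have hia : ι a ≠ 0 := (map_ne_zero ι).2 ha
    rw [map_add, map_add, map_pow, map_div₀, key.1, mul_div_cancel_right₀ _ hia, map_one, map_zero]
    exact E.hw

end KumW
end SumCubes

end

noncomputable section

namespace SumCubes
open NumberField

/-! ### The field of cube roots of unity -/

section K
variable {K : Type} [Field K] [NumberField K] {w : K} 

lemma eis_ne (hw : w ^ 2 + w + 1 = 0) (a b : ℚ) (h : (a : K) + b * w = 0) : a = 0 ∧ b = 0 := by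
  have e : (((a ^ 2 - a * b + b ^ 2 : ℚ)) : K) = 0 := by
    push_cast
    have : (a : K) = - (b * w) := by linear_combination h
    rw [this]; linear_combination (b : K) ^ 2 * hw
  have e2 : a ^ 2 - a * b + b ^ 2 = 0 := by exact_mod_cast e
  have h1 : b ^ 2 = 0 := by nlinarith [sq_nonneg (2 * a - b), sq_nonneg b]
  have h2 : b = 0 := by simpa using h1
  subst h2
  refine ⟨?_, rfl⟩
  simpa using e2

/-- The basis `1, ω`. -/
def eisBasis (hw : w ^ 2 + w + 1 = 0) (hK : Module.finrank ℚ K = 2) : Module.Basis (Fin 2) ℚ K :=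
  basisOfLinearIndependentOfCardEqFinrank (b := ![1, w]) (by
    rw [LinearIndependent.pair_iff]
    intro s t h
    refine eis_ne hw s t ?_
    rw [Algebra.smul_def, Algebra.smul_def] at h
    simpa using h) (by simp [hK])

lemma eisBasis_zero (hw : w ^ 2 + w + 1 = 0) (hK : Module.finrank ℚ K = 2) : eisBasis hw hK 0 = 1 := by
  simp [eisBasis]

lemma eisBasis_one (hw : w ^ 2 + w + 1 = 0) (hK : Module.finrank ℚ K = 2) : eisBasis hw hK 1 = w := by
  simp [eisBasis]

lemma eis_repr (hw : w ^ 2 + w + 1 = 0) (hK : Module.finrank ℚ K = 2) (a b : ℚ) :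
    (eisBasis hw hK).repr ((a : K) + b * w) 0 = a ∧ (eisBasis hw hK).repr ((a : K) + b * w) 1 = b := by
  have : (a : K) + b * w = a • eisBasis hw hK 0 + b • eisBasis hw hK 1 := by
    rw [eisBasis_zero, eisBasis_one, Algebra.smul_def, Algebra.smul_def]; simp
  rw [this]
  constructor <;> simp

lemma eis_span (hw : w ^ 2 + w + 1 = 0) (hK : Module.finrank ℚ K = 2) (z : K) :
    ∃ a b : ℚ, z = (a : K) + b * w := by
  refine ⟨(eisBasis hw hK).repr z 0, (eisBasis hw hK).repr z 1, ?_⟩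
  conv_lhs => rw [← (eisBasis hw hK).sum_repr z]
  rw [Fin.sum_univ_two, eisBasis_zero, eisBasis_one, Algebra.smul_def, Algebra.smul_def]
  simp

lemma eis_matrix (hw : w ^ 2 + w + 1 = 0) (hK : Module.finrank ℚ K = 2) (a b : ℚ) :
    Algebra.leftMulMatrix (eisBasis hw hK) ((a : K) + b * w) = !![a, -b; b, a - b] := by
  have h0 : ((a : K) + b * w) * eisBasis hw hK 0 = (a : K) + b * w := by
    rw [eisBasis_zero, mul_one]
  have h1 : ((a : K) + b * w) * eisBasis hw hK 1 = ((-b : ℚ) : K) + ((a - b : ℚ) : K) * w := by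
    rw [eisBasis_one]; push_cast; linear_combination (b : K) * hw
  ext i j
  rw [Algebra.leftMulMatrix_eq_repr_mul]
  fin_cases j
  · simp only [Fin.zero_eta, h0]
    fin_cases i
    · exact (eis_repr hw hK a b).1
    · exact (eis_repr hw hK a b).2
  · simp only [Fin.mk_one, h1]
    fin_cases i
    · exact (eis_repr hw hK (-b) (a - b)).1
    · exact (eis_repr hw hK (-b) (a - b)).2

lemma eis_norm (hw : w ^ 2 + w + 1 = 0) (hK : Module.finrank ℚ K = 2) (a b : ℚ) :
    Algebra.norm ℚ ((a : K) + b * w) = a ^ 2 - a * b + b ^ 2 := by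
  rw [Algebra.norm_eq_matrix_det (eisBasis hw hK), eis_matrix, Matrix.det_fin_two_of]; ring

lemma eis_trace (hw : w ^ 2 + w + 1 = 0) (hK : Module.finrank ℚ K = 2) (a b : ℚ) :
    Algebra.trace ℚ K ((a : K) + b * w) = 2 * a - b := by
  rw [Algebra.trace_eq_matrix_trace (eisBasis hw hK), eis_matrix, Matrix.trace_fin_two_of]; ring

lemma rat_int {q : ℚ} (h : IsIntegral ℤ q) : ∃ m : ℤ, (m : ℚ) = q := by
  obtain ⟨m, hm⟩ := IsIntegrallyClosed.isIntegral_iff.1 h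
  exact ⟨m, by simpa using hm⟩

lemma eis_int (hw : w ^ 2 + w + 1 = 0) (hK : Module.finrank ℚ K = 2) (a b : ℚ)
    (h : IsIntegral ℤ ((a : K) + b * w)) : ∃ m n : ℤ, (m : ℚ) = a ∧ (n : ℚ) = b := by
  obtain ⟨N, hN⟩ := rat_int (Algebra.isIntegral_norm ℚ h)
  obtain ⟨T, hT⟩ := rat_int (Algebra.isIntegral_trace (L := ℚ) h)
  rw [eis_norm hw hK] at hN
  rw [eis_trace hw hK] at hT
  have h1 : (3 * b) ^ 2 = ((3 * (4 * N - T ^ 2) : ℤ) : ℚ) := by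
    push_cast; rw [hN, hT]; ring
  obtain ⟨c, hc⟩ : ∃ c : ℤ, (c : ℚ) = 3 * b := by
    apply rat_int
    refine IsIntegral.of_pow (n := 2) (by norm_num) ?_
    rw [h1]; exact isIntegral_algebraMap
  have h2 : c ^ 2 = 3 * (4 * N - T ^ 2) := by
    rw [← hc] at h1; exact_mod_cast h1
  obtain ⟨n, rfl⟩ : (3 : ℤ) ∣ c := Int.prime_three.dvd_of_dvd_pow (Dvd.intro _ h2.symm)
  have hb : (n : ℚ) = b := by push_cast at hc; linarith
  have h3 : 3 * n ^ 2 = 4 * N - T ^ 2 := by nlinarith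
  have h4 : Even (T + n) := by
    have : Even (T ^ 2 + n ^ 2) := ⟨2 * N - n ^ 2, by linarith⟩
    rw [Int.even_add, Int.even_pow' (by norm_num), Int.even_pow' (by norm_num)] at this
    rwa [Int.even_add]
  obtain ⟨m, hm⟩ := h4
  refine ⟨m, n, ?_, hb⟩
  have : ((T + n : ℤ) : ℚ) = ((m + m : ℤ) : ℚ) := by rw [hm]
  push_cast at this
  rw [hT, hb] at this
  linarith

/-- `7 / 3` is not a proper power in `ℚ`, since its `7`-adic valuation is `1`. -/
lemma not_pow {n : ℕ} (hn : n ≠ 1) (q : ℚ) : q ^ n ≠ 7 / 3 := by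
  intro h
  haveI : Fact (Nat.Prime 7) := ⟨by norm_num⟩
  have h1 : padicValRat 7 (7 / 3 : ℚ) = 1 := by
    rw [padicValRat.div (by norm_num) (by norm_num)]
    have a : padicValRat 7 (7 : ℚ) = 1 := by exact_mod_cast padicValRat.self (p := 7) (by norm_num)
    have b : padicValRat 7 (3 : ℚ) = 0 := by
      have : padicValNat 7 3 = 0 := padicValNat.eq_zero_of_not_dvd (by norm_num)
      have h2 := padicValRat.of_nat (p := 7) (n := 3)
      rw [this] at h2
      exact_mod_cast h2
    rw [a, b]; norm_num
  have hq : q ≠ 0 := by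
    rintro rfl
    rcases Nat.eq_zero_or_pos n with rfl | hn
    · norm_num at h
    · rw [zero_pow hn.ne'] at h; norm_num at h
  rw [← h, padicValRat.pow] at h1
  have : (n : ℤ) ∣ 1 := Dvd.intro _ h1
  have := Int.natCast_dvd_natCast.1 (by exact_mod_cast this : (n : ℤ) ∣ ((1 : ℕ) : ℤ))
  exact hn (Nat.dvd_one.1 this)

lemma eis_delta (hw : w ^ 2 + w + 1 = 0) (hK : Module.finrank ℚ K = 2) :
    Algebra.norm ℚ ((5 + w) / 3) = 7 / 3 := by
  have : (5 + w) / 3 = ((5 / 3 : ℚ) : K) + ((1 / 3 : ℚ) : K) * w := by push_cast; ring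
  rw [this, eis_norm hw hK]; norm_num

lemma eis_not_pow (hw : w ^ 2 + w + 1 = 0) (hK : Module.finrank ℚ K = 2) {n : ℕ} (hn : n ≠ 1) (z : K) :
    z ^ n ≠ (5 + w) / 3 := by
  intro h
  have := congrArg (Algebra.norm ℚ) h
  rw [map_pow, eis_delta hw hK] at this
  exact not_pow hn _ this

open Polynomial in
lemma eis_irred (hw : w ^ 2 + w + 1 = 0) (hK : Module.finrank ℚ K = 2) :
    Irreducible (X ^ 6 - C ((5 + w) / 3) : K[X]) := by
  rw [show 6 = 2 * 3 by norm_num]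
  refine X_pow_mul_sub_C_irreducible (X_pow_sub_C_irreducible_of_prime Nat.prime_three
    (eis_not_pow hw hK (by norm_num))) ?_
  intro E _ _ x hx
  refine X_pow_sub_C_irreducible_of_prime Nat.prime_two ?_
  intro b hb
  have hInt : IsIntegral K x := not_not.mp fun h => by
    simpa only [degree_zero, degree_X_pow_sub_C (by norm_num : 0 < 3), WithBot.natCast_ne_bot]
      using congrArg degree (hx.symm.trans (dif_neg h))
  apply eis_not_pow hw hK (n := 2) (by norm_num) (Algebra.norm K b)
  rw [← map_pow, hb, ← IntermediateField.adjoin.powerBasis_gen hInt,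
    Algebra.PowerBasis.norm_gen_eq_coeff_zero_minpoly]
  simp [IntermediateField.minpoly_gen, hx, (by decide : Odd 3).neg_pow]

end K

/-- The field of cube roots of unity exists. -/
lemma exists_K : ∃ (K : Type) (_ : Field K) (_ : NumberField K) (w : K),
    w ^ 2 + w + 1 = 0 ∧ Module.finrank ℚ K = 2 := by
  have hc := CyclotomicField.isCyclotomicExtension 3 ℚ
  have e : CyclotomicField.algebra 3 ℚ = (DivisionRing.toRatAlgebra : Algebra ℚ (CyclotomicField 3 ℚ)) :=
    Subsingleton.elim _ _
  rw [e] at hc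
  refine ⟨CyclotomicField 3 ℚ, inferInstance, inferInstance, IsCyclotomicExtension.zeta 3 ℚ _, ?_, ?_⟩
  · have h := IsCyclotomicExtension.zeta_spec 3 ℚ (CyclotomicField 3 ℚ)
    have := h.geom_sum_eq_zero (by norm_num)
    simp only [Finset.sum_range_succ, Finset.range_zero, Finset.sum_empty] at this
    linear_combination this
  · rw [IsCyclotomicExtension.finrank (n := 3) _ (Polynomial.cyclotomic.irreducible_rat (by norm_num))]
    rfl

end SumCubes

end

/-! ### Existence of `F` -/

noncomputable section

namespace SumCubes

section
variable {K : Type} [Field K] [NumberField K] {w : K}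

open Polynomial in
/-- The Kummer extension `K(θ)`, `θ⁶ = (5 + w)/3`, with a generator of its Galois group. -/
lemma exists_F (hw : w ^ 2 + w + 1 = 0) (hK : Module.finrank ℚ K = 2) :
    ∃ (F : Type) (_ : Field F) (_ : NumberField F) (_ : Algebra K F) (θ : F) (τ : F ≃ₐ[K] F),
      θ ^ 6 = algebraMap K F ((5 + w) / 3) ∧ τ θ = algebraMap K F (- w ^ 2) * θ ∧
      Module.finrank K F = 6 ∧ Module.Finite K F ∧
      ∀ x : F, ∃ c : Fin 6 → K, x = ∑ j, algebraMap K F (c j) * θ ^ (j : ℕ) := by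
  have hirr := eis_irred hw hK
  haveI : Fact (Irreducible (X ^ 6 - C ((5 + w) / 3) : K[X])) := ⟨hirr⟩
  have hm : (X ^ 6 - C ((5 + w) / 3) : K[X]).Monic := monic_X_pow_sub_C _ (by norm_num)
  have hnd : (X ^ 6 - C ((5 + w) / 3) : K[X]).natDegree = 6 := natDegree_X_pow_sub_C
  let F := AdjoinRoot (X ^ 6 - C ((5 + w) / 3) : K[X])
  haveI : Module.Finite K F := hm.finite_adjoinRoot
  haveI : CharZero F := charZero_of_injective_algebraMap (algebraMap K F).injective
  haveI : NumberField F := { to_charZero := inferInstance, to_finiteDimensional := Module.Finite.trans K F }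
  have hw3 : w ^ 3 = 1 := by linear_combination (w - 1) * hw
  have h6 : (-w ^ 2) ^ 6 = 1 := by
    rw [show (-w ^ 2) ^ 6 = (w ^ 3) ^ 4 by ring, hw3, one_pow]
  let η : rootsOfUnity 6 K := rootsOfUnity.mkOfPowEq (-w ^ 2) h6
  refine ⟨F, inferInstance, inferInstance, inferInstance, AdjoinRoot.root _,
    autAdjoinRootXPowSubC 6 ((5 + w) / 3) η, ?_, ?_, ?_, inferInstance, ?_⟩
  · exact root_X_pow_sub_C_pow 6 _
  · rw [autAdjoinRootXPowSubC_root, Algebra.smul_def]; rfl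
  · rw [(AdjoinRoot.powerBasis' hm).finrank]; exact hnd
  · intro x
    let B := AdjoinRoot.powerBasis' hm
    have hd : B.dim = 6 := hnd
    refine ⟨fun j => B.basis.repr x (Fin.cast hd.symm j), ?_⟩
    conv_lhs => rw [← B.basis.sum_repr x]
    rw [← Equiv.sum_comp (finCongr hd.symm)]
    refine Finset.sum_congr rfl fun j _ => ?_
    rw [Algebra.smul_def, B.basis_eq_pow]
    rfl
end

end SumCubes

end

noncomputable section

namespace SumCubes

/-- An extension of degree `φ(n)` containing a primitive `n`-th root of unity is cyclotomic. -/
lemma cyclo_of_finrank {k F : Type} [Field k] [Field F] [Algebra k F] [FiniteDimensional k F]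
    {n : ℕ} [NeZero n] {ζ : F} (hζ : IsPrimitiveRoot ζ n)
    (hn : Irreducible (Polynomial.cyclotomic n k)) (hF : Module.finrank k F = n.totient) :
    IsCyclotomicExtension {n} k F := by
  haveI := hζ.intermediateField_adjoin_isCyclotomicExtension k
  have h1 : Module.finrank k (IntermediateField.adjoin k {ζ}) = n.totient :=
    IsCyclotomicExtension.finrank (n := n) _ hn
  have h2 : IntermediateField.adjoin k {ζ} = ⊤ :=
    IntermediateField.eq_of_le_of_finrank_eq le_top (by rw [h1, IntermediateField.finrank_top', hF])
  exact IsCyclotomicExtension.equiv {n} k (IntermediateField.adjoin k {ζ})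
    ((IntermediateField.equivOfEq h2).trans IntermediateField.topEquiv)

section
variable {K : Type} [Field K] [NumberField K] {w : K}
  {F : Type} [Field F] [NumberField F] [Algebra K F] {θ : F} {τ : F ≃ₐ[K] F}

/-- The elements fixed by `τ` lie in `K`. -/
lemma kum_fixed (hw : w ^ 2 + w + 1 = 0) (hτ : τ θ = algebraMap K F (- w ^ 2) * θ)
    (hspan : ∀ x : F, ∃ c : Fin 6 → K, x = ∑ j, algebraMap K F (c j) * θ ^ (j : ℕ))
    {x : F} (hx : τ x = x) : ∃ k, algebraMap K F k = x := by
  obtain ⟨c, hc⟩ := hspan x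
  have h0 : ∀ i : ℕ, ∑ j, algebraMap K F (c j) * (algebraMap K F (-w ^ 2) ^ i * θ) ^ (j : ℕ) = x := by
    intro i
    induction i with
    | zero => simp [← hc]
    | succ i ih =>
      have := congrArg τ ih
      rw [hx] at this
      rw [← this, map_sum]
      refine Finset.sum_congr rfl fun j _ => ?_
      rw [map_mul, AlgEquiv.commutes, map_pow, map_mul, map_pow, AlgEquiv.commutes, hτ, pow_succ]
      ring
  have h1 := h0 1
  have h2 := h0 2
  have h3 := h0 3
  have h4 := h0 4
  have h5 := h0 5
  have h0 := h0 0
  refine ⟨c 0, ?_⟩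
  set v := algebraMap K F (-w ^ 2) with hv
  have e2 : v ^ 2 = v - 1 := by
    have : (-w ^ 2) ^ 2 = (-w ^ 2) - 1 := by linear_combination (w ^ 2 - w + 1) * hw
    rw [hv, ← map_pow, this, map_sub, map_one]
  have h6 : (6 : F) ≠ 0 := by norm_num
  apply mul_left_cancel₀ h6
  simp only [Fin.sum_univ_succ] at h0 h1 h2 h3 h4 h5
  simp at h0 h1 h2 h3 h4 h5
  -- the power sums `∑ i, v ^ (i * j)` are multiples of `v ^ 2 - v + 1`
  linear_combination h0 + h1 + h2 + h3 + h4 + h5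
    - (algebraMap K F (c 1) * θ * ((1 + v) * (v ^ 2 + v + 1))
      + algebraMap K F (c 2) * θ ^ 2 * ((1 + v ^ 6) * (v ^ 2 + v + 1))
      + algebraMap K F (c 3) * θ ^ 3 * ((1 + v) * (1 + v ^ 6 + v ^ 12))
      + algebraMap K F (c 4) * θ ^ 4 * ((1 + v ^ 12) * (v ^ 2 + v + 1) * (1 - v ^ 2 + v ^ 4))
      + algebraMap K F (c 5) * θ ^ 5 * ((1 + v ^ 5) * (v ^ 2 + v + 1) *
        (1 - v ^ 2 + v ^ 6 - v ^ 8 + v ^ 10 - v ^ 14 + v ^ 16))) * e2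

/-- A primitive seventh root of unity in `F` would make `F` equal to `ℚ(ζ₂₁)`, which is abelian
over `ℚ`. For an automorphism `s` that moves `ω`, the element `θ * s θ` is then fixed by `τ`, so it
lies in `K`, while its sixth power is `7 / 3`; taking norms, `± 7 / 3` is a cube. -/
lemma kum_root7 (hw : w ^ 2 + w + 1 = 0) (hK : Module.finrank ℚ K = 2)
    (hθ : θ ^ 6 = algebraMap K F ((5 + w) / 3)) (hτ : τ θ = algebraMap K F (- w ^ 2) * θ)
    (hF : Module.finrank ℚ F = 12)
    (hspan : ∀ x : F, ∃ c : Fin 6 → K, x = ∑ j, algebraMap K F (c j) * θ ^ (j : ℕ))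
    (z : F) (hz : z ^ 7 = 1) : z = 1 := by
  by_contra hz1
  set v := algebraMap K F w with hv
  have hv2 : v ^ 2 + v + 1 = 0 := by
    rw [hv, ← map_pow, ← map_add, ← map_one (algebraMap K F), ← map_add, hw, map_zero]
  have hv3 : v ^ 3 = 1 := by linear_combination (v - 1) * hv2
  have hv1 : v ≠ 1 := by
    intro h; rw [h] at hv2; norm_num at hv2
  haveI : Fact (Nat.Prime 7) := ⟨by norm_num⟩
  haveI : Fact (Nat.Prime 3) := ⟨by norm_num⟩
  have o7 : orderOf z = 7 := orderOf_eq_prime hz hz1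
  have o3 : orderOf v = 3 := orderOf_eq_prime hv3 hv1
  have o21 : orderOf (z * v) = 21 := by
    rw [(Commute.all z v).orderOf_mul_eq_mul_orderOf_of_coprime (by rw [o7, o3]; norm_num), o7, o3]
  have hp : IsPrimitiveRoot (z * v) 21 := o21 ▸ IsPrimitiveRoot.orderOf (z * v)
  haveI := cyclo_of_finrank hp (Polynomial.cyclotomic.irreducible_rat (by norm_num)) (by rw [hF]; rfl)
  haveI := IsCyclotomicExtension.isAbelianGalois {21} ℚ F
  -- some automorphism moves `w`
  obtain ⟨s, hs⟩ : ∃ s : F ≃ₐ[ℚ] F, s v ≠ v := by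
    by_contra! hcon
    have := (IsGalois.mem_bot_iff_fixed (F := ℚ) v).2 hcon
    obtain ⟨q, hq⟩ := IntermediateField.mem_bot.1 this
    rw [← hq] at hv2
    have h2 : q ^ 2 + q + 1 = 0 := by
      apply (algebraMap ℚ F).injective
      simpa using hv2
    nlinarith [sq_nonneg (2 * q + 1)]
  have hsv : s v = v ^ 2 := by
    have h1 : s v ^ 2 + s v + 1 = 0 := by
      have := congrArg s hv2
      simpa using this
    have h2 : (s v - v) * (s v - v ^ 2) = 0 := by linear_combination h1 + (-s v + v - 1) * hv2
    rcases mul_eq_zero.1 h2 with h | h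
    · exact absurd (sub_eq_zero.1 h) hs
    · exact sub_eq_zero.1 h
  have hcomm : ∀ x, τ (s x) = s (τ x) := by
    intro x
    have h := IsMulCommutative.is_comm.comm (τ.restrictScalars ℚ) s
    exact DFunLike.congr_fun h x
  have hτ' : τ θ = -v ^ 2 * θ := by rw [hτ, hv]; simp
  have hτv : τ v = v := τ.commutes w
  have hfix : τ (θ * s θ) = θ * s θ := by
    rw [map_mul, hcomm, hτ', map_mul, map_neg, map_pow, hsv]
    linear_combination (θ * s θ) * (v ^ 3 + 1) * hv3
  obtain ⟨k, hk⟩ := kum_fixed hw hτ hspan hfix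
  have h3 (n : ℕ) [n.AtLeastTwo] : s (OfNat.ofNat n) = OfNat.ofNat n := map_ofNat s n
  have h4 (n : ℕ) [n.AtLeastTwo] : algebraMap K F (OfNat.ofNat n) = OfNat.ofNat n :=
    map_ofNat (algebraMap K F) n
  have hθ' : θ ^ 6 = (5 + v) / 3 := by rw [hθ, map_div₀, map_add, h4, h4]
  have hk6 : k ^ 6 = ((7 / 3 : ℚ) : K) := by
    apply (algebraMap K F).injective
    rw [map_pow, hk, mul_pow, ← map_pow, hθ', map_div₀, map_add, h3, h3, hsv]
    simp only [map_ratCast]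
    push_cast
    field_simp
    linear_combination (v + 4) * hv2
  have hN := congrArg (Algebra.norm ℚ) hk6
  rw [map_pow, ← eq_ratCast (algebraMap ℚ K), Algebra.norm_algebraMap, hK] at hN
  have hN' : (Algebra.norm ℚ k ^ 3 - 7 / 3) * (Algebra.norm ℚ k ^ 3 + 7 / 3) = 0 := by
    linear_combination hN
  rcases mul_eq_zero.1 hN' with h | h
  · exact not_pow (n := 3) (by norm_num) (Algebra.norm ℚ k) (by linarith)
  · exact not_pow (n := 3) (by norm_num) (-Algebra.norm ℚ k) (by linarith)

/-- The field `F` exists. -/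
lemma exists_KumF : ∃ (F : Type) (_ : Field F) (_ : NumberField F), Nonempty (KumF F) := by
  obtain ⟨K, _, _, w, hw, hK⟩ := exists_K
  obtain ⟨F, _, _, _, θ, τ, hθ, hτ, h6, _, hspan⟩ := exists_F hw hK
  have hF : Module.finrank ℚ F = 12 := by
    rw [← Module.finrank_mul_finrank ℚ K F, hK, h6]
  have hab : ∀ a b : ℚ, (a : F) + b * algebraMap K F w = algebraMap K F ((a : K) + b * w) := by
    intro a b; simp
  have h4 (n : ℕ) [n.AtLeastTwo] : algebraMap K F (OfNat.ofNat n) = OfNat.ofNat n :=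
    map_ofNat (algebraMap K F) n
  refine ⟨F, inferInstance, inferInstance, ⟨{
    w := algebraMap K F w
    θ := θ
    hw := by
      rw [← map_pow, ← map_add, ← map_one (algebraMap K F), ← map_add, hw, map_zero]
    hθ := by rw [hθ, map_div₀, map_add, h4, h4]
    τ := τ.restrictScalars ℚ
    τw := τ.commutes w
    τθ := by simpa using hτ
    deg := hF
    span := ?_
    normK := ?_
    traceK := ?_
    intK := ?_
    root7 := kum_root7 hw hK hθ hτ hF hspan }⟩⟩
  · intro x
    obtain ⟨c, hc⟩ := hspan x
    choose a b hab' using fun j => eis_span hw hK (c j)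
    refine ⟨a, b, ?_⟩
    rw [hc]
    refine Finset.sum_congr rfl fun j _ => ?_
    rw [hab, hab']
  · intro a b
    rw [hab, ← Algebra.norm_norm (S := K), Algebra.norm_algebraMap, map_pow, eis_norm hw hK, h6]
    apply abs_of_nonneg
    positivity
  · intro a b
    rw [hab, ← Algebra.trace_trace (S := K), Algebra.trace_algebraMap, map_nsmul, eis_trace hw hK, h6]
    simp
  · intro a b h
    rw [hab, isIntegral_algebraMap_iff (algebraMap K F).injective] at h
    exact eis_int hw hK a b h
end

end SumCubes

end

/-! ### Gaussian periods of conductor `29` -/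

noncomputable section

namespace SumCubes

section
variable {R : Type} [CommRing R]

/-- The seven Gaussian periods of length four of a `29`-th root of unity `z`; the index is read
modulo `7`. -/
def per (z : R) (i : ℕ) : R :=
  match i % 7 with
  | 0 => z + z ^ 12 + z ^ 17 + z ^ 28
  | 1 => z ^ 2 + z ^ 5 + z ^ 24 + z ^ 27
  | 2 => z ^ 4 + z ^ 10 + z ^ 19 + z ^ 25
  | 3 => z ^ 8 + z ^ 9 + z ^ 20 + z ^ 21
  | 4 => z ^ 11 + z ^ 13 + z ^ 16 + z ^ 18
  | 5 => z ^ 3 + z ^ 7 + z ^ 22 + z ^ 26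
  | _ => z ^ 6 + z ^ 14 + z ^ 15 + z ^ 23

lemma per0 (z : R) : per z 0 = z + z ^ 12 + z ^ 17 + z ^ 28 := rfl
lemma per1 (z : R) : per z 1 = z ^ 2 + z ^ 5 + z ^ 24 + z ^ 27 := rfl
lemma per2 (z : R) : per z 2 = z ^ 4 + z ^ 10 + z ^ 19 + z ^ 25 := rfl
lemma per3 (z : R) : per z 3 = z ^ 8 + z ^ 9 + z ^ 20 + z ^ 21 := rfl
lemma per4 (z : R) : per z 4 = z ^ 11 + z ^ 13 + z ^ 16 + z ^ 18 := rfl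
lemma per5 (z : R) : per z 5 = z ^ 3 + z ^ 7 + z ^ 22 + z ^ 26 := rfl
lemma per6 (z : R) : per z 6 = z ^ 6 + z ^ 14 + z ^ 15 + z ^ 23 := rfl

lemma per_add_seven (z : R) (i : ℕ) : per z (i + 7) = per z i := by
  simp [per]

lemma per_mod (z : R) (i : ℕ) : per z (i % 7) = per z i := by
  simp [per]

lemma per_map {z : R} (hz : z ^ 29 = 1) {φ : R →+* R} (hφ : φ z = z ^ 2) (i : ℕ) :
    φ (per z i) = per z (i + 1) := by
  rw [← per_mod, ← per_mod z (i + 1), Nat.add_mod]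
  have := Nat.mod_lt i (show 0 < 7 by norm_num)
  set r := i % 7
  interval_cases r <;> norm_num [per0, per1, per2, per3, per4, per5, per6, hφ]
  · linear_combination (z ^ 5 + z ^ 27) * hz
  · linear_combination (z ^ 19 + z ^ 25) * hz
  · linear_combination (z ^ 9 + z ^ 21) * hz
  · linear_combination (z ^ 11 + z ^ 13) * hz
  · linear_combination (z ^ 3 + z ^ 7) * hz
  · linear_combination (z ^ 15 + z ^ 23) * hz
  · linear_combination (z + z ^ 17) * hz

lemma per_sum {z : R} (h : ∑ k ∈ Finset.range 29, z ^ k = 0) :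
    ∑ i ∈ Finset.range 7, per z i = -1 := by
  simp only [Finset.sum_range_succ, Finset.range_zero, Finset.sum_empty] at h ⊢
  rw [per0, per1, per2, per3, per4, per5, per6]
  linear_combination h

/-- The Gram matrix of the periods with respect to the trace form. -/
lemma per_gram {z : R} (h : ∑ k ∈ Finset.range 29, z ^ k = 0) (j : ℕ) (hj : j < 7) :
    ∑ i ∈ Finset.range 7, per z i * per z (j + i) = if j = 0 then 25 else -4 := by
  simp only [Finset.sum_range_succ, Finset.range_zero, Finset.sum_empty] at h
  simp only [Finset.sum_range_succ, Finset.range_zero, Finset.sum_empty]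
  have e7 := per_add_seven z 0
  have e8 := per_add_seven z 1
  have e9 := per_add_seven z 2
  have e10 := per_add_seven z 3
  have e11 := per_add_seven z 4
  have e12 := per_add_seven z 5
  norm_num at e7 e8 e9 e10 e11 e12
  interval_cases j <;> norm_num only [e7, e8, e9, e10, e11, e12, if_true, if_false, zero_add] <;>
    rw [per0, per1, per2, per3, per4, per5, per6]
  · linear_combination (-25 + 25 * z + z ^ 2 - 1 * z ^ 3 + z ^ 4 - 1 * z ^ 5 + z ^ 6 + z ^ 7
      - 1 * z ^ 8 - 1 * z ^ 9 + 3 * z ^ 10 - 3 * z ^ 11 + z ^ 12 + z ^ 13 + z ^ 14 - 3 * z ^ 15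
      + z ^ 16 + z ^ 17 + z ^ 18 - 3 * z ^ 19 + 3 * z ^ 20 - 1 * z ^ 21 - 1 * z ^ 22 + z ^ 23
      + z ^ 24 - 1 * z ^ 25 + z ^ 26 - 1 * z ^ 27 + z ^ 28) * h
  · linear_combination (4 - 4 * z + z ^ 3 - 1 * z ^ 4 + 2 * z ^ 6 - 1 * z ^ 7 - 1 * z ^ 8
      + 2 * z ^ 9 - 2 * z ^ 10 + 2 * z ^ 12 + 2 * z ^ 18 - 2 * z ^ 20 + 2 * z ^ 21 - 1 * z ^ 22
      - 1 * z ^ 23 + 2 * z ^ 24 - 1 * z ^ 26 + z ^ 27) * h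
  · linear_combination (4 - 4 * z + z ^ 4 - 1 * z ^ 6 + 2 * z ^ 8 - 2 * z ^ 9 + z ^ 10
      + 3 * z ^ 11 - 3 * z ^ 12 + 2 * z ^ 15 - 3 * z ^ 18 + 3 * z ^ 19 + z ^ 20 - 2 * z ^ 21
      + 2 * z ^ 22 - 1 * z ^ 24 + z ^ 26) * h
  · linear_combination (4 - 4 * z + z ^ 5 - 1 * z ^ 6 + z ^ 7 + z ^ 9 - 1 * z ^ 11 + z ^ 12
      + z ^ 18 - 1 * z ^ 19 + z ^ 21 + z ^ 23 - 1 * z ^ 24 + z ^ 25) * h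
  · linear_combination (4 - 4 * z + z ^ 5 - 1 * z ^ 6 + z ^ 7 + z ^ 9 - 1 * z ^ 11 + z ^ 12
      + z ^ 18 - 1 * z ^ 19 + z ^ 21 + z ^ 23 - 1 * z ^ 24 + z ^ 25) * h
  · linear_combination (4 - 4 * z + z ^ 4 - 1 * z ^ 6 + 2 * z ^ 8 - 2 * z ^ 9 + z ^ 10
      + 3 * z ^ 11 - 3 * z ^ 12 + 2 * z ^ 15 - 3 * z ^ 18 + 3 * z ^ 19 + z ^ 20 - 2 * z ^ 21
      + 2 * z ^ 22 - 1 * z ^ 24 + z ^ 26) * h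
  · linear_combination (4 - 4 * z + z ^ 3 - 1 * z ^ 4 + 2 * z ^ 6 - 1 * z ^ 7 - 1 * z ^ 8
      + 2 * z ^ 9 - 2 * z ^ 10 + 2 * z ^ 12 + 2 * z ^ 18 - 2 * z ^ 20 + 2 * z ^ 21 - 1 * z ^ 22
      - 1 * z ^ 23 + 2 * z ^ 24 - 1 * z ^ 26 + z ^ 27) * h

lemma pow_eq_frob {x : R} {y : R} {p : ℕ} (hp : p.Prime) (n : ℕ) :
    ∃ r, (x + y) ^ p ^ n = x ^ p ^ n + y ^ p ^ n + p * r := by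
  obtain ⟨r, hr⟩ := exists_add_pow_prime_pow_eq hp x y n
  exact ⟨x * y * r, by rw [hr]; ring⟩

/-- The seventh power of the Frobenius fixes the periods modulo `7`, since `7 ^ 7 ≡ 1` modulo
`29`. -/
lemma per_frob {z : R} (hz : z ^ 29 = 1) : ∃ r, per z 0 ^ 7 ^ 7 = per z 0 + 7 * r := by
  have h7 : Nat.Prime 7 := by norm_num
  have hN : ∀ k : ℕ, (z ^ k) ^ 7 ^ 7 = z ^ k := by
    intro k
    have : z ^ 7 ^ 7 = z := by
      have e : 7 ^ 7 = 29 * 28398 + 1 := by norm_num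
      rw [e, pow_succ, pow_mul, hz, one_pow, one_mul]
    rw [← pow_mul, mul_comm, pow_mul, this]
  obtain ⟨r1, h1⟩ := pow_eq_frob (x := z ^ 1) (y := z ^ 12) h7 7
  obtain ⟨r2, h2⟩ := pow_eq_frob (x := z ^ 1 + z ^ 12) (y := z ^ 17) h7 7
  obtain ⟨r3, h3⟩ := pow_eq_frob (x := z ^ 1 + z ^ 12 + z ^ 17) (y := z ^ 28) h7 7
  rw [hN, hN] at h1
  rw [h1, hN] at h2
  rw [h2, hN] at h3
  refine ⟨r1 + r2 + r3, ?_⟩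
  have e : per z 0 = z ^ 1 + z ^ 12 + z ^ 17 + z ^ 28 := by rw [per0, pow_one]
  rw [e, h3]
  push_cast
  ring

end
end SumCubes

end

/-! ### The field of degree seven -/

noncomputable section

namespace SumCubes

section
variable {C : Type} [Field C] [NumberField C] [IsCyclotomicExtension {29} ℚ C]

lemma irr29 : Irreducible (Polynomial.cyclotomic 29 ℚ) :=
  Polynomial.cyclotomic.irreducible_rat (by norm_num)

/-- The arithmetic of the subfield `L` of degree `7`: it contains the Gaussian periods of length
four, and a generator `σ` of its Galois group permutes them cyclically. -/
lemma L_data (L : IntermediateField ℚ C) (hL : Module.finrank ℚ L = 7) :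
    ∃ (σ : L ≃ₐ[ℚ] L) (η : L), IsIntegral ℤ η ∧
      (∃ r, IsIntegral ℤ r ∧ η ^ 7 ^ 7 = η + 7 * r) ∧ (∀ x, (σ ^ 7) x = x) ∧
      (∀ x, σ x = x → ∃ q : ℚ, algebraMap ℚ L q = x) ∧
      (∑ i ∈ Finset.range 7, (σ ^ i) η = -1) ∧
      (∀ j < 7, ∑ i ∈ Finset.range 7, (σ ^ i) η * (σ ^ (j + i)) η = if j = 0 then 25 else -4) := by
  haveI := IsCyclotomicExtension.isAbelianGalois {29} ℚ C
  have hζ := IsCyclotomicExtension.zeta_spec 29 ℚ C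
  set ζ := IsCyclotomicExtension.zeta 29 ℚ C with hζdef
  have hz29 : ζ ^ 29 = 1 := hζ.pow_eq_one
  have hgeom : ∑ k ∈ Finset.range 29, ζ ^ k = 0 := hζ.geom_sum_eq_zero (by norm_num)
  have hζ2 : IsPrimitiveRoot (ζ ^ 2) 29 := hζ.pow_of_coprime 2 (by norm_num)
  obtain ⟨s, hs⟩ : ∃ s : C ≃ₐ[ℚ] C, s ζ = ζ ^ 2 :=
    ⟨_, IsCyclotomicExtension.fromZetaAut_spec hζ2 irr29⟩
  have hext : ∀ f g : C ≃ₐ[ℚ] C, f ζ = g ζ → f = g := by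
    intro f g h
    have : (f : C →ₐ[ℚ] C) = g := (hζ.powerBasis ℚ).algHom_ext (by simpa using h)
    ext x; exact DFunLike.congr_fun this x
  have hspow : ∀ i : ℕ, (s ^ i) ζ = ζ ^ 2 ^ i := by
    intro i
    induction i with
    | zero => simp
    | succ i ih => rw [pow_succ, AlgEquiv.mul_apply, hs, map_pow, ih, ← pow_mul, pow_succ]
  have hgal : ∀ g : C ≃ₐ[ℚ] C, ∃ k : (ZMod 29)ˣ, g ζ = ζ ^ (k : ZMod 29).val := fun g =>
    ⟨_, (hζ.autToPow_spec ℚ g).symm⟩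
  -- `2` is a primitive root modulo `29`
  have hgen : ∀ g : C ≃ₐ[ℚ] C, ∃ i : ℕ, g = s ^ i := by
    intro g
    obtain ⟨k, hk⟩ := hgal g
    have h2 : ∀ k : (ZMod 29)ˣ, ∃ i : Fin 28, (k : ZMod 29).val = 2 ^ (i : ℕ) % 29 := by decide
    obtain ⟨i, hi⟩ := h2 k
    refine ⟨i, hext _ _ ?_⟩
    rw [hk, hspow, hi]
    exact (pow_eq_pow_mod _ hz29).symm
  have hidx : L.fixingSubgroup.index = 7 := by
    rw [← hL]; exact (IntermediateField.finrank_eq_fixingSubgroup_index C L).symm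
  have hCdeg : Module.finrank ℚ C = 28 := by
    rw [IsCyclotomicExtension.finrank (n := 29) C irr29]; rfl
  have hcard : Nat.card L.fixingSubgroup = 4 := by
    have h1 := L.fixingSubgroup.card_mul_index
    rw [hidx, IsGalois.card_aut_eq_finrank, hCdeg] at h1
    omega
  have hmem : per ζ 0 ∈ L := by
    rw [← IsGalois.fixedField_fixingSubgroup L, IntermediateField.mem_fixedField_iff]
    intro g hg
    have hg4 : g ^ 4 = 1 := by
      have := pow_card_eq_one' (x := (⟨g, hg⟩ : L.fixingSubgroup))
      rw [hcard] at this
      exact congrArg Subtype.val this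
    obtain ⟨k, hk⟩ := hgal g
    generalize hm : (k : ZMod 29).val = m at hk
    have hm29 : m < 29 := hm ▸ ZMod.val_lt _
    have hpow : ∀ i : ℕ, (g ^ i) ζ = ζ ^ m ^ i := by
      intro i
      induction i with
      | zero => simp
      | succ i ih => rw [pow_succ, AlgEquiv.mul_apply, hk, map_pow, ih, ← pow_mul, pow_succ]
    have h4 := hpow 4
    rw [hg4, AlgEquiv.one_apply] at h4
    have h4' : ζ ^ 1 = ζ ^ m ^ 4 := by rw [pow_one]; exact h4
    have hmod : m ^ 4 % 29 = 1 := by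
      rw [pow_eq_pow_mod (m ^ 4) hz29] at h4'
      exact (hζ.pow_inj (by norm_num) (Nat.mod_lt _ (by norm_num)) h4').symm
    have hm4 : m = 1 ∨ m = 12 ∨ m = 17 ∨ m = 28 := by
      have : ∀ m < 29, m ^ 4 % 29 = 1 → m = 1 ∨ m = 12 ∨ m = 17 ∨ m = 28 := by decide
      exact this m hm29 hmod
    have hred : ∀ a b : ℕ, a % 29 = b % 29 → ζ ^ a = ζ ^ b := by
      intro a b hab
      rw [pow_eq_pow_mod a hz29, pow_eq_pow_mod b hz29, hab]
    rw [per0]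
    simp only [map_add, map_pow, hk, ← pow_mul]
    rcases hm4 with rfl | rfl | rfl | rfl
    · simp
    · rw [hred (12 * 12) 28 (by norm_num), hred (12 * 17) 1 (by norm_num),
        hred (12 * 28) 17 (by norm_num)]
      ring
    · rw [hred (17 * 12) 1 (by norm_num), hred (17 * 17) 28 (by norm_num),
        hred (17 * 28) 12 (by norm_num)]
      ring
    · rw [hred (28 * 12) 17 (by norm_num), hred (28 * 17) 12 (by norm_num),
        hred (28 * 28) 1 (by norm_num)]
      ring
  haveI : L.fixingSubgroup.Normal := by
    refine ⟨fun n hn g => ?_⟩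
    have h := IsMulCommutative.is_comm.comm g n
    have h' : g * n = n * g := h
    rw [h', mul_inv_cancel_right]; exact hn
  haveI : IsGalois ℚ L := (IsAbelianGalois.tower_bot ℚ L C).toIsGalois
  let σ : L ≃ₐ[ℚ] L := s.restrictNormal L
  have hσ : ∀ x : L, ((σ x : L) : C) = s x := fun x => s.restrictNormal_commutes L x
  have hσi : ∀ (i : ℕ) (x : L), (((σ ^ i) x : L) : C) = (s ^ i) x := by
    intro i
    induction i with
    | zero => simp
    | succ i ih => intro x; rw [pow_succ, AlgEquiv.mul_apply, ih, hσ, pow_succ, AlgEquiv.mul_apply]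
  have hsper : ∀ i : ℕ, (s ^ i) (per ζ 0) = per ζ i := by
    intro i
    induction i with
    | zero => simp
    | succ i ih =>
      rw [pow_succ', AlgEquiv.mul_apply, ih]
      exact per_map hz29 (φ := (s : C →+* C)) hs i
  have hση : ∀ i : ℕ, (((σ ^ i) ⟨per ζ 0, hmem⟩ : L) : C) = per ζ i := fun i => by
    rw [hσi]; exact hsper i
  have hInt : IsIntegral ℤ ζ := hζ.isIntegral (by norm_num)
  have hLint : ∀ x : L, IsIntegral ℤ (x : C) → IsIntegral ℤ x := fun x hx =>
    (isIntegral_algebraMap_iff (algebraMap L C).injective).1 hx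
  refine ⟨σ, ⟨per ζ 0, hmem⟩, hLint _ ?_, ?_, ?_, ?_, ?_, ?_⟩
  · change IsIntegral ℤ (per ζ 0)
    rw [per0]
    exact ((hInt.add (hInt.pow 12)).add (hInt.pow 17)).add (hInt.pow 28)
  · obtain ⟨ζI, hcz⟩ : ∃ y : NumberField.RingOfIntegers C, (y : C) = ζ := ⟨⟨ζ, hInt⟩, rfl⟩
    obtain ⟨r, hr⟩ := per_frob (z := ζI)
      (by apply NumberField.RingOfIntegers.ext; simpa [hcz] using hz29)
    generalize (7 : ℕ) ^ 7 = N at hr ⊢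
    have hr' := congrArg (fun x : NumberField.RingOfIntegers C => (x : C)) hr
    have hp : ((per ζI 0 : NumberField.RingOfIntegers C) : C) = per ζ 0 := by
      rw [per0, per0]; simp only [map_add, map_pow, hcz]
    have h7 : ((7 : NumberField.RingOfIntegers C) : C) = 7 := map_ofNat (algebraMap _ C) 7
    simp only [map_pow, map_add, map_mul, hp, h7] at hr'
    have h70 : (7 : C) ≠ 0 := by norm_num
    have hL7 : ((7 : L) : C) = 7 := map_ofNat (algebraMap L C) 7
    have hrL : (r : C) = ((((⟨per ζ 0, hmem⟩ : L) ^ N - ⟨per ζ 0, hmem⟩) / 7 : L) : C) := by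
      push_cast
      rw [hL7, eq_div_iff h70, hr']; ring
    refine ⟨((⟨per ζ 0, hmem⟩ : L) ^ N - ⟨per ζ 0, hmem⟩) / 7, hLint _ ?_, ?_⟩
    · rw [← hrL]; exact r.isIntegral_coe
    · have : (7 : L) ≠ 0 := by norm_num
      rw [mul_div_cancel₀ _ this]; ring
  · intro x
    apply Subtype.ext
    rw [hσi]
    have := L.fixingSubgroup.pow_index_mem s
    rw [hidx] at this
    rw [IntermediateField.mem_fixingSubgroup_iff] at this
    exact this (x : C) x.2
  · intro x hx
    have hsx : s x = x := by rw [← hσ, hx]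
    have hfix : (x : C) ∈ (⊥ : IntermediateField ℚ C) := by
      rw [IsGalois.mem_bot_iff_fixed]
      intro g
      obtain ⟨i, rfl⟩ := hgen g
      induction i with
      | zero => simp
      | succ i ih => rw [pow_succ, AlgEquiv.mul_apply, hsx, ih]
    obtain ⟨q, hq⟩ := IntermediateField.mem_bot.1 hfix
    exact ⟨q, Subtype.ext hq⟩
  · apply Subtype.ext
    push_cast
    simp only [hση]
    exact per_sum hgeom
  · intro j hj
    apply Subtype.ext
    push_cast
    simp only [hση]
    rw [per_gram hgeom j hj]
    have hc (n : ℕ) [n.AtLeastTwo] : ((OfNat.ofNat n : L) : C) = OfNat.ofNat n :=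
      map_ofNat (algebraMap L C) n
    split_ifs
    · exact (hc 25).symm
    · rw [← hc 4]; rfl

end
end SumCubes

end

/-! ### Existence of the compositum -/

noncomputable section

namespace SumCubes

section
open TensorProduct

/-- The compositum of two finite extensions of coprime degrees, with the automorphisms coming from
either factor. It is realised as their tensor product. -/
lemma exists_compositum {k F L : Type} [Field k] [Field F] [Algebra k F] [Field L] [Algebra k L]
    [FiniteDimensional k L] (hco : (Module.finrank k F).Coprime (Module.finrank k L)) :
    ∃ (W : Type) (_ : Field W) (_ : Algebra F W) (ι : L →+* W), FiniteDimensional F W ∧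
      (∀ σ : L ≃ₐ[k] L, ∃ σ' : W ≃ₐ[F] W, ∀ x, σ' (ι x) = ι (σ x)) ∧
      (∀ τ : F ≃ₐ[k] F, ∃ τ' : W ≃+* W,
        (∀ x, τ' (algebraMap F W x) = algebraMap F W (τ x)) ∧ ∀ x, τ' (ι x) = ι x) ∧
      ∀ p : W → Prop, p 0 → (∀ a b, p a → p b → p (a + b)) →
        (∀ f l, p (algebraMap F W f * ι l)) → ∀ x, p x := by
  have hfield : IsField (F ⊗[k] L) := by
    apply IntermediateField.LinearDisjoint.isField_of_forall
    intro K _ _ fa fb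
    apply IntermediateField.LinearDisjoint.of_finrank_coprime
    have h1 : Module.finrank k fa.fieldRange = Module.finrank k F :=
      (AlgEquiv.ofInjectiveField fa).toLinearEquiv.finrank_eq.symm
    have h2 : Module.finrank k fb.fieldRange = Module.finrank k L :=
      (AlgEquiv.ofInjectiveField fb).toLinearEquiv.finrank_eq.symm
    rw [h1, h2]; exact hco
  have hfin : Module.Finite F (F ⊗[k] L) := inferInstance
  let ι : L →+* F ⊗[k] L := (Algebra.TensorProduct.includeRight : L →ₐ[k] F ⊗[k] L).toRingHom
  refine ⟨F ⊗[k] L, hfield.toField, Algebra.TensorProduct.leftAlgebra, ι, hfin, ?_, ?_, ?_⟩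
  · intro σ
    refine ⟨Algebra.TensorProduct.congr AlgEquiv.refl σ, fun x => ?_⟩
    exact Algebra.TensorProduct.congr_apply _ _ _ |>.trans (by simp [ι])
  · intro τ
    refine ⟨(Algebra.TensorProduct.congr τ (AlgEquiv.refl : L ≃ₐ[k] L)).toRingEquiv, ?_, ?_⟩
    · intro x
      change Algebra.TensorProduct.congr τ (AlgEquiv.refl : L ≃ₐ[k] L) (x ⊗ₜ 1) = τ x ⊗ₜ 1
      simp
    · intro x
      change Algebra.TensorProduct.congr τ (AlgEquiv.refl : L ≃ₐ[k] L) (1 ⊗ₜ x) = 1 ⊗ₜ x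
      simp
  · intro p h0 hadd hmul x
    induction x using TensorProduct.induction_on with
    | zero => exact h0
    | add a b ha hb => exact hadd a b ha hb
    | tmul f l =>
      have e : (f ⊗ₜ[k] l : F ⊗[k] L) = (f ⊗ₜ 1) * (1 ⊗ₜ l) := by simp
      rw [e]
      exact hmul f l

end

/-- All the fields and automorphisms of the descent exist for the subfield `L`. -/
lemma exists_KumW {F L : Type} [Field F] [NumberField F] (D : KumF F) [Field L] [Algebra ℚ L]
    (hL : Module.finrank ℚ L = 7) (σ : L ≃ₐ[ℚ] L) (η : L) (hη : IsIntegral ℤ η)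
    (hfrob : ∃ r, IsIntegral ℤ r ∧ η ^ 7 ^ 7 = η + 7 * r) (h7 : ∀ x, (σ ^ 7) x = x)
    (hfix : ∀ x, σ x = x → ∃ q : ℚ, algebraMap ℚ L q = x)
    (hsum : ∑ i ∈ Finset.range 7, (σ ^ i) η = -1)
    (hgram : ∀ j < 7, ∑ i ∈ Finset.range 7, (σ ^ i) η * (σ ^ (j + i)) η = if j = 0 then 25 else -4) :
    ∃ (W : Type) (_ : Field W) (_ : NumberField W) (_ : Algebra F W) (E : KumW D W) (ι : L →+* W),
      (∃ z, IsIntegral ℤ z ∧ E.η ^ 7 ^ 7 = E.η + 7 * z) ∧ ∀ z, E.τ (ι z) = ι z := by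
  haveI : FiniteDimensional ℚ L := FiniteDimensional.of_finrank_pos (by rw [hL]; norm_num)
  obtain ⟨W, _, _, ι, _, hσ, hτ, hind⟩ :=
    exists_compositum (k := ℚ) (F := F) (L := L) (by rw [D.deg, hL]; norm_num)
  haveI : CharZero W := charZero_of_injective_algebraMap (algebraMap F W).injective
  haveI : NumberField W :=
    { to_charZero := inferInstance, to_finiteDimensional := Module.Finite.trans F _ }
  obtain ⟨σ', hσ'⟩ := hσ σ
  obtain ⟨τ'', hτF', hτL'⟩ := hτ D.τ
  obtain ⟨τ', hτ'⟩ : ∃ τ' : W ≃ₐ[ℚ] W, ∀ x, τ' x = τ'' x :=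
    ⟨AlgEquiv.ofRingEquiv (f := τ'') fun q => by simp, fun x => rfl⟩
  have hτF : ∀ x, τ' (algebraMap F W x) = algebraMap F W (D.τ x) := fun x => by rw [hτ', hτF']
  have hτL : ∀ x, τ' (ι x) = ι x := fun x => by rw [hτ', hτL']
  have hσi : ∀ (i : ℕ) x, (σ' ^ i) (ι x) = ι ((σ ^ i) x) := by
    intro i
    induction i with
    | zero => simp
    | succ i ih => intro x; rw [pow_succ, AlgEquiv.mul_apply, hσ', ih, pow_succ, AlgEquiv.mul_apply]
  have hιint : ∀ x : L, IsIntegral ℤ x → IsIntegral ℤ (ι x) := fun x hx => hx.map ι.toIntAlgHom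
  have htr : ∀ x : W, ∃ a : F, algebraMap F W a = ∑ i ∈ Finset.range 7, (σ' ^ i) x := by
    apply hind
    · exact ⟨0, by simp⟩
    · rintro a b ⟨c, hc⟩ ⟨d, hd⟩
      exact ⟨c + d, by simp [hc, hd, Finset.sum_add_distrib]⟩
    · intro f l
      obtain ⟨q, hq⟩ := hfix (∑ i ∈ Finset.range 7, (σ ^ i) l) (by
        rw [map_sum]
        have : ∀ i, σ ((σ ^ i) l) = (σ ^ (i + 1)) l := fun i => by
          rw [pow_succ', AlgEquiv.mul_apply]
        simp only [this]
        rw [Finset.sum_range_succ, h7, Finset.sum_range_succ' _ 6]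
        simp)
      refine ⟨f * q, ?_⟩
      have hq' : ι (algebraMap ℚ L q) = (q : W) := by
        rw [← RingHom.comp_apply]; exact eq_ratCast _ q
      simp only [map_mul, AlgEquiv.commutes, hσi, ← Finset.mul_sum]
      rw [← map_sum, ← hq, hq', map_ratCast]
  refine ⟨W, inferInstance, inferInstance, inferInstance, {
    σ := σ'
    τ := τ'
    τalg := hτF
    comm := ?_
    σ7 := ?_
    fixed := ?_
    η := ι η
    int := hιint _ hη
    τη := hτL _
    sum := ?_
    gram := ?_ }, ι, ?_, hτL⟩
  · apply hind
    · simp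
    · intro a b ha hb; simp [ha, hb]
    · intro f l
      rw [map_mul, map_mul, map_mul, map_mul, AlgEquiv.commutes, hτF, AlgEquiv.commutes, hσ', hτL, hτL, hσ']
  · apply hind
    · simp
    · intro a b ha hb; rw [map_add, ha, hb]
    · intro f l
      rw [map_mul, AlgEquiv.commutes, hσi, h7]
  · intro x hx
    obtain ⟨a, ha⟩ := htr x
    have h1 : ∀ i : ℕ, (σ' ^ i) x = x := by
      intro i
      induction i with
      | zero => simp
      | succ i ih => rw [pow_succ, AlgEquiv.mul_apply, hx, ih]
    simp only [h1, Finset.sum_const, Finset.card_range] at ha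
    refine ⟨a / 7, ?_⟩
    rw [map_div₀, ha, map_ofNat]
    simp
  · simp only [hσi]
    rw [← map_sum, hsum]; simp
  · intro j hj
    simp only [hσi, ← map_mul]
    rw [← map_sum, hgram j hj]
    split_ifs
    · exact map_ofNat ι 25
    · rw [map_neg]; exact congrArg _ (map_ofNat ι 4)
  · obtain ⟨r, hr, hr'⟩ := hfrob
    refine ⟨ι r, hιint _ hr, ?_⟩
    have := congrArg ι hr'
    generalize (7 : ℕ) ^ 7 = N at this ⊢
    rwa [map_pow, map_add, map_mul, map_ofNat] at this

end SumCubes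

end

/-! ### Conclusion -/

noncomputable section

namespace SumCubes

lemma no_omega {L : Type} [Field L] [Algebra ℚ L] (hL : Module.finrank ℚ L = 7) (z : L) :
    z ^ 2 + z + 1 ≠ 0 := by
  intro hz
  haveI : FiniteDimensional ℚ L := FiniteDimensional.of_finrank_pos (by rw [hL]; norm_num)
  have hInt : IsIntegral ℚ z := IsIntegral.of_finite ℚ z
  have hdvd : minpoly ℚ z ∣ Polynomial.X ^ 2 + Polynomial.X + 1 := minpoly.dvd _ _ (by simpa using hz)
  have h1 : (minpoly ℚ z).natDegree ∣ 7 := by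
    rw [← hL]; exact minpoly.degree_dvd hInt
  have hne : (Polynomial.X ^ 2 + Polynomial.X + 1 : Polynomial ℚ).natDegree = 2 := by compute_degree!
  have h2 : (minpoly ℚ z).natDegree ≤ 2 := by
    rw [← hne]
    apply Polynomial.natDegree_le_of_dvd hdvd
    intro h; rw [h] at hne; simp at hne
  have h3 : (minpoly ℚ z).natDegree = 1 := by
    rcases (Nat.dvd_prime (by norm_num : Nat.Prime 7)).1 h1 with h | h <;> omega
  obtain ⟨q, hq⟩ := minpoly.natDegree_eq_one_iff.1 h3
  rw [← hq] at hz
  have h4 : q ^ 2 + q + 1 = 0 := by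
    apply (algebraMap ℚ L).injective
    rw [map_add, map_add, map_pow, map_one, map_zero]; exact hz
  nlinarith [sq_nonneg (2 * q + 1)]

lemma no_cubes {C : Type} [Field C] [NumberField C] [IsCyclotomicExtension {29} ℚ C]
    (L : IntermediateField ℚ C) (hL : Module.finrank ℚ L = 7) : ¬ ∃ x y : L, x ^ 3 + y ^ 3 = (3 : L) := by
  rintro ⟨a, b, hab⟩
  obtain ⟨F, _, _, ⟨D⟩⟩ := exists_KumF
  obtain ⟨σ, η, h1, h2, h3, h4, h5, h6⟩ := L_data L hL
  obtain ⟨W, _, _, _, E, ι, hη, hι⟩ := exists_KumW D hL σ η h1 h2 h3 h4 h5 h6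
  have h0 : a + b ≠ 0 := by
    intro h
    have h3 : (3 : L) ≠ 0 := by norm_num
    apply h3
    rw [← hab]
    linear_combination (a ^ 2 - a * b + b ^ 2) * h
  refine E.no_point hη ι hι (no_omega hL) (x := 1 / (a + b)) (y := (a - b) / (2 * (a + b))) ?_
  have h2 : (2 : L) ≠ 0 := by norm_num
  have h12 : (12 : L) ≠ 0 := by norm_num
  field_simp
  linear_combination 16 * hab

end SumCubes

end

/-- If `L` is the (unique) subfield of the cyclotomic field `ℚ(ζ₂₉)` with
`[L : ℚ] = 7`, then `3` is not a sum of two cubes in `L`. -/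
theorem three_not_sum_of_two_cubes_in_degree_seven_subfield_of_cyclotomic29
    (L : IntermediateField ℚ (CyclotomicField 29 ℚ))
    (hL : Module.finrank ℚ L = 7) :
    ¬ ∃ x y : L, x ^ 3 + y ^ 3 = (3 : L) := by
  have hc := CyclotomicField.isCyclotomicExtension 29 ℚ
  -- the two `ℚ`-algebra structures on the cyclotomic field agree
  have e : CyclotomicField.algebra 29 ℚ =
      (DivisionRing.toRatAlgebra : Algebra ℚ (CyclotomicField 29 ℚ)) := Subsingleton.elim _ _
  rw [e] at hc
  exact SumCubes.no_cubes L hL
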